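/- If there is a measurable cardinal κ, then there is a forcing extension in which κ is the least weakly compact cardinal and κ is still weakly measurable. -/

import Mathlib

set_option linter.unusedVariables false

/-!
Common framework: first-order models of ZFC as abstract "universes" `(M, ∈)`,
internal (relational) renderings of the standard set-theoretic notions, and a
semantic treatment of (set- and class-) forcing extensions of countable models.
-/

open FirstOrder FirstOrder.Language

universe u

/-- The language of set theory: a single binary relation symbol
(we reuse Mathlib's one-binary-relation language `Language.order`,
reading its relation symbol as membership). -/
abbrev memLang : FirstOrder.Language := FirstOrder.Language.order

/-- The `memLang`-structure determined by a binary "membership" relation `E`. -/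
def memStr {M : Type u} (E : M → M → Prop) : memLang.Structure M where
  funMap := fun {_} f _ => f.elim
  RelMap := fun {n} r x =>
    match n, r with
    | 2, _ => E (x 0) (x 1)

/-- Realization of a first-order formula of the language of set theory in `(M, E)`. -/
def RealizeIn {M : Type u} (E : M → M → Prop) {n : ℕ}
    (φ : memLang.BoundedFormula Empty n) (xs : Fin n → M) : Prop :=
  letI := memStr E
  φ.Realize (fun e => e.elim) xs

/-- Elementary embeddings between two membership structures. -/
def MemElemEmbed {M : Type u} {N : Type u} (E₁ : M → M → Prop) (E₂ : N → N → Prop) :=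
  @FirstOrder.Language.ElementaryEmbedding memLang M N (memStr E₁) (memStr E₂)

/-- Application of an elementary embedding between membership structures. -/
def MemElemEmbed.app {M : Type u} {N : Type u} {E₁ : M → M → Prop} {E₂ : N → N → Prop}
    (j : MemElemEmbed E₁ E₂) (x : M) : N :=
  @FirstOrder.Language.ElementaryEmbedding.toFun memLang M N (memStr E₁) (memStr E₂) j x

namespace ZF

variable {M : Type u} (E : M → M → Prop)

def IsEmptySet (a : M) : Prop := ∀ x, ¬ E x a

def IsPairOf (p a b : M) : Prop := ∀ x, E x p ↔ (x = a ∨ x = b)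

/-- `p` is the Kuratowski ordered pair `⟨a, b⟩`. -/
def IsOPairOf (p a b : M) : Prop :=
  ∃ s t, IsPairOf E s a a ∧ IsPairOf E t a b ∧ IsPairOf E p s t

def Sub (a b : M) : Prop := ∀ x, E x a → E x b

def IsTransitiveSet (a : M) : Prop := ∀ x, E x a → Sub E x a

/-- In a well-founded extensional world, the ordinals are exactly the hereditarily
transitive sets. -/
def IsOrdinal (a : M) : Prop := IsTransitiveSet E a ∧ ∀ x, E x a → IsTransitiveSet E x

def IsSuccOf (s a : M) : Prop := ∀ x, E x s ↔ (E x a ∨ x = a)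

def IsLimitOrdinal (a : M) : Prop :=
  IsOrdinal E a ∧ ¬ IsEmptySet E a ∧ ∀ x, E x a → ∃ s, E s a ∧ IsSuccOf E s x

def IsOmega (w : M) : Prop :=
  IsOrdinal E w ∧ (∃ z, E z w ∧ IsEmptySet E z) ∧
    (∀ y, E y w → ∃ s, E s w ∧ IsSuccOf E s y) ∧
    (∀ y, E y w → (IsEmptySet E y ∨ ∃ z, IsSuccOf E y z ∧ E z w ∨ IsSuccOf E y z))

/-- `⟨x, y⟩ ∈ r` : the relation (set of ordered pairs) `r` relates `x` to `y`;
for a function `f` this says `f(x) = y`. -/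
def PairMem (r x y : M) : Prop := ∃ p, E p r ∧ IsOPairOf E p x y

/-- `f` is a function with domain `a` and values in `b` (coded as a set of
Kuratowski pairs). -/
def IsFuncFromTo (f a b : M) : Prop :=
  (∀ p, E p f → ∃ x y, E x a ∧ E y b ∧ IsOPairOf E p x y) ∧
  (∀ x, E x a → ∃ y, PairMem E f x y) ∧
  (∀ x y y', PairMem E f x y → PairMem E f x y' → y = y')

def IsInjFromTo (f a b : M) : Prop :=
  IsFuncFromTo E f a b ∧ ∀ x x' y, PairMem E f x y → PairMem E f x' y → x = x'

def IsSurjFromTo (f a b : M) : Prop :=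
  IsFuncFromTo E f a b ∧ ∀ y, E y b → ∃ x, E x a ∧ PairMem E f x y

def IsBijFromTo (f a b : M) : Prop := IsInjFromTo E f a b ∧ IsSurjFromTo E f a b

def CardLE (a b : M) : Prop := ∃ f, IsInjFromTo E f a b

def SameCard (a b : M) : Prop := ∃ f, IsBijFromTo E f a b

/-- `a` has cardinality less than the cardinal `κ`. -/
def CardLT (a κ : M) : Prop := ∃ γ, E γ κ ∧ CardLE E a γ

def IsCardinal (κ : M) : Prop := IsOrdinal E κ ∧ ∀ β, E β κ → ¬ CardLE E κ β

/-- `lam` is the cardinal successor `κ⁺` of `κ`. -/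
def IsCardSuccOf (lam κ : M) : Prop :=
  IsCardinal E lam ∧ E κ lam ∧ ∀ μ, IsCardinal E μ → E κ μ → (μ = lam ∨ E lam μ)

def IsPowersetOf (p a : M) : Prop := ∀ x, E x p ↔ Sub E x a

def IsCofinalIn (f β κ : M) : Prop :=
  ∀ γ, E γ κ → ∃ x y, E x β ∧ PairMem E f x y ∧ (γ = y ∨ E γ y)

def IsRegular (κ : M) : Prop :=
  IsCardinal E κ ∧ ∀ β f, E β κ → IsFuncFromTo E f β κ → ¬ IsCofinalIn E f β κ

def IsStrongLimit (κ : M) : Prop :=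
  IsCardinal E κ ∧ ∀ β p, E β κ → IsPowersetOf E p β → CardLT E p κ

def IsUncountable (κ : M) : Prop := ∃ w, IsOmega E w ∧ E w κ

/-- Inaccessible: an uncountable regular strong limit cardinal. -/
def IsInaccessible (κ : M) : Prop := IsRegular E κ ∧ IsStrongLimit E κ ∧ IsUncountable E κ

/-- Weakly inaccessible: an uncountable regular limit cardinal. -/
def IsWeaklyInaccessibleCard (κ : M) : Prop :=
  IsRegular E κ ∧ IsUncountable E κ ∧ ∀ β, E β κ → ∃ μ, E β μ ∧ E μ κ ∧ IsCardinal E μ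

/-- `δ` is the cofinality of `α`. -/
def IsCofinalityOf (δ α : M) : Prop :=
  IsOrdinal E α ∧ IsOrdinal E δ ∧ (∃ f, IsFuncFromTo E f δ α ∧ IsCofinalIn E f δ α) ∧
    ∀ δ', E δ' δ → ¬ ∃ f, IsFuncFromTo E f δ' α ∧ IsCofinalIn E f δ' α

/-! partial orders, sequences and games -/

/-- `le` is (the code of) a partial order relation on the set `P`;
`PairMem E le p q` reads "`p ≤ q`", i.e. `p` is a stronger condition than `q`. -/
def IsPartialOrderOn (le P : M) : Prop :=
  (∀ p, E p le → ∃ x y, E x P ∧ E y P ∧ IsOPairOf E p x y) ∧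
  (∀ x, E x P → PairMem E le x x) ∧
  (∀ x y z, PairMem E le x y → PairMem E le y z → PairMem E le x z) ∧
  (∀ x y, PairMem E le x y → PairMem E le y x → x = y)

/-- `s` is a `≤`-decreasing sequence of elements of `P` of length `β`. -/
def IsDecreasingSeq (le s β P : M) : Prop :=
  IsFuncFromTo E s β P ∧
    ∀ γ δ x y, E γ δ → E δ β → PairMem E s γ x → PairMem E s δ y → PairMem E le y x

/-- `(P, ≤)` is `<κ`-closed: every internal decreasing sequence of length `< κ`
has a lower bound. -/
def IsLtClosed (P le κ : M) : Prop :=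
  ∀ β s, E β κ → IsDecreasingSeq E le s β P →
    ∃ r, E r P ∧ ∀ γ x, E γ β → PairMem E s γ x → PairMem E le r x

/-- An ordinal is even iff its elements can be partitioned into pairs `{γ, γ+1}`. -/
def IsEvenOrdinal (β : M) : Prop :=
  IsOrdinal E β ∧ ∃ Q,
    (∀ q, E q Q → ∃ γ s, E γ β ∧ E s β ∧ IsSuccOf E s γ ∧ IsPairOf E q γ s) ∧
    (∀ γ, E γ β → ∃ q, E q Q ∧ E γ q) ∧
    (∀ q q', E q Q → E q' Q → (∃ x, E x q ∧ E x q') → q = q')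

/-- `s'` is the restriction of the (sequence) `s` to `δ`. -/
def SeqRestriction (s' s δ : M) : Prop :=
  ∀ p, E p s' ↔ (E p s ∧ ∃ γ y, E γ δ ∧ IsOPairOf E p γ y)

/-- `(P, ≤)` is strategically `<κ`-closed: for each game length `γ < κ`, the second
player (playing at even stages, in particular at limits) has a strategy `σ` which
always provides a next condition below everything played so far. -/
def IsStrategicallyLtClosed (P le κ : M) : Prop :=
  ∀ γlen, E γlen κ → ∃ σ : M,
    ∀ β s, E β γlen → IsDecreasingSeq E le s β P →
      (∀ δ, E δ β → IsEvenOrdinal E δ →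
        ∀ r y, SeqRestriction E r s δ → PairMem E s δ y → PairMem E σ r y) →
      IsEvenOrdinal E β →
      ∃ y, PairMem E σ s y ∧ E y P ∧ ∀ δ x, E δ β → PairMem E s δ x → PairMem E le y x

/-! trees -/

/-- `lt` codes a strict tree order on the set `T`: irreflexive, transitive, and the
predecessors of any node are linearly ordered. -/
def IsTreeOrderOn (lt T : M) : Prop :=
  (∀ p, E p lt → ∃ x y, E x T ∧ E y T ∧ IsOPairOf E p x y) ∧
  (∀ x, ¬ PairMem E lt x x) ∧
  (∀ x y z, PairMem E lt x y → PairMem E lt y z → PairMem E lt x z) ∧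
  (∀ x y z, E z T → PairMem E lt x z → PairMem E lt y z →
    (PairMem E lt x y ∨ x = y ∨ PairMem E lt y x))

/-- The node `x` has height `β` in the tree order `lt`: its set of predecessors is
order-isomorphic (internally) to the ordinal `β`. -/
def IsHeightOf (lt x β : M) : Prop :=
  IsOrdinal E β ∧ ∃ f,
    (∀ p, E p f → ∃ γ y, E γ β ∧ PairMem E lt y x ∧ IsOPairOf E p γ y) ∧
    (∀ γ, E γ β → ∃ y, PairMem E f γ y) ∧
    (∀ γ y y', PairMem E f γ y → PairMem E f γ y' → y = y') ∧
    (∀ y, PairMem E lt y x → ∃ γ, E γ β ∧ PairMem E f γ y) ∧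
    (∀ γ δ y z, E γ δ → PairMem E f γ y → PairMem E f δ z → PairMem E lt y z)

def IsLevelOf (lt T L β : M) : Prop := ∀ x, E x L ↔ (E x T ∧ IsHeightOf E lt x β)

/-- `(T, lt)` is a `κ`-tree: a tree of height `κ` all of whose levels have size `< κ`. -/
def IsKappaTree (T lt κ : M) : Prop :=
  IsTreeOrderOn E lt T ∧
  (∀ x, E x T → ∃ β, E β κ ∧ IsHeightOf E lt x β) ∧
  (∀ β, E β κ → ∃ x, E x T ∧ IsHeightOf E lt x β) ∧
  (∀ β L, E β κ → IsLevelOf E lt T L β → CardLT E L κ)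

def IsChainIn (lt C T : M) : Prop :=
  Sub E C T ∧ ∀ x y, E x C → E y C → (x = y ∨ PairMem E lt x y ∨ PairMem E lt y x)

def IsAntichainIn (lt A T : M) : Prop :=
  Sub E A T ∧ ∀ x y, E x A → E y A → x ≠ y → ¬ PairMem E lt x y ∧ ¬ PairMem E lt y x

def HasCofinalBranch (T lt κ : M) : Prop :=
  ∃ b, IsChainIn E lt b T ∧ ∀ β, E β κ → ∃ x, E x b ∧ IsHeightOf E lt x β

def HasTreeProperty (κ : M) : Prop :=
  ∀ T lt, IsKappaTree E T lt κ → HasCofinalBranch E T lt κ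

/-- Weakly compact: inaccessible with the tree property. -/
def IsWeaklyCompact (κ : M) : Prop := IsInaccessible E κ ∧ HasTreeProperty E κ

def IsLeastWeaklyCompact (κ : M) : Prop :=
  IsWeaklyCompact E κ ∧ ∀ μ, E μ κ → ¬ IsWeaklyCompact E μ

/-- `(T, lt)` is a `κ`-Souslin tree: a tree of height `κ` all of whose levels,
chains and antichains have size `< κ`. -/
def IsSouslinTree (T lt κ : M) : Prop :=
  IsTreeOrderOn E lt T ∧
  (∀ x, E x T → ∃ β, E β κ ∧ IsHeightOf E lt x β) ∧
  (∀ β, E β κ → ∃ x, E x T ∧ IsHeightOf E lt x β) ∧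
  (∀ β L, E β κ → IsLevelOf E lt T L β → CardLT E L κ) ∧
  (∀ C, IsChainIn E lt C T → CardLT E C κ) ∧
  (∀ A, IsAntichainIn E lt A T → CardLT E A κ)

/-- The automorphism group of `(T, lt)` acts transitively on each level. -/
def IsHomogeneousTree (T lt : M) : Prop :=
  ∀ x y β, E x T → E y T → IsHeightOf E lt x β → IsHeightOf E lt y β →
    ∃ π, IsBijFromTo E π T T ∧
      (∀ u v u' v', PairMem E π u u' → PairMem E π v v' →
        (PairMem E lt u v ↔ PairMem E lt u' v')) ∧
      PairMem E π x y

/-! filters and measurability -/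

def IsFilterOn (F κ : M) : Prop :=
  (∀ X, E X F → Sub E X κ) ∧ (∃ X, E X F) ∧ (∀ X, E X F → ∃ x, E x X) ∧
  (∀ X Y, E X F → Sub E X Y → Sub E Y κ → E Y F)

/-- `F` is a `κ`-complete filter on `κ`: it is closed under internal intersections
of families of size `< κ`. -/
def IsKappaCompleteFilterOn (F κ : M) : Prop :=
  IsFilterOn E F κ ∧
  ∀ β g, E β κ → IsFuncFromTo E g β F →
    ∀ Z, (∀ x, E x Z ↔ (E x κ ∧ ∀ γ Y, E γ β → PairMem E g γ Y → E x Y)) → E Z F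

def IsPrincipalOn (F κ : M) : Prop := ∃ a, ∀ X, E X F ↔ (Sub E X κ ∧ Sub E a X)

/-- The filter `F` measures the set `A ⊆ κ`. -/
def MeasuresIn (F A κ : M) : Prop :=
  E A F ∨ ∃ A', (∀ x, E x A' ↔ (E x κ ∧ ¬ E x A)) ∧ E A' F

/-- Measurable: there is a `κ`-complete nonprincipal ultrafilter on `κ`. -/
def IsMeasurable (κ : M) : Prop :=
  IsInaccessible E κ ∧ ∃ F, IsKappaCompleteFilterOn E F κ ∧ ¬ IsPrincipalOn E F κ ∧
    ∀ A, Sub E A κ → MeasuresIn E F A κ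

/-- Weakly measurable: an inaccessible `κ` such that every family of at most `κ⁺`
many subsets of `κ` is measured by some `κ`-complete nonprincipal filter. -/
def IsWeaklyMeasurable (κ : M) : Prop :=
  IsInaccessible E κ ∧ ∀ lam 𝒜, IsCardSuccOf E lam κ → (∀ A, E A 𝒜 → Sub E A κ) →
    CardLE E 𝒜 lam →
    ∃ F, IsKappaCompleteFilterOn E F κ ∧ ¬ IsPrincipalOn E F κ ∧
      ∀ A, E A 𝒜 → MeasuresIn E F A κ

/-! Cohen forcing `Add(κ,1)` -/

def IsTwo (t : M) : Prop := ∃ z o, IsEmptySet E z ∧ IsSuccOf E o z ∧ IsSuccOf E t o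

/-- A condition of `Add(κ,1)`: a binary partial function on κ of size `< κ`. -/
def IsCohenCondition (c κ : M) : Prop :=
  (∃ t, IsTwo E t ∧ ∀ p, E p c → ∃ x y, E x κ ∧ E y t ∧ IsOPairOf E p x y) ∧
  (∀ x y y', PairMem E c x y → PairMem E c x y' → y = y') ∧
  CardLT E c κ

/-- `(C, leC)` is the Cohen forcing `Add(κ,1)`, ordered by (reverse) extension. -/
def IsCohenPoset (C leC κ : M) : Prop :=
  (∀ c, E c C ↔ IsCohenCondition E c κ) ∧
  (∀ p, E p leC ↔ ∃ c d, E c C ∧ E d C ∧ Sub E d c ∧ IsOPairOf E p c d)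

def IsDenseIn (D P le : M) : Prop :=
  Sub E D P ∧ ∀ p, E p P → ∃ q, E q D ∧ PairMem E le q p

end ZF

/-! ZFC satisfaction (first-order, schemes ranging over all formulas with parameters) -/

/-- The separation scheme for `(M, E)`. -/
def SepScheme {M : Type u} (E : M → M → Prop) : Prop :=
  ∀ (n : ℕ) (φ : memLang.BoundedFormula Empty (n + 1)) (params : Fin n → M) (a : M),
    ∃ b, ∀ x, E x b ↔ (E x a ∧ RealizeIn E φ (Fin.snoc params x))

/-- The collection scheme for `(M, E)`. -/
def CollectionScheme {M : Type u} (E : M → M → Prop) : Prop :=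
  ∀ (n : ℕ) (φ : memLang.BoundedFormula Empty (n + 2)) (params : Fin n → M) (a : M),
    (∀ x, E x a → ∃ y, RealizeIn E φ (Fin.snoc (Fin.snoc params x) y)) →
    ∃ b, ∀ x, E x a → ∃ y, E y b ∧ RealizeIn E φ (Fin.snoc (Fin.snoc params x) y)

/-- `(M, E)` is a (well-founded) model of `ZFC⁻`: Zermelo–Fraenkel set theory with
choice and collection, but without the power set axiom. -/
structure SatisfiesZFCminus {M : Type u} (E : M → M → Prop) : Prop where
  ext : ∀ x y, (∀ z, E z x ↔ E z y) → x = y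
  found : WellFounded E
  pairing : ∀ a b, ∃ p, ZF.IsPairOf E p a b
  union : ∀ a, ∃ u, ∀ x, E x u ↔ ∃ y, E y a ∧ E x y
  infinity : ∃ w, ZF.IsOmega E w
  sep : SepScheme E
  coll : CollectionScheme E
  choice : ∀ a, (∀ x, E x a → ∃ y, E y x) →
    ∃ f, (∀ x y y', ZF.PairMem E f x y → ZF.PairMem E f x y' → y = y') ∧
      ∀ x, E x a → ∃ y, ZF.PairMem E f x y ∧ E y x

/-- `(M, E)` is a (well-founded) model of `ZFC`. -/
structure SatisfiesZFC {M : Type u} (E : M → M → Prop) extends SatisfiesZFCminus E : Prop where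
  power : ∀ a, ∃ p, ZF.IsPowersetOf E p a

/-- A universe of set theory: a (well-founded) first-order model of ZFC. -/
structure ZFCUniverse : Type (u + 1) where
  M : Type u
  mem : M → M → Prop
  zfc : SatisfiesZFC mem

namespace ZFCUniverse

variable (U : ZFCUniverse.{u})

/-- The external (von Neumann) rank of an element of a universe. -/
noncomputable def rk (x : U.M) : Ordinal.{u} :=
  (U.zfc.found.apply x).rank

/-- The extension of an internal set, as a type. -/
def Elem (m : U.M) : Type u := {x : U.M // U.mem x m}

/-- Membership restricted to an internal set. -/
def memOn (m : U.M) : U.Elem m → U.Elem m → Prop := fun x y => U.mem x.val y.val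

/-- Elementary embeddings between (the membership structures of) two internal sets. -/
abbrev SetEmb (m n : U.M) := MemElemEmbed (U.memOn m) (U.memOn n)

/-- The internal set `m` is a model of ZFC. -/
def SetModelsZFC (m : U.M) : Prop := SatisfiesZFC (U.memOn m)

/-- The internal set `m` is a model of ZFC⁻. -/
def SetModelsZFCminus (m : U.M) : Prop := SatisfiesZFCminus (U.memOn m)

/-- `m` is closed under `<κ`-sequences: `m^{<κ} ⊆ m`. -/
def SeqClosedIn (m κ : U.M) : Prop :=
  ∀ β f, U.mem β κ → ZF.IsFuncFromTo U.mem f β m → U.mem f m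

/-- `κ` is unfoldable: for every ordinal `θ` and every transitive set `m` of size `κ`
with `κ ∈ m` there is a transitive set `n` and an elementary embedding `j : m → n`
with critical point `κ` and `j(κ) > θ`. -/
def Unfoldable (κ : U.M) : Prop :=
  ∀ θ, ZF.IsOrdinal U.mem θ →
  ∀ m (hκ : U.mem κ m), ZF.IsTransitiveSet U.mem m → ZF.SameCard U.mem m κ →
    ∃ n, ZF.IsTransitiveSet U.mem n ∧
      ∃ j : U.SetEmb m n,
        (∀ x (hx : U.mem x m), U.mem x κ → (MemElemEmbed.app j ⟨x, hx⟩).val = x) ∧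
        U.mem θ ((MemElemEmbed.app j ⟨κ, hκ⟩).val)

/-- `κ` is strongly unfoldable: unfoldability embeddings can moreover be found with
`V_θ ⊆ n`. -/
def StronglyUnfoldable (κ : U.M) : Prop :=
  ∀ θ, ZF.IsOrdinal U.mem θ →
  ∀ m (hκ : U.mem κ m), ZF.IsTransitiveSet U.mem m → ZF.SameCard U.mem m κ →
    ∃ n, ZF.IsTransitiveSet U.mem n ∧
      (∀ x, U.rk x < U.rk θ → U.mem x n) ∧
      ∃ j : U.SetEmb m n,
        (∀ x (hx : U.mem x m), U.mem x κ → (MemElemEmbed.app j ⟨x, hx⟩).val = x) ∧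
        U.mem θ ((MemElemEmbed.app j ⟨κ, hκ⟩).val)

/-- `κ` is nearly `θ`-supercompact: for every `A ⊆ θ` there are a transitive
`ZFC`-model `m` with `m^{<κ} ⊆ m` and `A, κ, θ ∈ m`, a transitive set `n`, and an
elementary embedding `j : m → n` with critical point `κ`, `θ < j(κ)` and `j '' θ ∈ n`. -/
def NearlySupercompact (κ θ : U.M) : Prop :=
  ∀ A, ZF.Sub U.mem A θ →
    ∃ m, ZF.IsTransitiveSet U.mem m ∧ U.SetModelsZFC m ∧ U.SeqClosedIn m κ ∧ U.mem A m ∧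
      ∃ (hκ : U.mem κ m) (hθm : U.mem θ m) (n : U.M), ZF.IsTransitiveSet U.mem n ∧
        ∃ j : U.SetEmb m n,
          (∀ x (hx : U.mem x m), U.mem x κ → (MemElemEmbed.app j ⟨x, hx⟩).val = x) ∧
          U.mem θ ((MemElemEmbed.app j ⟨κ, hκ⟩).val) ∧
          ∃ jθ, U.mem jθ n ∧
            ∀ y, U.mem y jθ ↔ ∃ α, ∃ hα : U.mem α m, U.mem α θ ∧ y = (MemElemEmbed.app j ⟨α, hα⟩).val

/-- `κ` is `λ`-nearly `θ`-supercompact: for every `A ⊆ λ` there are a transitive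
`ZFC⁻`-model `m` with `m^{<κ} ⊆ m` and `A, κ, θ ∈ m`, a transitive set `n`, and an
elementary embedding `j : m → n` with critical point `κ`, `θ < j(κ)` and `j '' θ ∈ n`. -/
def LambdaNearlySupercompact (κ θ lam : U.M) : Prop :=
  ∀ A, ZF.Sub U.mem A lam →
    ∃ m, ZF.IsTransitiveSet U.mem m ∧ U.SetModelsZFCminus m ∧ U.SeqClosedIn m κ ∧ U.mem A m ∧
      ∃ (hκ : U.mem κ m) (hθm : U.mem θ m) (n : U.M), ZF.IsTransitiveSet U.mem n ∧
        ∃ j : U.SetEmb m n,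
          (∀ x (hx : U.mem x m), U.mem x κ → (MemElemEmbed.app j ⟨x, hx⟩).val = x) ∧
          U.mem θ ((MemElemEmbed.app j ⟨κ, hκ⟩).val) ∧
          ∃ jθ, U.mem jθ n ∧
            ∀ y, U.mem y jθ ↔ ∃ α, ∃ hα : U.mem α m, U.mem α θ ∧ y = (MemElemEmbed.app j ⟨α, hα⟩).val

/-- `κ` is `θ`-supercompact: there is an elementary embedding `j : V → M` of the
universe into a transitive class `M` with critical point `κ`, `j(κ) > θ` and
`M^θ ⊆ M`. -/
def ThetaSupercompact (κ θ : U.M) : Prop :=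
  ∃ cl : U.M → Prop,
    (∀ x y, cl y → U.mem x y → cl x) ∧
    (∀ f, (∀ p, U.mem p f → ∃ x y, U.mem x θ ∧ cl y ∧ ZF.IsOPairOf U.mem p x y) →
      (∀ x, U.mem x θ → ∃ y, ZF.PairMem U.mem f x y) →
      (∀ x y y', ZF.PairMem U.mem f x y → ZF.PairMem U.mem f x y' → y = y') → cl f) ∧
    ∃ j : MemElemEmbed U.mem (fun x y : {z : U.M // cl z} => U.mem x.val y.val),
      (∀ x, U.mem x κ → (MemElemEmbed.app j x).val = x) ∧
      U.mem θ ((MemElemEmbed.app j κ).val)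

/-- `κ` is supercompact: `θ`-supercompact for every ordinal `θ`. -/
def Supercompact (κ : U.M) : Prop :=
  ∀ θ, ZF.IsOrdinal U.mem θ → U.ThetaSupercompact κ θ

/-- The GCH holds in `U`. -/
def GCHholds : Prop :=
  ∀ lam p mu, ZF.IsCardinal U.mem lam →
    (∃ w, ZF.IsOmega U.mem w ∧ (U.mem w lam ∨ w = lam)) →
    ZF.IsPowersetOf U.mem p lam → ZF.IsCardSuccOf U.mem mu lam →
    ZF.SameCard U.mem p mu

end ZFCUniverse

/-! forcing extensions, semantically -/

/-- An `∈`-embedding of one universe into another, with transitive range: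
the ground model sits inside the extension as a transitive sub-universe. -/
structure MemEmbed (U V : ZFCUniverse.{u}) where
  f : U.M → V.M
  mem_iff : ∀ x y, V.mem (f x) (f y) ↔ U.mem x y
  trans_range : ∀ x y, V.mem y (f x) → ∃ z, U.mem z x ∧ y = f z

def MemEmbed.comp {U V W : ZFCUniverse.{u}} (g : MemEmbed V W) (e : MemEmbed U V) :
    MemEmbed U W where
  f := fun x => g.f (e.f x)
  mem_iff := by intro x y; rw [g.mem_iff, e.mem_iff]
  trans_range := by
    intro x y hy
    obtain ⟨z, hz, rfl⟩ := g.trans_range (e.f x) y hy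
    obtain ⟨w, hw, rfl⟩ := e.trans_range x z hz
    exact ⟨w, hw, rfl⟩

/-- `V = U[G]` is a (set-)forcing extension of `U` by the poset `(P, le) ∈ U` with
generic filter `G`: `G` is an `U`-generic filter on `P`, `V` has the same ordinals
as `U`, and `V` is the least such universe generated by `U` together with `G`. -/
structure IsSetGenericExt (U V : ZFCUniverse.{u}) (e : MemEmbed U V)
    (P le : U.M) (G : V.M) : Prop where
  poset : ZF.IsPartialOrderOn U.mem le P
  sub : ∀ x, V.mem x G → ∃ p, U.mem p P ∧ x = e.f p
  upward : ∀ p q, U.mem p P → U.mem q P → ZF.PairMem U.mem le p q →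
    V.mem (e.f p) G → V.mem (e.f q) G
  directed : ∀ p q, U.mem p P → U.mem q P → V.mem (e.f p) G → V.mem (e.f q) G →
    ∃ r, U.mem r P ∧ V.mem (e.f r) G ∧ ZF.PairMem U.mem le r p ∧ ZF.PairMem U.mem le r q
  generic : ∀ D, ZF.IsDenseIn U.mem D P le → ∃ q, U.mem q D ∧ V.mem (e.f q) G
  ords : ∀ x, ZF.IsOrdinal V.mem x → ∃ y, x = e.f y
  minimal : ∀ (W : ZFCUniverse.{u}) (g : MemEmbed U W) (H : W.M),
    (∀ x, W.mem x H ↔ ∃ p, V.mem (e.f p) G ∧ x = g.f p) →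
    (∀ x, ZF.IsOrdinal W.mem x → ∃ y, x = g.f y) →
    ∃ h : MemEmbed V W, ∀ x, h.f (e.f x) = g.f x

/-- A class of a universe, given by a first-order formula with parameters. -/
def DefinableClass (U : ZFCUniverse.{u}) (W : Set U.M) : Prop :=
  ∃ (n : ℕ) (φ : memLang.BoundedFormula Empty (n + 1)) (params : Fin n → U.M),
    ∀ x, x ∈ W ↔ RealizeIn U.mem φ (Fin.snoc params x)

/-- A binary class relation of a universe, given by a first-order formula with
parameters. -/
def DefinableClass₂ (U : ZFCUniverse.{u}) (R : U.M → U.M → Prop) : Prop :=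
  ∃ (n : ℕ) (φ : memLang.BoundedFormula Empty (n + 2)) (params : Fin n → U.M),
    ∀ x y, R x y ↔ RealizeIn U.mem φ (Fin.snoc (Fin.snoc params x) y)

/-- `V = U[G]` is a class-forcing extension of `U` by the definable class partial
order `(P, le)` of `U`, with generic class filter `G` meeting all definable dense
subclasses; `G` is amenable to `V`, the ordinals are the same, and `V` is least such. -/
structure IsClassGenericExt (U V : ZFCUniverse.{u}) (e : MemEmbed U V)
    (P : U.M → Prop) (le : U.M → U.M → Prop) (G : U.M → Prop) : Prop where
  defP : DefinableClass U {x | P x}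
  defle : DefinableClass₂ U le
  le_dom : ∀ p q, le p q → P p ∧ P q
  refl : ∀ p, P p → le p p
  trans : ∀ p q r, le p q → le q r → le p r
  sub : ∀ p, G p → P p
  upward : ∀ p q, le p q → G p → G q
  directed : ∀ p q, G p → G q → ∃ r, G r ∧ le r p ∧ le r q
  generic : ∀ D : Set U.M, DefinableClass U D → (∀ p, p ∈ D → P p) →
    (∀ p, P p → ∃ q, q ∈ D ∧ le q p) → ∃ q, q ∈ D ∧ G q
  amenable : ∀ a : V.M, ∃ b : V.M, ∀ x, V.mem x b ↔ (V.mem x a ∧ ∃ p, G p ∧ x = e.f p)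
  ords : ∀ x, ZF.IsOrdinal V.mem x → ∃ y, x = e.f y
  minimal : ∀ (W : ZFCUniverse.{u}) (g : MemEmbed U W),
    (∀ a : W.M, ∃ b : W.M, ∀ x, W.mem x b ↔ (W.mem x a ∧ ∃ p, G p ∧ x = g.f p)) →
    (∀ x, ZF.IsOrdinal W.mem x → ∃ y, x = g.f y) →
    ∃ h : MemEmbed V W, ∀ x, h.f (e.f x) = g.f x

/-- Two posets of `U` are forcing equivalent if they give rise to the same forcing
extensions. -/
def ForcingEquivPosets (U : ZFCUniverse.{u}) (P leP Q leQ : U.M) : Prop :=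
  ∀ (V : ZFCUniverse.{u}) (e : MemEmbed U V),
    (∃ G, IsSetGenericExt U V e P leP G) ↔ (∃ G, IsSetGenericExt U V e Q leQ G)

set_option linter.unusedVariables false
set_option linter.unusedSectionVars false
set_option synthInstance.maxSize 100000
set_option synthInstance.maxHeartbeats 400000
open FirstOrder FirstOrder.Language

/-- A type carrying a membership relation that makes it a well-founded model of ZFC. -/
class ZM (M : Type u) where
  E : M → M → Prop
  zfc : SatisfiesZFC E

infix:50 " ε " => ZM.E

namespace W6

section Calculus

variable {M : Type u} [ZM M]

instance modStr : memLang.Structure M := memStr ZM.E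

/-- Contexts of free variables, as iterated products `Nil × M × ⋯ × M`; `V` is the collection
of functions on the context that are constant or a coordinate projection. -/
class Ctx (M : outParam (Type u)) (Γ : Type u) where
  V : Set (Γ → M)
  c : ∀ m : M, (fun _ => m) ∈ V

/-- The empty context. -/
inductive Nil (M : Type u) : Type u
  | mk : Nil M

instance : Ctx M (Nil M) := ⟨{t | ∃ m, t = fun _ => m}, fun m => ⟨m, rfl⟩⟩
instance {Γ : Type u} [Ctx M Γ] : Ctx M (Γ × M) :=
  ⟨{t | t = Prod.snd ∨ ∃ s ∈ Ctx.V (Γ := Γ), t = fun w => s w.1},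
    fun m => Or.inr ⟨fun _ => m, Ctx.c m, rfl⟩⟩

/-- `φ` is first-order definable over `M`, with parameters, in the free variables of the
context `Γ`. -/
class Df {Γ : Type u} [Ctx M Γ] (φ : Γ → Prop) : Prop where
  out : ∃ (α : Type) (_ : Finite α) (ψ : memLang.Formula α) (ts : α → Γ → M),
    (∀ i, ts i ∈ Ctx.V) ∧ ∀ w, φ w ↔ ψ.Realize (fun i => ts i w)

/-- `t` is a definable term in the free variables of the context `Γ`. -/
class Tm {Γ : Type u} [Ctx M Γ] (t : Γ → M) : Prop where
  out : Df (fun w : Γ × M => w.2 = t w.1)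

variable {Γ : Type u} [Ctx M Γ]

theorem Df.congr {φ ψ : Γ → Prop} (h : Df φ) (e : ∀ w, φ w ↔ ψ w) : Df ψ := by
  have : φ = ψ := funext fun w => propext (e w)
  exact this ▸ h

instance Df.true' : Df (fun _ : Γ => True) :=
  ⟨⟨PEmpty, inferInstance, ⊤, fun i => i.elim, fun i => i.elim, fun w => by simp [Formula.realize_top]⟩⟩

instance Df.false' : Df (fun _ : Γ => False) :=
  ⟨⟨PEmpty, inferInstance, ⊥, fun i => i.elim, fun i => i.elim, fun w => by simp [Formula.realize_bot]⟩⟩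

theorem Df.const (p : Prop) : Df (fun _ : Γ => p) := by
  by_cases h : p
  · exact Df.true'.congr (by simp [h])
  · exact Df.false'.congr (by simp [h])

instance Df.imp {φ ψ : Γ → Prop} [h₁ : Df φ] [h₂ : Df ψ] : Df (fun w => φ w → ψ w) := by
  obtain ⟨α, _, f, ts, ht, hf⟩ := h₁.out
  obtain ⟨β, _, g, ss, hs, hg⟩ := h₂.out
  refine ⟨⟨α ⊕ β, inferInstance, (f.relabel Sum.inl).imp (g.relabel Sum.inr), Sum.elim ts ss, ?_, ?_⟩⟩
  · rintro (i | i)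
    · exact ht i
    · exact hs i
  · intro w
    rw [Formula.realize_imp, Formula.realize_relabel, Formula.realize_relabel, hf, hg]
    rfl

instance Df.not {φ : Γ → Prop} [h₁ : Df φ] : Df (fun w => ¬ φ w) :=
  (Df.imp (φ := φ) (ψ := fun _ => False)).congr (fun w => Iff.rfl)

instance Df.and {φ ψ : Γ → Prop} [h₁ : Df φ] [h₂ : Df ψ] : Df (fun w => φ w ∧ ψ w) :=
  (inferInstance : Df (fun w => ¬ (φ w → ¬ ψ w))).congr (fun w => by tauto)

instance Df.or {φ ψ : Γ → Prop} [h₁ : Df φ] [h₂ : Df ψ] : Df (fun w => φ w ∨ ψ w) :=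
  (inferInstance : Df (fun w => ¬ φ w → ψ w)).congr (fun w => by tauto)

instance Df.iff {φ ψ : Γ → Prop} [h₁ : Df φ] [h₂ : Df ψ] : Df (fun w => φ w ↔ ψ w) :=
  (inferInstance : Df (fun w => (φ w → ψ w) ∧ (ψ w → φ w))).congr (fun w => by tauto)

instance Df.ex {φ : Γ → M → Prop} [h : Df (fun w : Γ × M => φ w.1 w.2)] :
    Df (fun w => ∃ y, φ w y) := by
  classical
  obtain ⟨α, _, f, ts, ht, hf⟩ := h.out
  by_cases hM : Nonempty M
  · obtain ⟨m⟩ := hM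
    let tt : α → Γ → M := fun i => if h : ∃ s ∈ Ctx.V (Γ := Γ), ts i = fun w => s w.1 then h.choose
      else fun _ => m
    let r : α → α ⊕ Unit := fun i => if ∃ s ∈ Ctx.V (Γ := Γ), ts i = fun w => s w.1 then Sum.inl i
      else Sum.inr ()
    refine ⟨⟨α, inferInstance, (f.relabel r).iExs Unit, tt, ?_, ?_⟩⟩
    · intro i
      by_cases h : ∃ s ∈ Ctx.V (Γ := Γ), ts i = fun w => s w.1
      · simp only [tt, dif_pos h]; exact h.choose_spec.1
      · simp only [tt, dif_neg h]; exact Ctx.c m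
    · intro w
      rw [Formula.realize_iExs]
      have key : ∀ y : M, φ w y ↔ (f.relabel r).Realize (Sum.elim (fun i => tt i w) (fun _ : Unit => y)) := by
        intro y
        rw [hf (w, y), Formula.realize_relabel]
        have : (fun i => ts i (w, y)) = (Sum.elim (fun i => tt i w) (fun _ : Unit => y)) ∘ r := by
          funext i
          by_cases h : ∃ s ∈ Ctx.V (Γ := Γ), ts i = fun w => s w.1
          · simp only [Function.comp, r, if_pos h, Sum.elim_inl, tt, dif_pos h]
            exact congrFun h.choose_spec.2 (w, y)
          · simp only [Function.comp, r, if_neg h, Sum.elim_inr]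
            rcases ht i with h' | h'
            · rw [h']
            · exact absurd h' h
        rw [this]
      constructor
      · rintro ⟨y, hy⟩; exact ⟨fun _ => y, (key y).1 hy⟩
      · rintro ⟨y, hy⟩; exact ⟨y (), (key _).2 hy⟩
  · exact Df.false'.congr fun w => ⟨fun h => h.elim, fun ⟨y, _⟩ => hM ⟨y⟩⟩

instance Df.all {φ : Γ → M → Prop} [h : Df (fun w : Γ × M => φ w.1 w.2)] :
    Df (fun w => ∀ y, φ w y) :=
  (inferInstance : Df (fun w => ¬ ∃ y, ¬ φ w y)).congr (fun w => by push Not; rfl)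

theorem Df.V_eq {s t : Γ → M} (hs : s ∈ Ctx.V) (ht : t ∈ Ctx.V) : Df (fun w => s w = t w) :=
  ⟨⟨Bool, inferInstance, Term.equal (Term.var true) (Term.var false), fun b => if b then s else t,
    fun b => by cases b <;> simpa, fun w => by simp [Formula.realize_equal]⟩⟩

theorem Df.V_mem {s t : Γ → M} (hs : s ∈ Ctx.V) (ht : t ∈ Ctx.V) : Df (fun w => s w ε t w) :=
  ⟨⟨Bool, inferInstance, Relations.formula₂ leSymb (Term.var true) (Term.var false),
    fun b => if b then s else t,
    fun b => by cases b <;> simpa, fun w => by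
      rw [Formula.realize_rel₂]; simp; rfl⟩⟩

theorem Tm.of_V {s : Γ → M} (hs : s ∈ Ctx.V) : Tm s :=
  ⟨Df.V_eq (Γ := Γ × M) (Or.inl rfl) (Or.inr ⟨s, hs, rfl⟩)⟩

instance (priority := 2000) Tm.const (m : M) : Tm (fun _ : Γ => m) := Tm.of_V (Ctx.c m)

/-- Compositions of first projections, through which variables of the context are reached. -/
class Pr {Δ : Type u} [Ctx M Δ] (f : Γ → Δ) : Prop where
  out : ∀ s ∈ Ctx.V (Γ := Δ), (fun w => s (f w)) ∈ Ctx.V (Γ := Γ)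

instance Pr.id : Pr (fun w : Γ => w) := ⟨fun s hs => hs⟩
instance Pr.fst {Δ : Type u} [Ctx M Δ] {f : Γ → Δ × M} [h : Pr f] : Pr (fun w => (f w).1) :=
  ⟨fun s hs => h.out (fun w => s w.1) (Or.inr ⟨s, hs, rfl⟩)⟩
instance (priority := 1500) Tm.var {Δ : Type u} [Ctx M Δ] {f : Γ → Δ × M} [h : Pr f] :
    Tm (fun w => (f w).2) :=
  Tm.of_V (h.out Prod.snd (Or.inl rfl))

/-- Weakening along a projection of contexts. -/
theorem Df.pr {Δ : Type u} [Ctx M Δ] {f : Γ → Δ} (h : Pr f) {φ : Δ → Prop} (hφ : Df φ) :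
    Df (fun w => φ (f w)) := by
  obtain ⟨α, _, ψ, ts, ht, hf⟩ := hφ.out
  exact ⟨⟨α, inferInstance, ψ, fun i w => ts i (f w), fun i => h.out _ (ht i), fun w => hf _⟩⟩

theorem Pr.pair {Δ : Type u} [Ctx M Δ] {f : Γ → Δ} (h : Pr f) {t : Γ → M} (ht : t ∈ Ctx.V) :
    Pr (fun w => (f w, t w)) :=
  ⟨fun s hs => by
    rcases hs with rfl | ⟨s, hs, rfl⟩
    · exact ht
    · exact h.out s hs⟩

theorem Pr.nil : Pr (fun w : Γ => (Nil.mk : Nil M)) :=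
  ⟨fun s ⟨m, hm⟩ => by rw [hm]; exact Ctx.c m⟩

theorem Tm.pr {Δ : Type u} [Ctx M Δ] {f : Γ → Δ} (h : Pr f) {t : Δ → M} (ht : Tm t) :
    Tm (fun w => t (f w)) :=
  ⟨Df.pr (f := fun w : Γ × M => (f w.1, w.2))
    (Pr.pair ⟨fun s hs => Or.inr ⟨_, h.out s hs, rfl⟩⟩ (Or.inl rfl)) ht.out⟩

theorem V.v0 : (fun w : Γ × M => w.2) ∈ Ctx.V (Γ := Γ × M) := Or.inl rfl
theorem V.wk {s : Γ → M} (h : s ∈ Ctx.V) : (fun w : Γ × M => s w.1) ∈ Ctx.V (Γ := Γ × M) :=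
  Or.inr ⟨s, h, rfl⟩

theorem Df.subst {φ : Γ → M → Prop} (h : Df (fun w : Γ × M => φ w.1 w.2)) {t : Γ → M} (ht : Tm t) :
    Df (fun w => φ w (t w)) := by
  have h1 := ht.out
  exact (inferInstance : Df (fun w => ∃ y, y = t w ∧ φ w y)).congr (fun w => by simp)

theorem Pr.wk : Pr (fun w : Γ × M => w.1) := inferInstance

/-- Unary definable predicates. -/
class D1 (φ : M → Prop) : Prop where
  out : Df (fun w : Nil M × M => φ w.2)
/-- Binary definable predicates. -/
class D2 (φ : M → M → Prop) : Prop where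
  out : Df (fun w : (Nil M × M) × M => φ w.1.2 w.2)
/-- Ternary definable predicates. -/
class D3 (φ : M → M → M → Prop) : Prop where
  out : Df (fun w : ((Nil M × M) × M) × M => φ w.1.1.2 w.1.2 w.2)
/-- Definable predicates of four variables. -/
class D4 (φ : M → M → M → M → Prop) : Prop where
  out : Df (fun w : (((Nil M × M) × M) × M) × M => φ w.1.1.1.2 w.1.1.2 w.1.2 w.2)
/-- Definable predicates of five variables. -/
class D5 (φ : M → M → M → M → M → Prop) : Prop where
  out : Df (fun w : ((((Nil M × M) × M) × M) × M) × M =>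
    φ w.1.1.1.1.2 w.1.1.1.2 w.1.1.2 w.1.2 w.2)
/-- Definable predicates of six variables. -/
class D6 (φ : M → M → M → M → M → M → Prop) : Prop where
  out : Df (fun w : (((((Nil M × M) × M) × M) × M) × M) × M =>
    φ w.1.1.1.1.1.2 w.1.1.1.1.2 w.1.1.1.2 w.1.1.2 w.1.2 w.2)

theorem Df.sub1 {φ : Γ → M → Prop} {t : Γ → M} (ht : Tm t)
    (h : Df (fun w : Γ × M => φ w.1 w.2)) : Df (fun w => φ w (t w)) := Df.subst h ht

instance Df.d1 {φ : M → Prop} [h : D1 φ] {a : Γ → M} [ha : Tm a] : Df (fun w => φ (a w)) := by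
  refine Df.sub1 (φ := fun w x => φ x) ha ?_
  exact Df.pr (f := fun w : Γ × M => (Nil.mk, w.2)) (Pr.nil.pair V.v0) h.out

instance Df.d2 {φ : M → M → Prop} [h : D2 φ] {a b : Γ → M} [ha : Tm a] [hb : Tm b] :
    Df (fun w => φ (a w) (b w)) := by
  refine Df.sub1 (φ := fun w x => φ x (b w)) ha ?_
  refine Df.sub1 (φ := fun (w : Γ × M) x => φ w.2 x) (hb.pr Pr.wk) ?_
  exact Df.pr (f := fun w : (Γ × M) × M => ((Nil.mk, w.1.2), w.2))
    ((Pr.nil.pair (V.wk V.v0)).pair V.v0) h.out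

instance Df.d3 {φ : M → M → M → Prop} [h : D3 φ] {a b c : Γ → M} [ha : Tm a] [hb : Tm b]
    [hc : Tm c] : Df (fun w => φ (a w) (b w) (c w)) := by
  refine Df.sub1 (φ := fun w x => φ x (b w) (c w)) ha ?_
  refine Df.sub1 (φ := fun (w : Γ × M) x => φ w.2 x (c w.1)) (hb.pr Pr.wk) ?_
  refine Df.sub1 (φ := fun (w : (Γ × M) × M) x => φ w.1.2 w.2 x) ((hc.pr Pr.wk).pr Pr.wk) ?_
  exact Df.pr (f := fun w : ((Γ × M) × M) × M => (((Nil.mk, w.1.1.2), w.1.2), w.2))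
    (((Pr.nil.pair (V.wk (V.wk V.v0))).pair (V.wk V.v0)).pair V.v0) h.out

instance Df.d4 {φ : M → M → M → M → Prop} [h : D4 φ] {a b c d : Γ → M} [ha : Tm a] [hb : Tm b]
    [hc : Tm c] [hd : Tm d] : Df (fun w => φ (a w) (b w) (c w) (d w)) := by
  refine Df.sub1 (φ := fun w x => φ x (b w) (c w) (d w)) ha ?_
  refine Df.sub1 (φ := fun (w : Γ × M) x => φ w.2 x (c w.1) (d w.1)) (hb.pr Pr.wk) ?_
  refine Df.sub1 (φ := fun (w : (Γ × M) × M) x => φ w.1.2 w.2 x (d w.1.1)) ((hc.pr Pr.wk).pr Pr.wk) ?_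
  refine Df.sub1 (φ := fun (w : ((Γ × M) × M) × M) x => φ w.1.1.2 w.1.2 w.2 x)
    (((hd.pr Pr.wk).pr Pr.wk).pr Pr.wk) ?_
  exact Df.pr (f := fun w : (((Γ × M) × M) × M) × M =>
      ((((Nil.mk, w.1.1.1.2), w.1.1.2), w.1.2), w.2))
    ((((Pr.nil.pair (V.wk (V.wk (V.wk V.v0)))).pair (V.wk (V.wk V.v0))).pair (V.wk V.v0)).pair V.v0)
    h.out

instance Df.d5 {φ : M → M → M → M → M → Prop} [h : D5 φ] {a b c d e : Γ → M} [ha : Tm a] [hb : Tm b]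
    [hc : Tm c] [hd : Tm d] [he : Tm e] : Df (fun w => φ (a w) (b w) (c w) (d w) (e w)) := by
  refine Df.sub1 (φ := fun w x => φ x (b w) (c w) (d w) (e w)) ha ?_
  refine Df.sub1 (φ := fun (w : Γ × M) x => φ w.2 x (c w.1) (d w.1) (e w.1)) (hb.pr Pr.wk) ?_
  refine Df.sub1 (φ := fun (w : (Γ × M) × M) x => φ w.1.2 w.2 x (d w.1.1) (e w.1.1))
    ((hc.pr Pr.wk).pr Pr.wk) ?_
  refine Df.sub1 (φ := fun (w : ((Γ × M) × M) × M) x => φ w.1.1.2 w.1.2 w.2 x (e w.1.1.1))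
    (((hd.pr Pr.wk).pr Pr.wk).pr Pr.wk) ?_
  refine Df.sub1 (φ := fun (w : (((Γ × M) × M) × M) × M) x => φ w.1.1.1.2 w.1.1.2 w.1.2 w.2 x)
    ((((he.pr Pr.wk).pr Pr.wk).pr Pr.wk).pr Pr.wk) ?_
  exact Df.pr (f := fun w : ((((Γ × M) × M) × M) × M) × M =>
      (((((Nil.mk, w.1.1.1.1.2), w.1.1.1.2), w.1.1.2), w.1.2), w.2))
    (((((Pr.nil.pair (V.wk (V.wk (V.wk (V.wk V.v0))))).pair (V.wk (V.wk (V.wk V.v0)))).pair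
      (V.wk (V.wk V.v0))).pair (V.wk V.v0)).pair V.v0) h.out

instance Df.d6 {φ : M → M → M → M → M → M → Prop} [h : D6 φ] {a b c d e f : Γ → M} [ha : Tm a]
    [hb : Tm b] [hc : Tm c] [hd : Tm d] [he : Tm e] [hf : Tm f] :
    Df (fun w => φ (a w) (b w) (c w) (d w) (e w) (f w)) := by
  refine Df.sub1 (φ := fun w x => φ x (b w) (c w) (d w) (e w) (f w)) ha ?_
  refine Df.sub1 (φ := fun (w : Γ × M) x => φ w.2 x (c w.1) (d w.1) (e w.1) (f w.1)) (hb.pr Pr.wk) ?_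
  refine Df.sub1 (φ := fun (w : (Γ × M) × M) x => φ w.1.2 w.2 x (d w.1.1) (e w.1.1) (f w.1.1))
    ((hc.pr Pr.wk).pr Pr.wk) ?_
  refine Df.sub1 (φ := fun (w : ((Γ × M) × M) × M) x => φ w.1.1.2 w.1.2 w.2 x (e w.1.1.1) (f w.1.1.1))
    (((hd.pr Pr.wk).pr Pr.wk).pr Pr.wk) ?_
  refine Df.sub1 (φ := fun (w : (((Γ × M) × M) × M) × M) x =>
    φ w.1.1.1.2 w.1.1.2 w.1.2 w.2 x (f w.1.1.1.1)) ((((he.pr Pr.wk).pr Pr.wk).pr Pr.wk).pr Pr.wk) ?_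
  refine Df.sub1 (φ := fun (w : ((((Γ × M) × M) × M) × M) × M) x =>
    φ w.1.1.1.1.2 w.1.1.1.2 w.1.1.2 w.1.2 w.2 x)
    (((((hf.pr Pr.wk).pr Pr.wk).pr Pr.wk).pr Pr.wk).pr Pr.wk) ?_
  exact Df.pr (f := fun w : (((((Γ × M) × M) × M) × M) × M) × M =>
      ((((((Nil.mk, w.1.1.1.1.1.2), w.1.1.1.1.2), w.1.1.1.2), w.1.1.2), w.1.2), w.2))
    ((((((Pr.nil.pair (V.wk (V.wk (V.wk (V.wk (V.wk V.v0)))))).pair (V.wk (V.wk (V.wk (V.wk V.v0))))).pair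
      (V.wk (V.wk (V.wk V.v0)))).pair (V.wk (V.wk V.v0))).pair (V.wk V.v0)).pair V.v0) h.out

instance : D2 (fun x y : M => x = y) :=
  ⟨Df.V_eq (V.wk V.v0) V.v0⟩
instance D2.mem : D2 (ZM.E : M → M → Prop) := ⟨Df.V_mem (V.wk V.v0) V.v0⟩
instance D2.eq : D2 (Eq : M → M → Prop) := ⟨Df.V_eq (V.wk V.v0) V.v0⟩

/-- Unary definable operations. -/
class T1 (g : M → M) : Prop where
  out : D2 (fun x y => y = g x)
/-- Binary definable operations. -/
class T2 (g : M → M → M) : Prop where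
  out : D3 (fun x y z => z = g x y)
/-- Ternary definable operations. -/
class T3 (g : M → M → M → M) : Prop where
  out : D4 (fun x y z v => v = g x y z)
/-- Definable operations of four variables. -/
class T4 (g : M → M → M → M → M) : Prop where
  out : D5 (fun x y z v t => t = g x y z v)

instance Tm.t1 {g : M → M} [h : T1 g] {a : Γ → M} [ha : Tm a] : Tm (fun w => g (a w)) := by
  have := h.out
  have h2 : Tm (fun w : Γ × M => a w.1) := ha.pr Pr.wk
  exact ⟨Df.d2 (φ := fun x y => y = g x) (a := fun w : Γ × M => a w.1) (b := fun w => w.2)⟩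
instance Tm.t2 {g : M → M → M} [h : T2 g] {a b : Γ → M} [ha : Tm a] [hb : Tm b] :
    Tm (fun w => g (a w) (b w)) := by
  have := h.out
  have h2 : Tm (fun w : Γ × M => a w.1) := ha.pr Pr.wk
  have h3 : Tm (fun w : Γ × M => b w.1) := hb.pr Pr.wk
  exact ⟨Df.d3 (φ := fun x y z => z = g x y) (a := fun w : Γ × M => a w.1) (b := fun w => b w.1)
    (c := fun w => w.2)⟩
instance Tm.t3 {g : M → M → M → M} [h : T3 g] {a b c : Γ → M} [ha : Tm a] [hb : Tm b] [hc : Tm c] :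
    Tm (fun w => g (a w) (b w) (c w)) := by
  have := h.out
  have h2 : Tm (fun w : Γ × M => a w.1) := ha.pr Pr.wk
  have h3 : Tm (fun w : Γ × M => b w.1) := hb.pr Pr.wk
  have h4 : Tm (fun w : Γ × M => c w.1) := hc.pr Pr.wk
  exact ⟨Df.d4 (φ := fun x y z t => t = g x y z) (a := fun w : Γ × M => a w.1) (b := fun w => b w.1)
    (c := fun w => c w.1) (d := fun w => w.2)⟩
instance Tm.t4 {g : M → M → M → M → M} [h : T4 g] {a b c d : Γ → M} [ha : Tm a] [hb : Tm b]
    [hc : Tm c] [hd : Tm d] : Tm (fun w => g (a w) (b w) (c w) (d w)) := by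
  have := h.out
  have h2 : Tm (fun w : Γ × M => a w.1) := ha.pr Pr.wk
  have h3 : Tm (fun w : Γ × M => b w.1) := hb.pr Pr.wk
  have h4 : Tm (fun w : Γ × M => c w.1) := hc.pr Pr.wk
  have h5 : Tm (fun w : Γ × M => d w.1) := hd.pr Pr.wk
  exact ⟨Df.d5 (φ := fun x y z s t => t = g x y z s) (a := fun w : Γ × M => a w.1)
    (b := fun w => b w.1) (c := fun w => c w.1) (d := fun w => d w.1) (e := fun w => w.2)⟩

instance (priority := 500) Df.wk {Δ : Type u} [Ctx M Δ] {f : Γ → Δ} [h : Pr f] {φ : Δ → Prop} [hφ : Df φ] :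
    Df (fun w => φ (f w)) := Df.pr h hφ
instance (priority := 500) Tm.wk {Δ : Type u} [Ctx M Δ] {f : Γ → Δ} [h : Pr f] {t : Δ → M} [ht : Tm t] :
    Tm (fun w => t (f w)) := Tm.pr h ht
instance (priority := 500) Df.wks {Δ : Type u} [Ctx M Δ] {f : Γ → Δ} [h : Pr f] {φ : Δ → M → Prop}
    [hφ : Df (fun w : Δ × M => φ w.1 w.2)] {t : Γ → M} [ht : Tm t] :
    Df (fun w => φ (f w) (t w)) :=
  Df.sub1 ht (Df.pr (f := fun w : Γ × M => (f w.1, w.2))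
    (Pr.pair ⟨fun s hs => Or.inr ⟨_, h.out s hs, rfl⟩⟩ (Or.inl rfl)) hφ)

theorem Tm.mk' {t : Γ → M} (φ : Γ → M → Prop) [h : Df (fun w : Γ × M => φ w.1 w.2)]
    (e : ∀ w y, y = t w ↔ φ w y) : Tm t := ⟨h.congr fun w => (e w.1 w.2).symm⟩

/-- A binary operation is definable as soon as its graph is. -/
theorem T1.mk' {g : M → M} (φ : M → M → Prop) [h : D2 φ] (e : ∀ x y, y = g x ↔ φ x y) : T1 g :=
  ⟨⟨h.out.congr fun w => (e _ _).symm⟩⟩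
theorem T2.mk' {g : M → M → M} (φ : M → M → M → Prop) [h : D3 φ]
    (e : ∀ x y z, z = g x y ↔ φ x y z) : T2 g :=
  ⟨⟨h.out.congr fun w => (e _ _ _).symm⟩⟩
theorem T3.mk' {g : M → M → M → M} (φ : M → M → M → M → Prop) [h : D4 φ]
    (e : ∀ x y z v, v = g x y z ↔ φ x y z v) : T3 g :=
  ⟨⟨h.out.congr fun w => (e _ _ _ _).symm⟩⟩
theorem T1.of {g : M → M} (h : Tm (fun w : Nil M × M => g w.2)) : T1 g := ⟨⟨h.out⟩⟩
theorem T2.of {g : M → M → M} (h : Tm (fun w : (Nil M × M) × M => g w.1.2 w.2)) : T2 g := ⟨⟨h.out⟩⟩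
theorem T3.of {g : M → M → M → M} (h : Tm (fun w : ((Nil M × M) × M) × M => g w.1.1.2 w.1.2 w.2)) :
    T3 g := ⟨⟨h.out⟩⟩
theorem T4.of {g : M → M → M → M → M}
    (h : Tm (fun w : (((Nil M × M) × M) × M) × M => g w.1.1.1.2 w.1.1.2 w.1.2 w.2)) : T4 g := ⟨⟨h.out⟩⟩

open ZF
local notation "𝓔" => (ZM.E : M → M → Prop)
instance : D1 (IsEmptySet 𝓔) := ⟨by unfold IsEmptySet; infer_instance⟩
instance : D3 (IsPairOf 𝓔) := ⟨by unfold IsPairOf; infer_instance⟩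
instance : D3 (IsOPairOf 𝓔) := ⟨by unfold IsOPairOf; infer_instance⟩
instance : D2 (ZF.Sub 𝓔) := ⟨by unfold ZF.Sub; infer_instance⟩
instance : D1 (IsTransitiveSet 𝓔) := ⟨by unfold IsTransitiveSet; infer_instance⟩
instance : D1 (IsOrdinal 𝓔) := ⟨by unfold IsOrdinal; infer_instance⟩
instance : D2 (IsSuccOf 𝓔) := ⟨by unfold IsSuccOf; infer_instance⟩
instance : D1 (IsOmega 𝓔) := ⟨by unfold IsOmega; infer_instance⟩
instance : D3 (PairMem 𝓔) := ⟨by unfold PairMem; infer_instance⟩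
instance : D3 (IsFuncFromTo 𝓔) := ⟨by unfold IsFuncFromTo; infer_instance⟩
instance : D3 (IsInjFromTo 𝓔) := ⟨by unfold IsInjFromTo; infer_instance⟩
instance : D2 (CardLE 𝓔) := ⟨by unfold CardLE; infer_instance⟩
instance : D2 (CardLT 𝓔) := ⟨by unfold CardLT; infer_instance⟩
instance : D1 (IsCardinal 𝓔) := ⟨by unfold IsCardinal; infer_instance⟩
instance : D2 (IsPowersetOf 𝓔) := ⟨by unfold IsPowersetOf; infer_instance⟩
instance : D3 (IsCofinalIn 𝓔) := ⟨by unfold IsCofinalIn; infer_instance⟩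
instance : D1 (ZF.IsRegular 𝓔) := ⟨by unfold ZF.IsRegular; infer_instance⟩
instance : D1 (IsStrongLimit 𝓔) := ⟨by unfold IsStrongLimit; infer_instance⟩
instance : D1 (IsUncountable 𝓔) := ⟨by unfold IsUncountable; infer_instance⟩
instance : D1 (IsInaccessible 𝓔) := ⟨by unfold IsInaccessible; infer_instance⟩

end Calculus
end W6
namespace W6
section SetOps
variable {M : Type u} [ZM M] {Γ : Type u} [Ctx M Γ]
open ZF
local notation "𝓔" => (ZM.E : M → M → Prop)

theorem ext {x y : M} (h : ∀ z, z ε x ↔ z ε y) : x = y := (ZM.zfc (M := M)).ext x y h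

theorem toBdd {α : Type} [Finite α] (ψ : memLang.Formula α) {m : ℕ} (g : α → Fin m) :
    ∃ φ : memLang.BoundedFormula Empty m, ∀ xs : Fin m → M, RealizeIn 𝓔 φ xs ↔
      ψ.Realize (fun i => xs (g i)) := by
  refine ⟨BoundedFormula.relabel (n := m) (fun i => Sum.inr (g i)) ψ, fun xs => ?_⟩
  unfold RealizeIn
  have := BoundedFormula.realize_relabel (M := M) (L := memLang) (φ := ψ) (m := m)
    (g := fun i => (Sum.inr (g i) : Empty ⊕ Fin m)) (v := fun e : Empty => e.elim) (xs := xs)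
  refine this.trans ?_
  unfold Formula.Realize
  apply iff_of_eq
  congr 1
  exact Subsingleton.elim _ _

theorem sep_ex (a : M) (φ : M → Prop) [h : Df (fun w : Nil M × M => φ w.2)] :
    ∃ b, ∀ x, x ε b ↔ x ε a ∧ φ x := by
  classical
  obtain ⟨α, _, ψ, ts, ht, hf⟩ := h.out
  obtain ⟨n, ⟨e⟩⟩ := Finite.exists_equiv_fin α
  have hc : ∀ i, ∃ g : Fin (n+1), ∃ p : M, ∀ x y (xs : Fin n → M), xs (e i) = p →
      (Fin.snoc xs x : Fin (n+1) → M) g = ts i (y, x) := by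
    intro i
    rcases ht i with h | ⟨s, ⟨m, hm⟩, h⟩
    · exact ⟨Fin.last n, a, fun x y xs _ => by rw [Fin.snoc_last, h]⟩
    · exact ⟨(e i).castSucc, m, fun x y xs hx => by rw [Fin.snoc_castSucc, h, hx, hm]⟩
  choose g p hgp using hc
  obtain ⟨χ, hχ⟩ := toBdd (M := M) ψ g
  obtain ⟨b, hb⟩ := (ZM.zfc (M := M)).sep n χ (fun j => p (e.symm j)) a
  refine ⟨b, fun x => ?_⟩
  rw [hb, hχ]
  have : φ x ↔ ψ.Realize (fun i => ts i (Nil.mk, x)) := hf (Nil.mk, x)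
  rw [this]
  have : (fun i => (Fin.snoc (fun j => p (e.symm j)) x : Fin (n+1) → M) (g i)) =
    fun i => ts i (Nil.mk, x) := by
    funext i
    exact hgp i x Nil.mk _ (by simp)
  rw [this]

theorem coll (a : M) (φ : M → M → Prop) [h : Df (fun w : (Nil M × M) × M => φ w.1.2 w.2)]
    (H : ∀ x, x ε a → ∃ y, φ x y) : ∃ b, ∀ x, x ε a → ∃ y, y ε b ∧ φ x y := by
  classical
  obtain ⟨α, _, ψ, ts, ht, hf⟩ := h.out
  obtain ⟨n, ⟨e⟩⟩ := Finite.exists_equiv_fin α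
  have hc : ∀ i, ∃ g : Fin (n+2), ∃ p : M, ∀ x y z (xs : Fin n → M), xs (e i) = p →
      (Fin.snoc (Fin.snoc xs x : Fin (n+1) → M) y : Fin (n+2) → M) g = ts i ((z, x), y) := by
    intro i
    rcases ht i with h | ⟨s, h', h⟩
    · exact ⟨Fin.last _, a, fun x y z xs _ => by rw [Fin.snoc_last, h]⟩
    rcases h' with h' | ⟨s', ⟨m, hm⟩, h'⟩
    · exact ⟨(Fin.last n).castSucc, a, fun x y z xs hx => by
        rw [Fin.snoc_castSucc, Fin.snoc_last, h, h']⟩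
    · exact ⟨(e i).castSucc.castSucc, m, fun x y z xs hx => by
        rw [Fin.snoc_castSucc, Fin.snoc_castSucc, h, h', hx, hm]⟩
  choose g p hgp using hc
  obtain ⟨χ, hχ⟩ := toBdd (M := M) ψ g
  have key : ∀ x y, RealizeIn 𝓔 χ (Fin.snoc (Fin.snoc (fun j => p (e.symm j)) x : Fin (n+1) → M) y) ↔ φ x y := by
    intro x y
    rw [hχ]
    have : φ x y ↔ ψ.Realize (fun i => ts i ((Nil.mk, x), y)) := hf ((Nil.mk, x), y)
    rw [this]
    have : (fun i => (Fin.snoc (Fin.snoc (fun j => p (e.symm j)) x : Fin (n+1) → M) y : Fin (n+2) → M) (g i)) =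
      fun i => ts i ((Nil.mk, x), y) := by
      funext i
      exact hgp i x y Nil.mk _ (by simp)
    rw [this]
  have := (ZM.zfc (M := M)).coll n χ (fun j => p (e.symm j)) a
  simp only [key] at this
  exact this H

/-- A default element. -/
noncomputable def dft : M := (ZM.zfc (M := M)).infinity.choose

open Classical in
/-- The set whose elements are exactly the `x` with `φ x`, when there is one. -/
noncomputable def cpr (φ : M → Prop) : M :=
  if h : ∃ b, ∀ x, x ε b ↔ φ x then h.choose else dft

theorem mem_cpr {φ : M → Prop} (h : ∃ b, ∀ x, x ε b ↔ φ x) (x : M) : x ε cpr φ ↔ φ x := by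
  unfold cpr; rw [dif_pos h]; exact h.choose_spec x

instance Tm.cpr {φ : Γ → M → Prop} [h : Df (fun w : Γ × M => φ w.1 w.2)] :
    Tm (fun w => cpr (φ w)) := by
  have hd : Df (fun w : Γ × M => (∀ x, x ε w.2 ↔ φ w.1 x) ∨
      ((¬ ∃ b, ∀ x, x ε b ↔ φ w.1 x) ∧ w.2 = dft)) := inferInstance
  refine @Tm.mk' _ _ _ _ _ (fun w y => (∀ x, x ε y ↔ φ w x) ∨ ((¬ ∃ b, ∀ x, x ε b ↔ φ w x) ∧
    y = dft)) hd (fun w y => ?_)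
  by_cases h : ∃ b, ∀ x, x ε b ↔ φ w x
  · simp only [h, not_true, false_and, or_false]
    constructor
    · rintro rfl; exact mem_cpr h
    · intro h'; exact ext fun z => by rw [h', mem_cpr h]
  · have : ¬ ∀ x, x ε y ↔ φ w x := fun h' => h ⟨y, h'⟩
    simp [W6.cpr, h, this]

/-- Separation. -/
noncomputable abbrev sep (a : M) (φ : M → Prop) : M := cpr (fun x => x ε a ∧ φ x)

theorem mem_sep {a : M} {φ : M → Prop} [h : Df (fun w : Nil M × M => φ w.2)] {x : M} :
    x ε sep a φ ↔ x ε a ∧ φ x := mem_cpr (sep_ex a φ) x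

/-- The set of `x` with `φ x`, given a bound. -/
theorem mem_cpr_of {φ : M → Prop} [h : Df (fun w : Nil M × M => φ w.2)] (a : M)
    (ha : ∀ x, φ x → x ε a) {x : M} : x ε cpr φ ↔ φ x :=
  mem_cpr ⟨sep a φ, fun x => by rw [mem_sep]; exact ⟨fun h => h.2, fun h => ⟨ha x h, h⟩⟩⟩ x

noncomputable def pr (a b : M) : M := cpr (fun x => x = a ∨ x = b)
theorem mem_pr {a b x : M} : x ε pr a b ↔ x = a ∨ x = b :=
  mem_cpr ((ZM.zfc (M := M)).pairing a b) x
instance : T2 (pr : M → M → M) := .of (by unfold pr; infer_instance)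

noncomputable def op (a b : M) : M := pr (pr a a) (pr a b)
instance : T2 (op : M → M → M) := .of (by unfold op; infer_instance)

theorem isPair_pr {p a b : M} : IsPairOf 𝓔 p a b ↔ p = pr a b :=
  ⟨fun h => ext fun z => by rw [h, mem_pr], fun h x => by rw [h, mem_pr]⟩
theorem isOPair_op {p a b : M} : IsOPairOf 𝓔 p a b ↔ p = op a b := by
  unfold IsOPairOf; simp only [isPair_pr]
  constructor
  · rintro ⟨s, t, rfl, rfl, rfl⟩; rfl
  · rintro rfl; exact ⟨_, _, rfl, rfl, rfl⟩
theorem op_inj {a b c d : M} : op a b = op c d ↔ a = c ∧ b = d := by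
  constructor
  · intro h
    have h1 : ∀ x, x ε op a b ↔ x ε op c d := fun x => by rw [h]
    simp only [op, mem_pr] at h1
    have key : ∀ {a b c d : M}, pr a b = pr c d → (a = c ∨ a = d) ∧ (b = c ∨ b = d) ∧ (c = a ∨ c = b) ∧ (d = a ∨ d = b) := by
      intro a b c d h
      exact ⟨mem_pr.1 (h ▸ mem_pr.2 (Or.inl rfl)), mem_pr.1 (h ▸ mem_pr.2 (Or.inr rfl)),
        mem_pr.1 (h ▸ mem_pr.2 (Or.inl rfl)), mem_pr.1 (h ▸ mem_pr.2 (Or.inr rfl))⟩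
    have hac : a = c := by
      rcases (h1 (pr a a)).1 (Or.inl rfl) with h | h
      · rcases key h with ⟨h, _⟩; tauto
      · rcases key h with ⟨_, _, h, _⟩; rcases h with h | h <;> exact h.symm
    subst hac
    refine ⟨rfl, ?_⟩
    have hb := (h1 (pr a b)).1 (Or.inr rfl)
    have hd := (h1 (pr a d)).2 (Or.inr rfl)
    rcases hb with hb | hb
    · obtain ⟨_, hb, _⟩ := key hb
      have : b = a := by tauto
      subst this
      rcases hd with hd | hd
      · obtain ⟨_, hd, _⟩ := key hd; rcases hd with h | h <;> exact h.symm
      · obtain ⟨_, hd, _⟩ := key hd; rcases hd with h | h <;> exact h.symm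
    · obtain ⟨_, hb1, _, hb2⟩ := key hb
      rcases hb1 with h | h
      · rcases hb2 with h' | h'
        · rw [h, h']
        · exact h'.symm
      · exact h
  · rintro ⟨rfl, rfl⟩; rfl
theorem pairMem {r x y : M} : PairMem 𝓔 r x y ↔ op x y ε r := by
  unfold PairMem; simp only [isOPair_op]
  exact ⟨fun ⟨p, h, e⟩ => e ▸ h, fun h => ⟨_, h, rfl⟩⟩

noncomputable def emp : M := cpr (fun _ => False)
theorem not_mem_emp {x : M} : ¬ x ε (emp : M) := by
  unfold emp; rw [mem_cpr_of (φ := fun _ => False) dft]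
  · simp
  · simp
noncomputable def sU (a : M) : M := cpr (fun x => ∃ y, y ε a ∧ x ε y)
theorem mem_sU {a x : M} : x ε sU a ↔ ∃ y, y ε a ∧ x ε y := mem_cpr ((ZM.zfc (M := M)).union a) x
instance : T1 (sU : M → M) := .of (by unfold sU; infer_instance)
noncomputable def un (a b : M) : M := sU (pr a b)
theorem mem_un {a b x : M} : x ε un a b ↔ x ε a ∨ x ε b := by
  unfold un; rw [mem_sU]; simp only [mem_pr]
  constructor
  · rintro ⟨y, rfl | rfl, h⟩ <;> tauto
  · rintro (h | h)
    · exact ⟨a, Or.inl rfl, h⟩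
    · exact ⟨b, Or.inr rfl, h⟩
instance : T2 (un : M → M → M) := .of (by unfold un; infer_instance)
noncomputable def sing (a : M) : M := pr a a
theorem mem_sing {a x : M} : x ε sing a ↔ x = a := by unfold sing; rw [mem_pr]; simp
instance : T1 (sing : M → M) := .of (by unfold sing; infer_instance)
noncomputable def suc (a : M) : M := un a (sing a)
theorem mem_suc {a x : M} : x ε suc a ↔ x ε a ∨ x = a := by unfold suc; rw [mem_un, mem_sing]
instance : T1 (suc : M → M) := .of (by unfold suc; infer_instance)
/-- Internal inclusion. -/
def Sb (a b : M) : Prop := ∀ x, x ε a → x ε b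
instance : D2 (Sb : M → M → Prop) := ⟨by unfold Sb; infer_instance⟩
noncomputable def pw (a : M) : M := cpr (fun x => Sb x a)
theorem mem_pw {a x : M} : x ε pw a ↔ Sb x a := mem_cpr ((ZM.zfc (M := M)).power a) x
instance : T1 (pw : M → M) := .of (by unfold pw; infer_instance)
theorem Sb.antisymm {a b : M} (h : Sb a b) (h' : Sb b a) : a = b := ext fun z => ⟨h z, h' z⟩

noncomputable def prod (a b : M) : M := cpr (fun p => ∃ x y, x ε a ∧ y ε b ∧ p = op x y)
instance : T2 (prod : M → M → M) := .of (by unfold prod; infer_instance)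
theorem mem_prod {a b p : M} : p ε prod a b ↔ ∃ x y, x ε a ∧ y ε b ∧ p = op x y := by
  refine mem_cpr_of (φ := fun p => ∃ x y, x ε a ∧ y ε b ∧ p = op x y) (pw (pw (un a b))) ?_
  rintro p ⟨x, y, hx, hy, rfl⟩
  rw [mem_pw]; intro z hz; rw [mem_pw]; intro t ht
  unfold op at hz; rw [mem_un]
  rcases mem_pr.1 hz with rfl | rfl <;> rcases mem_pr.1 ht with rfl | rfl <;> simp [*]
theorem op_mem_prod {a b x y : M} : op x y ε prod a b ↔ x ε a ∧ y ε b := by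
  rw [mem_prod]; constructor
  · rintro ⟨x', y', hx, hy, h⟩; rw [op_inj] at h; obtain ⟨rfl, rfl⟩ := h; exact ⟨hx, hy⟩
  · rintro ⟨h, h'⟩; exact ⟨x, y, h, h', rfl⟩

/-- The image of a set under an operation. -/
noncomputable abbrev img (a : M) (g : M → M) : M := cpr (fun y => ∃ x, x ε a ∧ y = g x)
theorem mem_img {a : M} {g : M → M} [h : Tm (fun w : Nil M × M => g w.2)] {y : M} :
    y ε img a g ↔ ∃ x, x ε a ∧ y = g x := by
  have h2 : Df (fun w : (Nil M × M) × M => w.2 = g w.1.2) := h.out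
  obtain ⟨b, hb⟩ := coll a (fun x y => y = g x) (fun x _ => ⟨g x, rfl⟩)
  have : Tm (fun w : (Nil M × M) × M => g w.2) :=
    Tm.pr (f := fun w : (Nil M × M) × M => (Nil.mk, w.2)) (Pr.nil.pair V.v0) h
  refine mem_cpr_of (φ := fun y => ∃ x, x ε a ∧ y = g x) b ?_
  rintro y ⟨x, hx, rfl⟩
  obtain ⟨y, hy, rfl⟩ := hb x hx
  exact hy
/-- The restriction of a definable operation to a set, as a set of ordered pairs. -/
noncomputable def lam (a : M) (g : M → M) : M := img a (fun x => op x (g x))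
instance Tm.lam {a : Γ → M} {g : Γ → M → M} [Tm a] [h : Tm (fun w : Γ × M => g w.1 w.2)] :
    Tm (fun w => lam (a w) (g w)) := by
  have : Tm (fun w : (Γ × M) × M => g w.1.1 w.2) :=
    Tm.pr (f := fun w : (Γ × M) × M => (w.1.1, w.2)) (Pr.pair inferInstance V.v0) h
  unfold W6.lam img; infer_instance
theorem op_mem_lam {a : M} {g : M → M} [h : Tm (fun w : Nil M × M => g w.2)] {x y : M} :
    op x y ε lam a g ↔ x ε a ∧ y = g x := by
  unfold lam; rw [mem_img]
  constructor
  · rintro ⟨x', hx, e⟩; rw [op_inj] at e; obtain ⟨rfl, rfl⟩ := e; exact ⟨hx, rfl⟩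
  · rintro ⟨hx, rfl⟩; exact ⟨x, hx, rfl⟩
theorem mem_lam {a : M} {g : M → M} [h : Tm (fun w : Nil M × M => g w.2)] {p : M} :
    p ε lam a g ↔ ∃ x, x ε a ∧ p = op x (g x) := by
  unfold lam; rw [mem_img]
/-- Application of a set of ordered pairs. -/
noncomputable def app (f x : M) : M := cpr (fun z => ∃ y, z ε y ∧ op x y ε f)
instance : T2 (app : M → M → M) := .of (by unfold app; infer_instance)
theorem app_eq {f x y : M} (h : op x y ε f) (hu : ∀ y', op x y' ε f → y' = y) : app f x = y := by
  apply ext; intro z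
  unfold app
  have hd : Df (fun w : Nil M × M => ∃ y, w.2 ε y ∧ op x y ε f) := inferInstance
  rw [mem_cpr_of (φ := fun z => ∃ y, z ε y ∧ op x y ε f) (h := hd) y]
  · exact ⟨fun ⟨y', hz, hy⟩ => hu y' hy ▸ hz, fun hz => ⟨y, hz, h⟩⟩
  · rintro z ⟨y', hz, hy⟩; exact hu y' hy ▸ hz
theorem app_lam {a : M} {g : M → M} [h : Tm (fun w : Nil M × M => g w.2)] {x : M} (hx : x ε a) :
    app (lam a g) x = g x :=
  app_eq (op_mem_lam.2 ⟨hx, rfl⟩) (fun y' h' => (op_mem_lam.1 h').2)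
theorem lam_congr {a : M} {g g' : M → M} (h : ∀ x, x ε a → g x = g' x) : lam a g = lam a g' := by
  unfold lam img
  congr 1; funext y; apply propext
  constructor <;> rintro ⟨x, hx, rfl⟩ <;> exact ⟨x, hx, by simp only [h x hx]⟩

/-- `f` is a function with domain `a`. -/
def Fn (f a : M) : Prop := f = lam a (fun x => app f x)
instance : D2 (Fn : M → M → Prop) := ⟨by unfold Fn; infer_instance⟩
theorem Fn.lam {a : M} {g : M → M} [h : Tm (fun w : Nil M × M => g w.2)] : Fn (lam a g) a := by
  unfold Fn; exact lam_congr fun x hx => (app_lam hx).symm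
theorem Fn.ext {f g a : M} (hf : Fn f a) (hg : Fn g a) (h : ∀ x, x ε a → app f x = app g x) : f = g := by
  rw [hf, hg]; exact lam_congr h
theorem Fn.op_mem {f a x y : M} (hf : Fn f a) : op x y ε f ↔ x ε a ∧ y = app f x := by
  conv_lhs => rw [hf]
  exact op_mem_lam
theorem isFunc_iff {f a b : M} : IsFuncFromTo 𝓔 f a b ↔ Fn f a ∧ ∀ x, x ε a → app f x ε b := by
  unfold IsFuncFromTo
  simp only [pairMem, isOPair_op]
  constructor
  · rintro ⟨h1, h2, h3⟩
    have h4 : ∀ x y, op x y ε f → app f x = y := fun x y h => app_eq h (fun y' h' => h3 x y' y h' h)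
    have h5 : ∀ p, p ε f → ∃ x, x ε a ∧ p = op x (app f x) ∧ app f x ε b := by
      intro p hp; obtain ⟨x, y, hx, hy, rfl⟩ := h1 p hp
      have := h4 x y hp
      exact ⟨x, hx, by rw [this], this ▸ hy⟩
    refine ⟨W6.ext fun p => ?_, fun x hx => ?_⟩
    · rw [mem_lam]
      constructor
      · intro hp; obtain ⟨x, hx, h, _⟩ := h5 p hp; exact ⟨x, hx, h⟩
      · rintro ⟨x, hx, rfl⟩; obtain ⟨y, hy⟩ := h2 x hx; rw [h4 x y hy]; exact hy
    · obtain ⟨y, hy⟩ := h2 x hx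
      obtain ⟨x', hx', h, hb⟩ := h5 _ hy
      rw [op_inj] at h; rw [h.1]; exact hb
  · rintro ⟨h1, h2⟩
    refine ⟨fun p hp => ?_, fun x hx => ⟨app f x, h1.op_mem.2 ⟨hx, rfl⟩⟩, fun x y y' h h' => ?_⟩
    · rw [h1, mem_lam] at hp; obtain ⟨x, hx, rfl⟩ := hp; exact ⟨x, _, hx, h2 x hx, rfl⟩
    · rw [(h1.op_mem.1 h).2, (h1.op_mem.1 h').2]
theorem isInj_iff {f a b : M} : IsInjFromTo 𝓔 f a b ↔ Fn f a ∧ (∀ x, x ε a → app f x ε b) ∧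
    ∀ x x', x ε a → x' ε a → app f x = app f x' → x = x' := by
  unfold IsInjFromTo
  simp only [pairMem, isFunc_iff, and_assoc]
  refine and_congr_right fun h => and_congr_right fun h' => ⟨fun H x x' hx hx' e => ?_, fun H x x' y h1 h2 => ?_⟩
  · exact H x x' (app f x) (h.op_mem.2 ⟨hx, rfl⟩) (h.op_mem.2 ⟨hx', e⟩)
  · rw [h.op_mem] at h1 h2
    exact H x x' h1.1 h2.1 (h1.2.symm.trans h2.2)

/-- The axiom of choice, in relational form. -/
theorem ac (a : M) (φ : M → M → Prop) [h : Df (fun w : (Nil M × M) × M => φ w.1.2 w.2)]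
    (H : ∀ x, x ε a → ∃ y, φ x y) : ∃ f, Fn f a ∧ ∀ x, x ε a → φ x (app f x) := by
  obtain ⟨b, hb⟩ := coll a φ H
  have : D2 φ := ⟨h⟩
  let S : M → M := fun x => sep b (fun y => φ x y)
  have hS : ∀ x y, y ε S x ↔ y ε b ∧ φ x y := fun x y => mem_sep
  obtain ⟨f, hf1, hf2⟩ := (ZM.zfc (M := M)).choice (img a S) (by
    intro z hz; obtain ⟨x, hx, rfl⟩ := mem_img.1 hz
    obtain ⟨y, hy, h⟩ := hb x hx; exact ⟨y, (hS x y).2 ⟨hy, h⟩⟩)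
  simp only [pairMem] at hf1 hf2
  refine ⟨lam a (fun x => app f (S x)), Fn.lam, fun x hx => ?_⟩
  rw [app_lam hx]
  obtain ⟨y, hy, hyS⟩ := hf2 (S x) (mem_img.2 ⟨x, hx, rfl⟩)
  rw [app_eq hy (fun y' h' => hf1 _ _ _ h' hy)]
  exact ((hS x y).1 hyS).2

/-- Definite description. -/
noncomputable def the (φ : M → Prop) : M := sU (cpr φ)
instance Tm.the {φ : Γ → M → Prop} [h : Df (fun w : Γ × M => φ w.1 w.2)] :
    Tm (fun w => the (φ w)) := by unfold W6.the; infer_instance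
theorem the_eq {φ : M → Prop} {y : M} (h : φ y) (hu : ∀ z, φ z → z = y) : the φ = y := by
  have : ∃ b, ∀ x, x ε b ↔ φ x := ⟨sing y, fun x => by
    rw [mem_sing]; exact ⟨fun e => e ▸ h, hu x⟩⟩
  apply ext; intro z
  unfold the
  rw [mem_sU]; simp only [mem_cpr this]
  exact ⟨fun ⟨y', h1, h2⟩ => hu y' h1 ▸ h2, fun h1 => ⟨y, h, h1⟩⟩

open Classical in
instance Tm.ite {φ : Γ → Prop} {s t : Γ → M} [Df φ] [Tm s] [Tm t] :
    Tm (fun w => if φ w then s w else t w) :=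
  Tm.mk' (fun w y => (φ w ∧ y = s w) ∨ (¬ φ w ∧ y = t w)) fun w y => by
    by_cases h : φ w <;> simp [h]

end SetOps
end W6
namespace W6
section Ordinals
variable {M : Type u} [ZM M] {Γ : Type u} [Ctx M Γ]
open ZF
local notation "𝓔" => (ZM.E : M → M → Prop)

theorem eps_wf : WellFounded (ZM.E : M → M → Prop) := (ZM.zfc (M := M)).found
theorem eps_irrefl {x : M} (h : x ε x) : False := (eps_wf (M := M)).irrefl.irrefl x h
theorem eps_asymm {x y : M} (h : x ε y) (h' : y ε x) : False :=
  (eps_wf (M := M)).asymmetric x y h h'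
theorem eps_min {P : M → Prop} (h : ∃ x, P x) : ∃ x, P x ∧ ∀ y, y ε x → ¬ P y := by
  obtain ⟨m, hm, h'⟩ := (eps_wf (M := M)).has_min {x | P x} h
  exact ⟨m, hm, fun y hy hp => h' y hp hy⟩

/-- Ordinals of the model. -/
abbrev Ord (a : M) : Prop := IsOrdinal 𝓔 a

theorem _root_.ZF.IsOrdinal.mem {a x : M} (h : Ord a) (hx : x ε a) : Ord x :=
  ⟨h.2 x hx, fun y hy => h.2 y (h.1 x hx y hy)⟩
theorem _root_.ZF.IsOrdinal.trans {a b c : M} (h : Ord c) (hab : a ε b) (hbc : b ε c) : a ε c := h.1 b hbc a hab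
theorem _root_.ZF.IsOrdinal.sb {a x : M} (h : Ord a) (hx : x ε a) : Sb x a := h.1 x hx
theorem _root_.ZF.IsOrdinal.tri {a b : M} (ha : Ord a) (hb : Ord b) : a ε b ∨ a = b ∨ b ε a := by
  induction a using (eps_wf (M := M)).induction generalizing b with
  | _ a iha =>
  induction b using (eps_wf (M := M)).induction with
  | _ b ihb =>
  by_contra hn
  push Not at hn
  apply hn.2.1
  apply ext; intro z
  constructor
  · intro hz
    rcases iha z hz (ha.mem hz) hb with h | h | h
    · exact h
    · exact absurd (h ▸ hz) hn.2.2
    · exact absurd (ha.trans h hz) hn.2.2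
  · intro hz
    rcases ihb z hz (hb.mem hz) with h | h | h
    · exact absurd (hb.trans h hz) hn.1
    · exact absurd (h ▸ hz) hn.1
    · exact h
theorem _root_.ZF.IsOrdinal.sb_iff {a b : M} (ha : Ord a) (hb : Ord b) : Sb a b ↔ a ε b ∨ a = b := by
  constructor
  · intro h
    rcases ha.tri hb with h' | h' | h'
    · exact Or.inl h'
    · exact Or.inr h'
    · exact (eps_irrefl (h b h')).elim
  · rintro (h | rfl)
    · exact hb.sb h
    · exact fun x h => h
theorem _root_.ZF.IsOrdinal.lt_of_le {a b c : M} (hc : Ord c) (h : a ε b ∨ a = b) (h' : b ε c) : a ε c := by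
  rcases h with h | rfl
  · exact hc.trans h h'
  · exact h'
theorem _root_.ZF.IsOrdinal.lt_of_lt {a b c : M} (hc : Ord c) (h : a ε b) (h' : b ε c ∨ b = c) : a ε c := by
  rcases h' with h' | rfl
  · exact hc.trans h h'
  · exact h
theorem Ord.suc {a : M} (h : Ord a) : Ord (suc a) := by
  refine ⟨fun x hx y hy => ?_, fun x hx => ?_⟩
  · rw [mem_suc] at hx ⊢
    rcases hx with hx | rfl
    · exact Or.inl (h.trans hy hx)
    · exact Or.inl hy
  · rw [mem_suc] at hx
    rcases hx with hx | rfl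
    · exact h.2 x hx
    · exact h.1
theorem Ord.sU {a : M} (h : ∀ x, x ε a → Ord x) : Ord (sU a) := by
  refine ⟨fun x hx y hy => ?_, fun x hx => ?_⟩
  · rw [mem_sU] at hx ⊢; obtain ⟨z, hz, hx⟩ := hx
    exact ⟨z, hz, (h z hz).trans hy hx⟩
  · rw [mem_sU] at hx; obtain ⟨z, hz, hx⟩ := hx
    exact (h z hz).2 x hx
theorem Ord.emp : Ord (emp : M) := ⟨fun x hx => (not_mem_emp hx).elim, fun x hx => (not_mem_emp hx).elim⟩
theorem _root_.ZF.IsOrdinal.le_or_lt {a b : M} (ha : Ord a) (hb : Ord b) : (a ε b ∨ a = b) ∨ b ε a := by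
  rcases ha.tri hb with h | h | h <;> tauto
theorem _root_.ZF.IsOrdinal.min {P : M → Prop} {a : M} (ha : Ord a) (h : P a) :
    ∃ x, Ord x ∧ P x ∧ ∀ y, y ε x → ¬ P y := by
  obtain ⟨x, ⟨h1, h2⟩, h3⟩ := eps_min (P := fun x => Ord x ∧ P x) ⟨a, ha, h⟩
  exact ⟨x, h1, h2, fun y hy hp => h3 y hy ⟨h1.mem hy, hp⟩⟩
/-- A strict upper bound for a set of ordinals. -/
theorem ord_bdd (a : M) : ∃ β, Ord β ∧ ∀ x, x ε a → Ord x → x ε β := by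
  refine ⟨suc (sU (sep a (IsOrdinal 𝓔))), Ord.suc (Ord.sU fun x hx => (mem_sep.1 hx).2), fun x hx ho => ?_⟩
  have h1 : Ord (sU (sep a (IsOrdinal 𝓔))) := Ord.sU fun x hx => (mem_sep.1 hx).2
  rw [mem_suc, ← ho.sb_iff h1]
  intro z hz; rw [mem_sU]; exact ⟨x, mem_sep.2 ⟨hx, ho⟩, hz⟩

/-- The first infinite ordinal. -/
noncomputable def om : M := (ZM.zfc (M := M)).infinity.choose
theorem om_spec : IsOmega 𝓔 (om : M) := (ZM.zfc (M := M)).infinity.choose_spec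
theorem isSucc_iff {s a : M} : IsSuccOf 𝓔 s a ↔ s = suc a :=
  ⟨fun h => ext fun z => by rw [h, mem_suc], fun h x => by rw [h, mem_suc]⟩
theorem isEmpty_iff {a : M} : IsEmptySet 𝓔 a ↔ a = emp :=
  ⟨fun h => ext fun z => ⟨fun hz => (h z hz).elim, fun hz => (not_mem_emp hz).elim⟩,
    fun h x hx => not_mem_emp (h ▸ hx)⟩
theorem om_ord : Ord (om : M) := om_spec.1
theorem emp_om : emp ε (om : M) := by
  obtain ⟨z, hz, h⟩ := (om_spec (M := M)).2.1; rw [isEmpty_iff] at h; exact h ▸ hz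
theorem suc_om {n : M} (h : n ε om) : suc n ε om := by
  obtain ⟨s, hs, h⟩ := (om_spec (M := M)).2.2.1 n h; rw [isSucc_iff] at h; exact h ▸ hs
theorem om_ind {P : M → Prop} (h0 : P emp) (hs : ∀ n, n ε om → P n → P (suc n)) {n : M} (hn : n ε om) : P n := by
  induction n using (eps_wf (M := M)).induction with
  | _ n ih =>
  rcases (om_spec (M := M)).2.2.2 n hn with h | ⟨z, h⟩
  · rw [isEmpty_iff] at h; exact h ▸ h0
  · have : IsSuccOf 𝓔 n z := h.elim (fun h => h.1) id
    rw [isSucc_iff] at this; subst this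
    have hz : z ε suc z := mem_suc.2 (Or.inr rfl)
    exact hs z (om_ord.trans hz hn) (ih z hz (om_ord.trans hz hn))
theorem isOmega_iff {w : M} : IsOmega 𝓔 w ↔ w = om := by
  refine ⟨fun h => ?_, fun h => h ▸ om_spec⟩
  have h1 : Sb om w := fun n hn => om_ind (P := fun n => n ε w)
    (by obtain ⟨z, hz, h⟩ := h.2.1; rw [isEmpty_iff] at h; exact h ▸ hz)
    (fun n _ hn => by obtain ⟨s, hs, h⟩ := h.2.2.1 n hn; rw [isSucc_iff] at h; exact h ▸ hs) hn
  rcases (om_ord.sb_iff h.1).1 h1 with h2 | h2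
  · exfalso
    rcases h.2.2.2 om h2 with h3 | ⟨z, h3⟩
    · rw [isEmpty_iff] at h3; exact not_mem_emp (h3 ▸ emp_om)
    · have : IsSuccOf 𝓔 om z := h3.elim (fun h => h.1) id
      rw [isSucc_iff] at this
      have hz : z ε om := this ▸ mem_suc.2 (Or.inr rfl)
      have := suc_om hz
      rw [← ‹om = suc z›] at this
      exact eps_irrefl this
  · exact h2.symm

/-! ### Transfinite recursion -/

/-- Restriction of a function. -/
noncomputable def res (s b : M) : M := lam b (fun x => app s x)
instance : T2 (res : M → M → M) := .of (by unfold res; infer_instance)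
theorem res_fn {s b : M} : Fn (res s b) b := Fn.lam
theorem app_res {s b x : M} (h : x ε b) : app (res s b) x = app s x := by unfold res; exact app_lam h
theorem res_congr {s t b : M} (h : ∀ x, x ε b → app s x = app t x) : res s b = res t b := lam_congr h
theorem res_res {s a b : M} (h : Sb b a) : res (res s a) b = res s b :=
  res_congr fun x hx => app_res (h x hx)

/-- `trec G θ` is the function `s` on `θ` with `s β = G (s ↾ β)`. -/
noncomputable def trec (G : M → M) (θ : M) : M :=
  the (fun s => Fn s θ ∧ ∀ γ, γ ε θ → app s γ = G (res s γ))
instance Tm.trec {G : Γ → M → M} [h : Tm (fun w : Γ × M => G w.1 w.2)] {t : Γ → M} [Tm t] :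
    Tm (fun w => trec (G w) (t w)) := by
  have : Tm (fun w : ((Γ × M) × M) × M => G w.1.1.1 w.2) :=
    Tm.pr (f := fun w : ((Γ × M) × M) × M => (w.1.1.1, w.2)) (Pr.pair inferInstance V.v0) h
  have : Tm (fun w : (Γ × M) × M => G w.1.1 (res w.1.2 w.2)) := 
    ⟨Df.congr (φ := fun w : ((Γ × M) × M) × M => ∃ z, z = res w.1.1.2 w.1.2 ∧ w.2 = G w.1.1.1 z)
      (by
        have : Tm (fun w : (((Γ × M) × M) × M) × M => G w.1.1.1.1 w.2) :=
          Tm.pr (f := fun w : (((Γ × M) × M) × M) × M => (w.1.1.1.1, w.2)) (Pr.pair inferInstance V.v0) h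
        infer_instance) (fun w => by simp)⟩
  unfold W6.trec; infer_instance

theorem trec_spec (G : M → M) [h : Tm (fun w : Nil M × M => G w.2)] {θ : M} (hθ : Ord θ) :
    Fn (trec G θ) θ ∧ ∀ β, β ε θ → app (trec G θ) β = G (trec G β) := by
  have : T1 G := T1.of h
  have uniq : ∀ θ, Ord θ → ∀ s t, (∀ β, β ε θ → app s β = G (res s β)) →
      (∀ β, β ε θ → app t β = G (res t β)) → ∀ β, β ε θ → app s β = app t β := by
    intro θ hθ s t hs ht β
    induction β using (eps_wf (M := M)).induction with
    | _ β ih =>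
    intro hβ
    rw [hs β hβ, ht β hβ, res_congr fun x hx => ih x hx (hθ.trans hx hβ)]
  have key : ∀ θ, Ord θ → (∃ s, Fn s θ ∧ ∀ γ, γ ε θ → app s γ = G (res s γ)) →
      Fn (trec G θ) θ ∧ ∀ γ, γ ε θ → app (trec G θ) γ = G (res (trec G θ) γ) := by
    rintro β hβ ⟨s, hs⟩
    have : trec G β = s := the_eq (φ := fun s => Fn s β ∧ ∀ γ, γ ε β → app s γ = G (res s γ)) hs
      fun t ht => ht.1.ext hs.1 (uniq β hβ t s ht.2 hs.2)
    rw [this]; exact hs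
  have res_eq : ∀ β s, Ord β → Fn (trec G β) β → (∀ γ, γ ε β → app (trec G β) γ = G (res (trec G β) γ)) →
      (∀ γ, γ ε β → app s γ = G (res s γ)) → res s β = trec G β := by
    intro β s hβ h1 h2 h3
    refine res_fn.ext h1 fun γ hγ => ?_
    rw [app_res hγ]; exact uniq β hβ _ _ h3 h2 γ hγ
  have main : ∀ θ, Ord θ → Fn (trec G θ) θ ∧ ∀ γ, γ ε θ → app (trec G θ) γ = G (res (trec G θ) γ) := by
    intro θ hθ
    induction θ using (eps_wf (M := M)).induction with
    | _ θ ih =>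
    refine key θ hθ ⟨lam θ (fun β => G (trec G β)), Fn.lam, fun β hβ => ?_⟩
    rw [app_lam hβ]; congr 1
    have hF := ih β hβ (hθ.mem hβ)
    refine hF.1.ext res_fn fun γ hγ => ?_
    have hγ' := hθ.trans hγ hβ
    have hF' := ih γ hγ' (hθ.mem hγ')
    rw [app_res hγ, app_lam hγ', hF.2 γ hγ, res_eq γ _ (hθ.mem hγ') hF'.1 hF'.2]
    exact fun x hx => hF.2 x ((hθ.mem hβ).trans hx hγ)
  refine ⟨(main θ hθ).1, fun β hβ => ?_⟩
  rw [(main θ hθ).2 β hβ, res_eq β _ (hθ.mem hβ) (main β (hθ.mem hβ)).1 (main β (hθ.mem hβ)).2]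
  exact fun x hx => (main θ hθ).2 x (hθ.trans hx hβ)
theorem trec_res (G : M → M) [h : Tm (fun w : Nil M × M => G w.2)] {θ β : M} (hθ : Ord θ) (hβ : β ε θ) :
    res (trec G θ) β = trec G β := by
  refine res_fn.ext (trec_spec G (hθ.mem hβ)).1 fun γ hγ => ?_
  rw [app_res hγ, (trec_spec G hθ).2 γ (hθ.trans hγ hβ), (trec_spec G (hθ.mem hβ)).2 γ hγ]

/-- Recursive construction of a sequence in `Y` of length `θ`, where the next value is only
constrained by the relation `Φ` to the previous ones. -/
theorem rs {θ Y : M} (hθ : Ord θ) (Φ : M → M → M → Prop)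
    [hd : Df (fun w : ((Nil M × M) × M) × M => Φ w.1.1.2 w.1.2 w.2)]
    (H : ∀ β s, β ε θ → Fn s β → (∀ γ, γ ε β → app s γ ε Y ∧ Φ γ (res s γ) (app s γ)) →
      ∃ y, y ε Y ∧ Φ β s y) :
    ∃ s, Fn s θ ∧ ∀ γ, γ ε θ → app s γ ε Y ∧ Φ γ (res s γ) (app s γ) := by
  have h : D3 Φ := ⟨hd⟩
  obtain ⟨c, hc, hc'⟩ := ac (prod (suc θ) (pw (prod θ Y)))
    (fun q y : M => ∀ β s : M, q = op β s → (∃ y : M, y ε Y ∧ Φ β s y) → y ε Y ∧ Φ β s y) (by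
      intro q hq
      obtain ⟨β, s, hβ, hs, rfl⟩ := mem_prod.1 hq
      by_cases hy : ∃ y, y ε Y ∧ Φ β s y
      · obtain ⟨y, hy⟩ := hy
        refine ⟨y, fun β' s' e _ => ?_⟩
        obtain ⟨rfl, rfl⟩ := op_inj.1 e; exact hy
      · refine ⟨emp, fun β' s' e h => ?_⟩
        obtain ⟨rfl, rfl⟩ := op_inj.1 e; exact absurd h hy)
  let G : M → M := fun s => app c (op (the (fun β : M => Fn s β ∧ β ε suc θ)) s)
  obtain ⟨s, hs, hs'⟩ : ∃ s, Fn s θ ∧ ∀ γ, γ ε θ → app s γ = G (res s γ) :=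
    ⟨trec G θ, (trec_spec G hθ).1, fun γ hγ => by rw [(trec_spec G hθ).2 γ hγ, trec_res G hθ hγ]⟩
  have dom : ∀ t β β' : M, Fn t β → Fn t β' → β = β' := by
    intro t β β' h h'
    apply ext; intro z
    have h1 := h.op_mem (x := z) (y := app t z)
    have h2 := h'.op_mem (x := z) (y := app t z)
    simp only [and_true] at h1 h2
    rw [← h1, ← h2]
  refine ⟨s, hs, fun γ => ?_⟩
  induction γ using (eps_wf (M := M)).induction with
  | _ γ ih =>
  intro hγ
  have hγ' : γ ε suc θ := mem_suc.2 (Or.inl hγ)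
  have e : app s γ = app c (op γ (res s γ)) := by
    rw [hs' γ hγ]
    have : the (fun β => Fn (res s γ) β ∧ β ε suc θ) = γ :=
      the_eq (φ := fun β => Fn (res s γ) β ∧ β ε suc θ) ⟨res_fn, hγ'⟩ fun z hz => dom _ _ _ hz.1 res_fn
    simp only [G, this]
  have ih' : ∀ x, x ε γ → app (res s γ) x ε Y ∧ Φ x (res (res s γ) x) (app (res s γ) x) := by
    intro x hx
    rw [app_res hx, res_res ((hθ.mem hγ).sb hx)]
    exact ih x hx (hθ.trans hx hγ)
  have := hc' (op γ (res s γ)) (op_mem_prod.2 ⟨hγ', mem_pw.2 (by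
    intro q hq
    unfold res at hq
    obtain ⟨x, hx, rfl⟩ := mem_lam.1 hq
    exact op_mem_prod.2 ⟨hθ.trans hx hγ, (ih x hx (hθ.trans hx hγ)).1⟩)⟩) γ _ rfl
    (H γ _ hγ res_fn ih')
  rw [← e] at this
  exact this

/-! ### Cardinality -/

theorem cardLE_iff {a b : M} : CardLE 𝓔 a b ↔ ∃ f, (∀ x, x ε a → app f x ε b) ∧
    ∀ x x', x ε a → x' ε a → app f x = app f x' → x = x' := by
  unfold CardLE; simp only [isInj_iff]
  constructor
  · rintro ⟨f, _, h⟩; exact ⟨f, h⟩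
  · rintro ⟨f, h1, h2⟩
    refine ⟨res f a, res_fn, fun x hx => by rw [app_res hx]; exact h1 x hx, fun x x' hx hx' e => ?_⟩
    rw [app_res hx, app_res hx'] at e; exact h2 x x' hx hx' e
theorem _root_.ZF.CardLE.of {a b : M} (g : M → M) [h : Tm (fun w : Nil M × M => g w.2)]
    (h1 : ∀ x, x ε a → g x ε b) (h2 : ∀ x x', x ε a → x' ε a → g x = g x' → x = x') :
    CardLE 𝓔 a b := by
  rw [cardLE_iff]
  refine ⟨lam a g, fun x hx => by rw [app_lam hx]; exact h1 x hx, fun x x' hx hx' e => ?_⟩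
  rw [app_lam hx, app_lam hx'] at e; exact h2 x x' hx hx' e
theorem _root_.ZF.CardLE.of_rel {a b : M} (φ : M → M → Prop) [h : Df (fun w : (Nil M × M) × M => φ w.1.2 w.2)]
    (h1 : ∀ x, x ε a → ∃ y, y ε b ∧ φ x y)
    (h2 : ∀ x x' y, x ε a → x' ε a → y ε b → φ x y → φ x' y → x = x') : CardLE 𝓔 a b := by
  have : D2 φ := ⟨h⟩
  obtain ⟨f, hf, hf'⟩ := ac a (fun x y => y ε b ∧ φ x y) h1
  rw [cardLE_iff]
  exact ⟨f, fun x hx => (hf' x hx).1, fun x x' hx hx' e =>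
    h2 x x' _ hx hx' (hf' x hx).1 (hf' x hx).2 (e ▸ (hf' x' hx').2)⟩
theorem _root_.ZF.CardLE.of_surj {a b : M} (g : M → M) [h : Tm (fun w : Nil M × M => g w.2)]
    (h1 : ∀ y, y ε b → ∃ x, x ε a ∧ y = g x) : CardLE 𝓔 b a := by
  have : T1 g := T1.of h
  exact CardLE.of_rel (fun y x => y = g x) h1 (fun _ _ _ _ _ _ e e' => e.trans e'.symm)
theorem _root_.ZF.CardLE.sb {a b : M} (h : Sb a b) : CardLE 𝓔 a b := CardLE.of (fun x => x) h (fun _ _ _ _ e => e)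
theorem _root_.ZF.CardLE.rfl' {a : M} : CardLE 𝓔 a a := CardLE.sb fun _ h => h
theorem _root_.ZF.CardLE.trans {a b c : M} (h : CardLE 𝓔 a b) (h' : CardLE 𝓔 b c) : CardLE 𝓔 a c := by
  rw [cardLE_iff] at h h'
  obtain ⟨f, hf, hf'⟩ := h; obtain ⟨g, hg, hg'⟩ := h'
  exact CardLE.of (fun x => app g (app f x)) (fun x hx => hg _ (hf x hx))
    (fun x x' hx hx' e => hf' x x' hx hx' (hg' _ _ (hf x hx) (hf x' hx') e))
theorem _root_.ZF.CardLE.img {a : M} (g : M → M) [h : Tm (fun w : Nil M × M => g w.2)] : CardLE 𝓔 (img a g) a :=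
  CardLE.of_surj g fun y hy => mem_img.1 hy
theorem _root_.ZF.CardLE.prod {a b c d : M} (h : CardLE 𝓔 a c) (h' : CardLE 𝓔 b d) : CardLE 𝓔 (prod a b) (prod c d) := by
  rw [cardLE_iff] at h h'
  obtain ⟨f, hf, hf'⟩ := h; obtain ⟨g, hg, hg'⟩ := h'
  refine CardLE.of_rel (fun p q => ∃ x y, p = op x y ∧ q = op (app f x) (app g y)) ?_ ?_
  · intro p hp; obtain ⟨x, y, hx, hy, rfl⟩ := mem_prod.1 hp
    exact ⟨_, op_mem_prod.2 ⟨hf x hx, hg y hy⟩, x, y, rfl, rfl⟩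
  · rintro p p' q hp hp' _ ⟨x, y, rfl, rfl⟩ ⟨x', y', rfl, e⟩
    rw [op_mem_prod] at hp hp'; rw [op_inj] at e
    rw [hf' _ _ hp.1 hp'.1 e.1, hg' _ _ hp.2 hp'.2 e.2]
theorem _root_.ZF.CardLE.pw {a b : M} (h : CardLE 𝓔 a b) : CardLE 𝓔 (pw a) (pw b) := by
  rw [cardLE_iff] at h
  obtain ⟨f, hf, hf'⟩ := h
  refine CardLE.of (fun x => W6.img x (fun z => app f z)) ?_ ?_
  · intro x hx; rw [mem_pw] at hx ⊢; intro z hz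
    obtain ⟨t, ht, rfl⟩ := mem_img.1 hz; exact hf t (hx t ht)
  · intro x x' hx hx' e
    rw [mem_pw] at hx hx'
    have key : ∀ x x', Sb x a → Sb x' a → W6.img x (fun z => app f z) = W6.img x' (fun z => app f z) → Sb x x' := by
      intro x x' hx hx' e z hz
      have : app f z ε W6.img x' (fun z => app f z) := e ▸ mem_img.2 ⟨z, hz, rfl⟩
      obtain ⟨t, ht, e⟩ := mem_img.1 this
      rw [hf' z t (hx z hz) (hx' t ht) e]; exact ht
    exact (key x x' hx hx' e).antisymm (key x' x hx' hx e.symm)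

/-- Well-ordering theorem. -/
theorem exists_ord_cardLE (a : M) : ∃ θ, Ord θ ∧ CardLE 𝓔 a θ := by
  classical
  obtain ⟨c, hc, hc'⟩ := ac (pw a) (fun b x : M => (∃ y, y ε b) → x ε b) (by
    intro b _
    by_cases h : ∃ y, y ε b
    · obtain ⟨y, hy⟩ := h; exact ⟨y, fun _ => hy⟩
    · exact ⟨emp, fun h' => absurd h' h⟩)
  -- the elements of `a` not yet listed by the partial enumeration `s`
  let rem : M → M := fun s => sep a (fun x => ¬ ∃ β, op β x ε s)
  have hrem : ∀ s x, x ε rem s ↔ x ε a ∧ ¬ ∃ β, op β x ε s := fun s x => mem_sep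
  have hdr : T1 rem := .of (by unfold rem; infer_instance)
  let G : M → M := fun s => app c (rem s)
  have hdG : T1 G := .of (by unfold G; infer_instance)
  have hG : ∀ s, (∃ y, y ε rem s) → G s ε rem s := fun s h =>
    hc' _ (mem_pw.2 fun x hx => ((hrem s x).1 hx).1) h
  by_cases hex : ∃ θ, Ord θ ∧ ¬ ∃ y, y ε rem (trec G θ)
  · obtain ⟨θ, hθ, hn⟩ := hex
    refine ⟨θ, hθ, CardLE.of_rel (fun x β => op β x ε trec G θ) (fun x hx => ?_) fun x x' y _ _ _ h h' => ?_⟩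
    · by_contra hcon
      refine hn ⟨x, (hrem _ _).2 ⟨hx, fun ⟨β, hβ⟩ => hcon ⟨β, ?_, hβ⟩⟩⟩
      exact ((trec_spec G hθ).1.op_mem.1 hβ).1
    · rw [((trec_spec G hθ).1.op_mem.1 h).2, ((trec_spec G hθ).1.op_mem.1 h').2]
  · exfalso
    push Not at hex
    have h1 : ∀ θ, Ord θ → G (trec G θ) ε rem (trec G θ) := fun θ hθ => hG _ (hex θ hθ)
    obtain ⟨b, hb⟩ := coll a (fun x β : M => (∃ β : M, Ord β ∧ x = G (trec G β)) → Ord β ∧ x = G (trec G β)) (by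
      intro x _
      by_cases h : ∃ β, Ord β ∧ x = G (trec G β)
      · obtain ⟨y, hy⟩ := h; exact ⟨y, fun _ => hy⟩
      · exact ⟨emp, fun h' => absurd h' h⟩)
    obtain ⟨θ, hθ, hbd⟩ := ord_bdd b
    have h2 := (hrem _ _).1 (h1 θ hθ)
    obtain ⟨β, hβ, h3⟩ := hb _ h2.1
    obtain ⟨h4, h5⟩ := h3 ⟨θ, hθ, rfl⟩
    refine h2.2 ⟨β, (trec_spec G hθ).1.op_mem.2 ⟨hbd β hβ h4, ?_⟩⟩
    rw [(trec_spec G hθ).2 β (hbd β hβ h4)]; exact h5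

theorem cantor {a : M} (h : CardLE 𝓔 (pw a) a) : False := by
  rw [cardLE_iff] at h
  obtain ⟨f, h1, h2⟩ := h
  let d : M := sep a (fun z => ∃ x, Sb x a ∧ app f x = z ∧ ¬ z ε x)
  have hd : ∀ z, z ε d ↔ z ε a ∧ ∃ x, Sb x a ∧ app f x = z ∧ ¬ z ε x := fun z => mem_sep
  have hda : Sb d a := fun z hz => ((hd z).1 hz).1
  by_cases hz : app f d ε d
  · obtain ⟨_, x, hx, e, hn⟩ := (hd _).1 hz
    rw [h2 x d (mem_pw.2 hx) (mem_pw.2 hda) e] at hn; exact hn hz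
  · exact hz ((hd _).2 ⟨h1 d (mem_pw.2 hda), d, hda, rfl, hz⟩)
theorem exists_not_cardLE (a : M) : ∃ θ, Ord θ ∧ ¬ CardLE 𝓔 θ a := by
  obtain ⟨θ, hθ, h⟩ := exists_ord_cardLE (pw a)
  exact ⟨θ, hθ, fun h' => cantor (h.trans h')⟩

theorem _root_.ZF.CardLT.mono {a b γ : M} (h : CardLE 𝓔 a b) (h' : CardLT 𝓔 b γ) : CardLT 𝓔 a γ := by
  obtain ⟨β, hβ, h'⟩ := h'; exact ⟨β, hβ, h.trans h'⟩
theorem _root_.ZF.CardLT.sb {a b γ : M} (h' : CardLT 𝓔 b γ) (h : Sb a b) : CardLT 𝓔 a γ :=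
  h'.mono (CardLE.sb h)
theorem _root_.ZF.CardLT.le {a γ δ : M} (hδ : Ord δ) (h : CardLT 𝓔 a γ) (h' : γ ε δ ∨ γ = δ) : CardLT 𝓔 a δ := by
  obtain ⟨β, hβ, h⟩ := h; exact ⟨β, hδ.lt_of_lt hβ h', h⟩
theorem CardLT.of_mem {a γ : M} (h : a ε γ) : CardLT 𝓔 a γ := ⟨a, h, CardLE.rfl'⟩

section Inacc
variable {κ : M} (hκ : ZF.IsInaccessible (ZM.E : M → M → Prop) κ)
include hκ
theorem _root_.ZF.IsInaccessible.ord : Ord κ := hκ.1.1.1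
theorem _root_.ZF.IsInaccessible.not_lt {a : M} (h : CardLE 𝓔 κ a) (h' : CardLT 𝓔 a κ) : False := by
  obtain ⟨β, hβ, h'⟩ := h'
  exact hκ.1.1.2 β hβ (h.trans h')
theorem _root_.ZF.IsInaccessible.om_mem : om ε κ := by
  obtain ⟨w, h, h'⟩ := hκ.2.2; rw [isOmega_iff] at h; exact h ▸ h'
theorem _root_.ZF.IsInaccessible.pw {a : M} (h : CardLT 𝓔 a κ) : CardLT 𝓔 (pw a) κ := by
  obtain ⟨β, hβ, h⟩ := h
  exact (hκ.2.1.2 β (W6.pw β) hβ fun x => mem_pw).mono h.pw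
/-- Sets of fewer than `κ` ordinals below `κ` are bounded. -/
theorem _root_.ZF.IsInaccessible.bdd {a : M} (h : CardLT 𝓔 a κ) (g : M → M)
    [hg : Tm (fun w : Nil M × M => g w.2)] (h1 : ∀ x, x ε a → g x ε κ) :
    ∃ β, β ε κ ∧ ∀ x, x ε a → g x ε β := by
  classical
  have : T1 g := T1.of hg
  obtain ⟨α, hα, h⟩ := h
  rw [cardLE_iff] at h
  obtain ⟨f, hf, hf'⟩ := h
  by_contra hcon
  push Not at hcon
  have h0 : ∃ z, z ε κ := ⟨α, hα⟩
  obtain ⟨z, hz⟩ := h0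
  let F : M → M := fun ξ => if ∃ x, x ε a ∧ app f x = ξ then the (fun y => ∃ x, x ε a ∧ app f x = ξ ∧ y = g x) else z
  have hF : ∀ x, x ε a → F (app f x) = g x := by
    intro x hx
    have : ∃ x', x' ε a ∧ app f x' = app f x := ⟨x, hx, rfl⟩
    simp only [F, if_pos this]
    refine the_eq (φ := fun y => ∃ x', x' ε a ∧ app f x' = app f x ∧ y = g x') ⟨x, hx, rfl, rfl⟩ ?_
    rintro y ⟨x', hx', e, rfl⟩; rw [hf' x' x hx' hx e]
  refine hκ.1.2 α (lam α F) hα (isFunc_iff.2 ⟨Fn.lam, fun ξ hξ => ?_⟩) ?_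
  · rw [app_lam hξ]
    by_cases h : ∃ x, x ε a ∧ app f x = ξ
    · obtain ⟨x, hx, rfl⟩ := h; rw [hF x hx]; exact h1 x hx
    · simp only [F, if_neg h]; exact hz
  · intro γ hγ
    obtain ⟨x, hx, hn⟩ := hcon γ hγ
    refine ⟨app f x, g x, hf x hx, ?_, ?_⟩
    · rw [pairMem, op_mem_lam]; exact ⟨hf x hx, (hF x hx).symm⟩
    · rcases (hκ.ord.mem hγ).tri (hκ.ord.mem (h1 x hx)) with h | h | h
      · exact Or.inr h
      · exact Or.inl h
      · exact absurd h hn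
theorem _root_.ZF.IsInaccessible.suc_mem {β : M} (h : β ε κ) : suc β ε κ := by
  rcases (hκ.ord.mem h).suc.tri hκ.ord with h' | h' | h'
  · exact h'
  · exfalso
    -- a successor would be the supremum of a one-element set
    obtain ⟨γ, hγ, h1⟩ := hκ.bdd (a := sing β) (by
      refine ⟨suc emp, ?_, CardLE.of (fun _ => emp) (fun _ _ => mem_suc.2 (Or.inr rfl))
        (fun x x' hx hx' _ => by rw [mem_sing] at hx hx'; rw [hx, hx'])⟩
      exact hκ.ord.trans (suc_om emp_om) hκ.om_mem) (fun x => x)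
      (fun x hx => by rw [mem_sing] at hx; exact hx ▸ h)
    have h2 := h1 β (mem_sing.2 rfl)
    rw [← h', mem_suc] at hγ
    rcases hγ with h3 | rfl
    · exact eps_asymm h2 h3
    · exact eps_irrefl h2
  · rw [mem_suc] at h'
    rcases h' with h' | rfl
    · exact (eps_asymm h h').elim
    · exact (eps_irrefl h).elim
theorem _root_.ZF.IsInaccessible.max {α β : M} (h : α ε κ) (h' : β ε κ) : ∃ μ, μ ε κ ∧ α ε μ ∧ β ε μ := by
  rcases (hκ.ord.mem h).le_or_lt (hκ.ord.mem h') with h1 | h1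
  · exact ⟨suc β, hκ.suc_mem h', mem_suc.2 h1, mem_suc.2 (Or.inr rfl)⟩
  · exact ⟨suc α, hκ.suc_mem h, mem_suc.2 (Or.inr rfl), mem_suc.2 (Or.inl h1)⟩
theorem _root_.ZF.IsInaccessible.prod {a b : M} (h : CardLT 𝓔 a κ) (h' : CardLT 𝓔 b κ) : CardLT 𝓔 (W6.prod a b) κ := by
  obtain ⟨α, hα, h⟩ := h; obtain ⟨β, hβ, h'⟩ := h'
  obtain ⟨μ, hμ, h1, h2⟩ := hκ.max hα hβ
  have hμo := hκ.ord.mem hμ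
  refine CardLT.mono (h.prod h') (CardLT.sb (hκ.pw (hκ.pw (CardLT.of_mem hμ))) ?_)
  intro p hp
  obtain ⟨x, y, hx, hy, rfl⟩ := mem_prod.1 hp
  rw [mem_pw]; intro z hz; rw [mem_pw]; intro t ht
  have hx' := hμo.trans hx h1
  have hy' := hμo.trans hy h2
  unfold op at hz
  rcases mem_pr.1 hz with rfl | rfl <;> rcases mem_pr.1 ht with rfl | rfl <;> assumption
/-- Unions of fewer than `κ` sets of size less than `κ`. -/
theorem _root_.ZF.IsInaccessible.union {a u : M} (h : CardLT 𝓔 a κ) (φ : M → M → Prop)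
    [hd : Df (fun w : (Nil M × M) × M => φ w.1.2 w.2)]
    (hu : ∀ y, y ε u → ∃ x, x ε a ∧ φ x y)
    (h1 : ∀ x, x ε a → ∃ b, CardLT 𝓔 b κ ∧ ∀ y, φ x y → y ε b) : CardLT 𝓔 u κ := by
  have : D2 φ := ⟨hd⟩
  obtain ⟨F, hF, hF'⟩ := ac a (fun x b : M => CardLT 𝓔 b κ ∧ ∀ y : M, φ x y → y ε b) h1
  obtain ⟨B, hB, hB'⟩ := ac a (fun x β => β ε κ ∧ CardLE 𝓔 (app F x) β) (fun x hx => (hF' x hx).1)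
  obtain ⟨β, hβ, hb⟩ := hκ.bdd h (fun x => app B x) (fun x hx => (hB' x hx).1)
  obtain ⟨J, hJ, hJ'⟩ := ac a (fun x f => IsInjFromTo 𝓔 f (app F x) (app B x)) (fun x hx => (hB' x hx).2)
  refine CardLT.mono ?_ (hκ.prod h (CardLT.of_mem hβ))
  refine CardLE.of_rel (fun y q : M => ∃ x : M, x ε a ∧ φ x y ∧ q = op x (app (app J x) y)) ?_ ?_
  · intro y hy
    obtain ⟨x, hx, hxy⟩ := hu y hy
    have := isInj_iff.1 (hJ' x hx)
    refine ⟨_, op_mem_prod.2 ⟨hx, ?_⟩, x, hx, hxy, rfl⟩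
    exact (hκ.ord.mem hβ).trans (this.2.1 y ((hF' x hx).2 y hxy)) (hb x hx)
  · rintro y y' q _ _ _ ⟨x, hx, h1, rfl⟩ ⟨x', hx', h2, e⟩
    obtain ⟨rfl, e⟩ := op_inj.1 e
    exact (isInj_iff.1 (hJ' x hx)).2.2 y y' ((hF' x hx).2 y h1) ((hF' x hx).2 y' h2) e
theorem _root_.ZF.IsInaccessible.sing (a : M) : CardLT 𝓔 (W6.sing a) κ :=
  ⟨suc W6.emp, hκ.ord.trans (suc_om emp_om) hκ.om_mem, CardLE.of (fun _ => W6.emp) (fun _ _ => mem_suc.2 (Or.inr rfl))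
        (fun x x' hx hx' _ => by rw [mem_sing] at hx hx'; rw [hx, hx'])⟩
theorem _root_.ZF.IsInaccessible.emp : CardLT 𝓔 (W6.emp : M) κ :=
  (hκ.sing W6.emp).sb fun x hx => (not_mem_emp hx).elim
theorem _root_.ZF.IsInaccessible.un {a b : M} (h : CardLT 𝓔 a κ) (h' : CardLT 𝓔 b κ) : CardLT 𝓔 (W6.un a b) κ := by
  refine hκ.union (a := suc (suc W6.emp)) (CardLT.of_mem (hκ.ord.trans (suc_om (suc_om emp_om)) hκ.om_mem))
    (fun x y : M => (x = W6.emp ∧ y ε a) ∨ (x = suc W6.emp ∧ y ε b)) ?_ ?_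
  · intro y hy
    rcases mem_un.1 hy with hy | hy
    · exact ⟨W6.emp, mem_suc.2 (Or.inl (mem_suc.2 (Or.inr rfl))), Or.inl ⟨rfl, hy⟩⟩
    · exact ⟨suc W6.emp, mem_suc.2 (Or.inr rfl), Or.inr ⟨rfl, hy⟩⟩
  · intro x hx
    have hne : suc W6.emp ≠ (W6.emp : M) := fun h => not_mem_emp (h ▸ mem_suc.2 (Or.inr rfl))
    by_cases hx0 : x = W6.emp
    · exact ⟨a, h, fun y hy => by rcases hy with hy | hy; exacts [hy.2, absurd (hy.1.symm.trans hx0) hne]⟩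
    · exact ⟨b, h', fun y hy => by rcases hy with hy | hy; exacts [absurd hy.1 hx0, hy.2]⟩

/-- `κ · κ = κ`. -/
theorem _root_.ZF.IsInaccessible.sq : CardLE 𝓔 (W6.prod κ κ) κ := by
  -- copies of small sets inside final segments of `κ`
  have seg : ∀ σ X, σ ε κ → CardLT 𝓔 X κ → ∃ y f, y ε κ ∧ (∀ x, x ε X → app f x ε y ∧ ¬ app f x ε σ) ∧
      ∀ x x', x ε X → x' ε X → app f x = app f x' → x = x' := by
    intro σ X hσ ⟨β, hβ, hX⟩
    have hβo := hκ.ord.mem hβ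
    obtain ⟨s, hs, hs'⟩ := rs hβo (Y := κ) (fun γ s y : M => ¬ y ε σ ∧ ∀ ξ : M, ξ ε γ → app s ξ ε y) (by
      intro γ s hγ hs h
      obtain ⟨y, hy, hy'⟩ := hκ.bdd (CardLT.of_mem (hκ.ord.trans hγ hβ)) (fun ξ => app s ξ) (fun ξ hξ => (h ξ hξ).1)
      obtain ⟨μ, hμ, h1, h2⟩ := hκ.max hy hσ
      exact ⟨μ, hμ, fun h' => eps_asymm h2 h', fun ξ hξ => (hκ.ord.mem hμ).trans (hy' ξ hξ) h1⟩)
    obtain ⟨y, hy, hy'⟩ := hκ.bdd (CardLT.of_mem hβ) (fun ξ => app s ξ) (fun ξ hξ => (hs' ξ hξ).1)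
    rw [cardLE_iff] at hX
    obtain ⟨f, hf, hf'⟩ := hX
    refine ⟨y, lam X (fun x => app s (app f x)), hy, fun x hx => ?_, fun x x' hx hx' e => ?_⟩
    · rw [app_lam hx]; exact ⟨hy' _ (hf x hx), (hs' _ (hf x hx)).2.1⟩
    · rw [app_lam hx, app_lam hx'] at e
      have mono : ∀ ξ ξ', ξ ε ξ' → ξ' ε β → app s ξ ε app s ξ' := by
        intro ξ ξ' h h'
        have := (hs' ξ' h').2.2 ξ h
        rwa [app_res h] at this
      rcases (hβo.mem (hf x hx)).tri (hβo.mem (hf x' hx')) with h | h | h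
      · have := mono _ _ h (hf x' hx'); rw [e] at this; exact (eps_irrefl this).elim
      · exact hf' x x' hx hx' h
      · have := mono _ _ h (hf x hx); rw [e] at this; exact (eps_irrefl this).elim
  let Sg : M → M → M → M → Prop := fun σ X y f => (∀ x, x ε X → app f x ε y ∧ ¬ app f x ε σ) ∧
      ∀ x x', x ε X → x' ε X → app f x = app f x' → x = x'
  have hSg : D4 Sg := ⟨by unfold Sg; infer_instance⟩
  obtain ⟨s, hs, hs'⟩ := rs hκ.ord (Y := κ) (fun γ s y : M => ∀ ξ : M, ξ ε γ → ∃ f : M, Sg (app s ξ) (W6.prod (suc ξ) (suc ξ)) y f) (by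
    intro β s hβ hs h
    obtain ⟨Y, hY, hY'⟩ := ac β (fun ξ y : M => y ε κ ∧ ∃ f : M, Sg (app s ξ) (W6.prod (suc ξ) (suc ξ)) y f) (by
      intro ξ hξ
      have := CardLT.of_mem (hκ.suc_mem (hκ.ord.trans hξ hβ))
      obtain ⟨y, f, hy, h⟩ := seg (app s ξ) (W6.prod (suc ξ) (suc ξ)) (h ξ hξ).1 (hκ.prod this this)
      exact ⟨y, hy, f, h⟩)
    obtain ⟨y, hy, hy'⟩ := hκ.bdd (CardLT.of_mem hβ) (fun ξ => app Y ξ) (fun ξ hξ => (hY' ξ hξ).1)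
    refine ⟨y, hy, fun ξ hξ => ?_⟩
    obtain ⟨f, hf⟩ := (hY' ξ hξ).2
    exact ⟨f, fun x hx => ⟨(hκ.ord.mem hy).trans (hf.1 x hx).1 (hy' ξ hξ), (hf.1 x hx).2⟩, hf.2⟩)
  obtain ⟨F, hF, hF'⟩ := ac κ (fun ξ f : M => Sg (app s ξ) (W6.prod (suc ξ) (suc ξ)) (app s (suc ξ)) f) (by
    intro ξ hξ
    obtain ⟨f, hf⟩ := (hs' (suc ξ) (hκ.suc_mem hξ)).2 ξ (mem_suc.2 (Or.inr rfl))
    rw [app_res (mem_suc.2 (Or.inr rfl))] at hf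
    exact ⟨f, hf⟩)
  have mono : ∀ ξ ξ', ξ ε ξ' → ξ' ε κ → Sb (app s (suc ξ)) (app s ξ') := by
    intro ξ ξ' h h'
    have hξ := hκ.ord.trans h h'
    have h1 : suc ξ ε ξ' ∨ suc ξ = ξ' := by
      rcases (hκ.ord.mem hξ).suc.le_or_lt (hκ.ord.mem h') with h2 | h2
      · exact h2
      · rcases mem_suc.1 h2 with h3 | h3
        · exact (eps_asymm h h3).elim
        · exact (eps_irrefl (h3 ▸ h)).elim
    rcases h1 with h1 | h1
    · obtain ⟨f, hf⟩ := (hs' ξ' h').2 (suc ξ) h1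
      rw [app_res h1] at hf
      have o1 := hκ.ord.mem (hs' (suc ξ) (hκ.suc_mem hξ)).1
      have o2 := hκ.ord.mem (hs' ξ' h').1
      rw [o1.sb_iff o2]
      rcases o1.le_or_lt o2 with h2 | h2
      · exact h2
      · exfalso
        have h3 := hf.1 (op ξ ξ) (op_mem_prod.2 ⟨mem_suc.2 (Or.inl (mem_suc.2 (Or.inr rfl))), mem_suc.2 (Or.inl (mem_suc.2 (Or.inr rfl)))⟩)
        exact h3.2 (o1.trans h3.1 h2)
    · rw [h1]; exact fun _ h => h
  refine CardLE.of_rel (fun p y : M => ∃ ξ : M, ξ ε κ ∧ p ε W6.prod (suc ξ) (suc ξ) ∧ y = app (app F ξ) p) ?_ ?_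
  · intro p hp
    obtain ⟨α, β, hα, hβ, rfl⟩ := mem_prod.1 hp
    obtain ⟨μ, hμ, h1, h2⟩ := hκ.max hα hβ
    have h3 : op α β ε W6.prod (suc μ) (suc μ) := op_mem_prod.2 ⟨mem_suc.2 (Or.inl h1), mem_suc.2 (Or.inl h2)⟩
    exact ⟨_, hκ.ord.trans ((hF' μ hμ).1 _ h3).1 (hs' _ (hκ.suc_mem hμ)).1, μ, hμ, h3, rfl⟩
  · rintro p p' y _ _ _ ⟨ξ, hξ, hp, rfl⟩ ⟨ξ', hξ', hp', e⟩
    have a1 := (hF' ξ hξ).1 _ hp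
    have a2 := (hF' ξ' hξ').1 _ hp'
    rw [← e] at a2
    rcases (hκ.ord.mem hξ).tri (hκ.ord.mem hξ') with h | h | h
    · exact absurd (mono _ _ h hξ' _ a1.1) a2.2
    · subst h; exact (hF' ξ hξ).2 p p' hp hp' e
    · exact absurd (mono _ _ h hξ _ a2.1) a1.2
end Inacc
end Ordinals
end W6
namespace W6
open ZF

section Forcing
variable {M : Type u} [ZM M]
local notation "𝓔" => (ZM.E : M → M → Prop)

/-- A definable preorder on a set of conditions of `M`. -/
structure FP (M : Type u) [ZM M] where
  P : M
  le : M → M → Prop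
  dle : D2 le
  refl : ∀ p, p ε P → le p p
  trans : ∀ p q r, le p q → le q r → le p r
  dom : ∀ p q, le p q → p ε P ∧ q ε P

attribute [instance] FP.dle

/-- `M`-generic filters. -/
structure Gen (𝔽 : FP M) where
  S : M → Prop
  sub : ∀ p, S p → p ε 𝔽.P
  up : ∀ p q, 𝔽.le p q → S p → S q
  dir : ∀ p q, S p → S q → ∃ r, S r ∧ 𝔽.le r p ∧ 𝔽.le r q
  gen : ∀ D, (∀ p, p ε 𝔽.P → ∃ q, q ε D ∧ 𝔽.le q p) → ∃ q, q ε D ∧ S q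

variable {𝔽 : FP M}

theorem Gen.meet (G : Gen 𝔽) (φ : M → Prop) [h : Df (fun w : Nil M × M => φ w.2)] {p : M} (hp : G.S p)
    (hd : ∀ q, 𝔽.le q p → ∃ r, 𝔽.le r q ∧ φ r) : ∃ r, G.S r ∧ 𝔽.le r p ∧ φ r := by
  have : D1 φ := ⟨h⟩
  obtain ⟨q, hq, hG⟩ := G.gen (sep 𝔽.P (fun r => (𝔽.le r p ∧ φ r) ∨ ∀ s, 𝔽.le s r → ¬ 𝔽.le s p)) (by
    intro q hq
    by_cases hc : ∃ s, 𝔽.le s q ∧ 𝔽.le s p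
    · obtain ⟨s, h1, h2⟩ := hc
      obtain ⟨r, h3, h4⟩ := hd s h2
      exact ⟨r, mem_sep.2 ⟨(𝔽.dom _ _ h3).1, Or.inl ⟨𝔽.trans _ _ _ h3 h2, h4⟩⟩, 𝔽.trans _ _ _ h3 h1⟩
    · push Not at hc
      exact ⟨q, mem_sep.2 ⟨hq, Or.inr hc⟩, 𝔽.refl q hq⟩)
  rcases (mem_sep.1 hq).2 with h1 | h1
  · exact ⟨q, hG, h1⟩
  · obtain ⟨r, hr, h2, h3⟩ := G.dir q p hG hp
    exact absurd h3 (h1 r h2)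

theorem Gen.ne (G : Gen 𝔽) : ∃ p, G.S p := by
  obtain ⟨q, _, h⟩ := G.gen 𝔽.P (fun p hp => ⟨p, hp, 𝔽.refl p hp⟩)
  exact ⟨q, h⟩

theorem Gen.meet' (G : Gen 𝔽) (φ : M → Prop) [h : Df (fun w : Nil M × M => φ w.2)]
    (hd : ∀ q, q ε 𝔽.P → ∃ r, 𝔽.le r q ∧ φ r) : ∃ r, G.S r ∧ φ r := by
  obtain ⟨p, hp⟩ := G.ne
  obtain ⟨r, h1, _, h2⟩ := G.meet φ hp (fun q hq => hd q (𝔽.dom _ _ hq).1)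
  exact ⟨r, h1, h2⟩

/-- Over a countable model every condition lies in a generic filter. -/
theorem Gen.exists [Countable M] {p : M} (hp : p ε 𝔽.P) : ∃ G : Gen 𝔽, G.S p := by
  classical
  have : Nonempty M := ⟨p⟩
  obtain ⟨D, hD⟩ := exists_surjective_nat M
  let step : ℕ → M → M := fun n q => if h : ∃ r, r ε D n ∧ 𝔽.le r q then h.choose else q
  let s : ℕ → M := fun n => Nat.rec p (fun n q => step n q) n
  have hs : ∀ n, s (n + 1) = step n (s n) := fun n => rfl
  have hstep : ∀ n q, q ε 𝔽.P → 𝔽.le (step n q) q := by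
    intro n q hq
    by_cases h : ∃ r, r ε D n ∧ 𝔽.le r q
    · simp only [step, dif_pos h]; exact h.choose_spec.2
    · simp only [step, dif_neg h]; exact 𝔽.refl q hq
  have hP : ∀ n, s n ε 𝔽.P := by
    intro n
    induction n with
    | zero => exact hp
    | succ n ih => rw [hs]; exact (𝔽.dom _ _ (hstep n _ ih)).1
  have mono : ∀ m n, m ≤ n → 𝔽.le (s n) (s m) := by
    intro m n h
    induction n, h using Nat.le_induction with
    | base => exact 𝔽.refl _ (hP m)
    | succ n _ ih => exact 𝔽.trans _ _ _ (hs n ▸ hstep n _ (hP n)) ih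
  refine ⟨⟨fun q => ∃ n, 𝔽.le (s n) q, fun q ⟨n, h⟩ => (𝔽.dom _ _ h).2,
    fun q r h ⟨n, h'⟩ => ⟨n, 𝔽.trans _ _ _ h' h⟩, ?_, ?_⟩, 0, 𝔽.refl p hp⟩
  · rintro q r ⟨m, hm⟩ ⟨n, hn⟩
    refine ⟨s (max m n), ⟨_, 𝔽.refl _ (hP _)⟩, 𝔽.trans _ _ _ (mono _ _ (le_max_left m n)) hm,
      𝔽.trans _ _ _ (mono _ _ (le_max_right m n)) hn⟩
  · intro d hd
    obtain ⟨n, rfl⟩ := hD d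
    have h := hd (s n) (hP n)
    refine ⟨s (n + 1), ?_, n + 1, 𝔽.refl _ (hP (n + 1))⟩
    rw [hs]; simp only [step, dif_pos h]; exact h.choose_spec.1

omit [ZM M] in
theorem Pr.const' {Γ Δ : Type u} [Ctx M Γ] [Ctx M Δ] (w : Δ) : Pr (fun _ : Γ => w) :=
  ⟨fun s _ => Ctx.c (s w)⟩

theorem Df.fix {Γ : Type u} [Ctx M Γ] {F : Γ → M → Prop} (h : Df (fun w : Γ × M => F w.1 w.2)) (w : Γ) : D1 (F w) :=
  ⟨Df.pr (f := fun v : Nil M × M => (w, v.2)) ((Pr.const' w).pair V.v0) h⟩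

/-- Properties of generic filters, with parameters in a context over `M`, that are decided by
conditions in a way definable over `M`. -/
class Ff {Γ : Type u} [Ctx M Γ] (φ : Gen 𝔽 → Γ → Prop) : Prop where
  out : ∃ F : Γ → M → Prop, Df (fun w : Γ × M => F w.1 w.2) ∧
    (∀ (G : Gen 𝔽) w p, G.S p → F w p → φ G w) ∧ ∀ (G : Gen 𝔽) w, φ G w → ∃ p, G.S p ∧ F w p

variable {Γ : Type u} [Ctx M Γ]

theorem Ff.congr {φ ψ : Gen 𝔽 → Γ → Prop} (h : Ff φ) (e : ∀ G w, φ G w ↔ ψ G w) : Ff ψ := by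
  have : φ = ψ := funext fun G => funext fun w => propext (e G w)
  exact this ▸ h

instance (priority := 100) Ff.ground {φ : Γ → Prop} [h : Df φ] : Ff (fun (_ : Gen 𝔽) w => φ w) :=
  ⟨⟨fun w _ => φ w, inferInstance, fun _ _ _ _ h => h, fun G w h =>
    let ⟨p, hp⟩ := G.ne; ⟨p, hp, h⟩⟩⟩

instance Ff.mem_gen {t : Γ → M} [Tm t] : Ff (fun (G : Gen 𝔽) w => G.S (t w)) :=
  ⟨⟨fun w p => p = t w, inferInstance, fun G w p hp h => h ▸ hp, fun G w h => ⟨_, h, rfl⟩⟩⟩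

instance Ff.not {φ : Gen 𝔽 → Γ → Prop} [h : Ff φ] : Ff (fun G w => ¬ φ G w) := by
  obtain ⟨F, hF, h1, h2⟩ := h.out
  refine ⟨⟨fun w p => ∀ q, F w q → ∀ r, 𝔽.le r p → ¬ 𝔽.le r q, ?_, ?_, ?_⟩⟩
  · infer_instance
  · intro G w p hp hn hφ
    obtain ⟨q, hq, hq'⟩ := h2 G w hφ
    obtain ⟨r, _, hr, hr'⟩ := G.dir p q hp hq
    exact hn q hq' r hr hr'
  · intro G w hn
    have hd : D1 (F w) := hF.fix w
    obtain ⟨r, hr, h | h⟩ := G.meet' (fun p : M => (∃ q : M, F w q ∧ 𝔽.le p q) ∨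
      ∀ q : M, F w q → ∀ r : M, 𝔽.le r p → ¬ 𝔽.le r q) (by
        intro p hp
        by_cases hc : ∃ q, F w q ∧ ∃ r, 𝔽.le r p ∧ 𝔽.le r q
        · obtain ⟨q, hq, r, h3, h4⟩ := hc
          exact ⟨r, h3, Or.inl ⟨q, hq, h4⟩⟩
        · push Not at hc
          exact ⟨p, 𝔽.refl p hp, Or.inr hc⟩)
    · obtain ⟨q, hq, h⟩ := h
      exact absurd (h1 G w q (G.up _ _ h hr) hq) hn
    · exact ⟨r, hr, h⟩

instance Ff.and {φ ψ : Gen 𝔽 → Γ → Prop} [h : Ff φ] [h' : Ff ψ] : Ff (fun G w => φ G w ∧ ψ G w) := by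
  obtain ⟨F, hF, h1, h2⟩ := h.out
  obtain ⟨F', hF', h1', h2'⟩ := h'.out
  refine ⟨⟨fun w p => (∃ q, F w q ∧ 𝔽.le p q) ∧ ∃ q, F' w q ∧ 𝔽.le p q, ?_, ?_, ?_⟩⟩
  · infer_instance
  · rintro G w p hp ⟨⟨q, hq, h⟩, q', hq', h'⟩
    exact ⟨h1 G w q (G.up _ _ h hp) hq, h1' G w q' (G.up _ _ h' hp) hq'⟩
  · rintro G w ⟨h, h'⟩
    obtain ⟨q, hq, h⟩ := h2 G w h
    obtain ⟨q', hq', h'⟩ := h2' G w h'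
    obtain ⟨r, hr, h3, h4⟩ := G.dir q q' hq hq'
    exact ⟨r, hr, ⟨q, h, h3⟩, q', h', h4⟩

instance Ff.imp {φ ψ : Gen 𝔽 → Γ → Prop} [h : Ff φ] [h' : Ff ψ] : Ff (fun G w => φ G w → ψ G w) :=
  (inferInstance : Ff (fun G w => ¬ (φ G w ∧ ¬ ψ G w))).congr fun G w => by tauto

instance Ff.or {φ ψ : Gen 𝔽 → Γ → Prop} [h : Ff φ] [h' : Ff ψ] : Ff (fun G w => φ G w ∨ ψ G w) :=
  (inferInstance : Ff (fun G w => ¬ φ G w → ψ G w)).congr fun G w => by tauto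

instance Ff.iff {φ ψ : Gen 𝔽 → Γ → Prop} [h : Ff φ] [h' : Ff ψ] : Ff (fun G w => φ G w ↔ ψ G w) :=
  (inferInstance : Ff (fun G w => (φ G w → ψ G w) ∧ (ψ G w → φ G w))).congr fun G w => by tauto

instance Ff.ex {φ : Gen 𝔽 → Γ → M → Prop} [h : Ff (fun (G : Gen 𝔽) (w : Γ × M) => φ G w.1 w.2)] :
    Ff (fun G w => ∃ y, φ G w y) := by
  obtain ⟨F, hF, h1, h2⟩ := h.out
  refine ⟨⟨fun w p => ∃ y, F (w, y) p, ?_, ?_, ?_⟩⟩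
  · refine Df.ex (φ := fun (w : Γ × M) y => F (w.1, y) w.2) (h := ?_)
    exact Df.pr (f := fun w : (Γ × M) × M => ((w.1.1, w.2), w.1.2))
      ((Pr.pair inferInstance V.v0).pair (V.wk V.v0)) hF
  · rintro G w p hp ⟨y, hy⟩; exact ⟨y, h1 G (w, y) p hp hy⟩
  · rintro G w ⟨y, hy⟩
    obtain ⟨p, hp, h⟩ := h2 G (w, y) hy
    exact ⟨p, hp, y, h⟩

instance Ff.all {φ : Gen 𝔽 → Γ → M → Prop} [h : Ff (fun (G : Gen 𝔽) (w : Γ × M) => φ G w.1 w.2)] :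
    Ff (fun G w => ∀ y, φ G w y) :=
  (inferInstance : Ff (fun G w => ¬ ∃ y, ¬ φ G w y)).congr fun G w => by push Not; rfl

/-- `p` forces `φ`, semantically: `φ` holds for all generic filters containing `p`. -/
def Fo (p : M) (φ : Gen 𝔽 → Prop) : Prop := ∀ G : Gen 𝔽, G.S p → φ G

theorem Fo.mono {p q : M} {φ : Gen 𝔽 → Prop} (h : Fo p φ) (h' : 𝔽.le q p) : Fo q φ :=
  fun G hG => h G (G.up _ _ h' hG)

/-- Definability of forcing. -/
theorem Ff.df [Countable M] {φ : Gen 𝔽 → Γ → Prop} (h : Ff φ) {t : Γ → M} [ht : Tm t] :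
    Df (fun w => t w ε 𝔽.P ∧ Fo (t w) (fun G => φ G w)) := by
  obtain ⟨F, hF, h1, h2⟩ := h.out
  refine (inferInstance : Df (fun w => t w ε 𝔽.P ∧ ∀ q, 𝔽.le q (t w) → ∃ r, 𝔽.le r q ∧ ∃ s, 𝔽.le r s ∧ F w s)).congr ?_
  refine fun w => and_congr_right fun hp => ⟨fun h3 G hG => ?_, fun h3 q hq => ?_⟩
  · have hd : D1 (F w) := hF.fix w
    obtain ⟨r, hr, _, s, hs, h⟩ := G.meet (fun r : M => ∃ s : M, 𝔽.le r s ∧ F w s) hG h3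
    exact h1 G w s (G.up _ _ hs hr) h
  · obtain ⟨G, hG⟩ := Gen.exists (𝔽 := 𝔽) (𝔽.dom _ _ hq).1
    obtain ⟨s, hs, h⟩ := h2 G w (h3 G (G.up _ _ hq hG))
    obtain ⟨r, _, hr, hr'⟩ := G.dir q s hG hs
    exact ⟨r, hr, s, hr', h⟩

/-- The truth lemma. -/
theorem Ff.truth {φ : Gen 𝔽 → Γ → Prop} (h : Ff φ) {G : Gen 𝔽} {w : Γ} (hw : φ G w) :
    ∃ p, G.S p ∧ Fo p (fun G => φ G w) := by
  obtain ⟨F, hF, h1, h2⟩ := h.out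
  obtain ⟨p, hp, h⟩ := h2 G w hw
  exact ⟨p, hp, fun G' hG' => h1 G' w p hG' h⟩

theorem Ff.decide [Countable M] {φ : Gen 𝔽 → Γ → Prop} (h : Ff φ) (w : Γ) {p : M} (hp : p ε 𝔽.P) :
    ∃ q, 𝔽.le q p ∧ (Fo q (fun G => φ G w) ∨ Fo q (fun G => ¬ φ G w)) := by
  obtain ⟨G, hG⟩ := Gen.exists (𝔽 := 𝔽) hp
  by_cases hφ : φ G w
  · obtain ⟨q, hq, h'⟩ := h.truth hφ
    obtain ⟨r, _, h1, h2⟩ := G.dir p q hG hq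
    exact ⟨r, h1, Or.inl (h'.mono h2)⟩
  · obtain ⟨q, hq, h'⟩ := (inferInstance : Ff (fun G w => ¬ φ G w)).truth hφ
    obtain ⟨r, _, h1, h2⟩ := G.dir p q hG hq
    exact ⟨r, h1, Or.inr (h'.mono h2)⟩

end Forcing
end W6
namespace W6
open ZF

section Names
variable {M : Type u} [ZM M]
local notation "𝓔" => (ZM.E : M → M → Prop)
variable {Γ : Type u} [Ctx M Γ]

/-- `σ` is an element of the name `τ` with label `p`.  Names are either sets of pairs `⟨σ, p⟩`, or
`⟨∅, x⟩`, the canonical name of the ground model set `x`, whose elements carry all labels. -/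
def N (σ p τ : M) : Prop := op σ p ε τ ∨ ∃ x y, τ = op emp x ∧ y ε x ∧ σ = op emp y
instance : D3 (N : M → M → M → Prop) := ⟨by unfold N; infer_instance⟩

theorem not_op_mem_ground {σ p x : M} : ¬ op σ p ε op emp x := by
  intro h
  have h1 : pr σ σ ε op σ p := mem_pr.2 (Or.inl rfl)
  unfold op at h h1
  rcases mem_pr.1 h with h | h
  · rw [h] at h1
    rw [mem_pr, or_self] at h1
    exact not_mem_emp (h1 ▸ mem_pr.2 (Or.inl rfl) : σ ε (emp : M))
  · have h2 : emp ε pr (pr σ σ) (pr σ p) := h ▸ mem_pr.2 (Or.inl rfl)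
    rcases mem_pr.1 h2 with h3 | h3
    · exact not_mem_emp (h3 ▸ mem_pr.2 (Or.inl rfl) : σ ε (emp : M))
    · exact not_mem_emp (h3 ▸ mem_pr.2 (Or.inl rfl) : σ ε (emp : M))

theorem N_ground {σ p x : M} : N σ p (op emp x) ↔ ∃ y, y ε x ∧ σ = op emp y := by
  constructor
  · rintro (h | ⟨x', y, h, hy, rfl⟩)
    · exact (not_op_mem_ground h).elim
    · rw [(op_inj.1 h).2]; exact ⟨y, hy, rfl⟩
  · rintro ⟨y, hy, rfl⟩; exact Or.inr ⟨x, y, rfl, hy, rfl⟩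

theorem N_pairs {σ p t : M} (ht : ∀ z, z ε t → ∃ a b, z = op a b) : N σ p t ↔ op σ p ε t := by
  constructor
  · rintro (h | ⟨x, y, rfl, hy, rfl⟩)
    · exact h
    · obtain ⟨a, b, h⟩ := ht (pr emp emp) (mem_pr.2 (Or.inl rfl))
      have : op a b ε op emp x := h ▸ mem_pr.2 (Or.inl rfl)
      exact (not_op_mem_ground this).elim
  · exact Or.inl

theorem N_prod {σ p a b : M} : N σ p (prod a b) ↔ σ ε a ∧ p ε b := by
  rw [N_pairs fun z hz => ?_, op_mem_prod]
  obtain ⟨x, y, _, _, h⟩ := mem_prod.1 hz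
  exact ⟨x, y, h⟩

theorem N_wf : WellFounded (fun σ τ : M => ∃ p, N σ p τ) := by
  have hg : ∀ x : M, Acc (fun σ τ : M => ∃ p, N σ p τ) (op emp x) := by
    intro x
    induction x using (eps_wf (M := M)).induction with
    | _ x ih =>
      constructor
      rintro σ ⟨p, hp⟩
      obtain ⟨y, hy, rfl⟩ := N_ground.1 hp
      exact ih y hy
  constructor
  intro τ
  induction τ using (eps_wf (M := M)).transGen.induction with
  | _ τ ih =>
    constructor
    rintro σ ⟨p, hp | ⟨x, y, rfl, hy, rfl⟩⟩
    · refine ih σ (.tail (.tail (.single (?_ : σ ε pr σ σ)) (?_ : pr σ σ ε op σ p)) hp)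
      · exact mem_pr.2 (Or.inl rfl)
      · exact mem_pr.2 (Or.inl rfl)
    · exact hg y

/-- The labels-free elements of a name form a set. -/
theorem N_dom (τ : M) : ∃ d, ∀ σ p, N σ p τ → σ ε d := by
  by_cases h : ∃ x, τ = op emp x
  · obtain ⟨x, rfl⟩ := h
    refine ⟨img x (fun y => op emp y), fun σ p h => ?_⟩
    rw [mem_img]; exact N_ground.1 h
  · refine ⟨sU (sU τ), fun σ p h' => ?_⟩
    rcases h' with h' | ⟨x, y, rfl, _⟩
    · exact mem_sU.2 ⟨pr σ σ, mem_sU.2 ⟨_, h', mem_pr.2 (Or.inl rfl)⟩, mem_pr.2 (Or.inl rfl)⟩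
    · exact (h ⟨x, rfl⟩).elim

/-- The value of a name, as an actual set. -/
noncomputable def val (S : M → Prop) : M → ZFSet.{u} :=
  (N_wf (M := M)).fix fun τ ih => ZFSet.range (fun σ : {σ // ∃ p, S p ∧ N σ p τ} =>
    ih σ.1 ⟨σ.2.choose, σ.2.choose_spec.2⟩)

theorem mem_val {S : M → Prop} {τ : M} {z : ZFSet.{u}} :
    z ∈ val S τ ↔ ∃ σ p, S p ∧ N σ p τ ∧ z = val S σ := by
  unfold val
  rw [WellFounded.fix_eq, ZFSet.mem_range]
  constructor
  · rintro ⟨⟨σ, p, hp, h⟩, rfl⟩; exact ⟨σ, p, hp, h, rfl⟩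
  · rintro ⟨σ, p, hp, h, rfl⟩; exact ⟨⟨σ, p, hp, h⟩, rfl⟩

/-- The Mostowski collapse of the model. -/
noncomputable def cl : M → ZFSet.{u} :=
  (eps_wf (M := M)).fix fun x ih => ZFSet.range (fun y : {y // y ε x} => ih y.1 y.2)

theorem mem_cl {x : M} {z : ZFSet.{u}} : z ∈ cl x ↔ ∃ y, y ε x ∧ z = cl y := by
  unfold cl
  rw [WellFounded.fix_eq, ZFSet.mem_range]
  constructor
  · rintro ⟨⟨y, hy⟩, rfl⟩; exact ⟨y, hy, rfl⟩
  · rintro ⟨y, hy, rfl⟩; exact ⟨⟨y, hy⟩, rfl⟩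

theorem cl_inj {x y : M} : cl x = cl y ↔ x = y := by
  refine ⟨fun h => ?_, fun h => h ▸ rfl⟩
  induction x using (eps_wf (M := M)).induction generalizing y with
  | _ x ih =>
    refine ext fun z => ⟨fun hz => ?_, fun hz => ?_⟩
    · have := mem_cl.2 ⟨z, hz, rfl⟩
      rw [h, mem_cl] at this
      obtain ⟨z', hz', e⟩ := this
      rw [ih z hz e]; exact hz'
    · have := mem_cl.2 ⟨z, hz, rfl⟩
      rw [← h, mem_cl] at this
      obtain ⟨z', hz', e⟩ := this
      rw [← ih z' hz' e.symm]; exact hz'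

theorem cl_mem {x y : M} : cl x ∈ cl y ↔ x ε y := by
  rw [mem_cl]
  exact ⟨fun ⟨z, hz, e⟩ => cl_inj.1 e ▸ hz, fun h => ⟨x, h, rfl⟩⟩

theorem val_ground {S : M → Prop} (hS : ∃ p, S p) (x : M) : val S (op emp x) = cl x := by
  induction x using (eps_wf (M := M)).induction with
  | _ x ih =>
    ext z
    rw [mem_val, mem_cl]
    constructor
    · rintro ⟨σ, p, hp, h, rfl⟩
      obtain ⟨y, hy, rfl⟩ := N_ground.1 h
      exact ⟨y, hy, ih y hy⟩
    · rintro ⟨y, hy, rfl⟩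
      obtain ⟨p, hp⟩ := hS
      exact ⟨_, p, hp, N_ground.2 ⟨y, hy, rfl⟩, (ih y hy).symm⟩

variable {𝔽 : FP M}

/-- The pair `σ, τ` is related by the witness `B` below the condition `r`. -/
def InB (𝔽 : FP M) (B r σ τ : M) : Prop := ∃ q, 𝔽.le r q ∧ op q (op σ τ) ε B
instance : D4 (InB 𝔽) := ⟨by unfold InB; infer_instance⟩

/-- `B` is a bisimulation between names, labelled by conditions. -/
def Bis (𝔽 : FP M) (B : M) : Prop := ∀ q σ τ, op q (op σ τ) ε B →
  (∀ σ' s, N σ' s σ → ∀ q', 𝔽.le q' q → 𝔽.le q' s →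
    ∃ r τ' t, 𝔽.le r q' ∧ 𝔽.le r t ∧ N τ' t τ ∧ InB 𝔽 B r σ' τ') ∧
  (∀ τ' t, N τ' t τ → ∀ q', 𝔽.le q' q → 𝔽.le q' t →
    ∃ r σ' s, 𝔽.le r q' ∧ 𝔽.le r s ∧ N σ' s σ ∧ InB 𝔽 B r σ' τ')
instance : D1 (Bis 𝔽) := ⟨by unfold Bis; infer_instance⟩

/-- `p` forces the equality of `σ` and `τ`, in the strong sense that a bisimulation witnesses it. -/
def FEq (𝔽 : FP M) (p σ τ : M) : Prop := ∃ B, Bis 𝔽 B ∧ InB 𝔽 B p σ τ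
instance : D3 (FEq 𝔽) := ⟨by unfold FEq; infer_instance⟩

theorem InB.sb {B C r σ τ : M} (h : InB 𝔽 B r σ τ) (hs : Sb B C) : InB 𝔽 C r σ τ :=
  let ⟨q, h1, h2⟩ := h; ⟨q, h1, hs _ h2⟩

theorem FEq.mono {p q σ τ : M} (h : FEq 𝔽 p σ τ) (h' : 𝔽.le q p) : FEq 𝔽 q σ τ :=
  let ⟨B, h1, r, h2, h3⟩ := h; ⟨B, h1, r, 𝔽.trans _ _ _ h' h2, h3⟩

theorem FEq.sound {p σ τ : M} (h : FEq 𝔽 p σ τ) (G : Gen 𝔽) (hp : G.S p) : val G.S σ = val G.S τ := by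
  obtain ⟨B, hB, h⟩ := h
  induction σ using (N_wf (M := M)).induction generalizing p τ with
  | _ σ ih =>
    obtain ⟨q, hpq, hq⟩ := h
    have hqG := G.up _ _ hpq hp
    ext z
    rw [mem_val, mem_val]
    constructor
    · rintro ⟨σ', s, hs, hN, rfl⟩
      obtain ⟨q', hq', h1, h2⟩ := G.dir q s hqG hs
      obtain ⟨r, hr, _, τ', t, ht, hN', hI⟩ := G.meet (fun r : M => ∃ τ' t : M, 𝔽.le r t ∧ N τ' t τ ∧ InB 𝔽 B r σ' τ')
        hq' (fun q'' hq'' => by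
          obtain ⟨r, τ', t, a, b, c⟩ := (hB _ _ _ hq).1 σ' s hN q'' (𝔽.trans _ _ _ hq'' h1) (𝔽.trans _ _ _ hq'' h2)
          exact ⟨r, a, τ', t, b, c⟩)
      exact ⟨τ', t, G.up _ _ ht hr, hN', ih σ' ⟨s, hN⟩ hr hI⟩
    · rintro ⟨τ', t, hs, hN, rfl⟩
      obtain ⟨q', hq', h1, h2⟩ := G.dir q t hqG hs
      obtain ⟨r, hr, _, σ', s, ht, hN', hI⟩ := G.meet (fun r : M => ∃ σ' s : M, 𝔽.le r s ∧ N σ' s σ ∧ InB 𝔽 B r σ' τ')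
        hq' (fun q'' hq'' => by
          obtain ⟨r, σ', s, a, b, c⟩ := (hB _ _ _ hq).2 τ' t hN q'' (𝔽.trans _ _ _ hq'' h1) (𝔽.trans _ _ _ hq'' h2)
          exact ⟨r, a, σ', s, b, c⟩)
      exact ⟨σ', s, G.up _ _ ht hr, hN', (ih σ' ⟨s, hN'⟩ hr hI).symm⟩

/-- Bisimulations for the elements of two names can be merged into one for the names. -/
theorem FEq.of_elems {p σ τ : M} (hp : p ε 𝔽.P)
    (h1 : ∀ σ' s, N σ' s σ → ∀ q, 𝔽.le q p → 𝔽.le q s →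
      ∃ r τ' t, 𝔽.le r q ∧ 𝔽.le r t ∧ N τ' t τ ∧ FEq 𝔽 r σ' τ')
    (h2 : ∀ τ' t, N τ' t τ → ∀ q, 𝔽.le q p → 𝔽.le q t →
      ∃ r σ' s, 𝔽.le r q ∧ 𝔽.le r s ∧ N σ' s σ ∧ FEq 𝔽 r σ' τ') : FEq 𝔽 p σ τ := by
  obtain ⟨d, hd⟩ := N_dom σ
  obtain ⟨d', hd'⟩ := N_dom τ
  obtain ⟨b, hb⟩ := coll (prod 𝔽.P (prod d d')) (fun z B : M => (∃ r σ' τ' : M, z = op r (op σ' τ') ∧ FEq 𝔽 r σ' τ') →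
      ∃ r σ' τ' : M, z = op r (op σ' τ') ∧ Bis 𝔽 B ∧ InB 𝔽 B r σ' τ') (by
    intro z _
    by_cases h : ∃ r σ' τ' : M, z = op r (op σ' τ') ∧ FEq 𝔽 r σ' τ'
    · obtain ⟨r, σ', τ', e, B, hB⟩ := h
      exact ⟨B, fun _ => ⟨r, σ', τ', e, hB⟩⟩
    · exact ⟨z, fun h' => (h h').elim⟩)
  let B := un (sU (sep b (fun B => Bis 𝔽 B))) (sing (op p (op σ τ)))
  have key : ∀ r σ' τ' s t, N σ' s σ → N τ' t τ → FEq 𝔽 r σ' τ' → InB 𝔽 B r σ' τ' := by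
    intro r σ' τ' s t hs ht h
    have hr : r ε 𝔽.P := by obtain ⟨_, _, q, hq, _⟩ := h; exact (𝔽.dom _ _ hq).1
    obtain ⟨B', hB', h'⟩ := hb (op r (op σ' τ')) (op_mem_prod.2 ⟨hr, op_mem_prod.2 ⟨hd _ _ hs, hd' _ _ ht⟩⟩)
    obtain ⟨r1, σ1, τ1, e, hB1, hI⟩ := h' ⟨r, σ', τ', rfl, h⟩
    obtain ⟨rfl, e2⟩ := op_inj.1 e
    obtain ⟨rfl, rfl⟩ := op_inj.1 e2
    exact hI.sb fun x hx => mem_un.2 (Or.inl (mem_sU.2 ⟨B', mem_sep.2 ⟨hB', hB1⟩, hx⟩))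
  refine ⟨B, ?_, p, 𝔽.refl p hp, mem_un.2 (Or.inr (mem_sing.2 rfl))⟩
  intro q σ1 τ1 hq
  rcases mem_un.1 hq with hq | hq
  · obtain ⟨B', hB', hq⟩ := mem_sU.1 hq
    have hs : Sb B' B := fun x hx => mem_un.2 (Or.inl (mem_sU.2 ⟨B', hB', hx⟩))
    obtain ⟨a1, a2⟩ := (mem_sep.1 hB').2 q σ1 τ1 hq
    constructor
    · intro σ' s hN q' h3 h4
      obtain ⟨r, τ', t, b1, b2, b3, b4⟩ := a1 σ' s hN q' h3 h4
      exact ⟨r, τ', t, b1, b2, b3, b4.sb hs⟩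
    · intro τ' t hN q' h3 h4
      obtain ⟨r, σ', s, b1, b2, b3, b4⟩ := a2 τ' t hN q' h3 h4
      exact ⟨r, σ', s, b1, b2, b3, b4.sb hs⟩
  · obtain ⟨rfl, e⟩ := op_inj.1 (mem_sing.1 hq)
    obtain ⟨rfl, rfl⟩ := op_inj.1 e
    constructor
    · intro σ' s hN q' h3 h4
      obtain ⟨r, τ', t, b1, b2, b3, b4⟩ := h1 σ' s hN q' h3 h4
      exact ⟨r, τ', t, b1, b2, b3, key _ _ _ _ _ hN b3 b4⟩
    · intro τ' t hN q' h3 h4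
      obtain ⟨r, σ', s, b1, b2, b3, b4⟩ := h2 τ' t hN q' h3 h4
      exact ⟨r, σ', s, b1, b2, b3, key _ _ _ _ _ b3 hN b4⟩

theorem FEq.complete {σ τ : M} (G : Gen 𝔽) (h : val G.S σ = val G.S τ) : ∃ p, G.S p ∧ FEq 𝔽 p σ τ := by
  induction σ using (N_wf (M := M)).induction generalizing τ with
  | _ σ ih =>
    obtain ⟨p, hp, h1 | h1 | h1⟩ := G.meet' (fun p : M => FEq 𝔽 p σ τ ∨
      (∃ σ' s : M, N σ' s σ ∧ 𝔽.le p s ∧ ∀ r τ' t : M, 𝔽.le r p → 𝔽.le r t → N τ' t τ → ¬ FEq 𝔽 r σ' τ') ∨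
      (∃ τ' t : M, N τ' t τ ∧ 𝔽.le p t ∧ ∀ r σ' s : M, 𝔽.le r p → 𝔽.le r s → N σ' s σ → ¬ FEq 𝔽 r σ' τ')) (by
        intro p hp
        by_contra hcon
        push Not at hcon
        refine (hcon p (𝔽.refl p hp)).1 (FEq.of_elems hp ?_ ?_)
        · intro σ' s hN q hq hs
          obtain ⟨r, τ', t, a, b, c, d⟩ := (hcon q hq).2.1 σ' s hN hs
          exact ⟨r, τ', t, a, b, c, d⟩
        · intro τ' t hN q hq hs
          obtain ⟨r, σ', s, a, b, c, d⟩ := (hcon q hq).2.2 τ' t hN hs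
          exact ⟨r, σ', s, a, b, c, d⟩)
    · exact ⟨p, hp, h1⟩
    · exfalso
      obtain ⟨σ', s, hN, hs, h2⟩ := h1
      have : val G.S σ' ∈ val G.S τ := h ▸ mem_val.2 ⟨σ', s, G.up _ _ hs hp, hN, rfl⟩
      obtain ⟨τ', t, ht, hN', e⟩ := mem_val.1 this
      obtain ⟨q, hq, hq'⟩ := ih σ' ⟨s, hN⟩ e
      obtain ⟨r, hr, b1, b2⟩ := G.dir p q hp hq
      obtain ⟨r', hr', b3, b4⟩ := G.dir r t hr ht
      exact h2 r' τ' t (𝔽.trans _ _ _ b3 b1) b4 hN' (hq'.mono (𝔽.trans _ _ _ b3 b2))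
    · exfalso
      obtain ⟨τ', t, hN, hs, h2⟩ := h1
      have : val G.S τ' ∈ val G.S σ := h ▸ mem_val.2 ⟨τ', t, G.up _ _ hs hp, hN, rfl⟩
      obtain ⟨σ', s, ht, hN', e⟩ := mem_val.1 this
      obtain ⟨q, hq, hq'⟩ := ih σ' ⟨s, hN'⟩ e.symm
      obtain ⟨r, hr, b1, b2⟩ := G.dir p q hp hq
      obtain ⟨r', hr', b3, b4⟩ := G.dir r s hr ht
      exact h2 r' σ' s (𝔽.trans _ _ _ b3 b1) b4 hN' (hq'.mono (𝔽.trans _ _ _ b3 b2))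

instance Ff.val_eq {s t : Γ → M} [Tm s] [Tm t] : Ff (fun (G : Gen 𝔽) w => val G.S (s w) = val G.S (t w)) :=
  ⟨⟨fun w p => FEq 𝔽 p (s w) (t w), inferInstance, fun G w p hp h => h.sound G hp,
    fun G w h => FEq.complete G h⟩⟩

instance Ff.val_mem {s t : Γ → M} [Tm s] [Tm t] : Ff (fun (G : Gen 𝔽) w => val G.S (s w) ∈ val G.S (t w)) :=
  (inferInstance : Ff (fun (G : Gen 𝔽) w => ∃ σ p, G.S p ∧ N σ p (t w) ∧ val G.S (s w) = val G.S σ)).congr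
    fun G w => mem_val.symm

end Names
end W6
namespace W6
open ZF

/-! ### Transitive embeddings -/

section Emb
variable {M W : Type u} {E₁ : M → M → Prop} {E₂ : W → W → Prop}

/-- `f` is an isomorphism onto a transitive subclass. -/
structure TEmb (E₁ : M → M → Prop) (E₂ : W → W → Prop) (f : M → W) : Prop where
  mem : ∀ x y, E₂ (f x) (f y) ↔ E₁ x y
  tr : ∀ x y, E₂ y (f x) → ∃ z, E₁ z x ∧ y = f z
  inj : ∀ x y, f x = f y → x = y

variable {f : M → W} (h : TEmb E₁ E₂ f)
include h

theorem TEmb.isPair {p a b : M} : IsPairOf E₂ (f p) (f a) (f b) ↔ IsPairOf E₁ p a b := by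
  constructor
  · intro h1 x
    rw [← h.mem, h1]
    exact ⟨fun h2 => h2.imp (h.inj _ _) (h.inj _ _), fun h2 => h2.imp (congrArg f) (congrArg f)⟩
  · intro h1 x
    constructor
    · intro hx
      obtain ⟨z, hz, rfl⟩ := h.tr _ _ hx
      exact ((h1 z).1 hz).imp (congrArg f) (congrArg f)
    · rintro (rfl | rfl)
      · exact (h.mem _ _).2 ((h1 _).2 (Or.inl rfl))
      · exact (h.mem _ _).2 ((h1 _).2 (Or.inr rfl))

theorem TEmb.isEmpty {a : M} : IsEmptySet E₂ (f a) ↔ IsEmptySet E₁ a := by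
  constructor
  · intro h1 x hx; exact h1 (f x) ((h.mem _ _).2 hx)
  · intro h1 x hx
    obtain ⟨z, hz, rfl⟩ := h.tr _ _ hx
    exact h1 z hz

theorem TEmb.isSucc {s a : M} : IsSuccOf E₂ (f s) (f a) ↔ IsSuccOf E₁ s a := by
  constructor
  · intro h1 x
    rw [← h.mem, h1, h.mem]
    exact or_congr_right ⟨h.inj _ _, congrArg f⟩
  · intro h1 x
    constructor
    · intro hx
      obtain ⟨z, hz, rfl⟩ := h.tr _ _ hx
      rw [h.mem]
      exact ((h1 z).1 hz).imp_right (congrArg f)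
    · rintro (hx | rfl)
      · obtain ⟨z, hz, rfl⟩ := h.tr _ _ hx
        exact (h.mem _ _).2 ((h1 _).2 (Or.inl hz))
      · exact (h.mem _ _).2 ((h1 _).2 (Or.inr rfl))

theorem TEmb.sub {a b : M} : ZF.Sub E₂ (f a) (f b) ↔ ZF.Sub E₁ a b := by
  constructor
  · intro h1 x hx; exact (h.mem _ _).1 (h1 _ ((h.mem _ _).2 hx))
  · intro h1 x hx
    obtain ⟨z, hz, rfl⟩ := h.tr _ _ hx
    exact (h.mem _ _).2 (h1 z hz)

theorem TEmb.isTrans {a : M} : IsTransitiveSet E₂ (f a) ↔ IsTransitiveSet E₁ a := by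
  constructor
  · intro h1 x hx; exact h.sub.1 (h1 _ ((h.mem _ _).2 hx))
  · intro h1 x hx
    obtain ⟨z, hz, rfl⟩ := h.tr _ _ hx
    exact h.sub.2 (h1 z hz)

theorem TEmb.isOrd {a : M} : IsOrdinal E₂ (f a) ↔ IsOrdinal E₁ a := by
  refine and_congr h.isTrans ⟨fun h1 x hx => h.isTrans.1 (h1 _ ((h.mem _ _).2 hx)), fun h1 x hx => ?_⟩
  obtain ⟨z, hz, rfl⟩ := h.tr _ _ hx
  exact h.isTrans.2 (h1 z hz)

theorem TEmb.isOmega {w : M} (hw : IsOmega E₁ w) : IsOmega E₂ (f w) := by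
  obtain ⟨h1, ⟨z, hz, hz'⟩, h3, h4⟩ := hw
  refine ⟨h.isOrd.2 h1, ⟨f z, (h.mem _ _).2 hz, h.isEmpty.2 hz'⟩, ?_, ?_⟩
  · intro y hy
    obtain ⟨y, hy', rfl⟩ := h.tr _ _ hy
    obtain ⟨s, hs, hs'⟩ := h3 y hy'
    exact ⟨f s, (h.mem _ _).2 hs, h.isSucc.2 hs'⟩
  · intro y hy
    obtain ⟨y, hy', rfl⟩ := h.tr _ _ hy
    rcases h4 y hy' with h4 | ⟨z, h4⟩
    · exact Or.inl (h.isEmpty.2 h4)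
    · exact Or.inr ⟨f z, h4.imp (fun h4 => ⟨h.isSucc.2 h4.1, (h.mem _ _).2 h4.2⟩) h.isSucc.2⟩

end Emb

section Ext
variable {M : Type u} [ZM M]
local notation "𝓔" => (ZM.E : M → M → Prop)
variable {Γ : Type u} [Ctx M Γ] {𝔽 : FP M}

/-- The generic extension: names modulo equality of values. -/
def VG (G : Gen 𝔽) : Type u := Quotient (Setoid.ker (val G.S))

/-- The element of the extension denoted by a name. -/
noncomputable def nm (G : Gen 𝔽) (σ : M) : VG G := Quotient.mk _ σ

noncomputable def VG.v {G : Gen 𝔽} (x : VG G) : ZFSet.{u} := Quotient.lift (val G.S) (fun _ _ h => h) x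

/-- Membership in the generic extension. -/
def VG.E (G : Gen 𝔽) (x y : VG G) : Prop := x.v ∈ y.v

variable {G : Gen 𝔽}

theorem nm_surj (x : VG G) : ∃ σ, x = nm G σ := by
  induction x using Quotient.inductionOn with
  | _ σ => exact ⟨σ, rfl⟩
theorem v_nm {σ : M} : (nm G σ).v = val G.S σ := rfl
theorem nm_eq {σ τ : M} : nm G σ = nm G τ ↔ val G.S σ = val G.S τ :=
  ⟨fun h => congrArg VG.v h, fun h => Quotient.sound (s := Setoid.ker (val G.S)) h⟩
theorem v_inj {x y : VG G} : x.v = y.v ↔ x = y := by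
  obtain ⟨σ, rfl⟩ := nm_surj x
  obtain ⟨τ, rfl⟩ := nm_surj y
  exact nm_eq.symm
theorem nm_mem {σ τ : M} : VG.E G (nm G σ) (nm G τ) ↔ val G.S σ ∈ val G.S τ := Iff.rfl
theorem mem_nm {x : VG G} {τ : M} : VG.E G x (nm G τ) ↔ ∃ σ p, G.S p ∧ N σ p τ ∧ x = nm G σ := by
  obtain ⟨σ, rfl⟩ := nm_surj x
  rw [nm_mem, mem_val]; simp only [nm_eq]

theorem VG.ext {x y : VG G} (h : ∀ z, VG.E G z x ↔ VG.E G z y) : x = y := by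
  obtain ⟨σ, rfl⟩ := nm_surj x
  obtain ⟨τ, rfl⟩ := nm_surj y
  rw [nm_eq]
  ext z
  constructor
  · intro hz
    obtain ⟨ρ, p, _, _, rfl⟩ := mem_val.1 hz
    exact (h (nm G ρ)).1 hz
  · intro hz
    obtain ⟨ρ, p, _, _, rfl⟩ := mem_val.1 hz
    exact (h (nm G ρ)).2 hz

theorem VG.wf : WellFounded (VG.E G) := InvImage.wf VG.v ZFSet.mem_wf

theorem mem_prodP {x : VG G} {a : M} : VG.E G x (nm G (prod a 𝔽.P)) ↔ ∃ σ, σ ε a ∧ x = nm G σ := by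
  rw [mem_nm]
  constructor
  · rintro ⟨σ, p, hp, h, rfl⟩; exact ⟨σ, (N_prod.1 h).1, rfl⟩
  · rintro ⟨σ, h, rfl⟩
    obtain ⟨p, hp⟩ := G.ne
    exact ⟨σ, p, hp, N_prod.2 ⟨h, G.sub p hp⟩, rfl⟩

/-- Separation for names: the elements of a set of names satisfying a forceable property are
the values of the elements of a single name. -/
theorem Ff.sep (φ : Gen 𝔽 → M → Prop) [h : Ff (fun (G : Gen 𝔽) (w : Nil M × M) => φ G w.2)] (D : M) :
    ∃ c, Sb c (prod D 𝔽.P) ∧ ∀ (G : Gen 𝔽) x, VG.E G x (nm G c) ↔ ∃ σ, σ ε D ∧ x = nm G σ ∧ φ G σ := by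
  obtain ⟨F, hF, h1, h2⟩ := h.out
  have hd : D2 (fun σ p => F (Nil.mk, σ) p) := ⟨Df.pr (f := fun w : (Nil M × M) × M => ((Nil.mk, w.1.2), w.2))
    ((Pr.pair Pr.nil (V.wk V.v0)).pair V.v0) hF⟩
  obtain ⟨R, hR⟩ : ∃ R : M → M → Prop, R = fun σ p => F (Nil.mk, σ) p := ⟨_, rfl⟩
  rw [← hR] at hd
  let c := W6.sep (prod D 𝔽.P) (fun z : M => ∃ σ p : M, z = op σ p ∧ R σ p)
  have hs : Sb c (prod D 𝔽.P) := fun x hx => (mem_sep.1 hx).1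
  refine ⟨c, hs, fun G x => ?_⟩
  rw [mem_nm]
  have hp : ∀ σ p, N σ p c ↔ (σ ε D ∧ p ε 𝔽.P) ∧ F (Nil.mk, σ) p := by
    intro σ p
    rw [N_pairs fun z hz => ?_, mem_sep, op_mem_prod]
    · refine and_congr_right fun _ => ⟨?_, fun h => ⟨σ, p, rfl, hR ▸ h⟩⟩
      rintro ⟨σ', p', e, h⟩
      obtain ⟨rfl, rfl⟩ := op_inj.1 e; rw [hR] at h; exact h
    · obtain ⟨x, y, _, _, h⟩ := mem_prod.1 (hs z hz); exact ⟨x, y, h⟩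
  constructor
  · rintro ⟨σ, p, hpG, h, rfl⟩
    rw [hp] at h
    exact ⟨σ, h.1.1, rfl, h1 G (Nil.mk, σ) p hpG h.2⟩
  · rintro ⟨σ, hσ, rfl, h⟩
    obtain ⟨p, hpG, h⟩ := h2 G (Nil.mk, σ) h
    exact ⟨σ, p, hpG, (hp σ p).2 ⟨⟨hσ, G.sub p hpG⟩, h⟩, rfl⟩

theorem Ff.coll (φ : Gen 𝔽 → M → M → Prop) [h : Ff (fun (G : Gen 𝔽) (w : (Nil M × M) × M) => φ G w.1.2 w.2)] (d : M) :
    ∃ b, ∀ (G : Gen 𝔽) σ ρ, σ ε d → φ G σ ρ → ∃ ρ', ρ' ε b ∧ φ G σ ρ' := by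
  obtain ⟨F, hF, h1, h2⟩ := h.out
  have hd : D3 (fun σ ρ p => F ((Nil.mk, σ), ρ) p) :=
    ⟨Df.pr (f := fun w : ((Nil M × M) × M) × M => (((Nil.mk, w.1.1.2), w.1.2), w.2))
    (((Pr.pair Pr.nil (V.wk (V.wk V.v0))).pair (V.wk V.v0)).pair V.v0) hF⟩
  generalize hR : (fun σ ρ p => F ((Nil.mk, σ), ρ) p) = R at hd
  obtain ⟨b, hb⟩ := W6.coll (prod d 𝔽.P) (fun z ρ : M => ∀ σ p : M, z = op σ p → (∃ ρ' : M, R σ ρ' p) → R σ ρ p) (by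
    intro z hz
    obtain ⟨σ, p, _, _, rfl⟩ := mem_prod.1 hz
    by_cases hρ : ∃ ρ', R σ ρ' p
    · obtain ⟨ρ, hρ⟩ := hρ
      refine ⟨ρ, fun σ' p' e _ => ?_⟩
      obtain ⟨rfl, rfl⟩ := op_inj.1 e; exact hρ
    · refine ⟨σ, fun σ' p' e h => ?_⟩
      obtain ⟨rfl, rfl⟩ := op_inj.1 e; exact (hρ h).elim)
  refine ⟨b, fun G σ ρ hσ h => ?_⟩
  obtain ⟨p, hp, hF'⟩ := h2 G ((Nil.mk, σ), ρ) h
  obtain ⟨ρ', hρ', h'⟩ := hb (op σ p) (op_mem_prod.2 ⟨hσ, G.sub p hp⟩)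
  have := h' σ p rfl ⟨ρ, hR ▸ hF'⟩
  rw [← hR] at this
  exact ⟨ρ', hρ', h1 G _ p hp this⟩

omit [ZM M] in
theorem RealizeIn_bot {E : M → M → Prop} {n : ℕ} {xs : Fin n → M} :
    RealizeIn E BoundedFormula.falsum xs ↔ False := Iff.rfl

theorem Ff.realize {n : ℕ} (φ : memLang.BoundedFormula Empty n) : ∀ {Γ : Type u} [Ctx M Γ] (ts : Fin n → Γ → M)
    [∀ i, Tm (ts i)], Ff (fun (G : Gen 𝔽) w => RealizeIn (VG.E G) φ (fun i => nm G (ts i w))) := by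
  induction φ with
  | falsum => intro Γ _ ts _; exact (inferInstance : Ff (fun (G : Gen 𝔽) (w : Γ) => False))
  | @equal n t₁ t₂ =>
    intro Γ _ ts _
    rcases t₁ with (e | i) | ⟨f, _⟩
    · exact e.elim
    swap; · exact isEmptyElim f
    rcases t₂ with (e | j) | ⟨f, _⟩
    · exact e.elim
    swap; · exact isEmptyElim f
    exact (inferInstance : Ff (fun (G : Gen 𝔽) w => val G.S (ts i w) = val G.S (ts j w))).congr
      fun G w => nm_eq.symm
  | @rel n l R tt =>
    intro Γ _ ts _
    cases R
    rcases h₁ : tt 0 with (e | i) | ⟨f, _⟩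
    · exact e.elim
    swap; · exact isEmptyElim f
    rcases h₂ : tt 1 with (e | j) | ⟨f, _⟩
    · exact e.elim
    swap; · exact isEmptyElim f
    refine (inferInstance : Ff (fun (G : Gen 𝔽) w => val G.S (ts i w) ∈ val G.S (ts j w))).congr
      fun G w => ?_
    let _ := memStr (VG.E G)
    change _ ↔ VG.E G (Term.realize _ (tt 0)) (Term.realize _ (tt 1))
    rw [h₁, h₂]
    exact nm_mem.symm
  | imp φ ψ h1 h2 =>
    intro Γ _ ts _
    have := h1 ts
    have := h2 ts
    exact (inferInstance : Ff (fun (G : Gen 𝔽) w => RealizeIn (VG.E G) φ (fun i => nm G (ts i w)) →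
      RealizeIn (VG.E G) ψ (fun i => nm G (ts i w))))
  | @all n φ ih =>
    intro Γ _ ts _
    let ts' : Fin (n + 1) → Γ × M → M := Fin.snoc (α := fun _ => Γ × M → M) (fun i w => ts i w.1) (fun w => w.2)
    have : ∀ i, Tm (ts' i) := by
      intro i
      induction i using Fin.lastCases with
      | last => simp only [ts', Fin.snoc_last]; infer_instance
      | cast i => simp only [ts', Fin.snoc_castSucc]; infer_instance
    have := ih ts'
    have h3 : Ff (fun (G : Gen 𝔽) w => ∀ y, RealizeIn (VG.E G) φ (fun i => nm G (ts' i (w, y)))) :=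
      Ff.all (φ := fun G w y => RealizeIn (VG.E G) φ (fun i => nm G (ts' i (w, y))))
    refine h3.congr fun G w => ?_
    have key : ∀ y, (fun i => nm G (ts' i (w, y))) = Fin.snoc (α := fun _ => VG G) (fun i => nm G (ts i w)) (nm G y) := by
      intro y; funext i
      induction i using Fin.lastCases with
      | last => simp [ts', Fin.snoc_last]
      | cast i => simp [ts', Fin.snoc_castSucc]
    simp only [key]
    constructor
    · intro h x
      obtain ⟨y, rfl⟩ := nm_surj x
      exact h y
    · intro h y; exact h (nm G y)

end Ext
end W6
namespace W6
open ZF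

section Ext
variable {M : Type u} [ZM M]
local notation "𝓔" => (ZM.E : M → M → Prop)
variable {Γ : Type u} [Ctx M Γ] {𝔽 : FP M} {G : Gen 𝔽}

/-- The canonical embedding of the ground model. -/
noncomputable def chk (G : Gen 𝔽) (x : M) : VG G := nm G (op emp x)

theorem v_chk {x : M} : (chk G x).v = cl x := val_ground G.ne x

theorem chk_emb : TEmb 𝓔 (VG.E G) (chk G) where
  mem x y := by unfold VG.E; rw [v_chk, v_chk]; exact cl_mem
  tr x y h := by
    unfold VG.E at h
    rw [v_chk, mem_cl] at h
    obtain ⟨z, hz, e⟩ := h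
    exact ⟨z, hz, v_inj.1 (by rw [e, v_chk])⟩
  inj x y h := by rw [← v_inj, v_chk, v_chk] at h; exact cl_inj.1 h

theorem N_dom2 (τ : M) : ∃ d, ∀ σ p, N σ p τ → ∀ σ' q, N σ' q σ → σ' ε d := by
  obtain ⟨d, hd⟩ := N_dom τ
  obtain ⟨b, hb⟩ := coll d (fun σ e : M => ∀ σ' q : M, N σ' q σ → σ' ε e) (fun σ _ => N_dom σ)
  refine ⟨sU b, fun σ p h σ' q h' => ?_⟩
  obtain ⟨e, he, h3⟩ := hb σ (hd σ p h)
  exact mem_sU.2 ⟨e, he, h3 σ' q h'⟩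

theorem nm_pair {σ τ : M} : IsPairOf (VG.E G) (nm G (prod (pr σ τ) 𝔽.P)) (nm G σ) (nm G τ) := by
  intro x
  rw [mem_prodP]
  constructor
  · rintro ⟨ρ, hρ, rfl⟩
    exact (mem_pr.1 hρ).imp (congrArg _) (congrArg _)
  · rintro (rfl | rfl)
    · exact ⟨σ, mem_pr.2 (Or.inl rfl), rfl⟩
    · exact ⟨τ, mem_pr.2 (Or.inr rfl), rfl⟩

/-- A name for the ordered pair. -/
noncomputable def opn (P σ τ : M) : M := prod (pr (prod (pr σ σ) P) (prod (pr σ τ) P)) P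
instance : T3 (opn : M → M → M → M) := .of (by unfold opn; infer_instance)

theorem nm_opair {σ τ : M} : IsOPairOf (VG.E G) (nm G (opn 𝔽.P σ τ)) (nm G σ) (nm G τ) :=
  ⟨_, _, nm_pair, nm_pair, nm_pair⟩

theorem VG.pair_unique {p q a b : VG G} (h : IsPairOf (VG.E G) p a b) (h' : IsPairOf (VG.E G) q a b) : p = q :=
  VG.ext fun z => by rw [h, h']

theorem VG.opair_unique {p q a b : VG G} (h : IsOPairOf (VG.E G) p a b) (h' : IsOPairOf (VG.E G) q a b) : p = q := by
  obtain ⟨s, t, h1, h2, h3⟩ := h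
  obtain ⟨s', t', h1', h2', h3'⟩ := h'
  obtain rfl := VG.pair_unique h1 h1'
  obtain rfl := VG.pair_unique h2 h2'
  exact VG.pair_unique h3 h3'

theorem VG.pair_inj {p a b c d : VG G} (h : IsPairOf (VG.E G) p a b) (h' : IsPairOf (VG.E G) p c d) :
    (a = c ∧ b = d) ∨ (a = d ∧ b = c) := by
  have h1 := (h' a).1 ((h a).2 (Or.inl rfl))
  have h2 := (h' b).1 ((h b).2 (Or.inr rfl))
  have h3 := (h c).1 ((h' c).2 (Or.inl rfl))
  have h4 := (h d).1 ((h' d).2 (Or.inr rfl))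
  grind

theorem VG.opair_inj {p a b c d : VG G} (h : IsOPairOf (VG.E G) p a b) (h' : IsOPairOf (VG.E G) p c d) :
    a = c ∧ b = d := by
  obtain ⟨s, t, h1, h2, h3⟩ := h
  obtain ⟨s', t', h1', h2', h3'⟩ := h'
  have key : ∀ {s a b c d : VG G}, IsPairOf (VG.E G) s a b → IsPairOf (VG.E G) s c d → _ := fun x y => VG.pair_inj x y
  rcases VG.pair_inj h3 h3' with ⟨rfl, rfl⟩ | ⟨rfl, rfl⟩
  · have := VG.pair_inj h1 h1'
    have := VG.pair_inj h2 h2'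
    grind
  · have := VG.pair_inj h1 h2'
    have := VG.pair_inj h2 h1'
    grind

theorem VG.power (a : VG G) : ∃ p, IsPowersetOf (VG.E G) p a := by
  obtain ⟨τ, rfl⟩ := nm_surj a
  obtain ⟨d, hd⟩ := N_dom τ
  obtain ⟨c, _, hc⟩ := Ff.sep (fun (G : Gen 𝔽) (σ : M) => ∀ y : M, val G.S y ∈ val G.S σ → val G.S y ∈ val G.S τ)
    (pw (prod d 𝔽.P))
  refine ⟨nm G c, fun x => ?_⟩
  rw [hc]
  constructor
  · rintro ⟨σ, _, rfl, h⟩ y hy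
    obtain ⟨ρ, rfl⟩ := nm_surj y
    exact h ρ hy
  · intro h
    obtain ⟨ρ, rfl⟩ := nm_surj x
    obtain ⟨c', hc', h'⟩ := Ff.sep (fun (G : Gen 𝔽) (σ : M) => val G.S σ ∈ val G.S ρ) d
    have e : nm G ρ = nm G c' := by
      refine VG.ext fun z => ?_
      rw [h']
      constructor
      · intro hz
        obtain ⟨σ, p, hp, hN, rfl⟩ := mem_nm.1 (h z hz)
        exact ⟨σ, hd σ p hN, rfl, hz⟩
      · rintro ⟨σ, _, rfl, hσ⟩; exact hσ
    refine ⟨c', mem_pw.2 hc', e, fun y hy => h (nm G y) ?_⟩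
    rw [e]; exact hy

theorem VG.choice (a : VG G) (ha : ∀ x, VG.E G x a → ∃ y, VG.E G y x) :
    ∃ f, (∀ x y y', PairMem (VG.E G) f x y → PairMem (VG.E G) f x y' → y = y') ∧
      ∀ x, VG.E G x a → ∃ y, PairMem (VG.E G) f x y ∧ VG.E G y x := by
  obtain ⟨τ, rfl⟩ := nm_surj a
  obtain ⟨d, hd⟩ := N_dom τ
  obtain ⟨D, hD⟩ := N_dom2 τ
  obtain ⟨θ, hθ, hle⟩ := exists_ord_cardLE D
  obtain ⟨f, hf, hinj⟩ := cardLE_iff.1 hle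
  let φ : Gen 𝔽 → M → Prop := fun G z => ∃ σ ρ : M, z = opn 𝔽.P σ ρ ∧ ρ ε D ∧ val G.S ρ ∈ val G.S σ ∧
    ∀ ρ' : M, ρ' ε D → val G.S ρ' ∈ val G.S σ → ¬ app f ρ' ε app f ρ
  obtain ⟨c, _, hc⟩ := Ff.sep φ (img (prod d D) (fun z : M => the fun y : M => ∃ σ ρ : M, z = op σ ρ ∧ y = opn 𝔽.P σ ρ))
  refine ⟨nm G c, ?_, ?_⟩
  · rintro x y y' ⟨p, hp, hp'⟩ ⟨q, hq, hq'⟩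
    rw [hc] at hp hq
    obtain ⟨z, _, rfl, σ, ρ, rfl, h1, h2, h3⟩ := hp
    obtain ⟨z', _, rfl, σ', ρ', rfl, h1', h2', h3'⟩ := hq
    obtain ⟨rfl, rfl⟩ := VG.opair_inj hp' nm_opair
    obtain ⟨e, rfl⟩ := VG.opair_inj hq' nm_opair
    rw [nm_eq] at e
    have a1 := h3 ρ' h1' (e ▸ h2')
    have a2 := h3' ρ h1 (e ▸ h2)
    rcases (hθ.mem (hf ρ h1)).tri (hθ.mem (hf ρ' h1')) with h | h | h
    · exact (a2 h).elim
    · rw [hinj _ _ h1 h1' h]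
    · exact (a1 h).elim
  · intro x hx
    obtain ⟨y, hy⟩ := ha x hx
    obtain ⟨σ, p, hp, hN, rfl⟩ := mem_nm.1 hx
    obtain ⟨ρ, q, hq, hN', rfl⟩ := mem_nm.1 hy
    obtain ⟨β, ⟨ρ, hρ, rfl, h2⟩, h3⟩ := eps_min (P := fun β => ∃ ρ, ρ ε D ∧ β = app f ρ ∧ val G.S ρ ∈ val G.S σ)
      ⟨_, ρ, hD _ _ hN _ _ hN', rfl, hy⟩
    refine ⟨nm G ρ, ⟨nm G (opn 𝔽.P σ ρ), (hc G _).2 ⟨_, mem_img.2 ⟨op σ ρ, op_mem_prod.2 ⟨hd _ _ hN, hρ⟩, ?_⟩, rfl, σ, ρ, rfl, hρ, h2, ?_⟩,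
      nm_opair⟩, h2⟩
    · symm
      apply the_eq
      · exact ⟨σ, ρ, rfl, rfl⟩
      · rintro z ⟨σ', ρ', e, rfl⟩
        obtain ⟨rfl, rfl⟩ := op_inj.1 e; rfl
    · intro ρ' hρ' h5 h6
      exact h3 _ h6 ⟨ρ', hρ', rfl, h5⟩

theorem VG.zfc (G : Gen 𝔽) : SatisfiesZFC (VG.E G) where
  ext x y h := VG.ext h
  found := VG.wf
  pairing a b := by
    obtain ⟨σ, rfl⟩ := nm_surj a
    obtain ⟨τ, rfl⟩ := nm_surj b
    exact ⟨_, nm_pair⟩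
  union a := by
    obtain ⟨τ, rfl⟩ := nm_surj a
    obtain ⟨D, hD⟩ := N_dom2 τ
    obtain ⟨c, _, hc⟩ := Ff.sep (fun (G : Gen 𝔽) (σ : M) => ∃ y : M, val G.S y ∈ val G.S τ ∧ val G.S σ ∈ val G.S y) D
    refine ⟨nm G c, fun x => ?_⟩
    rw [hc]
    constructor
    · rintro ⟨σ, _, rfl, y, h⟩; exact ⟨nm G y, h⟩
    · rintro ⟨y, hy, h⟩
      obtain ⟨σ, p, hp, hN, rfl⟩ := mem_nm.1 hy
      obtain ⟨σ', q, hq, hN', rfl⟩ := mem_nm.1 h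
      exact ⟨σ', hD _ _ hN _ _ hN', rfl, σ, hy, h⟩
  infinity := ⟨_, chk_emb.isOmega om_spec⟩
  sep n φ params a := by
    obtain ⟨τ, rfl⟩ := nm_surj a
    obtain ⟨d, hd⟩ := N_dom τ
    choose ps hps using fun i => nm_surj (params i)
    let ts : Fin (n + 1) → Nil M × M → M := Fin.snoc (α := fun _ => Nil M × M → M) (fun i w => ps i) (fun w => w.2)
    have : ∀ i, Tm (ts i) := by
      intro i
      induction i using Fin.lastCases with
      | last => simp only [ts, Fin.snoc_last]; infer_instance
      | cast i => simp only [ts, Fin.snoc_castSucc]; infer_instance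
    have hF := Ff.realize (𝔽 := 𝔽) φ ts
    have hF' : Ff (fun (G : Gen 𝔽) (w : Nil M × M) => (fun G x => val G.S x ∈ val G.S τ ∧
      RealizeIn (VG.E G) φ (fun i => nm G (ts i (Nil.mk, x)))) G w.2) :=
      (inferInstance : Ff (fun (G : Gen 𝔽) (w : Nil M × M) => val G.S w.2 ∈ val G.S τ ∧ _))
    obtain ⟨c, _, hc⟩ := Ff.sep (h := hF') (fun G x => val G.S x ∈ val G.S τ ∧
      RealizeIn (VG.E G) φ (fun i => nm G (ts i (Nil.mk, x)))) d
    have key : ∀ y, (fun i => nm G (ts i (Nil.mk, y))) = Fin.snoc (α := fun _ => VG G) params (nm G y) := by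
      intro y; funext i
      induction i using Fin.lastCases with
      | last => simp [ts, Fin.snoc_last]
      | cast i => simp [ts, Fin.snoc_castSucc, hps]
    refine ⟨nm G c, fun x => ?_⟩
    rw [hc]
    constructor
    · rintro ⟨σ, _, rfl, h1, h2⟩
      rw [key] at h2
      exact ⟨h1, h2⟩
    · rintro ⟨h1, h2⟩
      obtain ⟨σ, p, hp, hN, rfl⟩ := mem_nm.1 h1
      rw [← key] at h2
      exact ⟨σ, hd _ _ hN, rfl, h1, h2⟩
  coll n φ params a := by
    obtain ⟨τ, rfl⟩ := nm_surj a
    obtain ⟨d, hd⟩ := N_dom τ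
    choose ps hps using fun i => nm_surj (params i)
    let ts : Fin (n + 2) → (Nil M × M) × M → M := Fin.snoc (α := fun _ => (Nil M × M) × M → M)
      (Fin.snoc (α := fun _ => (Nil M × M) × M → M) (fun i w => ps i) (fun w => w.1.2)) (fun w => w.2)
    have : ∀ i, Tm (ts i) := by
      intro i
      induction i using Fin.lastCases with
      | last => simp only [ts, Fin.snoc_last]; infer_instance
      | cast i =>
        simp only [ts, Fin.snoc_castSucc]
        induction i using Fin.lastCases with
        | last => simp only [Fin.snoc_last]; infer_instance
        | cast i => simp only [Fin.snoc_castSucc]; infer_instance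
    have hF := Ff.realize (𝔽 := 𝔽) φ ts
    obtain ⟨b, hb⟩ := Ff.coll (h := hF) (fun G x y => RealizeIn (VG.E G) φ (fun i => nm G (ts i ((Nil.mk, x), y)))) d
    have key : ∀ x y, (fun i => nm G (ts i ((Nil.mk, x), y))) =
        Fin.snoc (α := fun _ => VG G) (Fin.snoc (α := fun _ => VG G) params (nm G x)) (nm G y) := by
      intro x y; funext i
      induction i using Fin.lastCases with
      | last => simp [ts, Fin.snoc_last]
      | cast i =>
        induction i using Fin.lastCases with
        | last => simp [ts, Fin.snoc_last, Fin.snoc_castSucc]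
        | cast i => simp [ts, Fin.snoc_castSucc, hps]
    intro h
    refine ⟨nm G (prod b 𝔽.P), fun x hx => ?_⟩
    obtain ⟨y, hy⟩ := h x hx
    obtain ⟨σ, p, hp, hN, rfl⟩ := mem_nm.1 hx
    obtain ⟨ρ, rfl⟩ := nm_surj y
    rw [← key] at hy
    obtain ⟨ρ', h1, h2⟩ := hb G σ ρ (hd _ _ hN) hy
    refine ⟨nm G ρ', mem_prodP.2 ⟨ρ', h1, rfl⟩, ?_⟩
    rw [← key]; exact h2
  choice := VG.choice
  power := VG.power

noncomputable instance : ZM (VG G) := ⟨VG.E G, VG.zfc G⟩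

end Ext
end W6
namespace W6
open ZF

section Val
variable {W : Type u} [ZM W]
local notation "𝓔" => (ZM.E : W → W → Prop)

/-- `A` is a set of pairs that computes the evaluation of names by the filter `H`. -/
def Attempt (H A : W) : Prop := ∀ y v, op y v ε A →
  (∀ z, z ε v ↔ ∃ y', (∃ p, p ε H ∧ N y' p y) ∧ op y' z ε A) ∧ ∀ y', (∃ p, p ε H ∧ N y' p y) → ∃ z, op y' z ε A
instance : D2 (Attempt : W → W → Prop) := ⟨by unfold Attempt; infer_instance⟩

theorem Attempt.cl_eq {H A y w : W} (h : Attempt H A) (hy : op y w ε A) : cl w = val (· ε H) y := by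
  induction y using (N_wf (M := W)).induction generalizing w with
  | _ y ih =>
    ext x
    rw [mem_cl, mem_val]
    constructor
    · rintro ⟨z, hz, rfl⟩
      obtain ⟨y', ⟨p, hp, hN⟩, h'⟩ := ((h y w hy).1 z).1 hz
      exact ⟨y', p, hp, hN, ih y' ⟨p, hN⟩ h'⟩
    · rintro ⟨y', p, hp, hN, rfl⟩
      obtain ⟨z, hz⟩ := (h y w hy).2 y' ⟨p, hp, hN⟩
      exact ⟨z, ((h y w hy).1 z).2 ⟨y', ⟨p, hp, hN⟩, hz⟩, (ih y' ⟨p, hN⟩ hz).symm⟩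

theorem Attempt.of {H A : W} (h : ∀ y v, op y v ε A → cl v = val (· ε H) y ∧
    ∀ y', (∃ p, p ε H ∧ N y' p y) → ∃ z, op y' z ε A) : Attempt H A := by
  intro y v hy
  refine ⟨fun z => ?_, (h y v hy).2⟩
  rw [← cl_mem, (h y v hy).1, mem_val]
  constructor
  · rintro ⟨y', p, hp, hN, e⟩
    obtain ⟨z', hz'⟩ := (h y v hy).2 y' ⟨p, hp, hN⟩
    rw [← (h y' z' hz').1, cl_inj] at e
    exact ⟨y', ⟨p, hp, hN⟩, e ▸ hz'⟩
  · rintro ⟨y', ⟨p, hp, hN⟩, h'⟩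
    exact ⟨y', p, hp, hN, (h y' z h').1⟩

theorem exists_attempt (H y : W) : ∃ A, Attempt H A ∧ ∃ w, op y w ε A := by
  induction y using (N_wf (M := W)).induction with
  | _ y ih =>
    obtain ⟨d, hd⟩ := N_dom y
    obtain ⟨b, hb⟩ := coll (sep d (fun y' : W => ∃ p : W, p ε H ∧ N y' p y)) (fun y' A : W => Attempt H A ∧ ∃ w : W, op y' w ε A) (by
      intro y' h
      obtain ⟨p, _, hN⟩ := (mem_sep.1 h).2
      exact ih y' ⟨p, hN⟩)
    have hQ : ∀ y', (∃ p, p ε H ∧ N y' p y) → ∃ A z, A ε b ∧ Attempt H A ∧ op y' z ε A := by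
      rintro y' ⟨p, hp, hN⟩
      obtain ⟨A, hA, h1, z, h2⟩ := hb y' (mem_sep.2 ⟨hd _ _ hN, p, hp, hN⟩)
      exact ⟨A, z, hA, h1, h2⟩
    let A₀ := sU (sep b (fun A => Attempt H A))
    have h0 : ∀ y v, op y v ε A₀ ↔ ∃ A, A ε b ∧ Attempt H A ∧ op y v ε A := by
      intro y v; simp only [A₀, mem_sU, mem_sep, and_assoc]
    let w := sep (sU (sU A₀)) (fun z : W => ∃ y' : W, (∃ p : W, p ε H ∧ N y' p y) ∧ op y' z ε A₀)
    have hw : ∀ z, z ε w ↔ ∃ y', (∃ p, p ε H ∧ N y' p y) ∧ op y' z ε A₀ := by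
      intro z
      rw [mem_sep, and_iff_right_iff_imp]
      rintro ⟨y', _, h⟩
      exact mem_sU.2 ⟨pr y' z, mem_sU.2 ⟨_, h, mem_pr.2 (Or.inr rfl)⟩, mem_pr.2 (Or.inr rfl)⟩
    refine ⟨un A₀ (sing (op y w)), Attempt.of ?_, w, mem_un.2 (Or.inr (mem_sing.2 rfl))⟩
    intro y1 v h
    rcases mem_un.1 h with h | h
    · obtain ⟨A, hA, hA', h1⟩ := (h0 _ _).1 h
      refine ⟨hA'.cl_eq h1, fun y' hy' => ?_⟩
      obtain ⟨z, hz⟩ := (hA' _ _ h1).2 y' hy'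
      exact ⟨z, mem_un.2 (Or.inl ((h0 _ _).2 ⟨A, hA, hA', hz⟩))⟩
    · obtain ⟨rfl, rfl⟩ := op_inj.1 (mem_sing.1 h)
      constructor
      · ext x
        rw [mem_cl, mem_val]
        constructor
        · rintro ⟨z, hz, rfl⟩
          obtain ⟨y', ⟨p, hp, hN⟩, h⟩ := (hw z).1 hz
          obtain ⟨A, hA, hA', h1⟩ := (h0 _ _).1 h
          exact ⟨y', p, hp, hN, hA'.cl_eq h1⟩
        · rintro ⟨y', p, hp, hN, rfl⟩
          obtain ⟨A, z, hA, hA', h1⟩ := hQ y' ⟨p, hp, hN⟩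
          exact ⟨z, (hw z).2 ⟨y', ⟨p, hp, hN⟩, (h0 _ _).2 ⟨A, hA, hA', h1⟩⟩, (hA'.cl_eq h1).symm⟩
      · intro y' hy'
        obtain ⟨A, z, hA, hA', h1⟩ := hQ y' hy'
        exact ⟨z, mem_un.2 (Or.inl ((h0 _ _).2 ⟨A, hA, hA', h1⟩))⟩

theorem exists_val (H y : W) : ∃ w : W, cl w = val (· ε H) y := by
  obtain ⟨A, hA, w, hw⟩ := exists_attempt H y
  exact ⟨w, hA.cl_eq hw⟩

end Val

section Emb2
variable {M W : Type u} [ZM M] [ZM W] {f : M → W} (h : TEmb (ZM.E : M → M → Prop) (ZM.E : W → W → Prop) f)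
include h

theorem TEmb.pr (a b : M) : f (pr a b) = pr (f a) (f b) :=
  isPair_pr.1 (h.isPair.2 (isPair_pr.2 rfl))
theorem TEmb.op (a b : M) : f (op a b) = op (f a) (f b) := by
  unfold W6.op; rw [h.pr, h.pr, h.pr]
theorem TEmb.emp : f emp = emp := isEmpty_iff.1 (h.isEmpty.2 (isEmpty_iff.2 rfl))
theorem TEmb.om : f om = om := isOmega_iff.1 (h.isOmega om_spec)
theorem TEmb.cl (x : M) : cl (f x) = cl x := by
  induction x using (eps_wf (M := M)).induction with
  | _ x ih =>
    ext z
    rw [mem_cl, mem_cl]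
    constructor
    · rintro ⟨y, hy, rfl⟩
      obtain ⟨z, hz, rfl⟩ := h.tr _ _ hy
      exact ⟨z, hz, ih z hz⟩
    · rintro ⟨y, hy, rfl⟩
      exact ⟨f y, (h.mem _ _).2 hy, (ih y hy).symm⟩

theorem TEmb.op_mem {x y : W} {a : M} (hx : W6.op x y ε f a) : ∃ x' y', x = f x' ∧ y = f y' ∧ W6.op x' y' ε a := by
  obtain ⟨z, hz, e⟩ := h.tr _ _ hx
  have h1 : W6.pr x y ε f z := e ▸ mem_pr.2 (Or.inr rfl)
  obtain ⟨z', hz', e'⟩ := h.tr _ _ h1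
  obtain ⟨x', _, rfl⟩ := h.tr z' x (e' ▸ mem_pr.2 (Or.inl rfl))
  obtain ⟨y', _, rfl⟩ := h.tr z' y (e' ▸ mem_pr.2 (Or.inr rfl))
  refine ⟨x', y', rfl, rfl, ?_⟩
  rw [← h.op] at e
  rw [h.inj _ _ e]; exact hz

theorem TEmb.N {x p : W} {τ : M} : N x p (f τ) ↔ (∃ σ q, x = f σ ∧ p = f q ∧ W6.op σ q ε τ) ∨
    ∃ σ y, x = f σ ∧ τ = W6.op W6.emp y ∧ ∃ z, z ε y ∧ σ = W6.op W6.emp z := by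
  unfold W6.N
  refine or_congr ⟨fun h1 => ?_, ?_⟩ ⟨?_, ?_⟩
  · exact h.op_mem h1
  · rintro ⟨σ, q, rfl, rfl, h1⟩
    rw [← h.op]; exact (h.mem _ _).2 h1
  · rintro ⟨y, z, e, hz, rfl⟩
    have h1 : W6.pr W6.emp y ε f τ := e ▸ mem_pr.2 (Or.inr rfl)
    obtain ⟨t, _, ht⟩ := h.tr _ _ h1
    obtain ⟨y, _, rfl⟩ := h.tr t y (ht ▸ mem_pr.2 (Or.inr rfl))
    obtain ⟨z, hz', rfl⟩ := h.tr _ _ hz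
    rw [← h.emp, ← h.op] at e ⊢
    exact ⟨_, y, rfl, h.inj _ _ e, z, hz', rfl⟩
  · rintro ⟨σ, y, rfl, rfl, z, hz, rfl⟩
    exact ⟨f y, f z, by rw [h.op, h.emp], (h.mem _ _).2 hz, by rw [h.op, h.emp]⟩

theorem TEmb.val {S : M → Prop} (hS : ∃ p, S p) {H : W} (hH : ∀ x, x ε H ↔ ∃ p, S p ∧ x = f p) (τ : M) :
    W6.val (· ε H) (f τ) = W6.val S τ := by
  induction τ using (N_wf (M := M)).induction with
  | _ τ ih =>
    ext z
    rw [mem_val, mem_val]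
    constructor
    · rintro ⟨x, p, hp, hN, rfl⟩
      rcases h.N.1 hN with ⟨σ, q, rfl, rfl, h1⟩ | ⟨σ, y, rfl, rfl, z, hz, rfl⟩
      · obtain ⟨q', hq', e⟩ := (hH _).1 hp
        obtain rfl := h.inj _ _ e
        exact ⟨σ, q, hq', Or.inl h1, ih σ ⟨q, Or.inl h1⟩⟩
      · obtain ⟨q, hq⟩ := hS
        have hN' := N_ground (p := q).2 ⟨z, hz, rfl⟩
        exact ⟨_, q, hq, hN', ih _ ⟨q, hN'⟩⟩
    · rintro ⟨σ, p, hp, hN, rfl⟩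
      refine ⟨f σ, f p, (hH _).2 ⟨p, hp, rfl⟩, h.N.2 ?_, (ih σ ⟨p, hN⟩).symm⟩
      rcases hN with h1 | ⟨y, z, rfl, hz, rfl⟩
      · exact Or.inl ⟨σ, p, rfl, rfl, h1⟩
      · exact Or.inr ⟨_, y, rfl, rfl, z, hz, rfl⟩

end Emb2

section Gext
variable {M : Type u} [ZM M]
local notation "𝓔" => (ZM.E : M → M → Prop)
variable {𝔽 : FP M} {G : Gen 𝔽}

theorem chk_emb' : TEmb 𝓔 (ZM.E : VG G → VG G → Prop) (chk G) := chk_emb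

/-- The extension has no new ordinals. -/
theorem VG.ords (x : VG G) (hx : Ord x) : ∃ y, x = chk G y := by
  by_contra hne
  obtain ⟨τ, rfl⟩ := nm_surj x
  obtain ⟨d, hd⟩ := N_dom τ
  obtain ⟨b, hb⟩ := Ff.coll (fun (G : Gen 𝔽) (σ β : M) => val G.S σ = val G.S (op emp β)) d
  obtain ⟨β, hβ, hβ'⟩ := ord_bdd b
  rcases (chk_emb'.isOrd.2 hβ : Ord (chk G β)).tri hx with h | h | h
  · obtain ⟨σ, p, hp, hN, e⟩ := mem_nm.1 h
    obtain ⟨β', h1, h2⟩ := hb G σ β (hd _ _ hN) (nm_eq.1 e).symm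
    have : chk G β = chk G β' := e.trans (nm_eq.2 h2)
    obtain rfl := chk_emb.inj _ _ this
    exact eps_irrefl (hβ' _ h1 hβ)
  · exact hne ⟨β, h.symm⟩
  · obtain ⟨z, _, e⟩ := chk_emb.tr _ _ h
    exact hne ⟨z, e⟩

/-- The name of the generic filter. -/
noncomputable def Gnm (𝔽 : FP M) : M := img 𝔽.P (fun p => op (op emp p) p)

theorem mem_Gnm {x : VG G} : x ε nm G (Gnm 𝔽) ↔ ∃ p, G.S p ∧ x = chk G p := by
  change VG.E G _ _ ↔ _
  rw [mem_nm]
  have hN : ∀ σ p, N σ p (Gnm 𝔽) ↔ p ε 𝔽.P ∧ σ = op emp p := by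
    intro σ p
    rw [N_pairs fun z hz => ?_]
    · unfold Gnm; rw [mem_img]
      constructor
      · rintro ⟨q, hq, e⟩
        obtain ⟨rfl, rfl⟩ := op_inj.1 e; exact ⟨hq, rfl⟩
      · rintro ⟨hp, rfl⟩; exact ⟨p, hp, rfl⟩
    · obtain ⟨q, hq, e⟩ := mem_img.1 hz; exact ⟨_, _, e⟩
  simp only [hN]
  constructor
  · rintro ⟨σ, p, hp, ⟨_, rfl⟩, rfl⟩; exact ⟨p, hp, rfl⟩
  · rintro ⟨p, hp, rfl⟩; exact ⟨_, p, hp, ⟨G.sub p hp, rfl⟩, rfl⟩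

theorem chk_mem_Gnm {p : M} : chk G p ε nm G (Gnm 𝔽) ↔ G.S p := by
  rw [mem_Gnm]
  exact ⟨fun ⟨q, hq, e⟩ => chk_emb.inj _ _ e ▸ hq, fun h => ⟨p, h, rfl⟩⟩

theorem VG.minimal {W : Type u} [ZM W] {g : M → W} (hg : TEmb 𝓔 (ZM.E : W → W → Prop) g) (H : W)
    (hH : ∀ x, x ε H ↔ ∃ p, G.S p ∧ x = g p) :
    ∃ h : VG G → W, TEmb (ZM.E : VG G → VG G → Prop) (ZM.E : W → W → Prop) h ∧ ∀ x, h (chk G x) = g x := by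
  have hex : ∀ x : VG G, ∃ w : W, cl w = x.v := by
    intro x
    obtain ⟨τ, rfl⟩ := nm_surj x
    obtain ⟨w, hw⟩ := exists_val H (g τ)
    exact ⟨w, hw.trans (hg.val G.ne hH τ)⟩
  choose h hh using hex
  refine ⟨h, ⟨fun x y => ?_, fun x y hy => ?_, fun x y e => ?_⟩, fun x => ?_⟩
  · rw [← cl_mem, hh, hh]; rfl
  · rw [← cl_mem, hh] at hy
    obtain ⟨τ, rfl⟩ := nm_surj x
    obtain ⟨σ, p, hp, hN, e⟩ := mem_val.1 hy
    refine ⟨nm G σ, mem_nm.2 ⟨σ, p, hp, hN, rfl⟩, ?_⟩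
    rw [← cl_inj, hh, e]; rfl
  · rw [← cl_inj, hh, hh, v_inj] at e; exact e
  · rw [← cl_inj, hh, v_chk, hg.cl]

end Gext

section Final
/-- A universe as a model. -/
abbrev ZFCUniverse.zm (U : ZFCUniverse.{u}) : ZM U.M := ⟨U.mem, U.zfc⟩

/-- The generic extension as a universe. -/
def VG.univ {M : Type u} [ZM M] {𝔽 : FP M} (G : Gen 𝔽) : ZFCUniverse.{u} := ⟨VG G, VG.E G, VG.zfc G⟩

theorem isSetGenericExt (U : ZFCUniverse.{u}) :
    letI : ZM U.M := ⟨U.mem, U.zfc⟩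
    ∀ (𝔽 : FP U.M) (G : Gen 𝔽) (_ : ∀ p, p ε 𝔽.P → ∃ q, 𝔽.le q p ∧ ¬ 𝔽.le p q),
    ∃ (e : MemEmbed U (VG.univ G)) (leP : U.M) (H : (VG.univ G).M), e.f = chk G ∧
      IsSetGenericExt U (VG.univ G) e 𝔽.P leP H := by
  let _ : ZM U.M := ⟨U.mem, U.zfc⟩
  intro 𝔽 G hat
  let leP : U.M := sep (prod 𝔽.P 𝔽.P) (fun z : U.M => ∃ p q : U.M, z = op p q ∧ (p = q ∨ (𝔽.le p q ∧ ¬ 𝔽.le q p)))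
  have hle : ∀ p q, PairMem U.mem leP p q ↔ (p ε 𝔽.P ∧ q ε 𝔽.P) ∧ (p = q ∨ (𝔽.le p q ∧ ¬ 𝔽.le q p)) := by
    intro p q
    refine (pairMem (r := leP)).trans ?_
    rw [mem_sep, op_mem_prod]
    refine and_congr_right fun _ => ⟨?_, fun h => ⟨p, q, rfl, h⟩⟩
    rintro ⟨p', q', e, h⟩
    obtain ⟨rfl, rfl⟩ := op_inj.1 e; exact h
  have hle' : ∀ p q, PairMem U.mem leP p q → 𝔽.le p q := by
    intro p q h
    rcases (hle p q).1 h with ⟨⟨hp, hq⟩, rfl | h⟩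
    · exact 𝔽.refl _ hp
    · exact h.1
  have hG : ∀ p, (VG.univ G).mem (chk G p) (nm G (Gnm 𝔽)) ↔ G.S p := fun p => chk_mem_Gnm
  refine ⟨⟨chk G, chk_emb.mem, chk_emb.tr⟩, leP, nm G (Gnm 𝔽), rfl, ?_⟩
  constructor
  · refine ⟨?_, ?_, ?_, ?_⟩
    · intro z hz
      have hz' : z ε leP := hz
      obtain ⟨p, q, hp, hq, e⟩ := mem_prod.1 (mem_sep.1 hz').1
      exact ⟨p, q, hp, hq, isOPair_op.2 e⟩
    · intro p hp; exact (hle p p).2 ⟨⟨hp, hp⟩, Or.inl rfl⟩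
    · intro p q r h1 h2
      rw [hle] at h1 h2 ⊢
      refine ⟨⟨h1.1.1, h2.1.2⟩, ?_⟩
      rcases h1.2 with rfl | ⟨a, b⟩
      · exact h2.2
      · rcases h2.2 with rfl | ⟨c, d⟩
        · exact Or.inr ⟨a, b⟩
        · exact Or.inr ⟨𝔽.trans _ _ _ a c, fun h => d (𝔽.trans _ _ _ h a)⟩
    · intro p q h1 h2
      rcases ((hle p q).1 h1).2 with e | ⟨_, h⟩
      · exact e
      · exact (h (hle' _ _ h2)).elim
  · intro x hx
    obtain ⟨p, hp, e⟩ := mem_Gnm.1 hx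
    exact ⟨p, G.sub p hp, e⟩
  · intro p q hp hq h h1
    exact (hG q).2 (G.up _ _ (hle' _ _ h) ((hG p).1 h1))
  · intro p q hp hq h1 h2
    obtain ⟨r, hr, a, b⟩ := G.dir p q ((hG p).1 h1) ((hG q).1 h2)
    obtain ⟨s, hs, hsr, hn⟩ := G.meet (fun s : U.M => ¬ 𝔽.le r s) hr (by
      intro s hs
      obtain ⟨t, h1, h2⟩ := hat s (𝔽.dom _ _ hs).1
      exact ⟨t, h1, fun h => h2 (𝔽.trans _ _ _ hs h)⟩)
    refine ⟨s, G.sub s hs, (hG s).2 hs, ?_, ?_⟩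
    · exact (hle _ _).2 ⟨⟨G.sub s hs, hp⟩, Or.inr ⟨𝔽.trans _ _ _ hsr a, fun h => hn (𝔽.trans _ _ _ a h)⟩⟩
    · exact (hle _ _).2 ⟨⟨G.sub s hs, hq⟩, Or.inr ⟨𝔽.trans _ _ _ hsr b, fun h => hn (𝔽.trans _ _ _ b h)⟩⟩
  · intro D hD
    obtain ⟨q, hq, hq'⟩ := G.gen D (fun p hp => by
      obtain ⟨q, h1, h2⟩ := hD.2 p hp
      exact ⟨q, h1, hle' _ _ h2⟩)
    exact ⟨q, hq, (hG q).2 hq'⟩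
  · exact fun x hx => VG.ords x hx
  · intro W g H hH _
    let _ : ZM W.M := ⟨W.mem, W.zfc⟩
    have hinj : ∀ x y, g.f x = g.f y → x = y := fun x y e => ext fun z => by
      rw [show z ε x ↔ W.mem (g.f z) (g.f x) from (g.mem_iff _ _).symm, e]; exact g.mem_iff _ _
    obtain ⟨h, h1, h2⟩ := VG.minimal (G := G) (W := W.M) (g := g.f) ⟨g.mem_iff, g.trans_range, hinj⟩ H (fun x => by
      refine (hH x).trans (exists_congr fun p => ?_)
      exact and_congr_left fun _ => hG p)
    exact ⟨⟨h, h1.mem, h1.tr⟩, h2⟩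

end Final
end W6
namespace W6
open ZF

section Fin
variable {M : Type u} [ZM M]
local notation "𝓔" => (ZM.E : M → M → Prop)

/-- Finite sets, defined by induction: `x` lies in every family that contains `∅` and is closed
under adding one element of `x`. -/
def Fin' (x : M) : Prop := ∀ F, emp ε F → (∀ y z, y ε F → z ε x → un y (sing z) ε F) → x ε F
instance : D1 (Fin' : M → Prop) := ⟨by unfold Fin'; infer_instance⟩

theorem Fin'.emp : Fin' (emp : M) := fun _ h _ => h
theorem Fin'.sing (a : M) : Fin' (sing a) := by
  intro F h0 h1
  have := h1 _ a h0 (mem_sing.2 rfl)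
  rwa [show un W6.emp (W6.sing a) = W6.sing a from W6.ext fun z => by rw [mem_un]; simp [not_mem_emp] ] at this
theorem Fin'.un {x y : M} (hx : Fin' x) (hy : Fin' y) : Fin' (un x y) := by
  intro F h0 h1
  have hxF : x ε F := hx F h0 (fun a z ha hz => h1 a z ha (mem_un.2 (Or.inl hz)))
  have := hy (sep (pw y) (fun b => W6.un x b ε F)) (mem_sep.2 ⟨mem_pw.2 fun z hz => (not_mem_emp hz).elim, by
    rwa [show W6.un x W6.emp = x from W6.ext fun z => by rw [mem_un]; simp [not_mem_emp] ]⟩) (by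
    intro a z ha hz
    rw [mem_sep] at ha ⊢
    refine ⟨mem_pw.2 fun w hw => ?_, ?_⟩
    · rw [mem_un, mem_sing] at hw
      rcases hw with hw | rfl
      · exact mem_pw.1 ha.1 w hw
      · exact hz
    · have := h1 _ z ha.2 (mem_un.2 (Or.inr hz))
      rwa [show W6.un (W6.un x a) (W6.sing z) = W6.un x (W6.un a (W6.sing z)) from W6.ext fun w => by
        simp only [mem_un, or_assoc] ] at this)
  exact (mem_sep.1 this).2
theorem Fin'.sb {x y : M} (hy : Fin' y) (h : Sb x y) : Fin' x := by
  intro F h0 h1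
  have hx : ∀ b : M, Sb b x → sep b (fun z => z ε x) = b := fun b hb =>
    W6.ext fun z => by rw [mem_sep]; exact ⟨fun h => h.1, fun h => ⟨h, hb z h⟩⟩
  have := hy (sep (pw y) (fun b => sep b (fun z => z ε x) ε F)) (mem_sep.2 ⟨mem_pw.2 fun z hz => (not_mem_emp hz).elim, by
    rwa [hx _ fun z hz => (not_mem_emp hz).elim]⟩) (by
    intro a z ha hz
    rw [mem_sep] at ha ⊢
    refine ⟨mem_pw.2 fun w hw => ?_, ?_⟩
    · rw [mem_un, mem_sing] at hw
      rcases hw with hw | rfl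
      · exact mem_pw.1 ha.1 w hw
      · exact hz
    · by_cases hzx : z ε x
      · have := h1 _ z ha.2 hzx
        rwa [show W6.un (sep a fun z => z ε x) (W6.sing z) = sep (W6.un a (W6.sing z)) (fun z => z ε x) from W6.ext fun w => by
          simp only [mem_un, mem_sep, mem_sing]
          constructor
          · rintro (h | rfl)
            · exact ⟨Or.inl h.1, h.2⟩
            · exact ⟨Or.inr rfl, hzx⟩
          · rintro ⟨h | rfl, h'⟩
            · exact Or.inl ⟨h, h'⟩
            · exact Or.inr rfl] at this
      · have := ha.2
        rwa [show (sep a fun z => z ε x) = sep (W6.un a (W6.sing z)) (fun z => z ε x) from W6.ext fun w => by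
          simp only [mem_un, mem_sep, mem_sing]
          constructor
          · intro h
            exact ⟨Or.inl h.1, h.2⟩
          · rintro ⟨h | rfl, h'⟩
            · exact ⟨h, h'⟩
            · exact (hzx h').elim] at this)
  have := (mem_sep.1 this).2
  rwa [show (sep y fun z => z ε x) = x from W6.ext fun w => by
    rw [mem_sep]; exact ⟨fun h => h.2, fun h' => ⟨h _ h', h'⟩⟩] at this
theorem Fin'.img {n : M} (hn : n ε om) (g : M → M) [hg : Tm (fun w : Nil M × M => g w.2)] : Fin' (img n g) := by
  have : T1 g := T1.of hg
  refine om_ind (P := fun n => Fin' (W6.img n g)) ?_ ?_ hn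
  · exact Fin'.emp.sb fun z hz => by obtain ⟨x, hx, _⟩ := mem_img.1 hz; exact (not_mem_emp hx).elim
  · intro m _ h
    refine (h.un (Fin'.sing (g m))).sb fun z hz => ?_
    obtain ⟨x, hx, rfl⟩ := mem_img.1 hz
    rw [mem_un, mem_sing, mem_img]
    rcases mem_suc.1 hx with hx | rfl
    · exact Or.inl ⟨x, hx, rfl⟩
    · exact Or.inr rfl
end Fin

/-- A system of atoms: a set `At` of atoms, each with a stage in a set `S` of inaccessible
cardinals with greatest element `κ`; the atoms outside `NS` are the starred ones. -/
structure AS (M : Type u) [ZM M] where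
  At : M
  NS : M
  ST : M
  S : M
  κ : M
  inacc : ∀ γ, γ ε S → IsInaccessible (ZM.E : M → M → Prop) γ
  le_top : ∀ γ, γ ε S → γ ε κ ∨ γ = κ
  top : κ ε S
  st_mem : ∀ a, a ε At → app ST a ε S
  ns : ∀ a, a ε NS → a ε At
  ns_top : ∀ a, a ε At → app ST a = κ → a ε NS
  c0 : ¬ emp ε At
  c1 : ¬ sing emp ε At
  small : ∀ δ γ, δ ε γ → γ ε S → CardLT (ZM.E : M → M → Prop) (sep At (fun a => app ST a ε suc δ)) γ

namespace AS
variable {M : Type u} [ZM M] (𝔄 : AS M)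
local notation "𝓔" => (ZM.E : M → M → Prop)

/-- The stage of an atom. -/
noncomputable abbrev st (a : M) : M := app 𝔄.ST a

open Classical in
/-- The map on atoms coded by a condition, extended by the identity. -/
noncomputable def ev (p x : M) : M := if x ε 𝔄.At then app p x else x
instance : T2 𝔄.ev := .of (by unfold ev; infer_instance)

/-- The two truth values. -/
def Cst (y : M) : Prop := y = emp ∨ y = sing emp
instance : D1 (Cst : M → Prop) := ⟨by unfold Cst; infer_instance⟩

/-- The values a condition may give to the atom `x` when it moves it. -/
def Lo (x y : M) : Prop := Cst y ∨ y ε 𝔄.NS ∧ 𝔄.st y ε 𝔄.st x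
instance : D2 𝔄.Lo := ⟨by unfold Lo; infer_instance⟩

def Good (f : M → M) : Prop := (∀ x, ¬ x ε 𝔄.At → f x = x) ∧ (∀ x, x ε 𝔄.At → f x ≠ x → 𝔄.Lo x (f x)) ∧ ∀ x, f (f x) = f x

/-- Conditions: idempotent maps lowering stages, with small support at every stage. -/
def Cond (p : M) : Prop := Fn p 𝔄.At ∧ ((∀ x, x ε 𝔄.At → 𝔄.ev p x ≠ x → 𝔄.Lo x (𝔄.ev p x)) ∧ ∀ x, 𝔄.ev p (𝔄.ev p x) = 𝔄.ev p x) ∧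
  ∀ γ, γ ε 𝔄.S → CardLT 𝓔 (sep 𝔄.At (fun a => 𝔄.ev p a ≠ a ∧ 𝔄.st a ε suc γ)) γ
instance : D1 𝔄.Cond := ⟨by unfold Cond; infer_instance⟩

/-- The fine order. -/
def Le (q p : M) : Prop := 𝔄.Cond q ∧ 𝔄.Cond p ∧ ∀ x, 𝔄.ev q (𝔄.ev p x) = 𝔄.ev q x
instance : D2 𝔄.Le := ⟨by unfold Le; infer_instance⟩

/-- The forcing order: finitely many exceptions among the starred atoms of each stage are allowed. -/
def CL (q p : M) : Prop := 𝔄.Cond q ∧ 𝔄.Cond p ∧ (∀ x, x ε 𝔄.NS → 𝔄.ev q (𝔄.ev p x) = 𝔄.ev q x) ∧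
  ∀ δ, Fin' (sep 𝔄.At (fun a => 𝔄.st a = δ ∧ 𝔄.ev q (𝔄.ev p a) ≠ 𝔄.ev q a))
instance : D2 𝔄.CL := ⟨by unfold CL; infer_instance⟩

variable {𝔄}

theorem ord_st {a : M} (h : a ε 𝔄.At) : Ord (𝔄.st a) := (𝔄.inacc _ (𝔄.st_mem a h)).ord

theorem cst_not {y : M} (h : Cst y) : ¬ y ε 𝔄.At := by
  rcases h with rfl | rfl
  · exact 𝔄.c0
  · exact 𝔄.c1

theorem ev_off {p x : M} (h : ¬ x ε 𝔄.At) : 𝔄.ev p x = x := by unfold ev; rw [if_neg h]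
theorem ev_on {p x : M} (h : x ε 𝔄.At) : 𝔄.ev p x = app p x := by unfold ev; rw [if_pos h]
theorem ev_cst {p x : M} (h : Cst x) : 𝔄.ev p x = x := ev_off (cst_not h)

theorem Cond.good {p : M} (h : 𝔄.Cond p) : 𝔄.Good (𝔄.ev p) := ⟨fun _ => ev_off, h.2.1.1, h.2.1.2⟩

theorem Cond.ext {p q : M} (hp : 𝔄.Cond p) (hq : 𝔄.Cond q) (h : ∀ x, 𝔄.ev p x = 𝔄.ev q x) : p = q :=
  hp.1.ext hq.1 fun x hx => by rw [← ev_on hx, ← ev_on hx, h]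

theorem ev_mk {f : M → M} [hf : Tm (fun w : Nil M × M => f w.2)] (h : ∀ x, ¬ x ε 𝔄.At → f x = x) (x : M) :
    𝔄.ev (lam 𝔄.At f) x = f x := by
  by_cases hx : x ε 𝔄.At
  · rw [ev_on hx, app_lam hx]
  · rw [ev_off hx, h x hx]

theorem cond_mk {f : M → M} [hf : Tm (fun w : Nil M × M => f w.2)] (h : 𝔄.Good f)
    (hs : ∀ γ, γ ε 𝔄.S → ∃ b, CardLT 𝓔 b γ ∧ ∀ a, a ε 𝔄.At → f a ≠ a → 𝔄.st a ε suc γ → a ε b) :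
    𝔄.Cond (lam 𝔄.At f) := by
  have e := ev_mk (𝔄 := 𝔄) h.1
  refine ⟨Fn.lam, ⟨fun x hx => ?_, fun x => ?_⟩, fun γ hγ => ?_⟩
  · rw [e]; exact h.2.1 x hx
  · rw [e, e]; exact h.2.2 x
  · obtain ⟨b, hb, hb'⟩ := hs γ hγ
    refine hb.sb fun a ha => ?_
    rw [mem_sep, e] at ha
    exact hb' a ha.1 ha.2.1 ha.2.2

/-- The bound needed in `cond_mk` when the support is covered by those of two conditions. -/
theorem size2 {f : M → M} {p q : M} (hp : 𝔄.Cond p) (hq : 𝔄.Cond q)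
    (h : ∀ a, a ε 𝔄.At → f a ≠ a → 𝔄.ev p a ≠ a ∨ 𝔄.ev q a ≠ a) :
    ∀ γ, γ ε 𝔄.S → ∃ b, CardLT 𝓔 b γ ∧ ∀ a, a ε 𝔄.At → f a ≠ a → 𝔄.st a ε suc γ → a ε b := by
  intro γ hγ
  refine ⟨_, (𝔄.inacc γ hγ).un (hp.2.2 γ hγ) (hq.2.2 γ hγ), fun a ha hf hs => ?_⟩
  rw [mem_un, mem_sep, mem_sep]
  rcases h a ha hf with h | h
  · exact Or.inl ⟨ha, h, hs⟩
  · exact Or.inr ⟨ha, h, hs⟩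

theorem Good.cases {f : M → M} (h : 𝔄.Good f) (x : M) : f x = x ∨ (x ε 𝔄.At ∧ 𝔄.Lo x (f x)) := by
  by_cases hx : x ε 𝔄.At
  · by_cases h' : f x = x
    · exact Or.inl h'
    · exact Or.inr ⟨hx, h.2.1 x hx h'⟩
  · exact Or.inl (h.1 x hx)

/-- Values of moved atoms are unstarred atoms or truth values. -/
def NC (𝔄 : AS M) (y : M) : Prop := Cst y ∨ y ε 𝔄.NS

theorem Lo.nc {x y : M} (h : 𝔄.Lo x y) : 𝔄.NC y := h.imp id And.left

theorem Good.nc {f : M → M} (h : 𝔄.Good f) {x : M} (hx : 𝔄.NC x) : 𝔄.NC (f x) := by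
  rcases h.cases x with e | ⟨_, e⟩
  · rwa [e]
  · exact e.nc

theorem Lo.trans {x y z : M} (hx : x ε 𝔄.At) (h : 𝔄.Lo x y) (h' : 𝔄.Lo y z) (hy : y ε 𝔄.At) : 𝔄.Lo x z := by
  rcases h with h | h
  · exact (cst_not h hy).elim
  · rcases h' with h' | h'
    · exact Or.inl h'
    · exact Or.inr ⟨h'.1, (ord_st hx).trans h'.2 h.2⟩

theorem Good.lo {f g : M → M} (hf : 𝔄.Good f) (hg : 𝔄.Good g) (x : M) : g (f x) = x ∨ x ε 𝔄.At ∧ 𝔄.Lo x (g (f x)) := by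
  rcases hf.cases x with e | ⟨hx, e⟩
  · rw [e]; exact hg.cases x
  · refine Or.inr ⟨hx, ?_⟩
    rcases hg.cases (f x) with e' | ⟨hx', e'⟩
    · rwa [e']
    · exact e.trans hx e' hx'

theorem Lo.ne {x y : M} (hx : x ε 𝔄.At) (h : 𝔄.Lo x y) : y ≠ x := by
  rintro rfl
  rcases h with h | h
  · exact cst_not h hx
  · exact eps_irrefl h.2

theorem Good.comp {f g : M → M} (hf : 𝔄.Good f) (hg : 𝔄.Good g) (hi : ∀ x, g (f (g (f x))) = g (f x)) :
    𝔄.Good (fun x => g (f x)) :=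
  ⟨fun x hx => by show g (f x) = x; rw [hf.1 x hx, hg.1 x hx], fun x hx hne => ((hf.lo hg x).resolve_left hne).2, hi⟩

variable (𝔄) in
/-- Composition: first `p`, then `q`. -/
noncomputable def comp (q p : M) : M := lam 𝔄.At (fun a => 𝔄.ev q (𝔄.ev p a))
instance : T2 𝔄.comp := .of (by unfold comp; infer_instance)

theorem ev_comp (q p x : M) : 𝔄.ev (𝔄.comp q p) x = 𝔄.ev q (𝔄.ev p x) :=
  ev_mk (fun x hx => by rw [ev_off hx, ev_off hx]) x

theorem comp_cond {q p : M} (hq : 𝔄.Cond q) (hp : 𝔄.Cond p)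
    (hi : ∀ x, 𝔄.ev q (𝔄.ev p (𝔄.ev q (𝔄.ev p x))) = 𝔄.ev q (𝔄.ev p x)) : 𝔄.Cond (𝔄.comp q p) :=
  cond_mk (hp.good.comp hq.good hi) (size2 hp hq fun a ha h => by
    by_contra! h'
    exact h (by rw [h'.1, h'.2]))

theorem Le.refl {p : M} (h : 𝔄.Cond p) : 𝔄.Le p p := ⟨h, h, h.good.2.2⟩
theorem Le.trans {r q p : M} (h : 𝔄.Le r q) (h' : 𝔄.Le q p) : 𝔄.Le r p :=
  ⟨h.1, h'.2.1, fun x => by rw [← h.2.2 (𝔄.ev p x), h'.2.2, h.2.2]⟩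
theorem Le.cl {q p : M} (h : 𝔄.Le q p) : 𝔄.CL q p :=
  ⟨h.1, h.2.1, fun x _ => h.2.2 x, fun δ => Fin'.emp.sb fun z hz => ((mem_sep.1 hz).2.2 (h.2.2 z)).elim⟩
theorem CL.refl {p : M} (h : 𝔄.Cond p) : 𝔄.CL p p := (Le.refl h).cl

theorem CL.nc {q p x : M} (h : 𝔄.CL q p) (hx : 𝔄.NC x) : 𝔄.ev q (𝔄.ev p x) = 𝔄.ev q x := by
  rcases hx with hx | hx
  · rw [ev_cst hx]
  · exact h.2.2.1 x hx

theorem CL.trans {r q p : M} (h : 𝔄.CL r q) (h' : 𝔄.CL q p) : 𝔄.CL r p := by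
  have key : ∀ x, 𝔄.ev q (𝔄.ev p x) = 𝔄.ev q x → 𝔄.ev r (𝔄.ev q x) = 𝔄.ev r x → 𝔄.ev r (𝔄.ev p x) = 𝔄.ev r x := by
    intro x h1 h2
    rcases h'.2.1.good.cases x with e | ⟨hx, e⟩
    · rw [e]
    · rw [← h.nc e.nc, h1, h2]
  refine ⟨h.1, h'.2.1, fun x hx => key x (h'.2.2.1 x hx) (h.2.2.1 x hx), fun δ => ?_⟩
  refine ((h.2.2.2 δ).un (h'.2.2.2 δ)).sb fun z hz => ?_
  rw [mem_un, mem_sep, mem_sep]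
  rw [mem_sep] at hz
  by_contra! h''
  exact hz.2.2 (key z (by_contra fun h3 => h3 (h''.2 hz.1 hz.2.1)) (by_contra fun h3 => h3 (h''.1 hz.1 hz.2.1)))

/-- Below `p`, a condition can be replaced by an equivalent one finely below `p`. -/
theorem CL.comp {q p : M} (h : 𝔄.CL q p) : 𝔄.Le (𝔄.comp q p) p ∧ 𝔄.CL (𝔄.comp q p) q ∧ 𝔄.CL q (𝔄.comp q p) := by
  have hq := h.1.good
  have hp := h.2.1.good
  have qq := hq.2.2
  have k1 : ∀ x, 𝔄.NC x → 𝔄.ev q (𝔄.ev p (𝔄.ev q x)) = 𝔄.ev q x := fun x hx => by rw [h.nc (hq.nc hx), qq]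
  have k2 : ∀ x, 𝔄.ev p x = x → 𝔄.ev q (𝔄.ev p (𝔄.ev q x)) = 𝔄.ev q x := by
    intro x hx
    rcases hq.cases x with e | ⟨_, e⟩
    · rw [e, hx, e]
    · rw [h.nc e.nc, qq]
  have hi : ∀ x, 𝔄.ev q (𝔄.ev p (𝔄.ev q (𝔄.ev p x))) = 𝔄.ev q (𝔄.ev p x) := by
    intro x
    rcases hp.cases x with e | ⟨_, e⟩
    · rw [e]; exact k2 x e
    · exact k1 _ e.nc
  have hc := comp_cond h.1 h.2.1 hi
  refine ⟨⟨hc, h.2.1, fun x => by rw [ev_comp, ev_comp, hp.2.2]⟩, ⟨hc, h.1, fun x hx => ?_, fun δ => ?_⟩,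
    ⟨h.1, hc, fun x hx => ?_, fun δ => ?_⟩⟩
  · rw [ev_comp, ev_comp, k1 x (Or.inr hx), h.2.2.1 x hx]
  · refine (h.2.2.2 δ).sb fun z hz => ?_
    rw [mem_sep, ev_comp, ev_comp] at hz
    rw [mem_sep]
    refine ⟨hz.1, hz.2.1, fun e => hz.2.2 ?_⟩
    rcases hq.cases z with e' | ⟨_, e'⟩
    · rw [e']
    · rw [h.nc e'.nc, qq, e]
  · rw [ev_comp, qq, h.2.2.1 x hx]
  · refine (h.2.2.2 δ).sb fun z hz => ?_
    rw [mem_sep, ev_comp, qq] at hz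
    exact mem_sep.2 hz

variable (𝔄) in
/-- Sets of atoms closed under passing to possible values. -/
def Dn (L : M) : Prop := Sb L 𝔄.At ∧ ∀ x y, x ε L → y ε 𝔄.NS → 𝔄.st y ε 𝔄.st x → y ε L
instance : D1 𝔄.Dn := ⟨by unfold Dn; infer_instance⟩

variable (𝔄) in
/-- `p` is supported in `L`. -/
def Su (p L : M) : Prop := ∀ x, 𝔄.ev p x ≠ x → x ε L
instance : D2 𝔄.Su := ⟨by unfold Su; infer_instance⟩

theorem Dn.ev {L p x : M} (hL : 𝔄.Dn L) (hp : 𝔄.Cond p) (hx : x ε L) : 𝔄.ev p x ε L ∨ Cst (𝔄.ev p x) := by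
  rcases hp.good.cases x with e | ⟨_, e | e⟩
  · rw [e]; exact Or.inl hx
  · exact Or.inr e
  · exact Or.inl (hL.2 x _ hx e.1 e.2)

open Classical in
variable (𝔄) in
/-- Restriction of a condition to a set of atoms. -/
noncomputable def rst (p L : M) : M := lam 𝔄.At (fun a => if a ε L then 𝔄.ev p a else a)
instance : T2 𝔄.rst := .of (by unfold rst; infer_instance)

open Classical in
theorem ev_rst (p L x : M) : 𝔄.ev (𝔄.rst p L) x = if x ε L then 𝔄.ev p x else x := by
  unfold rst
  refine ev_mk (f := fun a => if a ε L then 𝔄.ev p a else a) (fun x hx => ?_) x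
  rw [ev_off hx]; simp
theorem ev_rst_on {p L x : M} (h : x ε L) : 𝔄.ev (𝔄.rst p L) x = 𝔄.ev p x := by rw [ev_rst, if_pos h]
theorem ev_rst_off {p L x : M} (h : ¬ x ε L) : 𝔄.ev (𝔄.rst p L) x = x := by rw [ev_rst, if_neg h]
theorem rst_su {p L : M} : 𝔄.Su (𝔄.rst p L) L := fun x hx => by_contra fun h => hx (ev_rst_off h)
theorem ev_rst_lc {L p x : M} (hx : x ε L ∨ Cst x) : 𝔄.ev (𝔄.rst p L) x = 𝔄.ev p x := by
  by_cases h : x ε L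
  · exact ev_rst_on h
  · rw [ev_cst (hx.resolve_left h), ev_cst (hx.resolve_left h)]

theorem Cond.rst {p L : M} (hp : 𝔄.Cond p) (hL : 𝔄.Dn L) : 𝔄.Cond (𝔄.rst p L) := by
  classical
  have hc : ∀ x, x ε L → 𝔄.ev (𝔄.rst p L) (𝔄.ev p x) = 𝔄.ev p x := fun x hx => by
    rw [ev_rst_lc (hL.ev hp hx), hp.good.2.2]
  unfold AS.rst
  refine cond_mk ⟨fun x hx => ?_, fun x hx => ?_, fun x => ?_⟩ (size2 hp hp fun a ha h => ?_)
  · dsimp only; rw [ev_off hx]; simp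
  · dsimp only; split_ifs
    · exact hp.good.2.1 x hx
    · intro h; exact (h rfl).elim
  · have := hc x
    rw [ev_rst] at this
    dsimp only
    by_cases hx : x ε L
    · simp only [if_pos hx]; exact this hx
    · simp only [if_neg hx]
  · left; intro e; apply h; rw [e]; simp

theorem Cond.le_rst {p L : M} (hp : 𝔄.Cond p) (hL : 𝔄.Dn L) : 𝔄.Le p (𝔄.rst p L) :=
  ⟨hp, hp.rst hL, fun x => by
    by_cases hx : x ε L
    · rw [ev_rst_on hx, hp.good.2.2]
    · rw [ev_rst_off hx]⟩

theorem Su.rst {p L : M} (hp : 𝔄.Cond p) (hL : 𝔄.Dn L) (h : 𝔄.Su p L) : 𝔄.rst p L = p :=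
  (hp.rst hL).ext hp fun x => by
    by_cases hx : x ε L
    · exact ev_rst_on hx
    · rw [ev_rst_off hx]; by_contra h'; exact hx (h x (Ne.symm h'))

theorem Le.rst {q p L : M} (h : 𝔄.Le q p) (hL : 𝔄.Dn L) : 𝔄.Le (𝔄.rst q L) (𝔄.rst p L) :=
  ⟨h.1.rst hL, h.2.1.rst hL, fun x => by
    by_cases hx : x ε L
    · rw [ev_rst_on hx, ev_rst_on hx, ev_rst_lc (hL.ev h.2.1 hx), h.2.2]
    · rw [ev_rst_off hx]⟩

theorem CL.rst {q p L : M} (h : 𝔄.CL q p) (hL : 𝔄.Dn L) : 𝔄.CL (𝔄.rst q L) (𝔄.rst p L) := by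
  have key : ∀ x, 𝔄.ev q (𝔄.ev p x) = 𝔄.ev q x → 𝔄.ev (𝔄.rst q L) (𝔄.ev (𝔄.rst p L) x) = 𝔄.ev (𝔄.rst q L) x := by
    intro x e
    by_cases hx : x ε L
    · rw [ev_rst_on hx, ev_rst_on hx, ev_rst_lc (hL.ev h.2.1 hx), e]
    · rw [ev_rst_off hx]
  refine ⟨h.1.rst hL, h.2.1.rst hL, fun x hx => key x (h.2.2.1 x hx), fun δ => (h.2.2.2 δ).sb fun z hz => ?_⟩
  rw [mem_sep] at hz ⊢
  exact ⟨hz.1, hz.2.1, fun e => hz.2.2 (key z e)⟩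

/-- Amalgamation of `p` with a condition on `L` below the restriction of `p`. -/
theorem amalg {r p L : M} (hL : 𝔄.Dn L) (h : 𝔄.Le r (𝔄.rst p L)) (hp : 𝔄.Cond p) (hr : 𝔄.Su r L) :
    𝔄.Le (𝔄.comp r p) p ∧ 𝔄.Le (𝔄.comp r p) r := by
  have k : ∀ x, x ε L ∨ Cst x → 𝔄.ev r (𝔄.ev p x) = 𝔄.ev r x := fun x hx => by
    have := h.2.2 x
    rwa [ev_rst_lc hx] at this
  have hc : 𝔄.Cond (𝔄.comp r p) := comp_cond h.1 hp fun x => by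
    by_cases hx : 𝔄.ev p x ε L ∨ Cst (𝔄.ev p x)
    · have : 𝔄.ev r (𝔄.ev p x) ε L ∨ Cst (𝔄.ev r (𝔄.ev p x)) := by
        rcases hx with hx | hx
        · exact hL.ev h.1 hx
        · rw [ev_cst hx]; exact Or.inr hx
      rw [k _ this, h.1.good.2.2]
    · have : 𝔄.ev r (𝔄.ev p x) = 𝔄.ev p x := by
        by_contra h'; exact hx (Or.inl (hr _ h'))
      rw [this, hp.good.2.2, this]
  refine ⟨⟨hc, hp, fun x => by rw [ev_comp, ev_comp, hp.good.2.2]⟩, ⟨hc, h.1, fun x => ?_⟩⟩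
  rw [ev_comp, ev_comp]
  by_cases hx : x ε L
  · rw [k _ (hL.ev h.1 hx), h.1.good.2.2, k _ (Or.inl hx)]
  · have : 𝔄.ev r x = x := by by_contra h'; exact hx (hr _ h')
    rw [this]

theorem Le.comp_mono {r p q L : M} (hL : 𝔄.Dn L) (h : 𝔄.Le r (𝔄.rst p L)) (hr : 𝔄.Su r L) (hpq : 𝔄.Le p q)
    (h' : 𝔄.Le r (𝔄.rst q L)) : 𝔄.Le (𝔄.comp r p) (𝔄.comp r q) := by
  refine ⟨(amalg hL h hpq.1 hr).1.1, (amalg hL h' hpq.2.1 hr).1.1, fun x => ?_⟩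
  have := (amalg hL h hpq.1 hr).2.2.2 (𝔄.ev q x)
  rw [ev_comp r q, this, ev_comp, ev_comp, hpq.2.2]

theorem Le.fix {t q x : M} (h : 𝔄.Le t q) (hx : 𝔄.ev t x = x) : 𝔄.ev q x = x := by
  rcases h.2.1.good.cases x with e | ⟨ha, e⟩
  · exact e
  · exfalso
    have h1 := h.2.2 x
    rw [hx] at h1
    rcases h.1.good.cases (𝔄.ev q x) with e' | ⟨ha', e'⟩
    · rw [e'] at h1; exact e.ne ha h1
    · exact (e.trans ha e' ha').ne ha h1

open Classical in
variable (𝔄) in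
/-- Take over `t` outside `L`, keeping `q` on `L`. -/
noncomputable def keep (t q L : M) : M := lam 𝔄.At (fun a => if 𝔄.ev q a ε L then 𝔄.ev q a else 𝔄.ev t (𝔄.ev q a))

theorem keep_spec {t q L : M} (h : 𝔄.Le t q) (hL : 𝔄.Dn L) :
    𝔄.Le (𝔄.keep t q L) q ∧ 𝔄.rst (𝔄.keep t q L) L = 𝔄.rst q L ∧ 𝔄.comp (𝔄.rst t L) (𝔄.keep t q L) = t ∧
    𝔄.Le t (𝔄.keep t q L) ∧ ∀ B, 𝔄.Su t B → 𝔄.Su q B → 𝔄.Su (𝔄.keep t q L) B := by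
  classical
  have ht := h.1.good
  have hq := h.2.1.good
  have e : ∀ x, 𝔄.ev (𝔄.keep t q L) x = if 𝔄.ev q x ε L then 𝔄.ev q x else 𝔄.ev t (𝔄.ev q x) := by
    unfold keep
    exact ev_mk (f := fun a => if 𝔄.ev q a ε L then 𝔄.ev q a else 𝔄.ev t (𝔄.ev q a)) (fun x hx => by rw [ev_off hx, ev_off hx]; simp)
  have hid : ∀ x, 𝔄.ev (𝔄.keep t q L) (𝔄.ev (𝔄.keep t q L) x) = 𝔄.ev (𝔄.keep t q L) x := by
    intro x
    by_cases hx : 𝔄.ev q x ε L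
    · rw [e x, if_pos hx, e, hq.2.2, if_pos hx]
    · have h1 : 𝔄.ev q (𝔄.ev t (𝔄.ev q x)) = 𝔄.ev t (𝔄.ev q x) := h.fix (ht.2.2 _)
      rw [e x, if_neg hx, e, h1, ht.2.2]; simp
  have hlo : ∀ x, x ε 𝔄.At → 𝔄.ev (𝔄.keep t q L) x ≠ x → 𝔄.Lo x (𝔄.ev (𝔄.keep t q L) x) := by
    intro x hx hne
    rw [e] at hne ⊢
    split_ifs at hne ⊢ with h1
    · exact hq.2.1 x hx hne
    · exact ((hq.lo ht x).resolve_left hne).2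
  have hmv : ∀ a, 𝔄.ev (𝔄.keep t q L) a ≠ a → 𝔄.ev t a ≠ a ∨ 𝔄.ev q a ≠ a := by
    intro a ha
    by_contra! h'
    apply ha
    rw [e, h'.2, h'.1]; simp
  have hc : 𝔄.Cond (𝔄.keep t q L) := by
    refine ⟨Fn.lam, ⟨hlo, hid⟩, fun γ hγ => ?_⟩
    obtain ⟨b, hb, hb'⟩ := size2 (f := 𝔄.ev (𝔄.keep t q L)) h.1 h.2.1 (fun a _ => hmv a) γ hγ
    exact hb.sb fun a ha => by rw [mem_sep] at ha; exact hb' a ha.1 ha.2.1 ha.2.2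
  have h1 : 𝔄.comp (𝔄.rst t L) (𝔄.keep t q L) = t := by
    refine Fn.lam.ext h.1.1 fun x hx => ?_
    rw [← ev_on hx, ← ev_on hx]
    show 𝔄.ev (𝔄.comp (𝔄.rst t L) (𝔄.keep t q L)) x = _
    rw [ev_comp, e]
    split_ifs with h1
    · rw [ev_rst_on h1, h.2.2]
    · rw [ev_rst]; split_ifs
      · rw [ht.2.2, h.2.2]
      · rw [h.2.2]
  refine ⟨⟨hc, h.2.1, fun x => ?_⟩, ?_, h1, ⟨h.1, hc, fun x => ?_⟩, ?_⟩
  · rw [e, e, hq.2.2]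
  · refine (hc.rst hL).ext (h.2.1.rst hL) fun x => ?_
    by_cases hx : x ε L
    · rw [ev_rst_on hx, ev_rst_on hx, e]
      rcases hL.ev h.2.1 hx with h' | h'
      · rw [if_pos h']
      · rw [ev_cst h']; simp
    · rw [ev_rst_off hx, ev_rst_off hx]
  · rw [e]; split_ifs
    · rw [h.2.2]
    · rw [ht.2.2, h.2.2]
  · intro B hB hB' x hx
    rcases hmv x hx with h' | h'
    · exact hB x h'
    · exact hB' x h'

end AS
end W6
namespace W6
open ZF
namespace AS
variable {M : Type u} [ZM M] {𝔄 : AS M}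
local notation "𝓔" => (ZM.E : M → M → Prop)

theorem Cond.val_mem {p x : M} (hp : 𝔄.Cond p) (hx : x ε 𝔄.At) : 𝔄.ev p x ε un 𝔄.At (pr emp (sing emp)) := by
  rw [mem_un, mem_pr]
  rcases hp.good.cases x with e | ⟨_, e | e⟩
  · rw [e]; exact Or.inl hx
  · exact Or.inr e
  · exact Or.inl (𝔄.ns _ e.1)

variable (𝔄) in
/-- The set of all conditions. -/
noncomputable def PP : M := sep (pw (prod 𝔄.At (un 𝔄.At (pr emp (sing emp))))) (fun p => 𝔄.Cond p)
theorem mem_PP {p : M} : p ε 𝔄.PP ↔ 𝔄.Cond p := by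
  unfold PP; rw [mem_sep]
  refine ⟨fun h => h.2, fun h => ⟨mem_pw.2 fun z hz => ?_, h⟩⟩
  have := h.1; unfold Fn at this; rw [this] at hz
  obtain ⟨x, hx, rfl⟩ := mem_lam.1 hz
  rw [op_mem_prod, ← ev_on hx]
  exact ⟨hx, h.val_mem hx⟩

variable (𝔄) in
/-- The forcing notion. -/
noncomputable def fp : FP M where
  P := 𝔄.PP
  le := 𝔄.CL
  dle := inferInstance
  refl p hp := CL.refl (mem_PP.1 hp)
  trans _ _ _ := CL.trans
  dom _ _ h := ⟨mem_PP.2 h.1, mem_PP.2 h.2.1⟩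

variable (𝔄) in
/-- Eventual values along a finely directed set of conditions. -/
noncomputable def glb (F : M) : M :=
  lam 𝔄.At (fun a => the (fun v => ∃ p : M, p ε F ∧ ∀ q : M, q ε F → 𝔄.Le q p → 𝔄.ev q a = v))
instance : T1 𝔄.glb := .of (by unfold glb; infer_instance)

variable (𝔄) in
def Dir (F : M) : Prop := (∃ p, p ε F) ∧ (∀ p, p ε F → 𝔄.Cond p) ∧ ∀ p q, p ε F → q ε F → ∃ r, r ε F ∧ 𝔄.Le r p ∧ 𝔄.Le r q

theorem Dir.val {F : M} (h : 𝔄.Dir F) (a : M) : ∃ p, p ε F ∧ ∀ q, q ε F → 𝔄.Le q p → 𝔄.ev q a = 𝔄.ev p a := by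
  obtain ⟨p0, hp0⟩ := h.1
  by_cases ha : a ε 𝔄.At
  swap
  · exact ⟨p0, hp0, fun q _ _ => by rw [ev_off ha, ev_off ha]⟩
  by_cases hc : ∃ p, p ε F ∧ Cst (𝔄.ev p a)
  · obtain ⟨p, hp, hc⟩ := hc
    exact ⟨p, hp, fun q hq hqp => by rw [← hqp.2.2, ev_cst hc]⟩
  obtain ⟨s, ⟨p, hp, rfl⟩, hm⟩ := eps_min (P := fun s => ∃ p, p ε F ∧ s = 𝔄.st (𝔄.ev p a)) ⟨_, p0, hp0, rfl⟩
  refine ⟨p, hp, fun q hq hqp => ?_⟩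
  rw [← hqp.2.2]
  rcases hqp.1.good.cases (𝔄.ev p a) with e | ⟨_, e | e⟩
  · exact e
  · rw [hqp.2.2] at e; exact (hc ⟨q, hq, e⟩).elim
  · rw [hqp.2.2] at e; exact (hm _ e.2 ⟨q, hq, rfl⟩).elim

theorem Dir.ev_glb {F : M} (h : 𝔄.Dir F) (a : M) : ∃ p, p ε F ∧ ∀ q, q ε F → 𝔄.Le q p → 𝔄.ev q a = 𝔄.ev (𝔄.glb F) a := by
  obtain ⟨p, hp, hq⟩ := h.val a
  refine ⟨p, hp, fun q hqF hqp => ?_⟩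
  rw [hq q hqF hqp]
  by_cases ha : a ε 𝔄.At
  · rw [ev_on (p := 𝔄.glb F) ha]
    unfold glb
    rw [app_lam ha]
    refine (the_eq ⟨p, hp, hq⟩ ?_).symm
    rintro v ⟨p', hp', hv⟩
    obtain ⟨r, hr, h1, h2⟩ := h.2.2 p p' hp hp'
    rw [← hv r hr h2, hq r hr h1]
  · rw [ev_off ha, ev_off ha]

theorem Dir.glb {F : M} (h : 𝔄.Dir F)
    (hs : ∀ γ, γ ε 𝔄.S → ∃ b, CardLT 𝓔 b γ ∧ ∀ p a, p ε F → a ε 𝔄.At → 𝔄.ev p a ≠ a → 𝔄.st a ε suc γ → a ε b) :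
    (∀ p, p ε F → 𝔄.Le (𝔄.glb F) p) ∧ ∀ B, (∀ p, p ε F → 𝔄.Su p B) → 𝔄.Su (𝔄.glb F) B := by
  have hlt : ∀ a, ∃ p, p ε F ∧ 𝔄.ev p a = 𝔄.ev (𝔄.glb F) a := fun a => by
    obtain ⟨p, hp, h'⟩ := h.ev_glb a
    exact ⟨p, hp, h' p hp (Le.refl (h.2.1 p hp))⟩
  have hc : 𝔄.Cond (𝔄.glb F) := by
    refine ⟨Fn.lam, ⟨fun x hx hne => ?_, fun x => ?_⟩, fun γ hγ => ?_⟩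
    · obtain ⟨p, hp, e⟩ := hlt x
      rw [← e] at hne ⊢
      exact (h.2.1 p hp).good.2.1 x hx hne
    · obtain ⟨p, hp, e⟩ := h.ev_glb x
      obtain ⟨q, hq, e'⟩ := h.ev_glb (𝔄.ev (𝔄.glb F) x)
      obtain ⟨r, hr, h1, h2⟩ := h.2.2 p q hp hq
      rw [← e' r hr h2, ← e r hr h1, (h.2.1 r hr).good.2.2]
    · obtain ⟨b, hb, hb'⟩ := hs γ hγ
      refine hb.sb fun a ha => ?_
      rw [mem_sep] at ha
      obtain ⟨p, hp, e⟩ := hlt a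
      rw [← e] at ha
      exact hb' p a hp ha.1 ha.2.1 ha.2.2
  refine ⟨fun p hp => ⟨hc, h.2.1 p hp, fun x => ?_⟩, fun B hB x hx => ?_⟩
  · obtain ⟨q, hq, e⟩ := h.ev_glb x
    obtain ⟨q', hq', e'⟩ := h.ev_glb (𝔄.ev p x)
    obtain ⟨r, hr, h1, h2⟩ := h.2.2 q q' hq hq'
    obtain ⟨r', hr', h3, h4⟩ := h.2.2 r p hr hp
    rw [← e r' hr' (h3.trans h1), ← e' r' hr' (h3.trans h2), h4.2.2]
  · obtain ⟨p, hp, e⟩ := hlt x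
    rw [← e] at hx
    exact hB p hp x hx

variable (𝔄) in
/-- The atoms of stage at most `δ`. -/
noncomputable def LL (δ : M) : M := sep 𝔄.At (fun a => 𝔄.st a ε suc δ)
instance : T1 𝔄.LL := .of (by unfold LL; infer_instance)
theorem mem_LL {δ a : M} : a ε 𝔄.LL δ ↔ a ε 𝔄.At ∧ 𝔄.st a ε suc δ := mem_sep
theorem LL_dn {δ : M} (hδ : Ord δ) : 𝔄.Dn (𝔄.LL δ) :=
  ⟨fun x hx => (mem_LL.1 hx).1, fun x y hx hy h => mem_LL.2 ⟨𝔄.ns _ hy, hδ.suc.trans h (mem_LL.1 hx).2⟩⟩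

variable (𝔄) in
/-- The conditions supported in `L`. -/
noncomputable def PL (L : M) : M := sep 𝔄.PP (fun r => 𝔄.Su r L)
instance : T1 𝔄.PL := .of (by unfold PL; infer_instance)
theorem mem_PL {L r : M} : r ε 𝔄.PL L ↔ 𝔄.Cond r ∧ 𝔄.Su r L := by unfold PL; rw [mem_sep, mem_PP]

theorem PL_small {L γ : M} (hL : 𝔄.Dn L) (hγ : ZF.IsInaccessible 𝓔 γ) (h : CardLT 𝓔 L γ) : CardLT 𝓔 (𝔄.PL L) γ := by
  have hc : CardLT 𝓔 (pr emp (sing emp)) γ := (hγ.un (hγ.sing W6.emp) (hγ.sing (W6.sing W6.emp))).sb fun z hz => by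
    rw [mem_pr] at hz; rw [mem_un, mem_sing, mem_sing]; exact hz
  refine (hγ.pw (hγ.prod h (hγ.un h hc))).mono (CardLE.of (fun r => res r L) ?_ ?_)
  · intro r hr
    rw [mem_PL] at hr
    refine mem_pw.2 fun z hz => ?_
    obtain ⟨x, hx, rfl⟩ := mem_lam.1 hz
    rw [op_mem_prod, ← ev_on (hL.1 x hx), mem_un, mem_pr]
    exact ⟨hx, hL.ev hr.1 hx⟩
  · intro r r' hr hr' e
    rw [mem_PL] at hr hr'
    refine hr.1.ext hr'.1 fun x => ?_
    by_cases hx : x ε L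
    · rw [ev_on (hL.1 x hx), ev_on (hL.1 x hx), ← app_res hx, e, app_res hx]
    · have h1 : 𝔄.ev r x = x := by_contra fun h => hx (hr.2 x h)
      have h2 : 𝔄.ev r' x = x := by_contra fun h => hx (hr'.2 x h)
      rw [h1, h2]

/-- Size bound for a chain with few members above `δ` and constant restriction to stages `≤ δ`. -/
theorem size_chain {F p δ : M} (hp : 𝔄.Cond p) (hδ : δ ε 𝔄.κ) (hF : ∀ γ, γ ε 𝔄.S → δ ε γ → CardLT 𝓔 F γ)
    (hFc : ∀ q, q ε F → 𝔄.Cond q) (hr : ∀ q, q ε F → 𝔄.rst q (𝔄.LL δ) = 𝔄.rst p (𝔄.LL δ)) :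
    ∀ γ, γ ε 𝔄.S → ∃ b, CardLT 𝓔 b γ ∧ ∀ p a, p ε F → a ε 𝔄.At → 𝔄.ev p a ≠ a → 𝔄.st a ε suc γ → a ε b := by
  intro γ hγ
  have hi := 𝔄.inacc γ hγ
  have hδo := (𝔄.inacc _ 𝔄.top).ord.mem hδ
  rcases hi.ord.le_or_lt hδo with h | h
  · refine ⟨_, hp.2.2 γ hγ, fun q a hq ha hne hst => ?_⟩
    rw [mem_sep]
    refine ⟨ha, fun e => hne ?_, hst⟩
    have hL : a ε 𝔄.LL δ := mem_LL.2 ⟨ha, by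
      rw [mem_suc] at hst ⊢
      rcases hst with hst | hst
      · exact Or.inl (hδo.lt_of_lt hst h)
      · rw [hst]; exact h⟩
    rw [← ev_rst_on hL, hr q hq, ev_rst_on hL, e]
  · refine ⟨sep 𝔄.At (fun a => 𝔄.st a ε suc γ ∧ ∃ q, q ε F ∧ 𝔄.ev q a ≠ a), ?_, fun q a hq ha hne hst => mem_sep.2 ⟨ha, hst, q, hq, hne⟩⟩
    refine hi.union (hF γ hγ h) (fun q a : M => 𝔄.st a ε suc γ ∧ a ε 𝔄.At ∧ 𝔄.ev q a ≠ a) (fun a ha => ?_) fun q hq => ?_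
    · obtain ⟨h1, h2, q, hq, h3⟩ := mem_sep.1 ha
      exact ⟨q, hq, h2, h1, h3⟩
    · exact ⟨_, (hFc q hq).2.2 γ hγ, fun a ha => mem_sep.2 ⟨ha.2.1, ha.2.2, ha.1⟩⟩

/-- Meeting few dense sets, up to an extension at the stages `≤ δ`, by an extension above `δ`. -/
theorem DL {δ X B p : M} (hδ : δ ε 𝔄.κ) (hB : Sb (𝔄.LL δ) B)
    (hX : ∀ γ, γ ε 𝔄.S → δ ε γ → CardLT 𝓔 X γ) (D : M → M → Prop)
    [hD : Df (fun w : (Nil M × M) × M => D w.1.2 w.2)] (hp : 𝔄.Cond p) (hpB : 𝔄.Su p B)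
    (hden : ∀ ξ t, ξ ε X → 𝔄.Le t p → 𝔄.Su t B → ∃ t', 𝔄.Le t' t ∧ 𝔄.Su t' B ∧ D ξ t')
    (hop : ∀ ξ t t', ξ ε X → D ξ t → 𝔄.Le t' t → 𝔄.Su t' B → D ξ t') :
    ∃ q, 𝔄.Le q p ∧ 𝔄.Su q B ∧ 𝔄.rst q (𝔄.LL δ) = 𝔄.rst p (𝔄.LL δ) ∧
      ∀ ξ r, ξ ε X → 𝔄.Le r (𝔄.rst p (𝔄.LL δ)) → 𝔄.Su r (𝔄.LL δ) →
        ∃ r', 𝔄.Le r' r ∧ 𝔄.Su r' (𝔄.LL δ) ∧ D ξ (𝔄.comp r' q) := by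
  have : D2 D := ⟨hD⟩
  have hκo := (𝔄.inacc _ 𝔄.top).ord
  have hδo := hκo.mem hδ
  have hL := LL_dn (𝔄 := 𝔄) hδo
  obtain ⟨L, eL⟩ : ∃ L, L = 𝔄.LL δ := ⟨_, rfl⟩
  obtain ⟨γ1, ⟨hγ1, hδ1⟩, hmin⟩ := eps_min (P := fun γ => γ ε 𝔄.S ∧ δ ε γ) ⟨_, 𝔄.top, hδ⟩
  have hi1 := 𝔄.inacc γ1 hγ1
  obtain ⟨θ, hθ, hJ⟩ := hi1.prod (hX γ1 hγ1 hδ1) (PL_small hL hi1 (𝔄.small δ γ1 hδ1 hγ1))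
  obtain ⟨f, hf, hf'⟩ := cardLE_iff.1 hJ
  rw [← eL] at hL hf hf' hB ⊢
  have hθo := hi1.ord.mem hθ
  obtain ⟨s, hs, hs'⟩ := rs (Y := 𝔄.PP) hθo.suc (fun β s y : M => 𝔄.Le y p ∧ 𝔄.Su y B ∧ 𝔄.rst y L = 𝔄.rst p L ∧
      (∀ γ : M, γ ε β → 𝔄.Le y (app s γ)) ∧ ∀ ξ r : M, ξ ε X → 𝔄.Le r (𝔄.rst p L) → 𝔄.Su r L → app f (op ξ r) = β →
        ∃ r' : M, 𝔄.Le r' r ∧ 𝔄.Su r' L ∧ D ξ (𝔄.comp r' y)) (by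
    intro β s hβ hs H
    have hβo := hθo.suc.mem hβ
    obtain ⟨F, eF⟩ : ∃ F, F = un (sing p) (img β (fun γ => app s γ)) := ⟨_, rfl⟩
    have hF : ∀ q, q ε F ↔ q = p ∨ ∃ γ, γ ε β ∧ q = app s γ := fun q => by rw [eF, mem_un, mem_sing, mem_img]
    have hch : ∀ γ γ', γ ε β → γ' ε γ → 𝔄.Le (app s γ) (app s γ') := fun γ γ' h h' => by
      have := (H γ h).2.2.2.2.1 γ' h'
      rwa [app_res h'] at this
    have hFc : ∀ q, q ε F → 𝔄.Cond q := fun q hq => by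
      rcases (hF q).1 hq with rfl | ⟨γ, hγ, rfl⟩
      · exact hp
      · exact (H γ hγ).2.1.1
    have hFr : ∀ q, q ε F → 𝔄.rst q L = 𝔄.rst p L := fun q hq => by
      rcases (hF q).1 hq with rfl | ⟨γ, hγ, rfl⟩
      · rfl
      · exact (H γ hγ).2.2.2.1
    have hdir : 𝔄.Dir F := by
      refine ⟨⟨p, (hF p).2 (Or.inl rfl)⟩, hFc, fun a b ha hb => ?_⟩
      rcases (hF a).1 ha with rfl | ⟨γ, hγ, rfl⟩ <;> rcases (hF b).1 hb with rfl | ⟨γ', hγ', rfl⟩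
      · exact ⟨_, ha, Le.refl (hFc _ ha), Le.refl (hFc _ ha)⟩
      · exact ⟨_, hb, (H γ' hγ').2.1, Le.refl (hFc _ hb)⟩
      · exact ⟨_, ha, Le.refl (hFc _ ha), (H γ hγ).2.1⟩
      · rcases (hβo.mem hγ).tri (hβo.mem hγ') with h | rfl | h
        · exact ⟨_, hb, hch _ _ hγ' h, Le.refl (hFc _ hb)⟩
        · exact ⟨_, ha, Le.refl (hFc _ ha), Le.refl (hFc _ ha)⟩
        · exact ⟨_, ha, Le.refl (hFc _ ha), hch _ _ hγ h⟩
    have hsz := size_chain (F := F) hp hδ (fun γ hγ hδγ => by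
      have hγo := 𝔄.inacc γ hγ
      rw [eF]
      refine hγo.un (hγo.sing _) ((CardLT.of_mem ?_).mono (CardLE.img _))
      have h1 : β ε γ1 := by
        rcases mem_suc.1 hβ with h | rfl
        · exact hi1.ord.trans h hθ
        · exact hθ
      rcases hi1.ord.tri hγo.ord with h | rfl | h
      · exact hγo.ord.trans h1 h
      · exact h1
      · exact (hmin γ h ⟨hγ, hδγ⟩).elim) hFc (by rw [← eL]; exact hFr)
    obtain ⟨g1, g2⟩ := hdir.glb hsz
    have g2 := g2 B (fun q hq => by
      rcases (hF q).1 hq with rfl | ⟨γ, hγ, rfl⟩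
      · exact hpB
      · exact (H γ hγ).2.2.1)
    have g3 : 𝔄.rst (𝔄.glb F) L = 𝔄.rst p L := by
      refine ((g1 p ((hF p).2 (Or.inl rfl))).1.rst hL).ext (hp.rst hL) fun x => ?_
      by_cases hx : x ε L
      · obtain ⟨q, hq, e⟩ := hdir.ev_glb x
        rw [ev_rst_on hx, ← e q hq (Le.refl (hFc q hq)), ← ev_rst_on hx, hFr q hq]
      · rw [ev_rst_off hx, ev_rst_off hx]
    have g0 : 𝔄.Le (𝔄.glb F) p := g1 p ((hF p).2 (Or.inl rfl))
    by_cases hξ : ∃ ξ r, ξ ε X ∧ 𝔄.Le r (𝔄.rst p L) ∧ 𝔄.Su r L ∧ app f (op ξ r) = β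
    · obtain ⟨ξ, r, hξ, hr, hrL, hfb⟩ := hξ
      have hr0 : 𝔄.Le r (𝔄.rst (𝔄.glb F) L) := by rw [g3]; exact hr
      obtain ⟨a1, a2⟩ := amalg hL hr0 g0.1 hrL
      obtain ⟨t, ht, htB, htD⟩ := hden ξ (𝔄.comp r (𝔄.glb F)) hξ (a1.trans g0) (fun x hx => by
        rw [ev_comp] at hx
        by_contra h'
        apply hx
        rw [show 𝔄.ev (𝔄.glb F) x = x from by_contra fun h => h' (g2 x h)]
        exact by_contra fun h => h' (hB _ (hrL x h)))
      obtain ⟨k1, k2, k3, k4, k5⟩ := keep_spec (ht.trans a1) hL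
      refine ⟨𝔄.keep t (𝔄.glb F) L, mem_PP.2 k1.1, k1.trans g0, k5 B htB g2, k2.trans g3,
        fun γ hγ => k1.trans (g1 _ ((hF _).2 (Or.inr ⟨γ, hγ, rfl⟩))), fun ξ' r' hξ' hr' hrL' hfb' => ?_⟩
      have he := hf' _ _ (op_mem_prod.2 ⟨hξ', mem_PL.2 ⟨hr'.1, hrL'⟩⟩) (op_mem_prod.2 ⟨hξ, mem_PL.2 ⟨hr.1, hrL⟩⟩) (hfb'.trans hfb.symm)
      obtain ⟨rfl, rfl⟩ := op_inj.1 he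
      refine ⟨𝔄.rst t L, ?_, rst_su, by rw [k3]; exact htD⟩
      have := (ht.trans a2).rst hL
      rwa [hrL.rst hr.1 hL] at this
    · refine ⟨𝔄.glb F, mem_PP.2 g0.1, g0, g2, g3, fun γ hγ => g1 _ ((hF _).2 (Or.inr ⟨γ, hγ, rfl⟩)), fun ξ r h1 h2 h3 h4 => ?_⟩
      exact (hξ ⟨ξ, r, h1, h2, h3, h4⟩).elim)
  have hθs : θ ε suc θ := mem_suc.2 (Or.inr rfl)
  obtain ⟨_, q2, q3, q4, q5⟩ := hs' θ hθs
  refine ⟨app s θ, q2, q3, q4, fun ξ r hξ hr hrL => ?_⟩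
  have hb := hf _ (op_mem_prod.2 ⟨hξ, mem_PL.2 ⟨hr.1, hrL⟩⟩)
  obtain ⟨_, p2, p3, p4, p5, p6⟩ := hs' _ (mem_suc.2 (Or.inl hb))
  obtain ⟨r', h1, h2, h3⟩ := p6 ξ r hξ hr hrL rfl
  have hle : 𝔄.Le (app s θ) (app s (app f (op ξ r))) := by
    have := q5.1 _ hb
    rwa [app_res hb] at this
  have e1 : 𝔄.Le r' (𝔄.rst (app s θ) L) := by rw [q4]; exact h1.trans hr
  refine ⟨r', h1, h2, hop ξ _ _ hξ h3 (Le.comp_mono hL e1 h2 hle ?_) fun x hx => ?_⟩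
  · rw [p4]; exact h1.trans hr
  · rw [ev_comp] at hx
    by_contra h'
    apply hx
    rw [show 𝔄.ev (app s θ) x = x from by_contra fun h => h' (q3 x h)]
    exact by_contra fun h => h' (hB _ (h2 x h))

end AS
end W6
namespace W6
open ZF
variable {M : Type u} [ZM M]
local notation "𝓔" => (ZM.E : M → M → Prop)

noncomputable def fst (a : M) : M := the (fun x => ∃ y : M, a = op x y)
instance : T1 (fst : M → M) := .of (by unfold fst; infer_instance)
theorem fst_op {x y : M} : fst (op x y) = x :=
  the_eq ⟨y, rfl⟩ fun z ⟨y', h⟩ => (op_inj.1 h).1.symm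
noncomputable def snd (a : M) : M := the (fun y => ∃ x : M, a = op x y)
instance : T1 (snd : M → M) := .of (by unfold snd; infer_instance)
theorem snd_op {x y : M} : snd (op x y) = y :=
  the_eq ⟨x, rfl⟩ fun z ⟨y', h⟩ => (op_inj.1 h).2.symm

theorem op_ne_emp {x y : M} : op x y ≠ emp := fun h => not_mem_emp (h ▸ mem_pr.2 (Or.inl rfl) : pr x x ε emp)
theorem emp_ne_op {x y : M} : emp ≠ op x y := fun h => op_ne_emp h.symm
theorem op_ne_sing {x y : M} : op x y ≠ sing emp := fun h => by
  have h1 : pr x x ε op x y := mem_pr.2 (Or.inl rfl)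
  rw [h, mem_sing] at h1
  exact not_mem_emp (h1 ▸ mem_pr.2 (Or.inl rfl) : x ε emp)
theorem emp_ne_sing : (emp : M) ≠ sing emp := fun h => not_mem_emp (M := M) (x := emp) (by
  conv => arg 2; rw [h]
  exact mem_sing.2 rfl)

/-- The index of the starred columns. -/
noncomputable def star : M := sing emp
theorem star_not {x y : M} : ¬ Sb (star : M) (prod x y) := fun h => by
  obtain ⟨_, _, _, _, e⟩ := mem_prod.1 (h emp (mem_sing.2 rfl)); exact emp_ne_op e

/-- `i` is a column of stage `δ`. -/
def Col (κ Λ δ i : M) : Prop := IsInaccessible 𝓔 δ ∧ (δ ε κ ∧ (Sb i (prod δ δ) ∨ i = star) ∨ δ = κ ∧ i ε Λ)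
instance : D4 (Col : M → M → M → M → Prop) := ⟨by unfold Col; infer_instance⟩

/-- The atoms: triples of a stage, a column of this stage and an ordinal below the stage. -/
noncomputable def Ats (κ Λ : M) : M := sep (prod (suc κ) (prod (un Λ (un (pw (prod κ κ)) (sing star))) κ))
  (fun a => ∃ δ i ν : M, a = op δ (op i ν) ∧ ν ε δ ∧ Col κ Λ δ i)
instance : T2 (Ats : M → M → M) := .of (by unfold Ats; infer_instance)

theorem prod_mono {a b c d : M} (h : Sb a c) (h' : Sb b d) : Sb (prod a b) (prod c d) := fun z hz => by
  obtain ⟨x, y, hx, hy, rfl⟩ := mem_prod.1 hz; exact op_mem_prod.2 ⟨h _ hx, h' _ hy⟩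

theorem mem_Ats {κ Λ a : M} (hκ : Ord κ) : a ε Ats κ Λ ↔ ∃ δ i ν : M, a = op δ (op i ν) ∧ ν ε δ ∧ Col κ Λ δ i := by
  unfold Ats
  rw [mem_sep]
  refine ⟨And.right, fun h => ⟨?_, h⟩⟩
  obtain ⟨δ, i, ν, rfl, hν, hi, h⟩ := h
  rw [op_mem_prod, op_mem_prod, mem_un, mem_un, mem_pw, mem_sing, mem_suc]
  rcases h with ⟨hδ, h⟩ | ⟨rfl, h⟩
  · refine ⟨Or.inl hδ, Or.inr (h.imp (fun h z hz => prod_mono (hκ.sb hδ) (hκ.sb hδ) z (h z hz)) id), hκ.trans hν hδ⟩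
  · exact ⟨Or.inr rfl, Or.inl h, hν⟩

theorem op3_inj {a b c d e f : M} : op a (op b c) = op d (op e f) ↔ a = d ∧ b = e ∧ c = f := by rw [op_inj, op_inj]

theorem op_mem_Ats {κ Λ δ i ν : M} (hκ : Ord κ) : op δ (op i ν) ε Ats κ Λ ↔ ν ε δ ∧ Col κ Λ δ i := by
  rw [mem_Ats hκ]
  constructor
  · rintro ⟨δ', i', ν', e, h⟩
    obtain ⟨rfl, rfl, rfl⟩ := op3_inj.1 e
    exact h
  · exact fun h => ⟨_, _, _, rfl, h⟩

/-- The concrete system of atoms. -/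
noncomputable def cAS {κ : M} (hκ : IsInaccessible 𝓔 κ) (Λ : M) : AS M where
  At := Ats κ Λ
  NS := sep (Ats κ Λ) (fun a => fst a = κ ∨ ¬ fst (snd a) = star)
  ST := lam (Ats κ Λ) fst
  S := sep (suc κ) (fun δ => IsInaccessible 𝓔 δ)
  κ := κ
  inacc γ h := (mem_sep.1 h).2
  le_top γ h := mem_suc.1 (mem_sep.1 h).1
  top := mem_sep.2 ⟨mem_suc.2 (Or.inr rfl), hκ⟩
  st_mem a h := by
    obtain ⟨δ, i, ν, rfl, hν, hi, h'⟩ := (mem_Ats hκ.ord).1 h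
    rw [app_lam h, fst_op, mem_sep, mem_suc]
    exact ⟨h'.imp And.left And.left, hi⟩
  ns a h := (mem_sep.1 h).1
  ns_top a h h' := mem_sep.2 ⟨h, Or.inl (by rwa [app_lam h] at h')⟩
  c0 h := by
    obtain ⟨δ, i, ν, e, _⟩ := (mem_Ats hκ.ord).1 h; exact emp_ne_op e
  c1 h := by
    obtain ⟨δ, i, ν, e, _⟩ := (mem_Ats hκ.ord).1 h; exact op_ne_sing e.symm
  small δ γ hδ hγ := by
    obtain ⟨h1, hi⟩ := mem_sep.1 hγ
    have hs : suc δ ε γ := hi.suc_mem hδ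
    have hso := hi.ord.mem hs
    refine (hi.prod (CardLT.of_mem hs) (hi.prod (hi.un (hi.pw (hi.prod (CardLT.of_mem hs) (CardLT.of_mem hs))) (hi.sing star)) (CardLT.of_mem hs))).sb
      fun a ha => ?_
    obtain ⟨ha, hst⟩ := mem_sep.1 ha
    rw [app_lam ha] at hst
    obtain ⟨δ', i, ν, rfl, hν, hi', h⟩ := (mem_Ats hκ.ord).1 ha
    rw [fst_op] at hst
    rw [op_mem_prod, op_mem_prod, mem_un, mem_pw, mem_sing]
    refine ⟨hst, ?_, hso.trans hν hst⟩
    rcases h with ⟨hδ', h⟩ | ⟨rfl, h⟩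
    · exact h.imp (fun h z hz => prod_mono (hso.sb hst) (hso.sb hst) z (h z hz)) id
    · exfalso
      have : δ' ε γ := hi.ord.trans hst hs
      rcases mem_suc.1 h1 with h | rfl
      · exact eps_asymm h this
      · exact eps_irrefl this

section
variable {κ Λ : M} {hκ : ZF.IsInaccessible (ZM.E : M → M → Prop) κ}
theorem cAS_mem {δ i ν : M} : op δ (op i ν) ε (cAS hκ Λ).At ↔ ν ε δ ∧ Col κ Λ δ i := op_mem_Ats hκ.ord
theorem cAS_cases {a : M} (h : a ε (cAS hκ Λ).At) : ∃ δ i ν : M, a = op δ (op i ν) ∧ ν ε δ ∧ Col κ Λ δ i := (mem_Ats hκ.ord).1 h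
theorem cAS_st {δ x : M} (h : op δ x ε (cAS hκ Λ).At) : (cAS hκ Λ).st (op δ x) = δ := by
  have h' : op δ x ε Ats κ Λ := h
  show app (lam _ _) _ = _
  rw [app_lam h', fst_op]
theorem cAS_ns {δ i ν : M} : op δ (op i ν) ε (cAS hκ Λ).NS ↔ op δ (op i ν) ε (cAS hκ Λ).At ∧ (δ = κ ∨ i ≠ star) := by
  show _ ε sep _ _ ↔ _
  rw [mem_sep, fst_op, snd_op, fst_op]; rfl
theorem cAS_S {δ : M} : δ ε (cAS hκ Λ).S ↔ (δ ε κ ∨ δ = κ) ∧ IsInaccessible 𝓔 δ := by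
  show _ ε sep _ _ ↔ _
  rw [mem_sep, mem_suc]
end

namespace AS
variable {𝔄 : AS M}
open Classical in
/-- Setting one unmoved atom to a truth value. -/
theorem set_one {p a c : M} (hp : 𝔄.Cond p) (ha : a ε 𝔄.At) (hpa : 𝔄.ev p a = a) (hc : Cst c) (hat : ∀ x, 𝔄.ev p x = a → x = a):
    ∃ q, 𝔄.Le q p ∧ 𝔄.ev q a = c ∧ ∀ x, x ≠ a → 𝔄.ev q x = 𝔄.ev p x := by
  have hoff : ∀ x, ¬ x ε 𝔄.At → (if x = a then c else 𝔄.ev p x) = x := fun x hx => by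
    rw [if_neg (fun h : x = a => hx (h ▸ ha)), ev_off hx]
  have hca : c ≠ a := fun h => cst_not hc (h ▸ ha)
  have hpc : 𝔄.ev p c = c := ev_cst hc
  have hi : ∀ x, (if (if x = a then c else 𝔄.ev p x) = a then c else 𝔄.ev p (if x = a then c else 𝔄.ev p x)) = if x = a then c else 𝔄.ev p x := by
    intro x
    by_cases hx : x = a
    · simp only [if_pos hx, if_neg hca, hpc]
    · simp only [if_neg hx, if_neg (fun h => hx (hat x h)), hp.good.2.2]
  have hq : 𝔄.Cond (lam 𝔄.At (fun x => if x = a then c else 𝔄.ev p x)) := by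
    refine cond_mk ⟨hoff, fun x hx hne => ?_, hi⟩ fun γ hγ => ?_
    · beta_reduce at hne ⊢
      by_cases h : x = a
      · rw [if_pos h]; exact Or.inl hc
      · rw [if_neg h] at hne ⊢; exact hp.good.2.1 x hx hne
    · have hi := 𝔄.inacc γ hγ
      refine ⟨un (sing a) (sep 𝔄.At (fun a : M => 𝔄.ev p a ≠ a ∧ 𝔄.st a ε suc γ)), hi.un (hi.sing a) (hp.2.2 γ hγ), fun x hx hne hst => ?_⟩
      rw [mem_un, mem_sing]
      by_cases h : x = a
      · exact Or.inl h
      · rw [if_neg h] at hne; exact Or.inr (mem_sep.2 ⟨hx, hne, hst⟩)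
  refine ⟨_, ⟨hq, hp, fun x => ?_⟩, ?_, fun x hx => ?_⟩
  · rw [ev_mk hoff, ev_mk hoff]
    by_cases hx : x = a
    · rw [hx, hpa]; simp only [if_true]
    · rw [if_neg (fun h => hx (hat x h)), hp.good.2.2, if_neg hx]
  · rw [ev_mk hoff, if_pos rfl]
  · rw [ev_mk hoff, if_neg hx]
end AS
end W6
namespace W6
open ZF
variable {M : Type u} [ZM M]
local notation "𝓔" => (ZM.E : M → M → Prop)

section
variable {𝔽 : FP M} {G : Gen 𝔽}

theorem mem_chk {x y : M} : chk G x ε chk G y ↔ x ε y := chk_emb.mem x y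
theorem mem_chk' {x : VG G} {y : M} (h : x ε chk G y) : ∃ z, z ε y ∧ x = chk G z := chk_emb.tr y x h
theorem chk_inj {x y : M} : chk G x = chk G y ↔ x = y := ⟨chk_emb.inj _ _, congrArg _⟩
theorem chk_op {x y : M} : chk G (op x y) = op (chk G x) (chk G y) := chk_emb'.op x y
theorem chk_ord {x : M} : Ord (chk G x) ↔ Ord x := chk_emb.isOrd

theorem chk_emp : chk G (emp : M) = emp := chk_emb'.emp
theorem chk_om : chk G (om : M) = om := chk_emb'.om
theorem chk_suc {x : M} : chk G (suc x) = suc (chk G x) := isSucc_iff.1 (chk_emb.isSucc.2 (isSucc_iff.2 rfl))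
theorem chk_sb {x y : M} : Sb (chk G x) (chk G y) ↔ Sb x y := chk_emb.sub
theorem op_mem_chk {x y : VG G} {r : M} (h : op x y ε chk G r) : ∃ x' y', x = chk G x' ∧ y = chk G y' ∧ op x' y' ε r :=
  chk_emb'.op_mem h

theorem chk_prod {a b : M} : chk G (prod a b) = prod (chk G a) (chk G b) := ext fun z => by
  constructor
  · intro h
    obtain ⟨w, hw, rfl⟩ := mem_chk' h
    obtain ⟨x, y, hx, hy, rfl⟩ := mem_prod.1 hw
    rw [chk_op, op_mem_prod, mem_chk, mem_chk]; exact ⟨hx, hy⟩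
  · intro h
    obtain ⟨x, y, hx, hy, rfl⟩ := mem_prod.1 h
    obtain ⟨x, hx', rfl⟩ := mem_chk' hx; clear hx
    obtain ⟨y, hy', rfl⟩ := mem_chk' hy; clear hy
    rw [← chk_op, mem_chk, op_mem_prod]; exact ⟨hx', hy'⟩

theorem app_chk {f a x : M} (hf : Fn f a) (hx : x ε a) : app (chk G f) (chk G x) = chk G (app f x) := by
  refine app_eq ?_ fun y h => ?_
  · rw [← chk_op, mem_chk, hf.op_mem]; exact ⟨hx, rfl⟩
  · obtain ⟨x', y', e, rfl, h⟩ := op_mem_chk h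
    rw [chk_inj] at e; subst e
    rw [(hf.op_mem.1 h).2]

theorem fn_chk {f a : M} (hf : Fn f a) : Fn (chk G f) (chk G a) := by
  refine ext fun z => ?_
  rw [mem_lam]
  constructor
  · intro h
    obtain ⟨w, hw, rfl⟩ := mem_chk' h
    rw [hf, mem_lam] at hw
    obtain ⟨x, hx, rfl⟩ := hw
    exact ⟨chk G x, mem_chk.2 hx, by rw [app_chk hf hx, chk_op]⟩
  · rintro ⟨x, hx, rfl⟩
    obtain ⟨x, hx', rfl⟩ := mem_chk' hx; clear hx
    rw [app_chk hf hx', ← chk_op, mem_chk, hf.op_mem]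
    exact ⟨hx', rfl⟩

theorem cardLE_chk {a b : M} (h : CardLE 𝓔 a b) : CardLE (ZM.E : VG G → VG G → Prop) (chk G a) (chk G b) := by
  obtain ⟨f, hf⟩ := h
  obtain ⟨hf, h1, h2⟩ := isInj_iff.1 hf
  refine cardLE_iff.2 ⟨chk G f, fun x hx => ?_, fun x y hx hy e => ?_⟩
  · obtain ⟨x, hx', rfl⟩ := mem_chk' hx; clear hx
    rw [app_chk hf hx', mem_chk]; exact h1 x hx'
  · obtain ⟨x, hx', rfl⟩ := mem_chk' hx; clear hx
    obtain ⟨y, hy', rfl⟩ := mem_chk' hy; clear hy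
    rw [app_chk hf hx', app_chk hf hy', chk_inj] at e
    rw [h2 x y hx' hy' e]

theorem cardLT_chk {a b : M} (h : CardLT 𝓔 a b) : CardLT (ZM.E : VG G → VG G → Prop) (chk G a) (chk G b) := by
  obtain ⟨γ, hγ, h⟩ := h
  exact ⟨chk G γ, mem_chk.2 hγ, cardLE_chk h⟩

/-- `x` belongs to the subset of the ground model named by `ρ`. -/
def Mm (ρ : M) (G : Gen 𝔽) (x : M) : Prop := chk G x ε nm G ρ

instance {Γ : Type u} [Ctx M Γ] {s t : Γ → M} [Tm s] [Tm t] : Ff (fun (G : Gen 𝔽) w => Mm (s w) G (t w)) :=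
  (inferInstance : Ff (fun (G : Gen 𝔽) w => val G.S (op emp (t w)) ∈ val G.S (s w))).congr fun G w => Iff.rfl

variable (𝔽) in
/-- `p` forces `x` into the set named by `ρ`. -/
def FF (ρ x p : M) : Prop := p ε 𝔽.P ∧ Fo p (fun G : Gen 𝔽 => Mm ρ G x)
instance [Countable M] : D3 (FF 𝔽) := ⟨by
  unfold FF
  exact Ff.df (t := fun w => w.2) (φ := fun (G : Gen 𝔽) (w : ((Nil M × M) × M) × M) => Mm w.1.1.2 G w.1.2) inferInstance⟩
variable (𝔽) in
/-- `p` forces `x` out of the set named by `ρ`. -/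
def FN (ρ x p : M) : Prop := p ε 𝔽.P ∧ Fo p (fun G : Gen 𝔽 => ¬ Mm ρ G x)
instance [Countable M] : D3 (FN 𝔽) := ⟨by
  unfold FN
  exact Ff.df (t := fun w => w.2) (φ := fun (G : Gen 𝔽) (w : ((Nil M × M) × M) × M) => ¬ Mm w.1.1.2 G w.1.2) inferInstance⟩

theorem Mm.truth {ρ x : M} (h : Mm ρ G x) : ∃ p, G.S p ∧ FF 𝔽 ρ x p := by
  obtain ⟨p, hp, h'⟩ := Ff.truth (φ := fun (G : Gen 𝔽) (w : (Nil M × M) × M) => Mm w.1.2 G w.2) inferInstance (G := G) (w := ((Nil.mk, ρ), x)) h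
  exact ⟨p, hp, G.sub p hp, h'⟩
theorem Mm.truth' {ρ x : M} (h : ¬ Mm ρ G x) : ∃ p, G.S p ∧ FN 𝔽 ρ x p := by
  obtain ⟨p, hp, h'⟩ := Ff.truth (φ := fun (G : Gen 𝔽) (w : (Nil M × M) × M) => ¬ Mm w.1.2 G w.2) inferInstance (G := G) (w := ((Nil.mk, ρ), x)) h
  exact ⟨p, hp, G.sub p hp, h'⟩
theorem FF.mono {ρ x p q : M} (h : FF 𝔽 ρ x p) (h' : 𝔽.le q p) : FF 𝔽 ρ x q := ⟨(𝔽.dom _ _ h').1, h.2.mono h'⟩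
theorem FN.mono {ρ x p q : M} (h : FN 𝔽 ρ x p) (h' : 𝔽.le q p) : FN 𝔽 ρ x q := ⟨(𝔽.dom _ _ h').1, h.2.mono h'⟩
theorem FF.decide [Countable M] {ρ x p : M} (hp : p ε 𝔽.P) : ∃ q, 𝔽.le q p ∧ (FF 𝔽 ρ x q ∨ FN 𝔽 ρ x q) := by
  obtain ⟨q, hq, h⟩ := Ff.decide (φ := fun (G : Gen 𝔽) (w : (Nil M × M) × M) => Mm w.1.2 G w.2) inferInstance ((Nil.mk, ρ), x) hp
  have := (𝔽.dom _ _ hq).1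
  exact ⟨q, hq, h.imp (fun h => ⟨this, h⟩) (fun h => ⟨this, h⟩)⟩
theorem FF.not [Countable M] {ρ x p : M} (h : FF 𝔽 ρ x p) (h' : FN 𝔽 ρ x p) : False := by
  obtain ⟨G, hG⟩ := Gen.exists (𝔽 := 𝔽) h.1
  exact h'.2 G hG (h.2 G hG)
/-- A condition no extension of which forces `x` in forces it out. -/
theorem FN.of [Countable M] {ρ x p : M} (hp : p ε 𝔽.P) (h : ∀ q, 𝔽.le q p → ¬ FF 𝔽 ρ x q) : FN 𝔽 ρ x p :=
  ⟨hp, fun G hG hm => by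
    obtain ⟨q, hq, h'⟩ := hm.truth
    obtain ⟨r, hr, h1, h2⟩ := G.dir _ _ hG hq
    exact h r h1 (h'.mono h2)⟩
theorem FF.of [Countable M] {ρ x p : M} (hp : p ε 𝔽.P) (h : ∀ q, 𝔽.le q p → ¬ FN 𝔽 ρ x q) : FF 𝔽 ρ x p :=
  ⟨hp, fun G hG => by_contra fun hm => by
    obtain ⟨q, hq, h'⟩ := Mm.truth' hm
    obtain ⟨r, hr, h1, h2⟩ := G.dir _ _ hG hq
    exact h r h1 (h'.mono h2)⟩
end

namespace AS
variable {𝔄 : AS M}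

theorem CL.comp_of {t r q : M} (h1 : 𝔄.CL t r) (h2 : 𝔄.CL t q) (hc : 𝔄.Cond (𝔄.comp r q)) : 𝔄.CL t (𝔄.comp r q) := by
  refine ⟨h1.1, hc, fun x hx => ?_, fun δ => ((h1.2.2.2 δ).un (h2.2.2.2 δ)).sb fun a ha => ?_⟩
  · rw [ev_comp, h1.nc (h2.2.1.good.nc (Or.inr hx)), h2.2.2.1 x hx]
  · obtain ⟨ha, hst, hne⟩ := mem_sep.1 ha
    rw [mem_un, mem_sep, mem_sep]
    rw [ev_comp] at hne
    rcases h2.2.1.good.cases a with e | ⟨_, e⟩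
    · rw [e] at hne; exact Or.inl ⟨ha, hst, hne⟩
    · rw [h1.nc e.nc] at hne; exact Or.inr ⟨ha, hst, hne⟩

/-- The generic filter contains a condition `q` for which membership in each of a small family of dense open sets
is reached by extending the part of `q` of stage at most `δ`. -/
theorem GDL (G : Gen 𝔄.fp) {δ X p : M} (hp : G.S p) (hδ : δ ε 𝔄.κ) (hX : ∀ γ, γ ε 𝔄.S → δ ε γ → CardLT 𝓔 X γ) (D : M → M → Prop)
    [hD : Df (fun w : (Nil M × M) × M => D w.1.2 w.2)]
    (hden : ∀ ξ t, ξ ε X → 𝔄.Cond t → ∃ t', 𝔄.CL t' t ∧ D ξ t')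
    (hop : ∀ ξ t t', ξ ε X → D ξ t → 𝔄.CL t' t → D ξ t') :
    ∃ q, G.S q ∧ 𝔄.CL q p ∧ (∀ ξ r, ξ ε X → 𝔄.Le r (𝔄.rst q (𝔄.LL δ)) → 𝔄.Su r (𝔄.LL δ) →
        ∃ r', 𝔄.Le r' r ∧ 𝔄.Su r' (𝔄.LL δ) ∧ D ξ (𝔄.comp r' q)) ∧
      ∀ ξ, ξ ε X → ∃ r, 𝔄.Le r (𝔄.rst q (𝔄.LL δ)) ∧ 𝔄.Su r (𝔄.LL δ) ∧ G.S r ∧ G.S (𝔄.comp r q) ∧ D ξ (𝔄.comp r q) := by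
  have hL : 𝔄.Dn (𝔄.LL δ) := LL_dn ((𝔄.inacc _ 𝔄.top).ord.mem hδ)
  have : D2 D := ⟨hD⟩
  obtain ⟨q, hq, hqp, h⟩ := G.meet (fun q : M => ∀ ξ r : M, ξ ε X → 𝔄.Le r (𝔄.rst q (𝔄.LL δ)) → 𝔄.Su r (𝔄.LL δ) →
        ∃ r' : M, 𝔄.Le r' r ∧ 𝔄.Su r' (𝔄.LL δ) ∧ D ξ (𝔄.comp r' q)) hp (fun t ht => by
    obtain ⟨q, h1, h2, h3, h4⟩ := DL (p := t) (B := 𝔄.At) hδ hL.1 hX D ht.1 (fun x hx => by_contra fun h => hx (ev_off h))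
      (fun ξ t hξ h1 h2 => by
        obtain ⟨t', h, hd⟩ := hden ξ t hξ h1.1
        refine ⟨_, h.comp.1, fun x hx => by_contra fun h => hx (ev_off h), hop _ _ _ hξ hd h.comp.2.1⟩)
      (fun ξ t t' hξ hd h _ => hop _ _ _ hξ hd h.cl)
    exact ⟨q, h1.cl, by rw [h3]; exact h4⟩)
  refine ⟨q, hq, hqp, h, fun ξ hξ => ?_⟩
  obtain ⟨t, ht, _, r, h1, h2, h3, h4⟩ := G.meet (fun t : M => ∃ r : M, 𝔄.Le r (𝔄.rst q (𝔄.LL δ)) ∧ 𝔄.Su r (𝔄.LL δ) ∧ 𝔄.CL t (𝔄.comp r q) ∧ D ξ (𝔄.comp r q)) hq (fun t ht => by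
    have ht : 𝔄.CL t q := ht
    obtain ⟨t1, t2, _⟩ := ht.comp
    obtain ⟨r, h1, h2, h3⟩ := h ξ (𝔄.rst (𝔄.comp t q) (𝔄.LL δ)) hξ (t1.rst hL) rst_su
    have h1' := h1.trans (t1.rst hL)
    exact ⟨𝔄.comp r (𝔄.comp t q), (amalg hL h1 t1.1 h2).1.cl.trans t2, r, h1', h2,
      (Le.comp_mono hL h1 h2 t1 h1').cl, h3⟩)
  have hc := G.up _ _ h3 ht
  exact ⟨r, h1, h2, G.up _ _ (amalg hL h1 (mem_PP.1 (G.sub _ hq)) h2).2.cl hc, hc, h4⟩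

end AS
end W6
namespace W6
open ZF
variable {M : Type u} [ZM M]
local notation "𝓔" => (ZM.E : M → M → Prop)

namespace AS
variable {𝔄 : AS M}

theorem LL_small {δ : M} (hδ : δ ε 𝔄.κ) : CardLT 𝓔 (𝔄.PL (𝔄.LL δ)) 𝔄.κ :=
  PL_small (LL_dn ((𝔄.inacc _ 𝔄.top).ord.mem hδ)) (𝔄.inacc _ 𝔄.top) (𝔄.small δ _ hδ 𝔄.top)

/-- Multivalued maps of the extension from an ordinal below `κ` to the ground model are met by small sets of the ground model. -/
theorem cover [Countable M] (G : Gen 𝔄.fp) {γ : M} (hγ : γ ε 𝔄.κ) (b ρ : M) :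
    ∃ K, CardLT 𝓔 K 𝔄.κ ∧ Sb K b ∧ ∀ ξ, ξ ε γ → (∃ β, β ε b ∧ Mm ρ G (op ξ β)) → ∃ β, β ε K ∧ Mm ρ G (op ξ β) := by
  obtain ⟨p, hp⟩ := G.ne
  obtain ⟨F, hF⟩ : ∃ F : M → M → Prop, F = FF 𝔄.fp ρ := ⟨_, rfl⟩
  have hFd : D2 F := ⟨by rw [hF]; infer_instance⟩
  obtain ⟨q, hq, _, _, h⟩ := GDL G hp hγ (X := γ) (fun γ' _ h => CardLT.of_mem h)
    (fun ξ t : M => (∃ β : M, β ε b ∧ F (op ξ β) t) ∨ ∀ t' : M, 𝔄.CL t' t → ∀ β : M, β ε b → ¬ F (op ξ β) t')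
    (fun ξ t hξ ht => by
      by_cases h : ∃ t', 𝔄.CL t' t ∧ ∃ β, β ε b ∧ F (op ξ β) t'
      · obtain ⟨t', h1, h2⟩ := h; exact ⟨t', h1, Or.inl h2⟩
      · exact ⟨t, CL.refl ht, Or.inr fun t' h1 β h2 h3 => h ⟨t', h1, β, h2, h3⟩⟩)
    (fun ξ t t' hξ h h' => by
      rcases h with ⟨β, h1, h2⟩ | h
      · left; refine ⟨β, h1, ?_⟩; rw [hF] at h2 ⊢; exact h2.mono h'
      · right; exact fun t'' h1 => h t'' (h1.trans h'))
  obtain ⟨f, hf, hf'⟩ := ac (sep (prod γ (𝔄.PL (𝔄.LL γ))) (fun z => ∃ β : M, β ε b ∧ F (op (fst z) β) (𝔄.comp (snd z) q)))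
    (fun z β : M => β ε b ∧ F (op (fst z) β) (𝔄.comp (snd z) q)) (fun z hz => (mem_sep.1 hz).2)
  refine ⟨_, CardLT.mono (CardLE.img (a := (sep (prod γ (𝔄.PL (𝔄.LL γ))) (fun z => ∃ β : M, β ε b ∧ F (op (fst z) β) (𝔄.comp (snd z) q)))) (fun z => app f z))
    (((𝔄.inacc _ 𝔄.top).prod (CardLT.of_mem hγ) (LL_small hγ)).sb fun z hz => (mem_sep.1 hz).1), ?_, ?_⟩
  · intro β hβ
    obtain ⟨z, hz, rfl⟩ := mem_img.1 hβ
    exact (hf' z hz).1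
  · rintro ξ hξ ⟨β, hβ, hm⟩
    obtain ⟨r, h1, h2, h3, h4, h5⟩ := h ξ hξ
    rcases h5 with ⟨β', h6, h7⟩ | h5
    · have hz : op ξ r ε (sep (prod γ (𝔄.PL (𝔄.LL γ))) (fun z => ∃ β : M, β ε b ∧ F (op (fst z) β) (𝔄.comp (snd z) q))) := by
        rw [mem_sep, op_mem_prod, fst_op, snd_op]
        exact ⟨⟨hξ, mem_PL.2 ⟨h1.1, h2⟩⟩, β', h6, h7⟩
      refine ⟨app f (op ξ r), mem_img.2 ⟨_, hz, rfl⟩, ?_⟩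
      have := (hf' _ hz).2
      rw [fst_op, snd_op, hF] at this
      exact this.2 G h4
    · exfalso
      obtain ⟨s, hs, hs'⟩ := hm.truth
      obtain ⟨t, ht, t1, t2⟩ := G.dir _ _ h4 hs
      refine h5 t t1 β hβ ?_
      rw [hF]; exact hs'.mono t2

section
variable [Countable M] (G : Gen 𝔄.fp)

theorem bddV {γ ρ : M} (hγ : γ ε 𝔄.κ) : ∃ η, η ε 𝔄.κ ∧ ∀ ξ, ξ ε γ → (∃ β, β ε 𝔄.κ ∧ Mm ρ G (op ξ β)) → ∃ β, β ε η ∧ Mm ρ G (op ξ β) := by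
  obtain ⟨K, hK, hKb, h⟩ := cover G hγ 𝔄.κ ρ
  obtain ⟨η, hη, h'⟩ := (𝔄.inacc _ 𝔄.top).bdd hK (fun x => x) hKb
  exact ⟨η, hη, fun ξ hξ h0 => let ⟨β, h1, h2⟩ := h ξ hξ h0; ⟨β, h' β h1, h2⟩⟩

theorem card_V : IsCardinal (ZM.E : VG G → VG G → Prop) (chk G 𝔄.κ) := by
  have hi := 𝔄.inacc _ 𝔄.top
  refine ⟨chk_ord.2 hi.ord, fun β hβ hc => ?_⟩
  obtain ⟨γ, hγ, rfl⟩ := mem_chk' hβ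
  obtain ⟨g, hg1, hg2⟩ := cardLE_iff.1 hc
  obtain ⟨ρ, hρ⟩ := nm_surj (sep (prod (chk G γ) (chk G 𝔄.κ)) (fun z => app g (snd z) = fst z))
  have hm : ∀ ξ α, Mm ρ G (op ξ α) ↔ ξ ε γ ∧ α ε 𝔄.κ ∧ app g (chk G α) = chk G ξ := fun ξ α => by
    unfold Mm; rw [← hρ, mem_sep, chk_op, fst_op, snd_op, op_mem_prod, mem_chk, mem_chk, and_assoc]
  obtain ⟨η, hη, h⟩ := bddV G (ρ := ρ) hγ
  obtain ⟨ξ, hξ, e⟩ := mem_chk' (hg1 (chk G η) (mem_chk.2 hη))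
  obtain ⟨β, hβ, h'⟩ := h ξ hξ ⟨η, hη, (hm _ _).2 ⟨hξ, hη, e⟩⟩
  obtain ⟨_, hβκ, e'⟩ := (hm _ _).1 h'
  have := hg2 _ _ (mem_chk.2 hη) (mem_chk.2 hβκ) (e.trans e'.symm)
  rw [chk_inj] at this
  exact eps_irrefl (this ▸ hβ)

theorem reg_V : IsRegular (ZM.E : VG G → VG G → Prop) (chk G 𝔄.κ) := by
  refine ⟨card_V G, fun β f hβ hf hc => ?_⟩
  obtain ⟨γ, hγ, rfl⟩ := mem_chk' hβ
  obtain ⟨ρ, rfl⟩ := nm_surj f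
  obtain ⟨η, hη, h⟩ := bddV G (ρ := ρ) hγ
  obtain ⟨x, v, hx, hv, hle⟩ := hc _ (mem_chk.2 hη)
  rw [pairMem] at hv
  obtain ⟨ξ, hξ, rfl⟩ := mem_chk' hx
  obtain ⟨hfn, hmaps⟩ := isFunc_iff.1 hf
  have hv' := (hfn.op_mem.1 hv).2
  obtain ⟨α, hα, rfl⟩ := mem_chk' (by rw [hv']; exact hmaps _ hx : v ε chk G 𝔄.κ)
  obtain ⟨β, hβ, h'⟩ := h ξ hξ ⟨α, hα, by unfold Mm; rwa [chk_op]⟩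
  unfold Mm at h'
  rw [chk_op] at h'
  have e := (hfn.op_mem.1 h').2.trans hv'.symm
  rw [chk_inj] at e
  subst e
  rcases hle with e | h
  · exact eps_irrefl (chk_inj.1 e ▸ hβ)
  · exact eps_asymm (mem_chk.1 h) hβ

/-- The subsets of ordinals below `κ` in the extension are coded by small sets of the ground model. -/
theorem sub_code {γ ρ : M} (hγ : γ ε 𝔄.κ) : ∃ c, Sb c (prod γ (𝔄.PL (𝔄.LL γ))) ∧ ∀ ξ, ξ ε γ → (Mm ρ G ξ ↔ ∃ r, G.S r ∧ op ξ r ε c) := by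
  obtain ⟨p, hp⟩ := G.ne
  obtain ⟨F, hF⟩ : ∃ F : M → M → Prop, F = FF 𝔄.fp ρ := ⟨_, rfl⟩
  have hFd : D2 F := ⟨by rw [hF]; infer_instance⟩
  obtain ⟨F', hF'⟩ : ∃ F : M → M → Prop, F = FN 𝔄.fp ρ := ⟨_, rfl⟩
  have hFd' : D2 F' := ⟨by rw [hF']; infer_instance⟩
  obtain ⟨q, hq, _, _, h⟩ := GDL G hp hγ (X := γ) (fun γ' _ h => CardLT.of_mem h)
    (fun ξ t : M => F ξ t ∨ F' ξ t)
    (fun ξ t hξ ht => by rw [hF, hF']; exact FF.decide (𝔽 := 𝔄.fp) (mem_PP.2 ht))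
    (fun ξ t t' hξ h h' => by
      rw [hF, hF'] at h ⊢; exact h.imp (fun h => h.mono h') (fun h => h.mono h'))
  refine ⟨sep (prod γ (𝔄.PL (𝔄.LL γ))) (fun z => F (fst z) (𝔄.comp (snd z) q)), fun z hz => (mem_sep.1 hz).1, fun ξ hξ => ⟨fun hm => ?_, ?_⟩⟩
  · obtain ⟨r, h1, h2, h3, h4, h5⟩ := h ξ hξ
    refine ⟨r, h3, mem_sep.2 ⟨op_mem_prod.2 ⟨hξ, mem_PL.2 ⟨h1.1, h2⟩⟩, ?_⟩⟩
    rw [fst_op, snd_op]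
    refine h5.resolve_right fun h => ?_
    rw [hF'] at h; exact h.2 G h4 hm
  · rintro ⟨r, hr, h⟩
    have h := (mem_sep.1 h).2
    rw [fst_op, snd_op, hF] at h
    obtain ⟨t, ht, t1, t2⟩ := G.dir _ _ hr hq
    exact h.2 G (G.up _ _ (CL.comp_of t1 t2 (mem_PP.1 h.1)) ht)

theorem inacc_V : IsInaccessible (ZM.E : VG G → VG G → Prop) (chk G 𝔄.κ) := by
  have hi := 𝔄.inacc _ 𝔄.top
  refine ⟨reg_V G, ⟨card_V G, fun β p hβ hp => ?_⟩, ⟨om, om_spec, by rw [← chk_om, mem_chk]; exact hi.om_mem⟩⟩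
  obtain ⟨γ, hγ, rfl⟩ := mem_chk' hβ
  refine ZF.CardLT.mono ?_ (cardLT_chk (G := G) (hi.pw (hi.prod (CardLT.of_mem hγ) (LL_small hγ))))
  refine CardLE.of_surj (fun c => sep (chk G γ) (fun ξ => ∃ r, r ε nm G (Gnm 𝔄.fp) ∧ op ξ r ε c)) fun x hx => ?_
  obtain ⟨ρ, rfl⟩ := nm_surj x
  obtain ⟨c, hc, h⟩ := sub_code G (ρ := ρ) hγ
  have hx := (hp _).1 hx
  refine ⟨chk G c, mem_chk.2 (mem_pw.2 hc), Eq.symm (ext fun z => ?_)⟩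
  rw [mem_sep]
  constructor
  · rintro ⟨hz, r, hr, hr'⟩
    obtain ⟨ξ, hξ, rfl⟩ := mem_chk' hz
    obtain ⟨r, _, rfl⟩ := mem_Gnm.1 hr
    rw [← chk_op, mem_chk] at hr'
    exact (h ξ hξ).2 ⟨r, chk_mem_Gnm.1 hr, hr'⟩
  · intro hz
    have hz' := hx z hz
    obtain ⟨ξ, hξ, rfl⟩ := mem_chk' hz'
    obtain ⟨r, hr, hr'⟩ := (h ξ hξ).1 hz
    exact ⟨hz', chk G r, chk_mem_Gnm.2 hr, by rwa [← chk_op, mem_chk]⟩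
end
end AS
end W6
namespace W6
open ZF
variable {M : Type u} [ZM M]
local notation "𝓔" => (ZM.E : M → M → Prop)

instance : D2 (IsKappaCompleteFilterOn 𝓔) := ⟨by unfold IsKappaCompleteFilterOn IsFilterOn; infer_instance⟩
instance : D3 (IsHeightOf 𝓔) := ⟨by unfold IsHeightOf; infer_instance⟩

section
variable {κ F : M} (hκ : ZF.IsInaccessible (ZM.E : M → M → Prop) κ) (hF : ZF.IsKappaCompleteFilterOn (ZM.E : M → M → Prop) F κ)
include hκ hF

theorem flt_top : κ ε F := by
  obtain ⟨X, hX⟩ := hF.1.2.1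
  exact hF.1.2.2.2 X κ hX (hF.1.1 X hX) (fun _ h => h)

theorem flt_inter {a : M} (ha : CardLT 𝓔 a κ) (g : M → M) [hg : Tm (fun w : Nil M × M => g w.2)]
    (h : ∀ x, x ε a → g x ε F) : sep κ (fun y => ∀ x, x ε a → y ε g x) ε F := by
  have : T1 g := T1.of hg
  obtain ⟨γ, hγ, i, hi⟩ := ha
  rw [isInj_iff] at hi
  obtain ⟨_, hi1, hi2⟩ := hi
  have hd : ∀ ξ, sep κ (fun y => ∀ x, x ε a → app i x = ξ → y ε g x) ε F := by
    intro ξ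
    by_cases hx : ∃ x, x ε a ∧ app i x = ξ
    · obtain ⟨x, hx, rfl⟩ := hx
      have : sep κ (fun y => ∀ x', x' ε a → app i x' = app i x → y ε g x') = g x := by
        apply W6.ext; intro y; rw [mem_sep]
        constructor
        · exact fun h' => h'.2 x hx rfl
        · intro hy
          refine ⟨hF.1.1 _ (h x hx) y hy, fun x' hx' e => ?_⟩
          rw [hi2 x' x hx' hx e]; exact hy
      rw [this]; exact h x hx
    · have : sep κ (fun y => ∀ x', x' ε a → app i x' = ξ → y ε g x') = κ := by
        apply W6.ext; intro y; rw [mem_sep]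
        exact ⟨fun h' => h'.1, fun h' => ⟨h', fun x' hx' e => (hx ⟨x', hx', e⟩).elim⟩⟩
      rw [this]; exact flt_top hκ hF
  refine hF.2 γ (lam γ (fun ξ => sep κ (fun y => ∀ x, x ε a → app i x = ξ → y ε g x))) hγ ?_ _ ?_
  · rw [isFunc_iff]
    refine ⟨Fn.lam, fun ξ hξ => ?_⟩
    rw [app_lam hξ]; exact hd ξ
  · intro y
    rw [mem_sep]
    refine and_congr_right fun hy => ⟨fun h' γ' Y hγ' hp => ?_, fun h' x hx => ?_⟩
    · rw [pairMem, op_mem_lam] at hp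
      rw [hp.2]
      exact mem_sep.2 ⟨hy, fun x hx _ => h' x hx⟩
    · have := h' (app i x) _ (hi1 x hx) (by rw [pairMem, op_mem_lam]; exact ⟨hi1 x hx, rfl⟩)
      exact (mem_sep.1 this).2 x hx rfl

theorem flt_up {X Y : M} (h : X ε F) (h' : ∀ x, x ε X → x ε κ → x ε Y) (hY : Sb Y κ) : Y ε F :=
  hF.1.2.2.2 X Y h (fun x hx => h' x hx (hF.1.1 X h x hx)) hY

theorem flt_two {X Y : M} (h : X ε F) (h' : Y ε F) : sep κ (fun x => x ε X ∧ x ε Y) ε F := by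
  have := flt_inter hκ hF (a := pr X Y) ⟨suc (suc emp), hκ.suc_mem (hκ.suc_mem (hκ.ord.trans emp_om hκ.om_mem)), by
    refine CardLE.of_rel (fun x y => (x = X ∧ y = emp) ∨ (x ≠ X ∧ y = suc emp)) ?_ ?_
    · intro x hx
      by_cases e : x = X
      · exact ⟨emp, by rw [mem_suc, mem_suc]; simp, Or.inl ⟨e, rfl⟩⟩
      · exact ⟨suc emp, by rw [mem_suc, mem_suc]; simp, Or.inr ⟨e, rfl⟩⟩
    · intro x x' y hx hx' _ h1 h2
      have ne : (emp : M) ≠ suc emp := fun e => not_mem_emp (x := (emp : M)) (by nth_rewrite 2 [e]; exact mem_suc.2 (Or.inr rfl))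
      rcases h1 with ⟨rfl, rfl⟩ | ⟨h1, rfl⟩
      · rcases h2 with ⟨rfl, _⟩ | ⟨_, e⟩
        · rfl
        · exact (ne e).elim
      · rcases h2 with ⟨_, e⟩ | ⟨h2, _⟩
        · exact (ne e.symm).elim
        · rw [(mem_pr.1 hx).resolve_left h1, (mem_pr.1 hx').resolve_left h2]⟩ (fun x => x) (fun x hx => by
    rcases mem_pr.1 hx with rfl | rfl <;> assumption)
  refine flt_up hκ hF this (fun x hx hx' => mem_sep.2 ⟨hx', ?_⟩) (fun x hx => (mem_sep.1 hx).1)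
  have := (mem_sep.1 hx).2
  exact ⟨this X (mem_pr.2 (Or.inl rfl)), this Y (mem_pr.2 (Or.inr rfl))⟩

theorem flt_and {φ ψ : M → Prop} [h1 : Df (fun w : Nil M × M => φ w.2)] [h2 : Df (fun w : Nil M × M => ψ w.2)]
    (h : sep κ φ ε F) (h' : sep κ ψ ε F) : sep κ (fun x => φ x ∧ ψ x) ε F := by
  have : D1 φ := ⟨h1⟩
  have : D1 ψ := ⟨h2⟩
  refine flt_up hκ hF (flt_two hκ hF h h') (fun x hx hx' => mem_sep.2 ⟨hx', ?_⟩) (fun x hx => (mem_sep.1 hx).1)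
  have := (mem_sep.1 hx).2
  exact ⟨(mem_sep.1 this.1).2, (mem_sep.1 this.2).2⟩

/-- A nonprincipal complete filter measuring the singletons contains the complements of small sets. -/
theorem flt_tail (hn : ¬ IsPrincipalOn 𝓔 F κ) (hm : ∀ ν, ν ε κ → MeasuresIn 𝓔 F (sing ν) κ)
    {a : M} (ha : CardLT 𝓔 a κ) (hs : Sb a κ) : sep κ (fun x => ¬ x ε a) ε F := by
  have := flt_inter hκ hF ha (fun ν => sep κ (fun x => x ≠ ν)) (fun ν hν => by
    rcases hm ν (hs ν hν) with h | ⟨A, hA, h⟩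
    · refine (hn ⟨sing ν, fun X => ⟨fun hX => ⟨hF.1.1 X hX, ?_⟩, fun hX => hF.1.2.2.2 _ _ h hX.2 hX.1⟩⟩).elim
      obtain ⟨y, hy⟩ := hF.1.2.2.1 _ (flt_two hκ hF h hX)
      have hy : y ε _ := hy
      rw [mem_sep, mem_sing] at hy
      intro z hz
      have hz : z ε sing ν := hz
      rw [mem_sing] at hz
      rw [hz, ← hy.2.1]; exact hy.2.2
    · refine flt_up hκ hF h (fun x hx hx' => mem_sep.2 ⟨hx', fun e => ((hA x).1 hx).2 (mem_sing.2 e)⟩) (fun x hx => (mem_sep.1 hx).1))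
  refine flt_up hκ hF this (fun x hx hx' => mem_sep.2 ⟨hx', fun h => ?_⟩) (fun x hx => (mem_sep.1 hx).1)
  exact (mem_sep.1 ((mem_sep.1 hx).2 x h)).2 rfl

end

/-- A union of `κ` sets of size at most `κ` has size at most `κ`. -/
theorem _root_.ZF.IsInaccessible.union_le {κ a u : M} (hκ : IsInaccessible 𝓔 κ) (h : CardLE 𝓔 a κ) (φ : M → M → Prop)
    [hd : Df (fun w : (Nil M × M) × M => φ w.1.2 w.2)]
    (hu : ∀ y, y ε u → ∃ x, x ε a ∧ φ x y)
    (h1 : ∀ x, x ε a → ∃ b, CardLE 𝓔 b κ ∧ ∀ y, φ x y → y ε b) : CardLE 𝓔 u κ := by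
  have : D2 φ := ⟨hd⟩
  obtain ⟨F, hF, hF'⟩ := ac a (fun x b : M => CardLE 𝓔 b κ ∧ ∀ y : M, φ x y → y ε b) h1
  obtain ⟨J, hJ, hJ'⟩ := ac a (fun x f => IsInjFromTo 𝓔 f (app F x) κ) (fun x hx => (hF' x hx).1)
  refine (CardLE.trans ?_ (CardLE.prod h (CardLE.rfl' (a := κ)))).trans hκ.sq
  refine CardLE.of_rel (fun y q : M => ∃ x : M, x ε a ∧ φ x y ∧ q = op x (app (app J x) y)) ?_ ?_
  · intro y hy
    obtain ⟨x, hx, hxy⟩ := hu y hy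
    have := isInj_iff.1 (hJ' x hx)
    refine ⟨_, op_mem_prod.2 ⟨hx, ?_⟩, x, hx, hxy, rfl⟩
    exact this.2.1 y ((hF' x hx).2 y hxy)
  · rintro y y' q _ _ _ ⟨x, hx, h1, rfl⟩ ⟨x', hx', h2, e⟩
    obtain ⟨rfl, e⟩ := op_inj.1 e
    exact (isInj_iff.1 (hJ' x hx)).2.2 y y' ((hF' x hx).2 y h1) ((hF' x hx).2 y' h2) e

theorem _root_.ZF.CardLT.cardLE {a κ : M} (hκ : Ord κ) (h : CardLT 𝓔 a κ) : CardLE 𝓔 a κ := by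
  obtain ⟨γ, hγ, h⟩ := h
  exact h.trans (CardLE.sb (hκ.sb hγ))

/-- The least ordinal that does not inject into `κ` is the cardinal successor. -/
theorem exists_succ {κ : M} (hκ : Ord κ) : ∃ lam, IsCardSuccOf 𝓔 lam κ ∧ ¬ CardLE 𝓔 lam κ ∧ ∀ β, β ε lam → CardLE 𝓔 β κ := by
  obtain ⟨θ, hθ, hn⟩ := exists_not_cardLE κ
  obtain ⟨lam, ⟨h1, h2⟩, h3⟩ := eps_min (P := fun θ : M => Ord θ ∧ ¬ CardLE 𝓔 θ κ) ⟨θ, hθ, hn⟩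
  have h3 : ∀ β, β ε lam → CardLE 𝓔 β κ := fun β hβ => by
    by_contra hc; exact h3 β hβ ⟨h1.mem hβ, hc⟩
  refine ⟨lam, ⟨⟨h1, fun β hβ hc => h2 (hc.trans (h3 β hβ))⟩, ?_, fun μ hμ hκμ => ?_⟩, h2, h3⟩
  · rcases hκ.tri h1 with h | h | h
    · exact h
    · exact (h2 (h ▸ CardLE.rfl')).elim
    · exact (h2 (CardLE.sb (hκ.sb h))).elim
  · rcases hμ.1.tri h1 with h | h | h
    · exact (hμ.2 κ hκμ (h3 μ h)).elim
    · exact Or.inl h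
    · exact Or.inr h

theorem height_pred {lt x β γ T : M} (hT : IsTreeOrderOn 𝓔 lt T) (h : IsHeightOf 𝓔 lt x β) (hγ : γ ε β) :
    ∃ y, PairMem 𝓔 lt y x ∧ IsHeightOf 𝓔 lt y γ := by
  obtain ⟨ho, f, h1, h2, h3, h4, h5⟩ := h
  obtain ⟨y, hy⟩ := h2 γ hγ
  have hv : ∀ δ z, PairMem 𝓔 f δ z → δ ε β ∧ PairMem 𝓔 lt z x := by
    intro δ z hp
    obtain ⟨δ', z', e1, e2, e3⟩ := h1 (op δ z) (pairMem.1 hp)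
    obtain ⟨rfl, rfl⟩ := op_inj.1 (isOPair_op.1 e3)
    exact ⟨e1, e2⟩
  refine ⟨y, (hv _ _ hy).2, ho.mem hγ, sep f (fun p => ∃ δ z : M, δ ε γ ∧ p = op δ z), ?_⟩
  have hm : ∀ δ z, PairMem 𝓔 (sep f (fun p => ∃ δ z : M, δ ε γ ∧ p = op δ z)) δ z ↔ δ ε γ ∧ PairMem 𝓔 f δ z := by
    intro δ z
    rw [pairMem, mem_sep, pairMem]
    constructor
    · rintro ⟨h, δ', z', h', e⟩
      rw [(op_inj.1 e).1]; exact ⟨h', (op_inj.1 e).1 ▸ h⟩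
    · exact fun h => ⟨h.2, δ, z, h.1, rfl⟩
  refine ⟨?_, ?_, ?_, ?_, ?_⟩
  · intro p hp
    obtain ⟨hp1, δ, z, hδ, rfl⟩ := mem_sep.1 (show p ε _ from hp)
    have hp1 := pairMem.2 hp1
    exact ⟨δ, z, hδ, h5 _ _ _ _ hδ hp1 hy, isOPair_op.2 rfl⟩
  · intro δ hδ
    obtain ⟨z, hz⟩ := h2 δ (ho.trans hδ hγ)
    exact ⟨z, (hm _ _).2 ⟨hδ, hz⟩⟩
  · intro δ z z' h h'
    exact h3 δ z z' ((hm _ _).1 h).2 ((hm _ _).1 h').2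
  · intro z hz
    obtain ⟨δ, hδ, hp⟩ := h4 z (hT.2.2.1 _ _ _ hz (hv _ _ hy).2)
    refine ⟨δ, ?_, (hm _ _).2 ⟨?_, hp⟩⟩ <;>
    · rcases (ho.mem hδ).tri (ho.mem hγ) with h | h | h
      · exact h
      · subst h; exact (hT.2.1 _ (h3 _ _ _ hp hy ▸ hz)).elim
      · exact (hT.2.1 _ (hT.2.2.1 _ _ _ hz (h5 _ _ _ _ h hy hp))).elim
  · intro δ δ' z z' hd h h'
    exact h5 _ _ _ _ hd ((hm _ _).1 h).2 ((hm _ _).1 h').2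

theorem tree_of_wm {κ : M} (h : IsWeaklyMeasurable 𝓔 κ) : HasTreeProperty 𝓔 κ := by
  have hκ := h.1
  intro T lt ⟨hT, hT1, hT2, hT3⟩
  have hlev : ∀ β, β ε κ → CardLT 𝓔 (sep T (fun x => IsHeightOf 𝓔 lt x β)) κ := fun β hβ =>
    hT3 β _ hβ fun x => mem_sep
  have hTc : CardLE 𝓔 T κ := by
    refine hκ.union_le CardLE.rfl' (fun β x : M => x ε T ∧ IsHeightOf 𝓔 lt x β) (fun x hx => ?_) (fun β hβ => ?_)
    · obtain ⟨β, hβ, hb⟩ := hT1 x hx; exact ⟨β, hβ, hx, hb⟩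
    · exact ⟨_, (hlev β hβ).cardLE hκ.ord, fun y hy => mem_sep.2 hy⟩
  obtain ⟨t, ht, ht'⟩ := ac κ (fun β x : M => x ε T ∧ IsHeightOf 𝓔 lt x β) hT2
  obtain ⟨A, hA⟩ : ∃ A : M → M, A = fun x => sep κ (fun ν => x = app t ν ∨ PairMem 𝓔 lt x (app t ν)) := ⟨_, rfl⟩
  have hAT : T1 A := T1.of (by rw [hA]; infer_instance)
  have hAm : ∀ x ν, ν ε A x ↔ ν ε κ ∧ (x = app t ν ∨ PairMem 𝓔 lt x (app t ν)) := by
    intro x ν; rw [hA]; exact mem_sep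
  obtain ⟨lam, hl, _, _⟩ := exists_succ hκ.ord
  obtain ⟨F, hF, hn, hm⟩ := h.2 lam (un (img T A) (img κ sing)) hl (by
    intro X hX
    rcases mem_un.1 (show X ε _ from hX) with hX | hX
    · obtain ⟨x, hx, rfl⟩ := mem_img.1 hX
      exact fun ν hν => ((hAm _ _).1 hν).1
    · obtain ⟨x, hx, rfl⟩ := mem_img.1 hX
      intro ν hν; rw [mem_sing.1 hν]; exact hx) (by
    refine CardLE.trans ?_ (CardLE.sb (hl.1.1.sb hl.2.1))
    refine hκ.union_le (a := pr emp (sing emp)) ((hκ.un (hκ.sing emp) (hκ.sing (sing emp))).cardLE hκ.ord |> fun h => CardLE.trans (CardLE.sb fun x hx => ?_) h) (fun i x : M => (i = emp ∧ x ε img T A) ∨ (i ≠ emp ∧ x ε img κ sing)) ?_ ?_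
    · rw [mem_un, mem_sing, mem_sing]; exact mem_pr.1 hx
    · intro x hx
      rcases mem_un.1 hx with hX | hX
      · exact ⟨emp, mem_pr.2 (Or.inl rfl), Or.inl ⟨rfl, hX⟩⟩
      · exact ⟨sing emp, mem_pr.2 (Or.inr rfl), Or.inr ⟨emp_ne_sing.symm, hX⟩⟩
    · intro i hi
      by_cases e : i = emp
      · exact ⟨_, (CardLE.img A).trans hTc, fun y hy => (hy.resolve_right fun h => h.1 e).2⟩
      · exact ⟨_, (CardLE.img sing), fun y hy => (hy.resolve_left fun h => e h.1).2⟩)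
  have hms : ∀ ν, ν ε κ → MeasuresIn 𝓔 F (sing ν) κ := fun ν hν => hm _ (mem_un.2 (Or.inr (mem_img.2 ⟨ν, hν, rfl⟩)))
  refine ⟨sep T (fun x => A x ε F), ⟨fun x hx => (mem_sep.1 hx).1, ?_⟩, ?_⟩
  · intro x y hx hy
    obtain ⟨_, hx⟩ := mem_sep.1 (show x ε _ from hx)
    obtain ⟨_, hy⟩ := mem_sep.1 (show y ε _ from hy)
    obtain ⟨ν, hν⟩ := hF.1.2.2.1 _ (flt_two hκ hF hx hy)
    obtain ⟨hν, h1, h2⟩ := mem_sep.1 (show ν ε _ from hν)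
    rw [hAm] at h1 h2
    rcases h1.2 with e1 | e1 <;> rcases h2.2 with e2 | e2
    · exact Or.inl (e1.trans e2.symm)
    · rw [e1]; exact Or.inr (Or.inr e2)
    · rw [e2]; exact Or.inr (Or.inl e1)
    · rcases hT.2.2.2 x y _ (ht' ν hν).1 e1 e2 with h | h | h <;> tauto
  · intro β hβ
    have hβ : β ε κ := hβ
    by_contra hc
    have hc : ∀ x, x ε T → IsHeightOf 𝓔 lt x β → ¬ A x ε F := fun x h1 h2 h3 => hc ⟨x, mem_sep.2 ⟨h1, h3⟩, h2⟩
    have h1 := flt_inter hκ hF (hlev β hβ) (fun x => sep κ (fun ν => ¬ ν ε A x)) (by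
      intro x hx
      obtain ⟨hx, hx'⟩ := mem_sep.1 hx
      rcases hm (A x) (mem_un.2 (Or.inl (mem_img.2 ⟨x, hx, rfl⟩))) with h | ⟨B, hB, h⟩
      · exact (hc x hx hx' h).elim
      · refine flt_up hκ hF h (fun x hx hx' => mem_sep.2 ⟨hx', ((hB x).1 hx).2⟩) (fun x hx => (mem_sep.1 hx).1))
    have h2 := flt_tail hκ hF hn hms (CardLT.of_mem hβ) (hκ.ord.sb hβ)
    obtain ⟨ν, hν⟩ := hF.1.2.2.1 _ (flt_two hκ hF h1 h2)
    obtain ⟨hν, h3, h4⟩ := mem_sep.1 (show ν ε _ from hν)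
    have h3 := (mem_sep.1 h3).2
    have h4 := (mem_sep.1 h4).2
    obtain ⟨x, hx, hx', hx2⟩ : ∃ x, x ε T ∧ IsHeightOf 𝓔 lt x β ∧ ν ε A x := by
      rcases (hκ.ord.mem hν).tri (hκ.ord.mem hβ) with e | e | e
      · exact (h4 e).elim
      · subst e; exact ⟨_, (ht' _ hβ).1, (ht' _ hβ).2, (hAm _ _).2 ⟨hβ, Or.inl rfl⟩⟩
      · obtain ⟨y, hy, hy'⟩ := height_pred hT (ht' _ hν).2 e
        obtain ⟨x', y', e1, e2, e3⟩ := hT.1 _ (pairMem.1 hy)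
        rw [isOPair_op, op_inj] at e3
        exact ⟨y, e3.1 ▸ e1, hy', (hAm _ _).2 ⟨hν, Or.inr hy⟩⟩
    exact (mem_sep.1 (h3 x (mem_sep.2 ⟨hx, hx'⟩))).2 hx2

end W6
namespace W6
open ZF
variable {M : Type u} [ZM M]
local notation "𝓔" => (ZM.E : M → M → Prop)

theorem _root_.ZF.IsInaccessible.two {κ : M} (hκ : IsInaccessible 𝓔 κ) (a b : M) : CardLT 𝓔 (pr a b) κ :=
  (hκ.un (hκ.sing a) (hκ.sing b)).sb fun z hz => by
    rw [mem_pr] at hz; rw [mem_un, mem_sing, mem_sing]; exact hz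

theorem _root_.ZF.IsInaccessible.un_le {κ a b : M} (hκ : IsInaccessible 𝓔 κ) (ha : CardLE 𝓔 a κ) (hb : CardLE 𝓔 b κ) :
    CardLE 𝓔 (un a b) κ :=
  hκ.union_le ((hκ.two a b).cardLE hκ.ord) (fun c x : M => x ε c) (fun y hy => by
    rcases mem_un.1 hy with h | h
    · exact ⟨a, mem_pr.2 (Or.inl rfl), h⟩
    · exact ⟨b, mem_pr.2 (Or.inr rfl), h⟩) (fun c hc => ⟨c, by rcases mem_pr.1 hc with rfl | rfl <;> assumption, fun _ h => h⟩)

theorem _root_.ZF.CardLE.sb' {a b c : M} (h : CardLE 𝓔 b c) (h' : Sb a b) : CardLE 𝓔 a c := (CardLE.sb h').trans h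

namespace AS
variable {𝔄 : AS M}

variable (𝔄) in
/-- The atoms of stage below `κ`. -/
noncomputable def low : M := sep 𝔄.At (fun a => 𝔄.st a ε 𝔄.κ)
theorem mem_low {a : M} : a ε 𝔄.low ↔ a ε 𝔄.At ∧ 𝔄.st a ε 𝔄.κ := mem_sep

theorem kin : IsInaccessible 𝓔 𝔄.κ := 𝔄.inacc _ 𝔄.top

theorem low_le : CardLE 𝓔 𝔄.low 𝔄.κ :=
  kin.union_le CardLE.rfl' (fun δ x : M => x ε 𝔄.LL δ) (fun y hy => ⟨_, (mem_low.1 hy).2, mem_LL.2 ⟨(mem_low.1 hy).1, mem_suc.2 (Or.inr rfl)⟩⟩)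
    (fun δ hδ => ⟨𝔄.LL δ, (𝔄.small δ _ hδ 𝔄.top).cardLE kin.ord, fun _ h => h⟩)

theorem st_le {a : M} (ha : a ε 𝔄.At) : 𝔄.st a ε suc 𝔄.κ := mem_suc.2 (𝔄.le_top _ (𝔄.st_mem a ha))

theorem low_dn {A : M} (h : Sb 𝔄.low A) (h' : Sb A 𝔄.At) : 𝔄.Dn A :=
  ⟨h', fun x y hx hy hs => h y (mem_low.2 ⟨𝔄.ns _ hy, kin.ord.lt_of_lt hs (𝔄.le_top _ (𝔄.st_mem x (h' x hx)))⟩)⟩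

variable (𝔄) in
/-- The support of a condition. -/
noncomputable def supp (p : M) : M := sep 𝔄.At (fun a => 𝔄.ev p a ≠ a)
instance : T1 𝔄.supp := .of (by unfold supp; infer_instance)
theorem mem_supp {p a : M} : a ε 𝔄.supp p ↔ 𝔄.ev p a ≠ a := by
  unfold supp; rw [mem_sep]
  exact ⟨And.right, fun h => ⟨by_contra fun h' => h (ev_off h'), h⟩⟩
theorem Cond.supp_lt {p : M} (hp : 𝔄.Cond p) : CardLT 𝓔 (𝔄.supp p) 𝔄.κ :=
  (hp.2.2 _ 𝔄.top).sb fun x hx => by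
    obtain ⟨h1, h2⟩ := mem_sep.1 hx
    exact mem_sep.2 ⟨h1, h2, st_le h1⟩

/-- `κ ^ {<κ} = κ`, for conditions. -/
theorem PL_le {A : M} (hA : 𝔄.Dn A) (hc : CardLE 𝓔 A 𝔄.κ) : CardLE 𝓔 (𝔄.PL A) 𝔄.κ := by
  have hκ := kin (𝔄 := 𝔄)
  obtain ⟨e, he⟩ := hκ.un_le hc ((hκ.two emp (sing emp)).cardLE hκ.ord)
  rw [isInj_iff] at he
  obtain ⟨-, he1, he2⟩ := he
  have hmem : ∀ v x, v ε 𝔄.PL A → x ε A → 𝔄.ev v x ε un A (pr emp (sing emp)) := fun v x hv hx => by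
    rw [mem_un, mem_pr]; exact hA.ev (mem_PL.1 hv).1 hx
  refine hκ.union_le CardLE.rfl' (fun β v : M => v ε 𝔄.PL A ∧ ∀ x : M, 𝔄.ev v x ≠ x → app e x ε β ∧ app e (𝔄.ev v x) ε β) ?_ ?_
  · intro v hv
    have hv' := mem_PL.1 hv
    obtain ⟨β, hβ, h1⟩ := hκ.bdd hv'.1.supp_lt (fun x => app e x) (fun x hx => he1 x (mem_un.2 (Or.inl (hv'.2 x (mem_supp.1 hx)))))
    obtain ⟨β', hβ', h2⟩ := hκ.bdd hv'.1.supp_lt (fun x => app e (𝔄.ev v x)) (fun x hx => he1 _ (hmem v x hv (hv'.2 x (mem_supp.1 hx))))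
    obtain ⟨μ, hμ, h3, h4⟩ := hκ.max hβ hβ'
    exact ⟨μ, hμ, hv, fun x hx => ⟨(hκ.ord.mem hμ).trans (h1 x (mem_supp.2 hx)) h3, (hκ.ord.mem hμ).trans (h2 x (mem_supp.2 hx)) h4⟩⟩
  · intro β hβ
    refine ⟨sep (𝔄.PL A) (fun v : M => ∀ x : M, 𝔄.ev v x ≠ x → app e x ε β ∧ app e (𝔄.ev v x) ε β), ?_, fun y hy => mem_sep.2 hy⟩
    refine CardLE.trans (b := pw (prod β β)) ?_ ((hκ.pw (hκ.prod (CardLT.of_mem hβ) (CardLT.of_mem hβ))).cardLE hκ.ord)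
    refine CardLE.of (fun v => sep (prod β β) (fun z => ∃ x : M, 𝔄.ev v x ≠ x ∧ z = op (app e x) (app e (𝔄.ev v x)))) ?_ ?_
    · intro v hv; exact mem_pw.2 fun z hz => (mem_sep.1 hz).1
    · have key : ∀ v v', v ε sep (𝔄.PL A) (fun v : M => ∀ x : M, 𝔄.ev v x ≠ x → app e x ε β ∧ app e (𝔄.ev v x) ε β) →
        v' ε sep (𝔄.PL A) (fun v : M => ∀ x : M, 𝔄.ev v x ≠ x → app e x ε β ∧ app e (𝔄.ev v x) ε β) →
        sep (prod β β) (fun z => ∃ x : M, 𝔄.ev v x ≠ x ∧ z = op (app e x) (app e (𝔄.ev v x))) =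
        sep (prod β β) (fun z => ∃ x : M, 𝔄.ev v' x ≠ x ∧ z = op (app e x) (app e (𝔄.ev v' x))) →
        ∀ x, 𝔄.ev v x ≠ x → 𝔄.ev v x = 𝔄.ev v' x := by
        intro v v' hv hv' eq x hx
        obtain ⟨hv1, hv2⟩ := mem_sep.1 hv
        obtain ⟨hv1', hv2'⟩ := mem_sep.1 hv'
        have : op (app e x) (app e (𝔄.ev v x)) ε sep (prod β β) (fun z => ∃ x : M, 𝔄.ev v x ≠ x ∧ z = op (app e x) (app e (𝔄.ev v x))) :=
          mem_sep.2 ⟨op_mem_prod.2 (hv2 x hx), x, hx, rfl⟩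
        rw [eq] at this
        obtain ⟨_, x', hx', e'⟩ := mem_sep.1 this
        obtain ⟨e1, e2⟩ := op_inj.1 e'
        have hxA := (mem_PL.1 hv1).2 x hx
        have hxA' := (mem_PL.1 hv1').2 x' hx'
        have := he2 _ _ (mem_un.2 (Or.inl hxA)) (mem_un.2 (Or.inl hxA')) e1
        subst this
        exact he2 _ _ (hmem v x hv1 hxA) (hmem v' x hv1' hxA') e2
      intro v v' hv hv' eq
      refine (mem_PL.1 (mem_sep.1 hv).1).1.ext (mem_PL.1 (mem_sep.1 hv').1).1 fun x => ?_
      by_cases h : 𝔄.ev v x = x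
      · by_cases h' : 𝔄.ev v' x = x
        · rw [h, h']
        · exact (key v' v hv' hv eq.symm x h').symm
      · exact key v v' hv hv' eq x h

/-- Any set of conditions is met by a part of it of size `κ`, all of whose members are supported in a set of `κ` atoms. -/
theorem cc (W : M) (hW : Sb W 𝔄.PP) : ∃ A, Sb 𝔄.low A ∧ Sb A 𝔄.At ∧ CardLE 𝓔 A 𝔄.κ ∧
    ∀ u w, w ε W → 𝔄.CL u w → ∃ w0 t, w0 ε W ∧ 𝔄.Su w0 A ∧ 𝔄.CL t u ∧ 𝔄.CL t w0 := by
  have hκ := kin (𝔄 := 𝔄)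
  obtain ⟨c, -, hc⟩ := ac 𝔄.PP (fun v z : M => ∃ u0 w0 : M, z = op u0 w0 ∧ 𝔄.Cond u0 ∧ 𝔄.Cond w0 ∧
      ((∃ w u : M, w ε W ∧ 𝔄.CL u v ∧ 𝔄.CL u w) → w0 ε W ∧ 𝔄.CL u0 v ∧ 𝔄.CL u0 w0)) (fun v hv => by
    by_cases h : ∃ w u : M, w ε W ∧ 𝔄.CL u v ∧ 𝔄.CL u w
    · obtain ⟨w, u, h1, h2, h3⟩ := h
      exact ⟨_, u, w, rfl, h2.1, h3.2.1, fun _ => ⟨h1, h2, h3⟩⟩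
    · exact ⟨_, v, v, rfl, mem_PP.1 hv, mem_PP.1 hv, fun h' => (h h').elim⟩)
  obtain ⟨C, hC⟩ : ∃ C : M → M, C = fun v => un (𝔄.supp (fst (app c v))) (𝔄.supp (snd (app c v))) := ⟨_, rfl⟩
  have hCT : T1 C := T1.of (by rw [hC]; infer_instance)
  have hCm : ∀ v u0 w0, app c v = op u0 w0 → C v = un (𝔄.supp u0) (𝔄.supp w0) := fun v u0 w0 h => by
    rw [hC]; beta_reduce; rw [h, fst_op, snd_op]
  have hCs : ∀ v, v ε 𝔄.PP → CardLE 𝓔 (C v) 𝔄.κ ∧ Sb (C v) 𝔄.At := fun v hv => by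
    obtain ⟨u0, w0, e, h1, h2, -⟩ := hc v hv
    rw [hCm v u0 w0 e]
    refine ⟨hκ.un_le (h1.supp_lt.cardLE hκ.ord) (h2.supp_lt.cardLE hκ.ord), fun x hx => ?_⟩
    rcases mem_un.1 hx with h | h <;> exact (mem_sep.1 h).1
  obtain ⟨s, -, hs⟩ := rs (Y := pw 𝔄.At) hκ.ord (fun β s y : M => Sb 𝔄.low y ∧ CardLE 𝓔 y 𝔄.κ ∧ ∀ γ : M, γ ε β → Sb (app s γ) y ∧
      ∀ v : M, v ε 𝔄.PL (app s γ) → Sb (C v) y) (by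
    intro β s hβ hs IH
    refine ⟨sep 𝔄.At (fun x => x ε 𝔄.low ∨ ∃ γ : M, γ ε β ∧ (x ε app s γ ∨ ∃ v : M, v ε 𝔄.PL (app s γ) ∧ x ε C v)),
      mem_pw.2 fun x hx => (mem_sep.1 hx).1, fun x hx => mem_sep.2 ⟨(mem_low.1 hx).1, Or.inl hx⟩, ?_, ?_⟩
    · refine (hκ.un_le (low_le (𝔄 := 𝔄)) (b := sep 𝔄.At (fun x => ∃ γ : M, γ ε β ∧ (x ε app s γ ∨ ∃ v : M, v ε 𝔄.PL (app s γ) ∧ x ε C v))) ?_).sb' ?_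
      · refine hκ.union_le (a := β) (CardLE.sb (hκ.ord.sb hβ)) (fun γ x : M => x ε app s γ ∨ ∃ v : M, v ε 𝔄.PL (app s γ) ∧ x ε C v)
          (fun y hy => (mem_sep.1 hy).2) (fun γ hγ => ?_)
        obtain ⟨h1, h2, h3, -⟩ := IH γ hγ
        refine ⟨un (app s γ) (sep 𝔄.At (fun x => ∃ v : M, v ε 𝔄.PL (app s γ) ∧ x ε C v)), hκ.un_le h3 ?_, ?_⟩
        · refine hκ.union_le (a := 𝔄.PL (app s γ)) (PL_le (low_dn h2 (mem_pw.1 h1)) h3) (fun v x : M => x ε C v) (fun y hy => (mem_sep.1 hy).2)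
            (fun v hv => ⟨C v, (hCs v (mem_PP.2 (mem_PL.1 hv).1)).1, fun _ h => h⟩)
        · rintro y (hy | ⟨v, hv, hy⟩)
          · exact mem_un.2 (Or.inl hy)
          · exact mem_un.2 (Or.inr (mem_sep.2 ⟨(hCs v (mem_PP.2 (mem_PL.1 hv).1)).2 y hy, v, hv, hy⟩))
      · intro x hx
        obtain ⟨h1, h2⟩ := mem_sep.1 hx
        exact mem_un.2 (h2.imp id fun h => mem_sep.2 ⟨h1, h⟩)
    · intro γ hγ
      refine ⟨fun x hx => mem_sep.2 ⟨mem_pw.1 (IH γ hγ).1 x hx, Or.inr ⟨γ, hγ, Or.inl hx⟩⟩, fun v hv x hx => mem_sep.2 ⟨(hCs v (mem_PP.2 (mem_PL.1 hv).1)).2 x hx, Or.inr ⟨γ, hγ, Or.inr ⟨v, hv, hx⟩⟩⟩⟩)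
  have hmono : ∀ γ β, γ ε β → β ε 𝔄.κ → Sb (app s γ) (app s β) ∧ ∀ v : M, v ε 𝔄.PL (app s γ) → Sb (C v) (app s β) := fun γ β h h' => by
    have := (hs β h').2.2.2 γ h
    rwa [app_res h] at this
  obtain ⟨A, hA⟩ : ∃ A, A = sep 𝔄.At (fun x => ∃ β : M, β ε 𝔄.κ ∧ x ε app s β) := ⟨_, rfl⟩
  have hAm : ∀ x, x ε A ↔ ∃ β, β ε 𝔄.κ ∧ x ε app s β := fun x => by
    rw [hA, mem_sep]; exact ⟨And.right, fun ⟨β, h1, h2⟩ => ⟨mem_pw.1 (hs β h1).1 x h2, β, h1, h2⟩⟩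
  have h0 : emp ε 𝔄.κ := hκ.ord.trans emp_om hκ.om_mem
  have hAlow : Sb 𝔄.low A := fun x hx => (hAm x).2 ⟨emp, h0, (hs emp h0).2.1 x hx⟩
  have hAAt : Sb A 𝔄.At := fun x hx => by rw [hA] at hx; exact (mem_sep.1 hx).1
  have hdn := low_dn hAlow hAAt
  refine ⟨A, hAlow, hAAt, ?_, ?_⟩
  · exact hκ.union_le CardLE.rfl' (fun β x : M => x ε app s β) (fun y hy => (hAm y).1 hy) (fun β hβ => ⟨_, (hs β hβ).2.2.1, fun _ h => h⟩)
  · intro u w hw huw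
    have hv : 𝔄.Cond (𝔄.rst u A) := huw.1.rst hdn
    obtain ⟨B, -, hB⟩ := ac (𝔄.supp (𝔄.rst u A)) (fun x β : M => β ε 𝔄.κ ∧ x ε app s β) (fun x hx => (hAm x).1 (rst_su x (mem_supp.1 hx)))
    obtain ⟨β, hβ, hb⟩ := hκ.bdd hv.supp_lt (fun x => app B x) (fun x hx => (hB x hx).1)
    have hvb : 𝔄.rst u A ε 𝔄.PL (app s β) := mem_PL.2 ⟨hv, fun x hx => by
      have hx := mem_supp.2 hx
      exact (hmono _ _ (hb x hx) hβ).1 x (hB x hx).2⟩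
    have hCA : Sb (C (𝔄.rst u A)) A := fun x hx => (hAm x).2 ⟨_, hκ.suc_mem hβ, (hmono β _ (mem_suc.2 (Or.inr rfl)) (hκ.suc_mem hβ)).2 _ hvb x hx⟩
    obtain ⟨u0, w0, e, h1, h2, h3⟩ := hc _ (mem_PP.2 hv)
    rw [hCm _ u0 w0 e] at hCA
    obtain ⟨h4, h5, h6⟩ := h3 ⟨w, u, hw, (huw.1.le_rst hdn).cl, huw⟩
    have hu0 : 𝔄.Su u0 A := fun x hx => hCA x (mem_un.2 (Or.inl (mem_supp.2 hx)))
    obtain ⟨g1, g2, g3⟩ := h5.comp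
    have hsu : 𝔄.Su (𝔄.comp u0 (𝔄.rst u A)) A := fun x hx => by
      by_contra hxA
      rw [ev_comp, ev_rst_off hxA] at hx
      exact hxA (hu0 x hx)
    obtain ⟨g4, g5⟩ := amalg hdn g1 huw.1 hsu
    exact ⟨w0, _, h4, fun x hx => hCA x (mem_un.2 (Or.inr (mem_supp.2 hx))), g4.cl, g5.cl.trans (g2.trans h6)⟩

end AS
end W6
namespace W6
open ZF
variable {M : Type u} [ZM M]
local notation "𝓔" => (ZM.E : M → M → Prop)

theorem card_cmp {γ a : M} (hγ : Ord γ) : CardLE 𝓔 γ a ∨ CardLT 𝓔 a γ := by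
  by_cases H : ∀ β s : M, β ε γ → Fn s β → ∃ y, y ε a ∧ ∀ x, x ε β → app s x ≠ y
  · left
    obtain ⟨s, _, h⟩ := rs hγ (Y := a) (fun β s y : M => ∀ x : M, x ε β → app s x ≠ y) (fun β s hβ hs _ => H β s hβ hs)
    have h2 : ∀ x y, x ε y → y ε γ → app s x ≠ app s y := fun x y hx hy e => by
      have := (h y hy).2 x hx
      rw [app_res hx] at this; exact this e
    refine CardLE.of (fun x => app s x) (fun x hx => (h x hx).1) fun x y hx hy e => ?_
    rcases (hγ.mem hx).tri (hγ.mem hy) with h' | h' | h'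
    · exact (h2 x y h' hy e).elim
    · exact h'
    · exact (h2 y x h' hx e.symm).elim
  · right
    push Not at H
    obtain ⟨β, s, hβ, _, h⟩ := H
    exact ⟨β, hβ, CardLE.of_surj (fun x => app s x) fun y hy => let ⟨x, hx, e⟩ := h y hy; ⟨x, hx, e.symm⟩⟩

theorem om_max {m x : M} (hm : m ε om) (hx : x ε om) : ∃ k, k ε om ∧ Sb m k ∧ x ε k := by
  rcases (om_ord.mem hm).le_or_lt (om_ord.mem (suc_om hx)) with h | h
  · exact ⟨_, suc_om hx, ((om_ord.mem hm).sb_iff (om_ord.mem (suc_om hx))).2 h, mem_suc.2 (Or.inr rfl)⟩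
  · exact ⟨m, hm, fun _ h => h, (om_ord.mem hm).trans (mem_suc.2 (Or.inr rfl)) h⟩

/-- An injective sequence of length `ω` eventually leaves every finite set. -/
theorem fin_bdd {e : M} (he : Fin' e) (g : M → M) [hg : Tm (fun w : Nil M × M => g w.2)]
    (hi : ∀ m n, m ε om → n ε om → g m = g n → m = n) : ∃ n0, n0 ε om ∧ ∀ n, n ε om → g n ε e → n ε n0 := by
  have : T1 g := T1.of hg
  refine (mem_sep.1 (he (sep (pw e) (fun y => ∃ n0 : M, n0 ε om ∧ ∀ n : M, n ε om → g n ε y → n ε n0))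
    (mem_sep.2 ⟨mem_pw.2 fun z hz => (not_mem_emp hz).elim, emp, emp_om, fun n _ h => (not_mem_emp h).elim⟩)
    fun y z hy hz => ?_)).2
  obtain ⟨hy, m, hm, h⟩ := mem_sep.1 hy
  refine mem_sep.2 ⟨mem_pw.2 fun x hx => ?_, ?_⟩
  · rcases mem_un.1 hx with hx | hx
    · exact mem_pw.1 hy x hx
    · rw [mem_sing.1 hx]; exact hz
  · by_cases h2 : ∃ x, x ε om ∧ g x = z
    · obtain ⟨x, hx, e⟩ := h2
      obtain ⟨k, hk, h1, h2⟩ := om_max hm hx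
      refine ⟨k, hk, fun n hn h' => ?_⟩
      rcases mem_un.1 h' with h' | h'
      · exact h1 _ (h n hn h')
      · rw [hi n x hn hx ((mem_sing.1 h').trans e.symm)]; exact h2
    · refine ⟨m, hm, fun n hn h' => ?_⟩
      rcases mem_un.1 h' with h' | h'
      · exact h n hn h'
      · exact (h2 ⟨n, hn, mem_sing.1 h'⟩).elim

section
variable {𝔽 : FP M} {G : Gen 𝔽} [Countable M]
theorem card_down {γ : M} (h : IsCardinal (ZM.E : VG G → VG G → Prop) (chk G γ)) : IsCardinal 𝓔 γ :=
  ⟨chk_ord.1 h.1, fun β hβ hc => h.2 _ (mem_chk.2 hβ) (cardLE_chk hc)⟩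

/-- Inaccessibility is downward absolute to the ground model. -/
theorem inacc_down {γ : M} (h : IsInaccessible (ZM.E : VG G → VG G → Prop) (chk G γ)) : IsInaccessible 𝓔 γ := by
  have ho : Ord γ := chk_ord.1 h.ord
  refine ⟨⟨card_down h.1.1, fun β f hβ hf hc => ?_⟩, ⟨card_down h.1.1, fun β p hβ hp => ?_⟩, ⟨om, om_spec, ?_⟩⟩
  · obtain ⟨hf1, hf2⟩ := isFunc_iff.1 hf
    refine h.1.2 _ (chk G f) (mem_chk.2 hβ) (isFunc_iff.2 ⟨fn_chk hf1, fun x hx => ?_⟩) fun δ hδ => ?_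
    · obtain ⟨x, hx', rfl⟩ := mem_chk' hx
      rw [app_chk hf1 hx', mem_chk]; exact hf2 x hx'
    · obtain ⟨δ, hδ', rfl⟩ := mem_chk' hδ
      obtain ⟨x, y, hx, hxy, h'⟩ := hc δ hδ'
      refine ⟨chk G x, chk G y, mem_chk.2 hx, ?_, h'.imp (congrArg _) mem_chk.2⟩
      rw [pairMem] at hxy ⊢
      rw [← chk_op]; exact mem_chk.2 hxy
  · rcases card_cmp (a := p) ho with h' | h'
    · exact (h.not_lt (cardLE_chk h') ((h.pw (CardLT.of_mem (mem_chk.2 hβ))).sb fun x hx => by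
        obtain ⟨x, hx', rfl⟩ := mem_chk' hx
        exact mem_pw.2 (chk_sb.2 ((hp x).1 hx')))).elim
    · exact h'
  · exact mem_chk.1 (by rw [chk_om]; exact h.om_mem : chk G om ε chk G γ)
end

namespace AS
variable {𝔄 : AS M}
/-- Countable directed families of conditions have lower bounds. -/
theorem Dir.glb_om {F : M} (h : 𝔄.Dir F) (hF : CardLE 𝓔 F om) : ∀ p, p ε F → 𝔄.Le (𝔄.glb F) p := by
  refine (h.glb fun γ hγ => ?_).1
  have hi := 𝔄.inacc γ hγ
  refine ⟨sep 𝔄.At (fun a => ∃ p : M, p ε F ∧ 𝔄.ev p a ≠ a ∧ 𝔄.st a ε suc γ), ?_, fun p a hp ha h1 h2 => mem_sep.2 ⟨ha, p, hp, h1, h2⟩⟩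
  refine hi.union (a := F) ⟨om, hi.om_mem, hF⟩ (fun p a : M => a ε 𝔄.At ∧ 𝔄.ev p a ≠ a ∧ 𝔄.st a ε suc γ) ?_ ?_
  · intro y hy
    obtain ⟨h1, p, hp, h2⟩ := mem_sep.1 hy
    exact ⟨p, hp, h1, h2⟩
  · intro p hp
    exact ⟨_, (h.2.1 p hp).2.2 γ hγ, fun y hy => mem_sep.2 ⟨hy.1, hy.2⟩⟩
end AS
end W6
namespace W6
open ZF
variable {M : Type u} [ZM M]
local notation "𝓔" => (ZM.E : M → M → Prop)

theorem om_cases {n : M} (hn : n ε om) : n = emp ∨ ∃ m, m ε om ∧ n = suc m := by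
  rcases (om_spec (M := M)).2.2.2 n hn with h | ⟨z, h⟩
  · exact Or.inl (isEmpty_iff.1 h)
  · have h : n = suc z := isSucc_iff.1 (h.elim (fun h => h.1) id)
    exact Or.inr ⟨z, om_ord.trans (h ▸ mem_suc.2 (Or.inr rfl)) hn, h⟩

namespace AS
variable {𝔄 : AS M}
theorem Cond.not_val {p x a : M} (hp : 𝔄.Cond p) (ha : a ε 𝔄.At) (hn : ¬ a ε 𝔄.NS) (h : 𝔄.ev p x = a) : x = a := by
  rcases hp.good.cases x with e | ⟨_, e | e⟩
  · exact e.symm.trans h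
  · rw [h] at e; exact (cst_not e ha).elim
  · rw [h] at e; exact (hn e.1).elim

open Classical in
/-- Given atoms `g ξ` (`ξ < γ`) that are never values, each condition has a coarse extension which
decides `ξ ∈ ρ` and gives `g ξ` the opposite truth value, for infinitely many `ξ`. -/
theorem star_mix [Countable M] {γ ρ p0 : M} (hγ : γ ε 𝔄.S) (g : M → M) [hg : Tm (fun w : Nil M × M => g w.2)]
    (hg1 : ∀ ξ, ξ ε γ → g ξ ε 𝔄.At ∧ 𝔄.st (g ξ) = γ ∧ ¬ g ξ ε 𝔄.NS) (hg2 : ∀ ξ ξ', g ξ = g ξ' → ξ = ξ')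
    (hp0 : 𝔄.Cond p0) : ∃ q f, 𝔄.CL q p0 ∧ Fn f om ∧ (∀ n, n ε om → app f n ε γ) ∧
      (∀ m n, m ε om → n ε om → app f m = app f n → m = n) ∧
      ∀ n, n ε om → (𝔄.ev q (g (app f n)) = emp ∧ FF 𝔄.fp ρ (app f n) q) ∨ (𝔄.ev q (g (app f n)) = sing emp ∧ FN 𝔄.fp ρ (app f n) q) := by
  have hgT : T1 g := T1.of hg
  have hi := 𝔄.inacc γ hγ
  obtain ⟨F, hF⟩ : ∃ F : M → M → Prop, F = FF 𝔄.fp ρ := ⟨_, rfl⟩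
  have hFd : D2 F := ⟨by rw [hF]; infer_instance⟩
  obtain ⟨F', hF'⟩ : ∃ F : M → M → Prop, F = FN 𝔄.fp ρ := ⟨_, rfl⟩
  have hFd' : D2 F' := ⟨by rw [hF']; infer_instance⟩
  have step : ∀ p, 𝔄.Cond p → ∃ r ξ, 𝔄.Le r p ∧ ξ ε γ ∧ 𝔄.ev p (g ξ) = g ξ ∧ 𝔄.ev r (g ξ) ≠ g ξ ∧ (F ξ r ∨ F' ξ r) := by
    intro p hp
    have h1 : ∃ ξ, ξ ε γ ∧ 𝔄.ev p (g ξ) = g ξ := by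
      by_contra h
      push Not at h
      exact hi.not_lt (CardLE.of g (fun ξ hξ => mem_sep.2 ⟨(hg1 ξ hξ).1, h ξ hξ, by rw [(hg1 ξ hξ).2.1]; exact mem_suc.2 (Or.inr rfl)⟩)
        fun x y _ _ => hg2 x y) (hp.2.2 γ hγ)
    obtain ⟨ξ, hξ, e⟩ := h1
    obtain ⟨q, hq, hd⟩ := FF.decide (𝔽 := 𝔄.fp) (ρ := ρ) (x := ξ) (mem_PP.2 hp)
    rw [← hF, ← hF'] at hd
    obtain ⟨c1, c2, -⟩ := CL.comp hq
    have mono : ∀ r, 𝔄.CL r q → F ξ r ∨ F' ξ r := fun r hr => by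
      rw [hF, hF'] at hd ⊢; exact hd.imp (fun h => h.mono hr) (fun h => h.mono hr)
    by_cases hm : 𝔄.ev (𝔄.comp q p) (g ξ) = g ξ
    · obtain ⟨r, hr, hr', -⟩ := set_one c1.1 (hg1 ξ hξ).1 hm (Or.inl rfl) (fun x => c1.1.not_val (hg1 ξ hξ).1 (hg1 ξ hξ).2.2)
      exact ⟨r, ξ, hr.trans c1, hξ, e, fun h => cst_not (Or.inl (h.symm.trans hr' : g ξ = emp)) (hg1 ξ hξ).1, mono _ (hr.cl.trans c2)⟩
    · exact ⟨_, ξ, c1, hξ, e, hm, mono _ c2⟩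
  obtain ⟨s, hs, h⟩ := rs om_ord (Y := prod 𝔄.PP γ) (fun β s y : M => 𝔄.Le (fst y) p0 ∧ (∀ m : M, m ε β → 𝔄.Le (fst y) (fst (app s m)) ∧
      𝔄.ev (fst (app s m)) (g (snd y)) = g (snd y)) ∧ 𝔄.ev (fst y) (g (snd y)) ≠ g (snd y) ∧ (F (snd y) (fst y) ∨ F' (snd y) (fst y)))
    (fun β s hβ hs h => by
      have h1 : ∃ p, 𝔄.Le p p0 ∧ ∀ m, m ε β → 𝔄.Le p (fst (app s m)) := by
        rcases om_cases hβ with rfl | ⟨k, hk, rfl⟩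
        · exact ⟨p0, Le.refl hp0, fun m hm => (not_mem_emp hm).elim⟩
        · obtain ⟨-, h1, h2, -⟩ := h k (mem_suc.2 (Or.inr rfl))
          refine ⟨_, h1, fun m hm => ?_⟩
          rcases mem_suc.1 hm with hm | rfl
          · have := (h2 m hm).1; rwa [app_res hm] at this
          · exact Le.refl h1.1
      obtain ⟨p, hp, h1⟩ := h1
      obtain ⟨r, ξ, a1, a2, a3, a4, a5⟩ := step p hp.1
      refine ⟨op r ξ, op_mem_prod.2 ⟨mem_PP.2 a1.1, a2⟩, ?_⟩
      rw [fst_op, snd_op]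
      exact ⟨a1.trans hp, fun m hm => ⟨a1.trans (h1 m hm), (h1 m hm).fix a3⟩, a4, a5⟩)
  obtain ⟨p, hp⟩ : ∃ p : M → M, p = fun n => fst (app s n) := ⟨_, rfl⟩
  have hpT : T1 p := T1.of (by rw [hp]; infer_instance)
  obtain ⟨ξ, hξ⟩ : ∃ p : M → M, p = fun n => snd (app s n) := ⟨_, rfl⟩
  have hξT : T1 ξ := T1.of (by rw [hξ]; infer_instance)
  have h0 : ∀ n, n ε om → 𝔄.Le (p n) p0 ∧ ξ n ε γ ∧ 𝔄.ev (p n) (g (ξ n)) ≠ g (ξ n) ∧ (F (ξ n) (p n) ∨ F' (ξ n) (p n)) := fun n hn => by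
    obtain ⟨a, b, -, c⟩ := h n hn
    obtain ⟨x, y, hx, hy, e⟩ := mem_prod.1 a
    rw [hp, hξ]
    refine ⟨b, ?_, c⟩
    simp only [e, snd_op]; exact hy
  have h1 : ∀ m n, m ε n → n ε om → 𝔄.Le (p n) (p m) ∧ 𝔄.ev (p m) (g (ξ n)) = g (ξ n) := fun m n hm hn => by
    obtain ⟨-, -, b, -⟩ := h n hn
    have := b m hm
    rw [app_res hm] at this; rw [hp, hξ]; exact this
  have hinj : ∀ m n, m ε om → n ε om → ξ m = ξ n → m = n := fun m n hm hn e => by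
    rcases (om_ord.mem hm).tri (om_ord.mem hn) with h | h | h
    · exact ((h0 m hm).2.2.1 (e ▸ (h1 m n h hn).2)).elim
    · exact h
    · exact ((h0 n hn).2.2.1 (e ▸ (h1 n m h hm).2)).elim
  have hdir : 𝔄.Dir (img om p) := by
    refine ⟨⟨p emp, mem_img.2 ⟨emp, emp_om, rfl⟩⟩, fun q hq => ?_, fun q r hq hr => ?_⟩
    · obtain ⟨n, hn, rfl⟩ := mem_img.1 hq; exact (h0 n hn).1.1
    · obtain ⟨m, hm, rfl⟩ := mem_img.1 hq; obtain ⟨n, hn, rfl⟩ := mem_img.1 hr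
      rcases (om_ord.mem hm).tri (om_ord.mem hn) with h | rfl | h
      · exact ⟨_, hr, (h1 m n h hn).1, Le.refl (h0 n hn).1.1⟩
      · exact ⟨_, hr, Le.refl (h0 m hn).1.1, Le.refl (h0 m hn).1.1⟩
      · exact ⟨_, hq, Le.refl (h0 m hm).1.1, (h1 n m h hm).1⟩
  obtain ⟨w, hw⟩ : ∃ w, w = 𝔄.glb (img om p) := ⟨_, rfl⟩
  have hwp : ∀ n, n ε om → 𝔄.Le w (p n) := fun n hn => hw ▸ hdir.glb_om (CardLE.img p) _ (mem_img.2 ⟨n, hn, rfl⟩)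
  have hwc : 𝔄.Cond w := (hwp emp emp_om).1
  obtain ⟨T, hT⟩ : ∃ T : M → Prop, T = fun x => ∃ n : M, n ε om ∧ x = g (ξ n) := ⟨_, rfl⟩
  have hTd : D1 T := ⟨by rw [hT]; infer_instance⟩
  obtain ⟨N, hN⟩ : ∃ T : M → Prop, T = fun x => ∃ n : M, n ε om ∧ x = g (ξ n) ∧ F (ξ n) (p n) := ⟨_, rfl⟩
  have hNd : D1 N := ⟨by rw [hN]; infer_instance⟩
  have hTA : ∀ x, T x → x ε 𝔄.At ∧ ¬ x ε 𝔄.NS := fun x hx => by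
    rw [hT] at hx; obtain ⟨n, hn, rfl⟩ := hx; exact ⟨(hg1 _ (h0 n hn).2.1).1, (hg1 _ (h0 n hn).2.1).2.2⟩
  obtain ⟨E, hE⟩ : ∃ E : M → M, E = fun x => if T x then (if N x then emp else sing emp) else 𝔄.ev w x := ⟨_, rfl⟩
  have hET : T1 E := T1.of (by rw [hE]; infer_instance)
  have hoff : ∀ x, ¬ x ε 𝔄.At → E x = x := fun x hx => by
    rw [hE]; beta_reduce; rw [if_neg (fun h => hx (hTA x h).1), ev_off hx]
  have hEc : ∀ x, T x → Cst (E x) := fun x hx => by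
    rw [hE]; beta_reduce; rw [if_pos hx]; split_ifs
    · exact Or.inl rfl
    · exact Or.inr rfl
  have hEw : ∀ x, ¬ T x → E x = 𝔄.ev w x := fun x hx => by rw [hE]; beta_reduce; rw [if_neg hx]
  have hcT : ∀ x, Cst x → ¬ T x := fun x hx h => cst_not hx (hTA x h).1
  have hwT : ∀ x r, 𝔄.Cond r → ¬ T x → ¬ T (𝔄.ev r x) := fun x r hr hx h => by
    rw [hr.not_val (hTA _ h).1 (hTA _ h).2 rfl] at hx; exact hx h
  have hq : 𝔄.Cond (lam 𝔄.At E) := by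
    refine cond_mk ⟨hoff, fun x hx hne => ?_, fun x => ?_⟩ fun γ' hγ' => ?_
    · by_cases h : T x
      · exact Or.inl (hEc x h)
      · rw [hEw x h] at hne ⊢; exact hwc.good.2.1 x hx hne
    · by_cases h : T x
      · rw [hEw _ (hcT _ (hEc x h)), ev_cst (hEc x h)]
      · rw [hEw x h, hEw _ (hwT x w hwc h), hwc.good.2.2]
    · refine ⟨_, hwc.2.2 γ' hγ', fun x hx hne hst => mem_sep.2 ⟨hx, fun e => ?_, hst⟩⟩
      by_cases h : T x
      · rw [hT] at h; obtain ⟨n, hn, rfl⟩ := h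
        exact (h0 n hn).2.2.1 ((hwp n hn).fix e)
      · rw [hEw x h] at hne; exact hne e
  have hcl : ∀ n, n ε om → 𝔄.CL (lam 𝔄.At E) (p n) := by
    intro n hn
    refine ⟨hq, (h0 n hn).1.1, fun x hx => ?_, fun δ => ?_⟩
    · have hx' : ¬ T x := fun h => (hTA x h).2 hx
      rw [ev_mk hoff, ev_mk hoff, hEw x hx', hEw _ (hwT _ _ (h0 n hn).1.1 hx'), (hwp n hn).2.2]
    · refine (Fin'.img (suc_om hn) (fun m => g (ξ m))).sb fun x hx => ?_
      obtain ⟨hx, -, hne⟩ := mem_sep.1 hx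
      rw [ev_mk hoff, ev_mk hoff] at hne
      by_cases h : T x
      · rw [hT] at h; obtain ⟨m, hm, rfl⟩ := h
        refine mem_img.2 ⟨m, ?_, rfl⟩
        rcases (om_ord.mem hm).le_or_lt (om_ord.mem hn) with h | h
        · exact mem_suc.2 h
        · rw [(h1 n m h hm).2] at hne; exact (hne rfl).elim
      · rw [hEw x h, hEw _ (hwT _ _ (h0 n hn).1.1 h), (hwp n hn).2.2] at hne; exact (hne rfl).elim
  refine ⟨lam 𝔄.At E, lam om ξ, (hcl emp emp_om).trans (h0 emp emp_om).1.cl, Fn.lam, fun n hn => ?_, fun m n hm hn e => ?_, fun n hn => ?_⟩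
  · rw [app_lam hn]; exact (h0 n hn).2.1
  · rw [app_lam hm, app_lam hn] at e; exact hinj m n hm hn e
  · rw [app_lam hn, ev_mk hoff]
    have hTn : T (g (ξ n)) := by rw [hT]; exact ⟨n, hn, rfl⟩
    by_cases hF1 : F (ξ n) (p n)
    · left
      have hNn : N (g (ξ n)) := by rw [hN]; exact ⟨n, hn, rfl, hF1⟩
      rw [hF] at hF1
      refine ⟨?_, hF1.mono (hcl n hn)⟩
      rw [hE]; beta_reduce
      rw [if_pos hTn, if_pos hNn]
    · right
      have hNn : ¬ N (g (ξ n)) := by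
        rw [hN]; rintro ⟨m, hm, e, h⟩
        rw [← hinj n m hn hm (hg2 _ _ e)] at h; exact hF1 h
      have := (h0 n hn).2.2.2.resolve_left hF1
      rw [hF'] at this
      refine ⟨?_, this.mono (hcl n hn)⟩
      rw [hE]; beta_reduce
      rw [if_pos hTn, if_neg hNn]
end AS
end W6
namespace W6
open ZF
variable {M : Type u} [ZM M]
local notation "𝓔" => (ZM.E : M → M → Prop)

/-- `x ∩ α`. -/
noncomputable def cap (x α : M) : M := sep x (fun ν => ν ε α)
instance : T2 (cap : M → M → M) := .of (by unfold cap; infer_instance)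
theorem mem_cap {x α ν : M} : ν ε cap x α ↔ ν ε x ∧ ν ε α := mem_sep

/-- The order of initial-segment extension on pairs `(α, x)`, `x ⊆ α`. -/
noncomputable def tlt (T : M) : M :=
  sep (prod T T) (fun z => ∃ α x β y : M, z = op (op α x) (op β y) ∧ α ε β ∧ x = cap y α)

theorem op_mem_tlt {T α x β y : M} : op (op α x) (op β y) ε tlt T ↔ op α x ε T ∧ op β y ε T ∧ α ε β ∧ x = cap y α := by
  unfold tlt
  rw [mem_sep, op_mem_prod, and_assoc]
  refine and_congr_right fun _ => and_congr_right fun _ => ⟨?_, fun h => ⟨_, _, _, _, rfl, h⟩⟩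
  rintro ⟨α', x', β', y', e, h⟩
  rw [op_inj, op_inj, op_inj] at e
  obtain ⟨⟨rfl, rfl⟩, rfl, rfl⟩ := e
  exact h

section
variable {T γ : M} (hγ : Ord γ) (hT : ∀ z, z ε T → ∃ α x : M, z = op α x ∧ α ε γ ∧ Sb x α)
  (hT' : ∀ α x β : M, op α x ε T → β ε α → op β (cap x β) ε T)
include hγ hT
theorem tlt_mem {u v : M} (h : op u v ε tlt T) : u ε T ∧ v ε T := by
  exact op_mem_prod.1 (mem_sep.1 h).1

theorem tlt_order : IsTreeOrderOn 𝓔 (tlt T) T := by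
  refine ⟨fun p hp => ?_, fun u h => ?_, fun u v w h1 h2 => ?_, fun u v w hw h1 h2 => ?_⟩
  · obtain ⟨x, y, hx, hy, rfl⟩ := mem_prod.1 (mem_sep.1 (show p ε tlt T from hp)).1
    exact ⟨x, y, hx, hy, isOPair_op.2 rfl⟩
  · rw [pairMem] at h
    obtain ⟨α, x, rfl, -, -⟩ := hT u (tlt_mem hγ hT h).1
    exact eps_irrefl (op_mem_tlt.1 h).2.2.1
  · rw [pairMem] at h1 h2 ⊢
    obtain ⟨α, x, rfl, -, -⟩ := hT u (tlt_mem hγ hT h1).1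
    obtain ⟨β, y, rfl, -, -⟩ := hT v (tlt_mem hγ hT h2).1
    obtain ⟨δ, z, rfl, hδ, -⟩ := hT w (tlt_mem hγ hT h2).2
    rw [op_mem_tlt] at h1 h2 ⊢
    refine ⟨h1.1, h2.2.1, (hγ.mem hδ).trans h1.2.2.1 h2.2.2.1, ?_⟩
    rw [h1.2.2.2, h2.2.2.2]
    refine ext fun ν => ?_
    rw [mem_cap, mem_cap, mem_cap]
    exact ⟨fun h => ⟨h.1.1, h.2⟩, fun h => ⟨⟨h.1, ((hγ.mem hδ).mem h2.2.2.1).trans h.2 h1.2.2.1⟩, h.2⟩⟩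
  · rw [pairMem] at h1 h2 ⊢; rw [pairMem]
    obtain ⟨α, x, rfl, hα, -⟩ := hT u (tlt_mem hγ hT h1).1
    obtain ⟨β, y, rfl, hβ, -⟩ := hT v (tlt_mem hγ hT h2).1
    obtain ⟨δ, z, rfl, hδ, -⟩ := hT w (tlt_mem hγ hT h2).2
    rw [op_mem_tlt] at h1 h2 ⊢; rw [op_mem_tlt]
    obtain ⟨a1, a2, a3, rfl⟩ := h1; obtain ⟨b1, b2, b3, rfl⟩ := h2
    have key : ∀ α β, α ε β → β ε γ → cap z α = cap (cap z β) α := fun α β h h' => ext fun ν => by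
      rw [mem_cap, mem_cap, mem_cap]
      exact ⟨fun h1 => ⟨⟨h1.1, (hγ.mem h').trans h1.2 h⟩, h1.2⟩, fun h1 => ⟨h1.1.1, h1.2⟩⟩
    rcases (hγ.mem hα).tri (hγ.mem hβ) with h | rfl | h
    · exact Or.inl ⟨a1, b1, h, key _ _ h hβ⟩
    · exact Or.inr (Or.inl rfl)
    · exact Or.inr (Or.inr ⟨b1, a1, h, key _ _ h hα⟩)

include hT'
theorem tlt_height {α x : M} (h : op α x ε T) : IsHeightOf 𝓔 (tlt T) (op α x) α := by
  obtain ⟨_, _, e, hα, -⟩ := hT _ h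
  obtain ⟨rfl, rfl⟩ := op_inj.1 e
  have hm : ∀ β, β ε α → op (op β (cap x β)) (op α x) ε tlt T := fun β hβ => op_mem_tlt.2 ⟨hT' _ _ _ h hβ, h, hβ, rfl⟩
  refine ⟨hγ.mem hα, lam α (fun β => op β (cap x β)), fun p hp => ?_, fun β hβ => ⟨op β (cap x β), ?_⟩, fun β y y' h1 h2 => ?_, fun y hy => ?_, fun β δ y z hβ h1 h2 => ?_⟩
  · obtain ⟨β, hβ, rfl⟩ := mem_lam.1 (show p ε lam _ _ from hp)
    exact ⟨β, _, hβ, pairMem.2 (hm β hβ), isOPair_op.2 rfl⟩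
  · rw [pairMem]; exact op_mem_lam.2 ⟨hβ, rfl⟩
  · rw [pairMem] at h1 h2; rw [(op_mem_lam.1 h1).2, (op_mem_lam.1 h2).2]
  · rw [pairMem] at hy
    obtain ⟨β, y, rfl, -, -⟩ := hT _ (tlt_mem hγ hT hy).1
    obtain ⟨-, -, h1, rfl⟩ := op_mem_tlt.1 hy
    exact ⟨β, h1, pairMem.2 (op_mem_lam.2 ⟨h1, rfl⟩)⟩
  · rw [pairMem] at h1 h2 ⊢
    obtain ⟨a1, rfl⟩ := op_mem_lam.1 h1
    obtain ⟨b1, rfl⟩ := op_mem_lam.1 h2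
    refine op_mem_tlt.2 ⟨hT' _ _ _ h a1, hT' _ _ _ h b1, hβ, ext fun ν => ?_⟩
    rw [mem_cap, mem_cap, mem_cap]
    exact ⟨fun h1 => ⟨⟨h1.1, ((hγ.mem hα).mem b1).trans h1.2 hβ⟩, h1.2⟩, fun h1 => ⟨h1.1.1, h1.2⟩⟩

theorem tlt_height_eq {α x β : M} (h : op α x ε T) (hh : IsHeightOf 𝓔 (tlt T) (op α x) β) : β = α := by
  obtain ⟨_, _, e, hα, -⟩ := hT _ h
  obtain ⟨rfl, rfl⟩ := op_inj.1 e
  have hαo := hγ.mem hα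
  obtain ⟨hβ, f, h0, h1, h2, h3, h4⟩ := hh
  simp only [pairMem] at h1 h2 h3 h4
  have hval : ∀ ξ z, op ξ z ε f → ξ ε β ∧ ∃ δ, z = op δ (cap x δ) ∧ δ ε α := by
    intro ξ z hz
    obtain ⟨_, _, hξ, hy, e⟩ := h0 _ hz
    rw [isOPair_op, op_inj] at e
    obtain ⟨rfl, rfl⟩ := e
    rw [pairMem] at hy
    obtain ⟨δ, y, rfl, -, -⟩ := hT _ (tlt_mem hγ hT hy).1
    obtain ⟨-, -, h, rfl⟩ := op_mem_tlt.1 hy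
    exact ⟨hξ, δ, rfl, h⟩
  have hlt : ∀ ξ ξ' δ y δ' y', ξ ε ξ' → op ξ (op δ y) ε f → op ξ' (op δ' y') ε f → δ ε δ' := fun ξ ξ' δ y δ' y' h a b =>
    (op_mem_tlt.1 (h4 _ _ _ _ h a b)).2.2.1
  have hsur : ∀ δ, δ ε α → ∃ ξ, ξ ε β ∧ op ξ (op δ (cap x δ)) ε f := fun δ hδ =>
    h3 _ (op_mem_tlt.2 ⟨hT' _ _ _ h hδ, h, hδ, rfl⟩)
  have key : ∀ ξ δ y, op ξ (op δ y) ε f → δ = ξ := by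
    intro ξ
    induction ξ using (eps_wf (M := M)).induction with
    | _ ξ ih =>
    intro δ y hy
    obtain ⟨hξ, δ', e, hδ⟩ := hval _ _ hy
    obtain ⟨rfl, rfl⟩ := op_inj.1 e
    have h5 : ξ ε δ ∨ ξ = δ := ((hβ.mem hξ).sb_iff (hαo.mem hδ)).1 fun ξ' hξ' => by
      obtain ⟨z, hz⟩ := h1 ξ' (hβ.trans hξ' hξ)
      obtain ⟨-, δ', rfl, -⟩ := hval _ _ hz
      have := hlt _ _ _ _ _ _ hξ' hz hy
      rwa [ih ξ' hξ' _ _ hz] at this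
    rcases h5 with h5 | h5
    · obtain ⟨ξ', hξ', h6⟩ := hsur ξ (hαo.trans h5 hδ)
      rcases (hβ.mem hξ').tri (hβ.mem hξ) with h | rfl | h
      · exact (eps_irrefl (ih ξ' h _ _ h6 ▸ h)).elim
      · exact (op_inj.1 (h2 _ _ _ hy h6)).1
      · exact (eps_asymm h5 (hlt _ _ _ _ _ _ h hy h6)).elim
    · exact h5.symm
  refine ext fun ξ => ⟨fun hξ => ?_, fun hξ => ?_⟩
  · obtain ⟨z, hz⟩ := h1 ξ hξ
    obtain ⟨-, δ, rfl, hδ⟩ := hval _ _ hz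
    rwa [← key _ _ _ hz]
  · obtain ⟨ξ', h1, h6⟩ := hsur ξ hξ
    rwa [key _ _ _ h6]

theorem tlt_tree (hi : ZF.IsInaccessible 𝓔 γ) (hne : ∀ α, α ε γ → ∃ x, op α x ε T) : IsKappaTree 𝓔 T (tlt T) γ := by
  refine ⟨tlt_order hγ hT, fun z hz => ?_, fun α hα => ?_, fun β L hβ hL => ?_⟩
  · obtain ⟨α, x, rfl, h, -⟩ := hT z hz
    exact ⟨α, h, tlt_height hγ hT hT' hz⟩
  · obtain ⟨x, hx⟩ := hne α hα
    exact ⟨_, hx, tlt_height hγ hT hT' hx⟩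
  · have hL' : ∀ z, z ε L → ∃ x, z = op β x ∧ Sb x β := fun z hz => by
      obtain ⟨h1, h2⟩ := (hL z).1 hz
      obtain ⟨α, x, rfl, -, h⟩ := hT z h1
      obtain rfl := tlt_height_eq hγ hT hT' h1 h2
      exact ⟨x, rfl, h⟩
    refine (hi.pw (CardLT.of_mem hβ)).mono (CardLE.of (fun z => snd z) (fun z hz => ?_) fun z z' hz hz' e => ?_)
    · obtain ⟨x, rfl, h⟩ := hL' z hz
      rw [snd_op]; exact mem_pw.2 h
    · obtain ⟨x, rfl, h⟩ := hL' z hz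
      obtain ⟨x', rfl, h'⟩ := hL' z' hz'
      rw [snd_op, snd_op] at e; rw [e]

theorem tlt_branch (h : HasCofinalBranch 𝓔 T (tlt T) γ) : ∃ B, Sb B γ ∧ ∀ α, α ε γ → op α (cap B α) ε T := by
  obtain ⟨b, ⟨hb, hc⟩, h⟩ := h
  refine ⟨sep γ (fun ν => ∃ α x : M, op α x ε b ∧ ν ε x), fun ν h => (mem_sep.1 h).1, fun α hα => ?_⟩
  obtain ⟨z, hz, hh⟩ := h α hα
  obtain ⟨α', x, rfl, -, hx⟩ := hT z (hb z hz)
  obtain rfl := tlt_height_eq hγ hT hT' (hb _ hz) hh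
  convert hb _ hz using 2
  refine ext fun ν => ?_
  rw [mem_cap, mem_sep]
  refine ⟨?_, fun h => ⟨⟨hγ.trans (hx ν h) hα, α, x, hz, h⟩, hx ν h⟩⟩
  rintro ⟨⟨-, β, y, hy, h⟩, hν⟩
  have := hc _ _ hz hy
  rw [pairMem, pairMem] at this
  rcases this with e | e | e
  · rw [(op_inj.1 e).2]; exact h
  · rw [(op_mem_tlt.1 e).2.2.2]; exact mem_cap.2 ⟨h, hν⟩
  · rw [(op_mem_tlt.1 e).2.2.2] at h; exact (mem_cap.1 h).1
end
end W6
namespace W6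
open ZF
variable {M : Type u} [ZM M]
local notation "𝓔" => (ZM.E : M → M → Prop)
namespace AS
variable {𝔄 : AS M}

open Classical in
theorem move_all {γ α p : M} (hγ : γ ε 𝔄.S) (hα : α ε γ) (g : M → M) [hg : Tm (fun w : Nil M × M => g w.2)]
    (hg1 : ∀ ξ, ξ ε γ → g ξ ε 𝔄.At ∧ 𝔄.st (g ξ) = γ ∧ ¬ g ξ ε 𝔄.NS) (hp : 𝔄.Cond p) :
    ∃ q, 𝔄.CL q p ∧ ∀ ν, ν ε α → 𝔄.ev q (g ν) ≠ g ν := by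
  have hgT : T1 g := T1.of hg
  have hγo := (𝔄.inacc γ hγ).ord
  obtain ⟨T, hT⟩ : ∃ T : M → Prop, T = fun x => (∃ n : M, n ε α ∧ x = g n) ∧ 𝔄.ev p x = x := ⟨_, rfl⟩
  have hTd : D1 T := ⟨by rw [hT]; infer_instance⟩
  have hTA : ∀ x, T x → x ε 𝔄.At ∧ 𝔄.st x = γ ∧ ¬ x ε 𝔄.NS := fun x hx => by
    rw [hT] at hx; obtain ⟨⟨n, hn, rfl⟩, -⟩ := hx; exact hg1 n (hγo.trans hn hα)
  obtain ⟨E, hE⟩ : ∃ E : M → M, E = fun x => if T x then emp else 𝔄.ev p x := ⟨_, rfl⟩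
  have hET : T1 E := T1.of (by rw [hE]; infer_instance)
  have hEc : ∀ x, T x → E x = emp := fun x hx => by rw [hE]; beta_reduce; rw [if_pos hx]
  have hEw : ∀ x, ¬ T x → E x = 𝔄.ev p x := fun x hx => by rw [hE]; beta_reduce; rw [if_neg hx]
  have hoff : ∀ x, ¬ x ε 𝔄.At → E x = x := fun x hx => by rw [hEw _ (fun h => hx (hTA x h).1), ev_off hx]
  have hcT : ¬ T emp := fun h => cst_not (Or.inl rfl) (hTA _ h).1
  have hwT : ∀ x, ¬ T x → ¬ T (𝔄.ev p x) := fun x hx h => by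
    rw [hp.not_val (hTA _ h).1 (hTA _ h).2.2 rfl] at hx; exact hx h
  have hq : 𝔄.Cond (lam 𝔄.At E) := by
    refine cond_mk ⟨hoff, fun x hx hne => ?_, fun x => ?_⟩ fun γ' hγ' => ?_
    · by_cases h : T x
      · rw [hEc x h]; exact Or.inl (Or.inl rfl)
      · rw [hEw x h] at hne ⊢; exact hp.good.2.1 x hx hne
    · by_cases h : T x
      · rw [hEc x h, hEw _ hcT, ev_cst (Or.inl rfl)]
      · rw [hEw x h, hEw _ (hwT x h), hp.good.2.2]
    · have hi := 𝔄.inacc γ' hγ'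
      refine ⟨un (sep 𝔄.At (fun x => T x ∧ 𝔄.st x ε suc γ')) (sep 𝔄.At (fun a : M => 𝔄.ev p a ≠ a ∧ 𝔄.st a ε suc γ')), hi.un ?_ (hp.2.2 γ' hγ'), fun x hx hne hst => ?_⟩
      · by_cases h : γ ε suc γ'
        · refine ZF.CardLT.mono (CardLE.of_surj g fun x hx => ?_) (CardLT.of_mem (hi.ord.lt_of_lt hα (mem_suc.1 h)))
          have := (mem_sep.1 hx).2.1
          rw [hT] at this; exact this.1
        · exact hi.emp.sb fun x hx => by
            have := (mem_sep.1 hx).2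
            rw [(hTA x this.1).2.1] at this; exact (h this.2).elim
      · rw [mem_un, mem_sep, mem_sep]
        by_cases h : T x
        · exact Or.inl ⟨hx, h, hst⟩
        · rw [hEw x h] at hne; exact Or.inr ⟨hx, hne, hst⟩
  refine ⟨_, Le.cl ⟨hq, hp, fun x => ?_⟩, fun ν hν => ?_⟩
  · rw [ev_mk hoff, ev_mk hoff]
    by_cases h : T x
    · rw [show 𝔄.ev p x = x by rw [hT] at h; exact h.2]
    · rw [hEw x h, hEw _ (hwT x h), hp.good.2.2]
  · rw [ev_mk hoff]
    by_cases h : T (g ν)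
    · rw [hEc _ h]; exact fun e => cst_not (Or.inl e.symm) (hg1 ν (hγo.trans hν hα)).1
    · rw [hEw _ h]; intro e; apply h; rw [hT]; exact ⟨⟨ν, hν, rfl⟩, e⟩

section
variable [Countable M] (G : Gen 𝔄.fp)

/-- The generic truth value of `b`, in the extension. -/
def vv (b : VG G) : Prop := b = sing emp ∨ ∃ q, q ε nm G (Gnm 𝔄.fp) ∧ op b (sing emp) ε q
instance : D1 (vv G) := ⟨by unfold vv; infer_instance⟩

theorem chk_sing {x : M} : chk G (sing x) = sing (chk G x) := ext fun z => by
  rw [mem_sing]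
  constructor
  · intro h; obtain ⟨z, hz, rfl⟩ := mem_chk' h; rw [mem_sing.1 hz]
  · rintro rfl; exact mem_chk.2 (mem_sing.2 rfl)

theorem vv_iff {b : M} : vv G (chk G b) ↔ ∃ q, G.S q ∧ 𝔄.ev q b = sing emp := by
  constructor
  · rintro (h | ⟨q, hq, h⟩)
    · rw [← chk_emp, ← chk_sing, chk_inj] at h
      obtain ⟨q, hq⟩ := G.ne
      exact ⟨q, hq, by rw [h]; exact ev_cst (Or.inr rfl)⟩
    · obtain ⟨q, hq', rfl⟩ := mem_Gnm.1 hq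
      rw [← chk_emp, ← chk_sing, ← chk_op, mem_chk, (mem_PP.1 (G.sub _ hq')).1.op_mem] at h
      exact ⟨q, hq', by rw [ev_on h.1]; exact h.2.symm⟩
  · rintro ⟨q, hq, h⟩
    by_cases hb : b ε 𝔄.At
    · refine Or.inr ⟨chk G q, chk_mem_Gnm.2 hq, ?_⟩
      rw [← chk_emp, ← chk_sing, ← chk_op, mem_chk, (mem_PP.1 (G.sub _ hq)).1.op_mem, ← h, ev_on hb]
      exact ⟨hb, rfl⟩
    · rw [ev_off hb] at h
      left; rw [h, chk_sing, chk_emp]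

theorem vv_ev {r b : M} (hr : G.S r) (hb : 𝔄.NC b) : vv G (chk G (𝔄.ev r b)) ↔ vv G (chk G b) := by
  rw [vv_iff, vv_iff]
  have hn : 𝔄.NC (𝔄.ev r b) := (mem_PP.1 (G.sub _ hr)).good.nc hb
  constructor
  · rintro ⟨q, hq, h⟩
    obtain ⟨t, ht, t1, t2⟩ := G.dir _ _ hq hr
    exact ⟨t, ht, by rw [← CL.nc t2 hb, ← CL.nc t1 hn, h]; exact ev_cst (Or.inr rfl)⟩
  · rintro ⟨q, hq, h⟩
    obtain ⟨t, ht, t1, t2⟩ := G.dir _ _ hq hr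
    exact ⟨t, ht, by rw [CL.nc t2 hb, ← CL.nc t1 hb, h]; exact ev_cst (Or.inr rfl)⟩

theorem no_tp {γ : M} (hγ : γ ε 𝔄.S) (hV : ZF.IsInaccessible (ZM.E : VG G → VG G → Prop) (chk G γ)) (g : M → M) [hg : Tm (fun w : Nil M × M => g w.2)]
    (hg1 : ∀ ξ, ξ ε γ → g ξ ε 𝔄.At ∧ 𝔄.st (g ξ) = γ ∧ ¬ g ξ ε 𝔄.NS) (hg2 : ∀ ξ ξ', g ξ = g ξ' → ξ = ξ') :
    ¬ HasTreeProperty (ZM.E : VG G → VG G → Prop) (chk G γ) := by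
  intro htp
  have hgT : T1 g := T1.of hg
  have hi := 𝔄.inacc γ hγ
  obtain ⟨φ, hφ⟩ : ∃ φ, φ = chk G (lam γ g) := ⟨_, rfl⟩
  have hφa : ∀ ν, ν ε γ → app φ (chk G ν) = chk G (g ν) := fun ν hν => by rw [hφ, app_chk Fn.lam hν, app_lam hν]
  have hev : ∀ p ν, G.S p → ν ε γ → app (chk G p) (app φ (chk G ν)) = chk G (𝔄.ev p (g ν)) := fun p ν hp hν => by
    rw [hφa ν hν, app_chk (mem_PP.1 (G.sub _ hp)).1 (hg1 ν hν).1, ev_on (hg1 ν hν).1]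
  obtain ⟨T, hT⟩ : ∃ T : VG G, T = sep (prod (chk G γ) (pw (chk G γ))) (fun z => ∃ α x p : VG G, z = op α x ∧ Sb x α ∧ p ε nm G (Gnm 𝔄.fp) ∧
    (∀ ν : VG G, ν ε α → app p (app φ ν) ≠ app φ ν) ∧ Fin' (sep α (fun ν : VG G => ¬ (ν ε x ↔ vv G (app p (app φ ν)))))) := ⟨_, rfl⟩
  have hTm : ∀ α x : VG G, op α x ε T ↔ α ε chk G γ ∧ Sb x α ∧ ∃ p : VG G, p ε nm G (Gnm 𝔄.fp) ∧
    (∀ ν : VG G, ν ε α → app p (app φ ν) ≠ app φ ν) ∧ Fin' (sep α (fun ν : VG G => ¬ (ν ε x ↔ vv G (app p (app φ ν))))) := fun α x => by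
    rw [hT, mem_sep, op_mem_prod]
    constructor
    · rintro ⟨⟨h1, -⟩, α', x', p, e, h2, h3⟩
      obtain ⟨rfl, rfl⟩ := op_inj.1 e
      exact ⟨h1, h2, p, h3⟩
    · rintro ⟨h1, h2, p, h3⟩
      exact ⟨⟨h1, mem_pw.2 fun z hz => hV.ord.trans (h2 z hz) h1⟩, α, x, p, rfl, h2, h3⟩
  have hT1 : ∀ z, z ε T → ∃ α x : VG G, z = op α x ∧ α ε chk G γ ∧ Sb x α := fun z hz => by
    have hz' := hz; rw [hT] at hz'
    obtain ⟨α, x, -, rfl, -⟩ := (mem_sep.1 hz').2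
    exact ⟨α, x, rfl, ((hTm _ _).1 hz).1, ((hTm _ _).1 hz).2.1⟩
  have hT2 : ∀ α x β : VG G, op α x ε T → β ε α → op β (cap x β) ε T := fun α x β h hβ => by
    obtain ⟨h1, h2, p, hp, h3, h4⟩ := (hTm _ _).1 h
    have ho := hV.ord.mem h1
    refine (hTm _ _).2 ⟨hV.ord.trans hβ h1, fun z hz => (mem_cap.1 hz).2, p, hp, fun ν hν => h3 ν (ho.trans hν hβ), h4.sb fun ν hν => ?_⟩
    obtain ⟨hν, hn⟩ := mem_sep.1 hν
    refine mem_sep.2 ⟨ho.trans hν hβ, ?_⟩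
    rwa [mem_cap, and_iff_left hν] at hn
  have htree : IsKappaTree (ZM.E : VG G → VG G → Prop) T (tlt T) (chk G γ) := by
    refine tlt_tree hV.ord hT1 hT2 hV fun α hα => ?_
    obtain ⟨α, hα', rfl⟩ := mem_chk' hα
    obtain ⟨p, hp⟩ := G.ne
    obtain ⟨q, hq, -, h⟩ := G.meet (fun q : M => ∀ ν : M, ν ε α → 𝔄.ev q (g ν) ≠ g ν) hp
      (fun t ht => move_all hγ hα' g hg1 (mem_PP.1 (𝔄.fp.dom _ _ ht).1))
    refine ⟨sep (chk G α) (fun ν => vv G (app (chk G q) (app φ ν))), (hTm _ _).2 ⟨hα, fun z hz => (mem_sep.1 hz).1, chk G q, chk_mem_Gnm.2 hq, fun ν hν => ?_, ?_⟩⟩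
    · obtain ⟨ν, hν', rfl⟩ := mem_chk' hν
      have hν2 := hi.ord.trans hν' hα'
      rw [hev q ν hq hν2, hφa ν hν2]; exact fun e => h ν hν' (chk_inj.1 e)
    · refine Fin'.emp.sb fun z hz => ?_
      obtain ⟨h1, h2⟩ := mem_sep.1 hz
      exact (h2 ⟨fun h => (mem_sep.1 h).2, fun h => mem_sep.2 ⟨h1, h⟩⟩).elim
  obtain ⟨B, hB, hBT⟩ := tlt_branch hV.ord hT1 hT2 (htp _ _ htree)
  obtain ⟨ρ, rfl⟩ := nm_surj B
  obtain ⟨F, hF⟩ : ∃ F : M → M → Prop, F = FF 𝔄.fp ρ := ⟨_, rfl⟩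
  have hFd : D2 F := ⟨by rw [hF]; infer_instance⟩
  obtain ⟨F', hF'⟩ : ∃ F : M → M → Prop, F = FN 𝔄.fp ρ := ⟨_, rfl⟩
  have hFd' : D2 F' := ⟨by rw [hF']; infer_instance⟩
  obtain ⟨p, hp⟩ := G.ne
  obtain ⟨q, hq, -, f, hf, hf1, hf2, hf3⟩ := G.meet (fun q : M => ∃ f : M, Fn f om ∧ (∀ n : M, n ε om → app f n ε γ) ∧
      (∀ m n : M, m ε om → n ε om → app f m = app f n → m = n) ∧
      ∀ n : M, n ε om → (𝔄.ev q (g (app f n)) = emp ∧ F (app f n) q) ∨ (𝔄.ev q (g (app f n)) = sing emp ∧ F' (app f n) q)) hp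
    (fun t ht => by
      obtain ⟨q, f, h1, h2⟩ := star_mix (ρ := ρ) hγ g hg1 hg2 (mem_PP.1 (𝔄.fp.dom _ _ ht).1)
      rw [hF, hF']; exact ⟨q, h1, f, h2⟩)
  clear hp p
  obtain ⟨α, hα, hfα⟩ := hi.bdd (CardLT.of_mem hi.om_mem) (fun n => app f n) hf1
  obtain ⟨-, -, p, hp, hp1, hp2⟩ := (hTm _ _).1 (hBT _ (mem_chk.2 hα))
  obtain ⟨p, hpG, rfl⟩ := mem_Gnm.1 hp
  obtain ⟨t, ht, t1, t2⟩ := G.dir _ _ hpG hq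
  obtain ⟨n0, hn0, b0⟩ := fin_bdd hp2 (fun n => app (chk G f) n) (fun m n hm hn e => by
    rw [← chk_om] at hm hn
    obtain ⟨m, hm', rfl⟩ := mem_chk' hm; obtain ⟨n, hn', rfl⟩ := mem_chk' hn
    beta_reduce at e
    rw [app_chk hf hm', app_chk hf hn', chk_inj] at e
    rw [hf2 m n hm' hn' e])
  rw [← chk_om] at hn0
  obtain ⟨n0, hn0', rfl⟩ := mem_chk' hn0
  obtain ⟨n1, hn1, b1⟩ := fin_bdd (t1.2.2.2 γ) (fun n => g (app f n)) (fun m n hm hn e => hf2 m n hm hn (hg2 _ _ e))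
  obtain ⟨n2, hn2, b2⟩ := fin_bdd (t2.2.2.2 γ) (fun n => g (app f n)) (fun m n hm hn e => hf2 m n hm hn (hg2 _ _ e))
  obtain ⟨k, hk, k0, k1⟩ := om_max hn0' hn1
  obtain ⟨n, hn, k2, k3⟩ := om_max hk hn2
  have hν := hfα n hn
  have hνγ := hf1 n hn
  have e1 : 𝔄.ev t (𝔄.ev p (g (app f n))) = 𝔄.ev t (g (app f n)) := by
    by_contra h
    exact eps_asymm (k2 _ k1) (b1 n hn (mem_sep.2 ⟨(hg1 _ hνγ).1, (hg1 _ hνγ).2.1, h⟩))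
  have e2 : 𝔄.ev t (𝔄.ev q (g (app f n))) = 𝔄.ev t (g (app f n)) := by
    by_contra h
    exact eps_asymm k3 (b2 n hn (mem_sep.2 ⟨(hg1 _ hνγ).1, (hg1 _ hνγ).2.1, h⟩))
  have e0 : (Mm ρ G (app f n) ↔ vv G (chk G (𝔄.ev p (g (app f n))))) := by
    by_contra h
    have := b0 (chk G n) (by rw [← chk_om]; exact mem_chk.2 hn) (by
      rw [app_chk hf hn]
      refine mem_sep.2 ⟨mem_chk.2 hν, ?_⟩
      rw [hev p _ hpG hνγ, mem_cap, and_iff_left (mem_chk.2 hν)]; exact h)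
    rw [mem_chk] at this
    exact eps_irrefl (k2 _ (k0 _ this))
  have hpc := mem_PP.1 (G.sub _ hpG)
  have hnc : 𝔄.NC (𝔄.ev p (g (app f n))) := by
    rcases hpc.good.cases (g (app f n)) with e | ⟨-, h⟩
    · exact (hp1 _ (mem_chk.2 hν) (by rw [hev p _ hpG hνγ, hφa _ hνγ, e])).elim
    · exact h.nc
  rw [← vv_ev G ht hnc, e1, ← e2] at e0
  rcases hf3 n hn with ⟨c, h⟩ | ⟨c, h⟩
  · rw [c, ev_cst (Or.inl rfl), vv_iff] at e0
    rw [hF] at h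
    obtain ⟨r, -, h'⟩ := e0.1 (h.2 G hq)
    rw [ev_cst (Or.inl rfl)] at h'
    exact emp_ne_sing h'
  · rw [c, ev_cst (Or.inr rfl), chk_sing, chk_emp] at e0
    rw [hF'] at h
    exact h.2 G hq (e0.2 (Or.inl rfl))
end
end AS
end W6
namespace W6
open ZF Filter
variable {M : Type u} [ZM M]
local notation "𝓔" => (ZM.E : M → M → Prop)

/-- `D` is a normal measure on `κ`. -/
structure NM (κ D : M) : Prop where
  inacc : IsInaccessible 𝓔 κ
  flt : IsKappaCompleteFilterOn 𝓔 D κ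
  ult : ∀ A, Sb A κ → A ε D ∨ sep κ (fun x => ¬ x ε A) ε D
  tail : ∀ ν, ν ε κ → sep κ (fun x => ν ε x) ε D
  press : ∀ f, sep κ (fun x => app f x ε x) ε D → ∃ γ, γ ε κ ∧ sep κ (fun x => app f x = γ) ε D

open Classical in
/-- A measurable cardinal carries a normal measure: push the given measure forward along a minimal
function that is not constant almost everywhere. -/
theorem NM.exists {κ : M} (h : IsMeasurable 𝓔 κ) : ∃ D, NM κ D := by
  obtain ⟨hκ, F, hF, hn, hm⟩ := h
  have hu : ∀ A, Sb A κ → A ε F ∨ sep κ (fun x => ¬ x ε A) ε F := by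
    intro A hA
    refine (hm A hA).imp id ?_
    rintro ⟨A', h1, h2⟩
    rwa [show sep κ (fun x => ¬ x ε A) = A' from W6.ext fun x => by rw [mem_sep]; exact (h1 x).symm]
  have hno : ∀ X Y, X ε F → Y ε F → ∃ x, x ε κ ∧ x ε X ∧ x ε Y := fun X Y hX hY => by
    obtain ⟨x, hx⟩ := hF.1.2.2.1 _ (flt_two hκ hF hX hY)
    exact ⟨x, mem_sep.1 (show x ε _ from hx)⟩
  -- the functions that are not constant almost everywhere
  obtain ⟨Y, hY⟩ : ∃ Y, ∀ h, h ε Y ↔ h ε pw (prod κ κ) ∧ (Fn h κ ∧ (∀ x, x ε κ → app h x ε κ) ∧ ∀ γ, ¬ sep κ (fun x : M => app h x = γ) ε F) :=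
    ⟨sep (pw (prod κ κ)) (fun h => Fn h κ ∧ (∀ x, x ε κ → app h x ε κ) ∧ ∀ γ, ¬ sep κ (fun x : M => app h x = γ) ε F), fun h => mem_sep⟩
  have hY' : ∀ h, Fn h κ → (∀ x, x ε κ → app h x ε κ) → (∀ γ, ¬ sep κ (fun x : M => app h x = γ) ε F) → h ε Y := by
    intro h h1 h2 h3
    refine (hY h).2 ⟨mem_pw.2 fun p hp => ?_, h1, h2, h3⟩
    unfold Fn at h1
    rw [h1] at hp
    obtain ⟨x, hx, rfl⟩ := mem_lam.1 hp
    exact op_mem_prod.2 ⟨hx, h2 x hx⟩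
  have hid : lam κ (fun x : M => x) ε Y := by
    refine hY' _ Fn.lam (fun x hx => by rwa [app_lam hx]) fun γ hγ => ?_
    by_cases hg : γ ε κ
    · obtain ⟨x, hx, h1, h2⟩ := hno _ _ hγ (flt_tail hκ hF hn (fun ν hν => hm _ fun x hx => by
        have hx : x ε sing ν := hx
        rw [mem_sing] at hx; rw [hx]; exact hν) (hκ.sing γ) (fun x hx => by rw [mem_sing] at hx; rw [hx]; exact hg))
      rw [mem_sep, app_lam hx] at h1
      exact (mem_sep.1 h2).2 (mem_sing.2 h1.2)
    · obtain ⟨x, hx, h1, -⟩ := hno _ _ hγ hγ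
      rw [mem_sep, app_lam hx] at h1
      exact hg (h1.2 ▸ hx)
  obtain ⟨h, hh, hmin⟩ : ∃ h, h ε Y ∧ ∀ k, k ε Y → ¬ sep κ (fun x => app k x ε app h x) ε F := by
    by_contra hc
    push Not at hc
    obtain ⟨s, hs, hs'⟩ := rs (θ := (om : M)) (Y := Y) om_ord
      (fun β s y : M => ∀ γ : M, β = suc γ → sep κ (fun x => app y x ε app (app s γ) x) ε F) (by
        intro β s hβ hs hr
        rcases om_cases hβ with rfl | ⟨γ, hγ, rfl⟩
        · exact ⟨_, hid, fun γ e => (not_mem_emp (x := γ) (by rw [e]; exact mem_suc.2 (Or.inr rfl))).elim⟩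
        · obtain ⟨k, hk, hk'⟩ := hc _ (hr γ (mem_suc.2 (Or.inr rfl))).1
          refine ⟨k, hk, fun γ' e => ?_⟩
          have : γ' = γ := by
            have h1 : γ' ε suc γ := e ▸ mem_suc.2 (Or.inr rfl)
            have h2 : γ ε suc γ' := e ▸ mem_suc.2 (Or.inr rfl)
            rcases mem_suc.1 h1 with h1 | h1
            · rcases mem_suc.1 h2 with h2 | h2
              · exact (eps_asymm h1 h2).elim
              · exact h2.symm
            · exact h1
          rw [this]; exact hk')
    have := flt_inter hκ hF (CardLT.of_mem hκ.om_mem) (fun n => sep κ (fun x => app (app s (suc n)) x ε app (app s n) x)) (by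
      intro n hn
      have := (hs' _ (suc_om hn)).2 n rfl
      rwa [app_res (mem_suc.2 (Or.inr rfl))] at this)
    obtain ⟨x, hx⟩ := hF.1.2.2.1 _ this
    obtain ⟨hx, hx'⟩ := mem_sep.1 (show x ε _ from hx)
    obtain ⟨m, ⟨n, hn, rfl⟩, hm'⟩ := eps_min (P := fun z => ∃ n, n ε om ∧ z = app (app s n) x) ⟨_, emp, emp_om, rfl⟩
    exact hm' _ (mem_sep.1 (hx' n hn)).2 ⟨_, suc_om hn, rfl⟩
  obtain ⟨-, hh0, hh1, hh2⟩ := (hY h).1 hh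
  have hD : ∀ X, X ε sep (pw κ) (fun X => sep κ (fun x => app h x ε X) ε F) ↔ Sb X κ ∧ sep κ (fun x => app h x ε X) ε F := fun X => by
    rw [mem_sep, mem_pw]
  have hcmp : ∀ A, Sb A κ → ¬ A ε F → sep κ (fun x => ¬ x ε A) ε F := fun A hA h => (hu A hA).resolve_left h
  refine ⟨_, hκ, ⟨⟨fun X hX => ((hD X).1 hX).1, ⟨κ, (hD κ).2 ⟨fun _ h => h, flt_up hκ hF (flt_top hκ hF) (fun x _ hx => mem_sep.2 ⟨hx, hh1 x hx⟩) (fun x hx => (mem_sep.1 hx).1)⟩⟩, ?_, ?_⟩, ?_⟩, ?_, ?_, ?_⟩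
  · intro X hX
    obtain ⟨x, hx, h1, -⟩ := hno _ _ ((hD X).1 hX).2 ((hD X).1 hX).2
    exact ⟨_, (mem_sep.1 h1).2⟩
  · intro X X' hX hs hs'
    exact (hD X').2 ⟨hs', flt_up hκ hF ((hD X).1 hX).2 (fun x hx hx' => mem_sep.2 ⟨hx', hs _ (mem_sep.1 hx).2⟩) (fun x hx => (mem_sep.1 hx).1)⟩
  · intro β g hβ hg Z hZ
    rw [isFunc_iff] at hg
    refine (hD Z).2 ⟨fun x hx => ((hZ x).1 hx).1, flt_up hκ hF (flt_inter hκ hF (CardLT.of_mem hβ) (fun γ => sep κ (fun x => app h x ε app g γ)) fun γ hγ => ((hD _).1 (hg.2 γ hγ)).2) (fun x hx hx' => mem_sep.2 ⟨hx', (hZ _).2 ⟨hh1 x hx', fun γ Y hγ hp => ?_⟩⟩) (fun x hx => (mem_sep.1 hx).1)⟩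
    rw [pairMem, hg.1.op_mem] at hp
    rw [hp.2]; exact (mem_sep.1 ((mem_sep.1 hx).2 γ hγ)).2
  · intro A hA
    rcases hu (sep κ (fun x => app h x ε A)) (fun x hx => (mem_sep.1 hx).1) with h' | h'
    · exact Or.inl ((hD A).2 ⟨hA, h'⟩)
    · refine Or.inr ((hD _).2 ⟨fun x hx => (mem_sep.1 hx).1, flt_up hκ hF h' (fun x hx hx' => mem_sep.2 ⟨hx', mem_sep.2 ⟨hh1 x hx', fun h1 => (mem_sep.1 hx).2 (mem_sep.2 ⟨hx', h1⟩)⟩⟩) (fun x hx => (mem_sep.1 hx).1)⟩)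
  · intro ν hν
    refine (hD _).2 ⟨fun x hx => (mem_sep.1 hx).1, ?_⟩
    refine flt_up hκ hF (flt_inter hκ hF (CardLT.of_mem (hκ.suc_mem hν)) (fun γ => sep κ (fun x => ¬ x ε sep κ (fun x => app h x = γ))) fun γ hγ => hcmp _ (fun x hx => (mem_sep.1 hx).1) (hh2 γ)) (fun x hx hx' => mem_sep.2 ⟨hx', mem_sep.2 ⟨hh1 x hx', ?_⟩⟩) (fun x hx => (mem_sep.1 hx).1)
    rcases (hκ.ord.mem (hh1 x hx')).le_or_lt (hκ.ord.mem hν) with h1 | h1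
    · exact ((mem_sep.1 ((mem_sep.1 hx).2 _ (mem_suc.2 h1))).2 (mem_sep.2 ⟨hx', rfl⟩)).elim
    · exact h1
  · intro f hf
    have hf := ((hD _).1 hf).2
    have hk0 : ∀ x, x ε κ → (if app f (app h x) ε app h x then app f (app h x) else app h x) ε κ := fun x hx => by
      split_ifs with h'
      · exact hκ.ord.trans h' (hh1 x hx)
      · exact hh1 x hx
    by_cases hc : ∃ γ, sep κ (fun x : M => app (lam κ (fun x : M => if app f (app h x) ε app h x then app f (app h x) else app h x)) x = γ) ε F
    · obtain ⟨γ, hγ⟩ := hc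
      have hg : ∀ x, x ε κ → x ε sep κ (fun x => app h x ε sep κ (fun x => app f x ε x)) → x ε sep κ (fun x : M => app (lam κ (fun x : M => if app f (app h x) ε app h x then app f (app h x) else app h x)) x = γ) → app f (app h x) = γ := by
        intro x hx h1 h2
        rw [mem_sep, app_lam hx, if_pos (mem_sep.1 (mem_sep.1 h1).2).2] at h2
        exact h2.2
      obtain ⟨x, hx, h1, h2⟩ := hno _ _ hf hγ
      refine ⟨γ, ?_, (hD _).2 ⟨fun x hx => (mem_sep.1 hx).1, flt_up hκ hF (flt_two hκ hF hf hγ) (fun x hx hx' => mem_sep.2 ⟨hx', mem_sep.2 ⟨hh1 x hx', hg x hx' (mem_sep.1 hx).2.1 (mem_sep.1 hx).2.2⟩⟩) (fun x hx => (mem_sep.1 hx).1)⟩⟩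
      rw [← hg x hx h1 h2]
      exact hκ.ord.trans (mem_sep.1 (mem_sep.1 h1).2).2 (hh1 x hx)
    · refine (hmin _ (hY' _ Fn.lam (fun x hx => by rw [app_lam hx]; exact hk0 x hx) (fun γ hγ => hc ⟨γ, hγ⟩)) ?_).elim
      refine flt_up hκ hF hf (fun x hx hx' => mem_sep.2 ⟨hx', ?_⟩) (fun x hx => (mem_sep.1 hx).1)
      have := (mem_sep.1 (mem_sep.1 hx).2).2
      rw [app_lam hx', if_pos this]; exact this

end W6
namespace W6
open ZF Filter
variable {M : Type u} [ZM M]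
local notation "𝓔" => (ZM.E : M → M → Prop)

namespace NM
variable {κ D : M} (h : NM κ D)

/-- The filter on the external universe generated by a normal measure. -/
def ae : Filter M where
  sets := {s | ∃ X, X ε D ∧ ∀ x, x ε X → x ∈ s}
  univ_sets := ⟨κ, flt_top h.inacc h.flt, fun _ _ => trivial⟩
  sets_of_superset := fun ⟨X, hX, h1⟩ h2 => ⟨X, hX, fun x hx => h2 (h1 x hx)⟩
  inter_sets := fun ⟨X, hX, h1⟩ ⟨Y, hY, h2⟩ => ⟨_, flt_two h.inacc h.flt hX hY, fun x hx =>
    ⟨h1 x (mem_sep.1 hx).2.1, h2 x (mem_sep.1 hx).2.2⟩⟩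

theorem ae_of {φ : M → Prop} [Df (fun w : Nil M × M => φ w.2)] (hf : sep κ φ ε D) : ∀ᶠ x in h.ae, φ x :=
  ⟨_, hf, fun _ hx => (mem_sep.1 hx).2⟩

theorem ae_mem : ∀ᶠ x in h.ae, x ε κ := ⟨κ, flt_top h.inacc h.flt, fun _ hx => hx⟩

theorem ae_iff {φ : M → Prop} [Df (fun w : Nil M × M => φ w.2)] : (∀ᶠ x in h.ae, φ x) ↔ sep κ φ ε D :=
  ⟨fun ⟨_, hX, h1⟩ => flt_up h.inacc h.flt hX (fun x hx hx' => mem_sep.2 ⟨hx', h1 x hx⟩) (fun _ hx => (mem_sep.1 hx).1), h.ae_of⟩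

theorem ae_ne {φ : M → Prop} (hf : ∀ᶠ x in h.ae, φ x) : ∃ x, φ x := by
  obtain ⟨X, hX, h1⟩ := hf
  obtain ⟨x, hx⟩ := h.flt.1.2.2.1 X hX
  exact ⟨x, h1 x hx⟩

theorem ae_tail {ν : M} (hν : ν ε κ) : ∀ᶠ x in h.ae, ν ε x := h.ae_of (h.tail ν hν)

theorem ae_ult (φ : M → Prop) [hd : Df (fun w : Nil M × M => φ w.2)] : (∀ᶠ x in h.ae, φ x) ∨ ∀ᶠ x in h.ae, ¬ φ x := by
  have : D1 φ := ⟨hd⟩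
  refine (h.ult (sep κ φ) fun x hx => (mem_sep.1 hx).1).imp h.ae_of fun h' => ?_
  filter_upwards [h.ae_of h', h.ae_mem] with x hx hx' using fun e => hx (mem_sep.2 ⟨hx', e⟩)

theorem ae_ball {a : M} (ha : CardLT 𝓔 a κ) (φ : M → M → Prop) [hd : Df (fun w : (Nil M × M) × M => φ w.1.2 w.2)]
    (hf : ∀ i, i ε a → ∀ᶠ δ in h.ae, φ i δ) : ∀ᶠ δ in h.ae, ∀ i, i ε a → φ i δ := by
  have : D2 φ := ⟨hd⟩
  filter_upwards [h.ae_of (flt_inter h.inacc h.flt ha (fun i => sep κ (fun δ => φ i δ)) fun i hi => h.ae_iff.1 (hf i hi))] with δ hδ i hi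
    using (mem_sep.1 (hδ i hi)).2

/-- Regressive choices are constant almost everywhere. -/
theorem ae_ex (φ : M → M → Prop) [hd : Df (fun w : (Nil M × M) × M => φ w.1.2 w.2)]
    (hf : ∀ᶠ δ in h.ae, ∃ i, i ε δ ∧ φ i δ) : ∃ i, i ε κ ∧ ∀ᶠ δ in h.ae, φ i δ := by
  have : D2 φ := ⟨hd⟩
  obtain ⟨f, -, h1⟩ := ac (sep κ (fun δ => ∃ i, i ε δ ∧ φ i δ)) (fun δ i => i ε δ ∧ φ i δ) (fun x hx => (mem_sep.1 hx).2)
  have h1 : ∀ᶠ δ in h.ae, app f δ ε δ ∧ φ (app f δ) δ := by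
    filter_upwards [hf, h.ae_mem] with δ h2 h3 using h1 δ (mem_sep.2 ⟨h3, h2⟩)
  obtain ⟨γ, hγ, h2⟩ := h.press f (h.ae_iff.1 (h1.mono fun _ h => h.1))
  refine ⟨γ, hγ, ?_⟩
  filter_upwards [h1, h.ae_of h2] with δ h3 h4 using h4 ▸ h3.2

theorem ae_diag (φ : M → M → Prop) [hd : Df (fun w : (Nil M × M) × M => φ w.1.2 w.2)]
    (hf : ∀ i, i ε κ → ∀ᶠ δ in h.ae, φ i δ) : ∀ᶠ δ in h.ae, ∀ i, i ε δ → φ i δ := by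
  have : D2 φ := ⟨hd⟩
  refine (h.ae_ult (fun δ => ∀ i, i ε δ → φ i δ)).resolve_right fun h1 => ?_
  obtain ⟨i, hi, h2⟩ := h.ae_ex (fun i δ => ¬ φ i δ) (h1.mono fun δ h => by push Not at h; exact h)
  obtain ⟨δ, h3, h4⟩ := h.ae_ne (h2.and (hf i hi))
  exact h3 h4

theorem ae_ex_small {a : M} (ha : CardLT 𝓔 a κ) (φ : M → M → Prop) [hd : Df (fun w : (Nil M × M) × M => φ w.1.2 w.2)]
    (hf : ∀ᶠ δ in h.ae, ∃ i, i ε a ∧ φ i δ) : ∃ i, i ε a ∧ ∀ᶠ δ in h.ae, φ i δ := by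
  have : D2 φ := ⟨hd⟩
  by_contra hc
  obtain ⟨δ, ⟨i, h1, h2⟩, h3⟩ := h.ae_ne (hf.and (h.ae_ball ha (fun i δ => ¬ φ i δ) fun i hi => (h.ae_ult (φ i)).resolve_left fun h4 => hc ⟨i, hi, h4⟩))
  exact h3 i h1 h2

/-- A choice of subsets of `δ × δ` is the trace of one subset of `κ × κ` almost everywhere. -/
theorem ae_sub (f : M → M) [hf : Tm (fun w : Nil M × M => f w.2)] : ∃ X, Sb X (prod κ κ) ∧
    ∀ᶠ δ in h.ae, ∀ i, i ε δ → ∀ j, j ε δ → (op i j ε f δ ↔ op i j ε X) := by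
  have : T1 f := T1.of hf
  refine ⟨sep (prod κ κ) (fun p => sep κ (fun δ => p ε f δ) ε D), fun _ h => (mem_sep.1 h).1, ?_⟩
  refine h.ae_diag (fun i δ : M => ∀ j : M, j ε δ → (op i j ε f δ ↔ op i j ε sep (prod κ κ) (fun p => sep κ (fun δ => p ε f δ) ε D))) fun i hi => h.ae_diag (fun j δ : M => (op i j ε f δ ↔ op i j ε sep (prod κ κ) (fun p => sep κ (fun δ => p ε f δ) ε D))) fun j hj => ?_
  simp only [mem_sep, op_mem_prod, hi, hj, true_and]
  rcases h.ae_ult (fun δ => op i j ε f δ) with h1 | h1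
  · filter_upwards [h1] with δ h2 using iff_of_true h2 (h.ae_iff.1 h1)
  · filter_upwards [h1] with δ h2 using iff_of_false h2 fun h3 => by
      obtain ⟨δ, h4, h5⟩ := h.ae_ne (h1.and (h.ae_of h3))
      exact h4 h5

theorem ae_inacc : ∀ᶠ δ in h.ae, IsInaccessible 𝓔 δ := by
  have hκ := h.inacc
  have hp : ∀ᶠ δ in h.ae, ∀ β, β ε δ → CardLT 𝓔 (pw β) δ := h.ae_diag (fun β δ => CardLT 𝓔 (pw β) δ) fun β hβ => by
    obtain ⟨η, hη, h1⟩ := hκ.pw (CardLT.of_mem hβ)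
    filter_upwards [h.ae_tail hη] with δ h2 using ⟨η, h2, h1⟩
  have hr : ∀ᶠ δ in h.ae, ∀ β, β ε δ → ∀ f, IsFuncFromTo 𝓔 f β δ → ¬ IsCofinalIn 𝓔 f β δ :=
    h.ae_diag (fun β δ => ∀ f, IsFuncFromTo 𝓔 f β δ → ¬ IsCofinalIn 𝓔 f β δ) fun β hβ => by
      refine (h.ae_ult (fun δ => ∀ f, IsFuncFromTo 𝓔 f β δ → ¬ IsCofinalIn 𝓔 f β δ)).resolve_right fun h1 => ?_
      obtain ⟨F, -, hF⟩ := ac (sep κ (fun δ => ∃ f, IsFuncFromTo 𝓔 f β δ ∧ IsCofinalIn 𝓔 f β δ))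
        (fun δ f => IsFuncFromTo 𝓔 f β δ ∧ IsCofinalIn 𝓔 f β δ) (fun x hx => (mem_sep.1 hx).2)
      have hF : ∀ᶠ δ in h.ae, IsFuncFromTo 𝓔 (app F δ) β δ ∧ IsCofinalIn 𝓔 (app F δ) β δ := by
        filter_upwards [h1, h.ae_mem] with δ h2 h3
        push Not at h2
        exact hF δ (mem_sep.2 ⟨h3, h2⟩)
      obtain ⟨y, -, hy⟩ := ac β (fun x y => y ε κ ∧ sep κ (fun δ => app (app F δ) x = y) ε D) (fun x hx => by
        obtain ⟨i, hi, h2⟩ := h.ae_ex (fun i δ => app (app F δ) x = i) (hF.mono fun δ h3 => ⟨_, (isFunc_iff.1 h3.1).2 x hx, rfl⟩)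
        exact ⟨i, hi, h.ae_iff.1 h2⟩)
      obtain ⟨η, hη, h4⟩ := hκ.bdd (CardLT.of_mem hβ) (fun x => app y x) (fun x hx => (hy x hx).1)
      obtain ⟨δ, ⟨h5, h6⟩, h7, h8, h9⟩ := h.ae_ne (hF.and ((h.ae_ball (CardLT.of_mem hβ) (fun x δ => app (app F δ) x = app y x) fun x hx => h.ae_of (hy x hx).2).and ((h.ae_tail hη).and h.ae_mem)))
      obtain ⟨x, z, hx, hz, h10⟩ := h6 η h8
      rw [pairMem, (isFunc_iff.1 h5).1.op_mem, h7 x hx] at hz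
      rcases h10 with h10 | h10
      · exact eps_irrefl (hz.2 ▸ h10 ▸ h4 x hx)
      · exact eps_asymm (hz.2 ▸ h4 x hx) h10
  filter_upwards [hp, hr, h.ae_tail hκ.om_mem, h.ae_mem] with δ h1 h2 h3 h4
  have hc : IsCardinal 𝓔 δ := ⟨hκ.ord.mem h4, fun β hβ h5 => by
    obtain ⟨η, hη, h6⟩ := h1 β hβ
    exact cantor ((h6.trans (CardLE.sb ((hκ.ord.mem h4).sb hη))).trans h5)⟩
  refine ⟨⟨hc, fun β f hβ => h2 β hβ f⟩, ⟨hc, fun β p hβ hp => ?_⟩, om, isOmega_iff.2 rfl, h3⟩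
  rw [show p = pw β from W6.ext fun x => (hp x).trans mem_pw.symm]
  exact h1 β hβ

end NM
end W6
namespace W6
open ZF Filter AS
variable {M : Type u} [ZM M]
local notation "𝓔" => (ZM.E : M → M → Prop)

/-- The data for reflecting conditions: a normal measure `D` on `κ` and a bijection `i` between a
set `A` of columns of stage `κ` and the set of all subsets of `κ × κ`, together with the star. -/
structure RD (M : Type u) [ZM M] where
  κ : M
  D : M
  Λ : M
  A : M
  i : M
  nm : NM κ D
  hA : Sb A Λ
  col : ∀ ξ, ξ ε A → Sb (app i ξ) (prod κ κ) ∨ app i ξ = star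
  inj : ∀ ξ ξ', ξ ε A → ξ' ε A → app i ξ = app i ξ' → ξ = ξ'
  surj : ∀ X, Sb X (prod κ κ) ∨ X = star → ∃ ξ, ξ ε A ∧ app i ξ = X

open Classical in
/-- The column of stage `δ` cut out by a column of stage `κ`. -/
noncomputable def tr (δ X : M) : M := if X = star then star else sep X (fun p => p ε prod δ δ)
instance : T2 (tr : M → M → M) := .of (by unfold tr; infer_instance)
theorem tr_cases {δ X : M} : Sb (tr δ X) (prod δ δ) ∨ tr δ X = star := by
  unfold tr; split_ifs
  · exact Or.inr rfl
  · exact Or.inl fun x hx => (mem_sep.1 hx).2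
theorem tr_sub {δ X κ : M} (h : Sb X (prod κ κ)) : tr δ X = sep X (fun p => p ε prod δ δ) := if_neg fun e => star_not (e ▸ h)

namespace RD
variable (R : RD M)

noncomputable abbrev AA : AS M := cAS R.nm.inacc R.Λ

open Classical in
/-- The reflection of atoms of stage `κ` to stage `δ`. -/
noncomputable def τ (δ x : M) : M := if x ε sep R.AA.At (fun a => R.AA.st a = R.κ) then op δ (op (tr δ (app R.i (fst (snd x)))) (snd (snd x))) else x
instance : T2 R.τ := .of (by unfold τ; infer_instance)

/-- The atoms that are reflected. -/
noncomputable def B : M := sep R.AA.At (fun a => R.AA.st a = R.κ → fst (snd a) ε R.A)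

/-- At `δ`, reflection works as intended on `S`. -/
structure NN (S δ : M) : Prop where
  inacc : IsInaccessible 𝓔 δ
  mem : δ ε R.κ
  sz : CardLT 𝓔 S δ
  cs : ∀ x, x ε S → Cst x ∨ x ε R.AA.At ∧ R.AA.st x ε δ ∨ ∃ ξ ν : M, x = op R.κ (op ξ ν) ∧ ν ε δ ∧ ξ ε R.A
  inj : ∀ x, x ε S → ∀ x', x' ε S → R.τ δ x = R.τ δ x' → x = x'

open Classical in
/-- The reflection of a condition. -/
noncomputable def rf (δ s : M) : M := lam R.AA.At (fun y => if ∃ x, R.AA.ev s x ≠ x ∧ y = R.τ δ x then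
  the (fun v => ∃ x, R.AA.ev s x ≠ x ∧ y = R.τ δ x ∧ v = R.AA.ev s x) else y)
instance : T2 R.rf := .of (by unfold rf; infer_instance)

/-- `S` contains the atoms moved by `s` and their values. -/
def Ad (S s : M) : Prop := ∀ x, R.AA.ev s x ≠ x → x ε S ∧ R.AA.ev s x ε S
variable {R}

theorem τ_cst {δ x : M} (h : Cst x) : R.τ δ x = x := if_neg fun h' => cst_not h (mem_sep.1 h').1
theorem τ_low {δ x : M} (h : R.AA.st x ε R.κ) : R.τ δ x = x := if_neg fun h' => by
  rw [(mem_sep.1 h').2] at h; exact eps_irrefl h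
theorem top_at {ξ ν : M} (h : ν ε R.κ) (hξ : ξ ε R.A) : op R.κ (op ξ ν) ε R.AA.At ∧ R.AA.st (op R.κ (op ξ ν)) = R.κ := by
  have : op R.κ (op ξ ν) ε R.AA.At := cAS_mem.2 ⟨h, R.nm.inacc, Or.inr ⟨rfl, R.hA ξ hξ⟩⟩
  exact ⟨this, cAS_st this⟩
theorem τ_top {δ ξ ν : M} (h : ν ε R.κ) (hξ : ξ ε R.A) : R.τ δ (op R.κ (op ξ ν)) = op δ (op (tr δ (app R.i ξ)) ν) := by
  unfold τ
  rw [if_pos (mem_sep.2 (top_at h hξ)), snd_op, fst_op, snd_op]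
theorem τ_at {δ i ν : M} (h : IsInaccessible 𝓔 δ) (h' : δ ε R.κ) (hν : ν ε δ) : op δ (op (tr δ i) ν) ε R.AA.At :=
  cAS_mem.2 ⟨hν, h, Or.inl ⟨h', tr_cases⟩⟩
theorem mem_B {x : M} : x ε R.B ↔ x ε R.AA.At ∧ (R.AA.st x ε R.κ ∨ ∃ ξ ν : M, x = op R.κ (op ξ ν) ∧ ν ε R.κ ∧ ξ ε R.A) := by
  unfold B
  rw [mem_sep]
  refine and_congr_right fun hx => ?_
  obtain ⟨δ, i, ν, rfl, h1, h2⟩ := cAS_cases hx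
  rw [cAS_st hx, snd_op, fst_op]
  constructor
  · intro h
    rcases h2.2 with h3 | ⟨rfl, -⟩
    · exact Or.inl h3.1
    · exact Or.inr ⟨_, _, rfl, h1, h rfl⟩
  · rintro (h | ⟨ξ, ν, e, h3, h4⟩) rfl
    · exact (eps_irrefl h).elim
    · rw [(op_inj.1 (op_inj.1 e).2).1]; exact h4

theorem τ_val {δ s x : M} (hc : R.AA.Cond s) (e : R.AA.ev s x ≠ x) : R.τ δ (R.AA.ev s x) = R.AA.ev s x := by
  have ha := by_contra fun h => e (ev_off h)
  rcases hc.2.1.1 x ha e with h1 | ⟨h1, h2⟩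
  · exact τ_cst h1
  · exact τ_low (R.nm.inacc.ord.lt_of_lt h2 (mem_suc.1 (AS.st_le ha)))

theorem cond_of {p : M} (h0 : Fn p R.AA.At) (h : R.AA.Good (R.AA.ev p))
    (hs : ∀ γ, γ ε R.AA.S → ∃ b, CardLT 𝓔 b γ ∧ ∀ a, a ε R.AA.At → R.AA.ev p a ≠ a → R.AA.st a ε suc γ → a ε b) : R.AA.Cond p :=
  ⟨h0, h.2, fun γ hγ => by
    obtain ⟨b, hb, h1⟩ := hs γ hγ
    exact hb.sb fun a ha => h1 a (mem_sep.1 ha).1 (mem_sep.1 ha).2.1 (mem_sep.1 ha).2.2⟩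

namespace NN
variable {S δ : M} (H : R.NN S δ)
include H
theorem cases {x : M} (hx : x ε S) : (Cst x ∧ R.τ δ x = x) ∨ (x ε R.AA.At ∧ R.AA.st x ε δ ∧ R.τ δ x = x) ∨
    (x ε R.AA.At ∧ R.AA.st x = R.κ ∧ R.τ δ x ε R.AA.At ∧ R.AA.st (R.τ δ x) = δ) := by
  rcases H.cs x hx with h | h | ⟨ξ, ν, rfl, hν, hξ⟩
  · exact Or.inl ⟨h, τ_cst h⟩
  · exact Or.inr (Or.inl ⟨h.1, h.2, τ_low (R.nm.inacc.ord.trans h.2 H.mem)⟩)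
  · have hν' := R.nm.inacc.ord.trans hν H.mem
    have := τ_at H.inacc H.mem hν (i := app R.i ξ)
    rw [τ_top hν' hξ]
    exact Or.inr (Or.inr ⟨(top_at hν' hξ).1, (top_at hν' hξ).2, this, cAS_st this⟩)

theorem st_le {x : M} (hx : x ε S) (h : ¬ Cst x) : R.τ δ x ε R.AA.LL δ := by
  rcases H.cases hx with ⟨h1, -⟩ | ⟨h1, h2, h3⟩ | ⟨-, -, h1, h2⟩
  · exact (h h1).elim
  · rw [h3]; exact mem_LL.2 ⟨h1, mem_suc.2 (Or.inl h2)⟩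
  · exact mem_LL.2 ⟨h1, mem_suc.2 (Or.inr h2)⟩

variable {s t : M} (hs : R.Ad S s)
include hs
theorem off : ∀ y, ¬ y ε R.AA.At → ¬ ∃ x, R.AA.ev s x ≠ x ∧ y = R.τ δ x := by
  rintro y hy ⟨x, hx, rfl⟩
  exact hy (mem_LL.1 (H.st_le (hs x hx).1 fun h => hx (ev_cst h))).1
open Classical in
theorem rf_ev (y : M) : R.AA.ev (R.rf δ s) y = if ∃ x, R.AA.ev s x ≠ x ∧ y = R.τ δ x then
    the (fun v => ∃ x, R.AA.ev s x ≠ x ∧ y = R.τ δ x ∧ v = R.AA.ev s x) else y :=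
  ev_mk (fun y hy => if_neg (H.off hs y hy)) y
theorem rf_off {y : M} (hy : ∀ x, R.AA.ev s x ≠ x → y ≠ R.τ δ x) : R.AA.ev (R.rf δ s) y = y := by
  rw [H.rf_ev hs, if_neg]; rintro ⟨x, h1, h2⟩; exact hy x h1 h2


variable (hc : R.AA.Cond s)
include hc
theorem rf_on {x : M} (hx : x ε S) : R.AA.ev (R.rf δ s) (R.τ δ x) = R.τ δ (R.AA.ev s x) := by
  by_cases e : R.AA.ev s x = x
  · rw [e]; refine H.rf_off hs fun x' h1 h2 => h1 ?_
    rw [← H.inj x hx x' (hs x' h1).1 h2]; exact e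
  · rw [H.rf_ev hs, if_pos ⟨x, e, rfl⟩, τ_val hc e]
    refine the_eq ⟨x, e, rfl, rfl⟩ ?_
    rintro z ⟨x', h1, h2, rfl⟩
    rw [H.inj x hx x' (hs x' h1).1 h2]

theorem ad_mem {x : M} (hx : x ε S) : R.AA.ev s x ε S := by
  by_cases e : R.AA.ev s x = x
  · rwa [e]
  · exact (hs x e).2

theorem rf_moved {y : M} (hy : R.AA.ev (R.rf δ s) y ≠ y) : ∃ x, x ε S ∧ R.AA.ev s x ≠ x ∧ y = R.τ δ x := by
  by_contra hn
  exact hy (H.rf_off hs fun x h1 h2 => hn ⟨x, (hs x h1).1, h1, h2⟩)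

theorem rf_su : R.AA.Su (R.rf δ s) (R.AA.LL δ) := fun y hy => by
  obtain ⟨x, h1, h2, rfl⟩ := H.rf_moved hs hc hy
  exact H.st_le h1 fun h => h2 (ev_cst h)

theorem rf_cond : R.AA.Cond (R.rf δ s) := by
  have hd := H.inacc.ord
  have := H.rf_ev hs
  refine cond_of Fn.lam ⟨fun _ => ev_off, fun y _ hy => ?_, fun y => ?_⟩ fun γ hγ => ?_
  · obtain ⟨x, h1, h2, rfl⟩ := H.rf_moved hs hc hy
    rw [H.rf_on hs hc h1, τ_val hc h2]
    have ha := by_contra fun h => h2 (ev_off h)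
    rcases hc.2.1.1 x ha h2 with h3 | ⟨h3, h4⟩
    · exact Or.inl h3
    · refine Or.inr ⟨h3, ?_⟩
      rcases H.cases h1 with ⟨h5, -⟩ | ⟨-, h5, h6⟩ | ⟨-, h5, -, h6⟩
      · exact (h2 (ev_cst h5)).elim
      · rwa [h6]
      · rw [h6]
        rcases H.cases (hs x h2).2 with ⟨h7, -⟩ | ⟨-, h7, -⟩ | ⟨-, h7, -⟩
        · exact (cst_not h7 (R.AA.ns _ h3)).elim
        · exact h7
        · rw [h5, h7] at h4; exact (eps_irrefl h4).elim
  · by_cases hy : R.AA.ev (R.rf δ s) y = y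
    · rw [hy, hy]
    · obtain ⟨x, h1, h2, rfl⟩ := H.rf_moved hs hc hy
      rw [H.rf_on hs hc h1, H.rf_on hs hc (H.ad_mem hs hc h1), hc.2.1.2]
  · rcases hd.le_or_lt (R.AA.inacc γ hγ).ord with h | h
    · refine ⟨img S (fun x => R.τ δ x), CardLT.mono (CardLE.img _) (H.sz.le (R.AA.inacc γ hγ).ord h), fun a ha h1 h2 => ?_⟩
      obtain ⟨x, h3, h4, h5⟩ := H.rf_moved hs hc h1
      exact mem_img.2 ⟨x, h3, h5⟩
    · refine ⟨_, hc.2.2 γ hγ, fun a ha h1 h2 => ?_⟩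
      obtain ⟨x, h3, h4, rfl⟩ := H.rf_moved hs hc h1
      rcases H.cases h3 with ⟨h5, -⟩ | ⟨h5, h6, h7⟩ | ⟨-, h5, -, h6⟩
      · exact (h4 (ev_cst h5)).elim
      · rw [h7] at h2 ha ⊢; exact mem_sep.2 ⟨ha, h4, h2⟩
      · rw [h6] at h2
        rcases mem_suc.1 h2 with h2 | rfl
        · exact (eps_asymm h2 h).elim
        · exact (eps_irrefl h).elim

variable (ht : R.Ad S t) (hc' : R.AA.Cond t)
include ht hc'
theorem rf_le : R.AA.Le (R.rf δ s) (R.rf δ t) ↔ R.AA.Le s t := by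
  have h1 : ∀ x, x ε S → R.AA.ev (R.rf δ s) (R.AA.ev (R.rf δ t) (R.τ δ x)) = R.τ δ (R.AA.ev s (R.AA.ev t x)) := fun x hx => by
    rw [H.rf_on ht hc' hx, H.rf_on hs hc (H.ad_mem ht hc' hx)]
  constructor
  · intro h
    refine ⟨hc, hc', fun x => ?_⟩
    by_cases hx : x ε S
    · have := h.2.2 (R.τ δ x)
      rw [h1 x hx, H.rf_on hs hc hx] at this
      exact H.inj _ (H.ad_mem hs hc (H.ad_mem ht hc' hx)) _ (H.ad_mem hs hc hx) this
    · rw [by_contra fun h => hx (ht x h).1]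
  · intro h
    refine ⟨H.rf_cond hs hc, H.rf_cond ht hc', fun y => ?_⟩
    by_cases hy : R.AA.ev (R.rf δ t) y = y
    · rw [hy]
    · obtain ⟨x, h2, h3, rfl⟩ := H.rf_moved ht hc' hy
      rw [h1 x h2, H.rf_on hs hc h2, h.2.2]

/-- Reflection commutes with composition with a condition of small stages. -/
theorem rf_comp {θ : M} (hsu : R.AA.Su s (R.AA.LL θ)) (hθ : θ ε δ) (hm : R.AA.Cond (R.AA.comp s t)) (hS : R.Ad S (R.AA.comp s t)) (y : M) :
    R.AA.ev (R.rf δ (R.AA.comp s t)) y = R.AA.ev s (R.AA.ev (R.rf δ t) y) := by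
  have hl : ∀ x, R.AA.ev s x ≠ x → R.τ δ x = x := fun x hx =>
    τ_low (R.nm.inacc.ord.trans (H.inacc.ord.lt_of_le (mem_suc.1 (mem_LL.1 (hsu x hx)).2) hθ) H.mem)
  have hcm : ∀ x, x ε S → R.τ δ (R.AA.ev s x) = R.AA.ev s (R.τ δ x) := by
    intro x hx
    by_cases e : R.AA.ev s x = x
    · rw [e]
      by_contra h
      have h := Ne.symm h
      have h1 := hl _ h
      have := H.inj x hx _ (hs _ h).1 h1.symm
      rw [← this] at h; exact h e
    · rw [hl x e, τ_val hc e]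
  by_cases hy : ∃ x, x ε S ∧ y = R.τ δ x
  · obtain ⟨x, hx, rfl⟩ := hy
    rw [H.rf_on hS hm hx, H.rf_on ht hc' hx, ev_comp, hcm _ (H.ad_mem ht hc' hx)]
  · have h1 : ∀ {u}, R.Ad S u → R.AA.ev (R.rf δ u) y = y := fun hu => H.rf_off hu fun x h1 h2 => hy ⟨x, (hu x h1).1, h2⟩
    rw [h1 hS, h1 ht]
    by_contra h
    exact hy ⟨y, (hs y (Ne.symm h)).1, (hl y (Ne.symm h)).symm⟩
end NN
end RD
end W6
namespace W6
open ZF Filter AS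
variable {M : Type u} [ZM M]
local notation "𝓔" => (ZM.E : M → M → Prop)

namespace RD
variable {R : RD M}

theorem tr_ne {X Y : M} (hX : Sb X (prod R.κ R.κ) ∨ X = star) (hY : Sb Y (prod R.κ R.κ) ∨ Y = star) (h : X ≠ Y) :
    ∀ᶠ δ in R.nm.ae, tr δ X ≠ tr δ Y := by
  have key : ∀ X Y, Sb X (prod R.κ R.κ) → (∃ p, p ε X ∧ ¬ p ε Y) → ∀ᶠ δ in R.nm.ae, tr δ X ≠ tr δ Y := by
    rintro X Y hX ⟨p, hp, hn⟩
    obtain ⟨a, b, ha, hb, rfl⟩ := mem_prod.1 (hX p hp)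
    filter_upwards [R.nm.ae_tail ha, R.nm.ae_tail hb] with δ h1 h2 e
    have : op a b ε tr δ Y := by rw [← e, tr_sub hX]; exact mem_sep.2 ⟨hp, op_mem_prod.2 ⟨h1, h2⟩⟩
    unfold tr at this
    split_ifs at this with h3
    · exact op_ne_emp (mem_sing.1 this)
    · exact hn (mem_sep.1 this).1
  have st : ∀ X, Sb X (prod R.κ R.κ) → ∀ δ, tr δ X ≠ star := fun X hX δ e => by
    rw [tr_sub hX] at e
    exact star_not (x := δ) (y := δ) (e ▸ fun x hx => (mem_sep.1 hx).2)
  have ts : ∀ δ, tr δ (star : M) = star := fun δ => if_pos rfl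
  rcases hX with hX | rfl
  · rcases hY with hY | rfl
    · by_cases h1 : ∃ p, p ε X ∧ ¬ p ε Y
      · exact key X Y hX h1
      · refine (key Y X hY ?_).mono fun δ h => Ne.symm h
        by_contra h2
        push Not at h1 h2
        exact h (Sb.antisymm h1 h2)
    · exact Eventually.of_forall fun δ => by rw [ts]; exact st X hX δ
  · rcases hY with hY | rfl
    · exact Eventually.of_forall fun δ => by rw [ts]; exact (st Y hY δ).symm
    · exact (h rfl).elim

theorem ae_NN {S : M} (hS : CardLT 𝓔 S R.κ) (hB : ∀ x, x ε S → Cst x ∨ x ε R.B) : ∀ᶠ δ in R.nm.ae, R.NN S δ := by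
  have hcs : ∀ᶠ δ in R.nm.ae, ∀ x, x ε S → Cst x ∨ x ε R.AA.At ∧ R.AA.st x ε δ ∨ ∃ ξ ν : M, x = op R.κ (op ξ ν) ∧ ν ε δ ∧ ξ ε R.A :=
    R.nm.ae_ball hS (fun x δ : M => Cst x ∨ x ε R.AA.At ∧ R.AA.st x ε δ ∨ ∃ ξ ν : M, x = op R.κ (op ξ ν) ∧ ν ε δ ∧ ξ ε R.A) fun x hx => by
      rcases hB x hx with h | h
      · exact Eventually.of_forall fun _ => Or.inl h
      · rcases (mem_B.1 h).2 with h1 | ⟨ξ, ν, h1, h2, h3⟩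
        · filter_upwards [R.nm.ae_tail h1] with δ h2 using Or.inr (Or.inl ⟨(mem_B.1 h).1, h2⟩)
        · filter_upwards [R.nm.ae_tail h2] with δ h4 using Or.inr (Or.inr ⟨ξ, ν, h1, h4, h3⟩)
  obtain ⟨η, hη, hS'⟩ := hS
  have hS : CardLT 𝓔 S R.κ := ⟨η, hη, hS'⟩
  have hin : ∀ᶠ δ in R.nm.ae, ∀ x, x ε S → ∀ x', x' ε S → R.τ δ x = R.τ δ x' → x = x' :=
    R.nm.ae_ball hS (fun x δ : M => ∀ x' : M, x' ε S → R.τ δ x = R.τ δ x' → x = x') fun x hx =>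
      R.nm.ae_ball hS (fun x' δ : M => R.τ δ x = R.τ δ x' → x = x') fun x' hx' => by
        by_cases e : x = x'
        · exact Eventually.of_forall fun _ _ => e
        have hq : ∀ᶠ δ in R.nm.ae, ∀ ξ ν ξ' ν' : M, x = op R.κ (op ξ ν) → x' = op R.κ (op ξ' ν') → ξ ε R.A → ξ' ε R.A → tr δ (app R.i ξ) = tr δ (app R.i ξ') → ξ = ξ' := by
          by_cases hh : ∃ ξ ν ξ' ν' : M, x = op R.κ (op ξ ν) ∧ x' = op R.κ (op ξ' ν') ∧ ξ ε R.A ∧ ξ' ε R.A ∧ ξ ≠ ξ'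
          · obtain ⟨ξ, ν, ξ', ν', rfl, rfl, h1, h2, h3⟩ := hh
            filter_upwards [tr_ne (R.col ξ h1) (R.col ξ' h2) fun e => h3 (R.inj ξ ξ' h1 h2 e)] with δ h4 a b c d e1 e2 _ _ e3
            rw [op3_inj] at e1 e2
            rw [← e1.2.1, ← e2.2.1] at e3
            exact (h4 e3).elim
          · exact Eventually.of_forall fun δ a b c d h1 h2 h3 h4 _ => by_contra fun h5 => hh ⟨a, b, c, d, h1, h2, h3, h4, h5⟩
        filter_upwards [hcs, hq, R.nm.ae_mem, R.nm.ae_inacc] with δ h1 h2 hδ hi e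
        have hk := R.nm.inacc.ord
        have key : ∀ z ξ ν : M, (Cst z ∨ z ε R.AA.At ∧ R.AA.st z ε δ) → ν ε δ → ξ ε R.A → R.τ δ z ≠ R.τ δ (op R.κ (op ξ ν)) := by
          intro z ξ ν hz hν hξ e
          rw [τ_top (hk.trans hν hδ) hξ] at e
          have ha := τ_at hi hδ hν (R := R) (i := app R.i ξ)
          rcases hz with hz | ⟨hz, hz'⟩
          · rw [τ_cst hz] at e
            exact cst_not hz (e ▸ ha)
          · rw [τ_low (hk.trans hz' hδ)] at e
            rw [e, cAS_st ha] at hz'; exact eps_irrefl hz'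
        have fx : ∀ z, (Cst z ∨ z ε R.AA.At ∧ R.AA.st z ε δ) → R.τ δ z = z := fun z hz =>
          hz.elim τ_cst fun hz => τ_low (hk.trans hz.2 hδ)
        rcases or_assoc.2 (h1 x hx) with h3 | ⟨ξ, ν, rfl, h3, h4⟩
        · rcases or_assoc.2 (h1 x' hx') with h5 | ⟨ξ', ν', rfl, h5, h6⟩
          · rwa [fx x h3, fx x' h5] at e
          · exact (key _ _ _ h3 h5 h6 e).elim
        · rcases or_assoc.2 (h1 x' hx') with h5 | ⟨ξ', ν', rfl, h5, h6⟩
          · exact (key _ _ _ h5 h3 h4 e.symm).elim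
          · rw [τ_top (hk.trans h3 hδ) h4, τ_top (hk.trans h5 hδ) h6, op3_inj] at e
            rw [h2 _ _ _ _ rfl rfl h4 h6 e.2.1, e.2.2]
  filter_upwards [hcs, hin, R.nm.ae_mem, R.nm.ae_inacc, R.nm.ae_tail hη] with δ h1 h2 h3 h4 h5
    using ⟨h4, h3, ⟨η, h5, hS'⟩, h1, h2⟩

/-- For almost all `δ` reflection works on three given conditions. -/
theorem ae_ad {s t u : M} (hs : R.AA.Cond s ∧ R.AA.Su s R.B) (ht : R.AA.Cond t ∧ R.AA.Su t R.B) (hu : R.AA.Cond u ∧ R.AA.Su u R.B) :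
    ∀ᶠ δ in R.nm.ae, ∃ S, R.NN S δ ∧ R.Ad S s ∧ R.Ad S t ∧ R.Ad S u := by
  have key : ∀ s, R.AA.Cond s ∧ R.AA.Su s R.B → ∃ S, CardLT 𝓔 S R.κ ∧ (∀ x, x ε S → Cst x ∨ x ε R.B) ∧ R.Ad S s := by
    rintro s ⟨hc, hs⟩
    refine ⟨un (R.AA.supp s) (img (R.AA.supp s) (fun x => R.AA.ev s x)), R.nm.inacc.un hc.supp_lt (CardLT.mono (CardLE.img _) hc.supp_lt), fun x hx => ?_, fun x hx => ?_⟩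
    · rcases mem_un.1 hx with hx | hx
      · exact Or.inr (hs x (mem_supp.1 hx))
      · obtain ⟨y, hy, rfl⟩ := mem_img.1 hx
        have hy := mem_supp.1 hy
        have ha := by_contra fun h => hy (ev_off h)
        rcases hc.2.1.1 y ha hy with h1 | ⟨h1, h2⟩
        · exact Or.inl h1
        · exact Or.inr (mem_B.2 ⟨R.AA.ns _ h1, Or.inl (R.nm.inacc.ord.lt_of_lt h2 (mem_suc.1 (AS.st_le ha)))⟩)
    · exact ⟨mem_un.2 (Or.inl (mem_supp.2 hx)), mem_un.2 (Or.inr (mem_img.2 ⟨x, mem_supp.2 hx, rfl⟩))⟩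
  obtain ⟨S, h1, h2, h3⟩ := key s hs
  obtain ⟨T, h4, h5, h6⟩ := key t ht
  obtain ⟨U, h7, h8, h9⟩ := key u hu
  have hk := R.nm.inacc
  filter_upwards [ae_NN (hk.un h1 (hk.un h4 h7)) fun x hx => by
    rcases mem_un.1 hx with h | h
    · exact h2 x h
    · exact (mem_un.1 h).elim (h5 x) (h8 x)] with δ h
  refine ⟨_, h, fun x hx => ?_, fun x hx => ?_, fun x hx => ?_⟩ <;> simp only [mem_un]
  · exact ⟨Or.inl (h3 x hx).1, Or.inl (h3 x hx).2⟩
  · exact ⟨Or.inr (Or.inl (h6 x hx).1), Or.inr (Or.inl (h6 x hx).2)⟩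
  · exact ⟨Or.inr (Or.inr (h9 x hx).1), Or.inr (Or.inr (h9 x hx).2)⟩

/-- A choice of atoms of stage at most `δ` is almost everywhere the reflection of one atom. -/
theorem rep_atom (a : M → M) [ha : Tm (fun w : Nil M × M => a w.2)] (h : ∀ᶠ δ in R.nm.ae, Cst (a δ) ∨ a δ ε R.AA.LL δ) :
    ∃ x, (Cst x ∨ x ε R.B) ∧ ∀ᶠ δ in R.nm.ae, a δ = R.τ δ x := by
  have : T1 a := T1.of ha
  have hk := R.nm.inacc
  rcases R.nm.ae_ult (fun δ => Cst (a δ)) with h1 | h1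
  · obtain ⟨c, hc, h2⟩ := R.nm.ae_ex_small (hk.two emp (sing emp)) (fun c δ => a δ = c) (h1.mono fun δ h => ⟨_, mem_pr.2 h, rfl⟩)
    have hc : Cst c := mem_pr.1 hc
    exact ⟨c, Or.inl hc, h2.mono fun δ h => by rw [h, τ_cst hc]⟩
  have h := (h.and h1).mono fun δ h => h.1.resolve_left h.2
  rcases R.nm.ae_ult (fun δ => R.AA.st (a δ) = δ) with h2 | h2
  · have h3 : ∀ᶠ δ in R.nm.ae, ∃ ν, ν ε δ ∧ ∃ i, a δ = op δ (op i ν) := by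
      filter_upwards [h, h2] with δ h3 h4
      have h3 := (mem_LL.1 h3).1
      obtain ⟨δ', i, ν, e, hν, hc⟩ := cAS_cases h3
      rw [e] at h3
      rw [e, cAS_st h3] at h4
      subst h4
      exact ⟨ν, hν, i, e⟩
    obtain ⟨ν, hν, h3⟩ := R.nm.ae_ex (fun ν δ => ∃ i, a δ = op δ (op i ν)) h3
    have h3 : ∀ᶠ δ in R.nm.ae, a δ = op δ (op (fst (snd (a δ))) ν) ∧ (Sb (fst (snd (a δ))) (prod δ δ) ∨ fst (snd (a δ)) = star) := by
      filter_upwards [h3, h, R.nm.ae_mem] with δ ⟨i, e⟩ h5 hδ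
      have h5 := (mem_LL.1 h5).1
      rw [e] at h5 ⊢
      rw [snd_op, fst_op]
      refine ⟨rfl, (cAS_mem.1 h5).2.2.elim And.right fun h6 => ?_⟩
      exact (eps_irrefl (h6.1 ▸ hδ : R.κ ε R.κ)).elim
    obtain ⟨X, hX, h4⟩ : ∃ X, (Sb X (prod R.κ R.κ) ∨ X = star) ∧ ∀ᶠ δ in R.nm.ae, fst (snd (a δ)) = tr δ X := by
      rcases R.nm.ae_ult (fun δ => fst (snd (a δ)) = star) with h4 | h4
      · exact ⟨star, Or.inr rfl, h4.mono fun δ h => h.trans (if_pos rfl).symm⟩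
      · obtain ⟨X, hX, h5⟩ := R.nm.ae_sub (fun δ => fst (snd (a δ)))
        refine ⟨X, Or.inl hX, ?_⟩
        filter_upwards [h3, h4, h5] with δ h6 h7 h8
        rw [tr_sub hX]
        apply W6.ext; intro p
        rw [mem_sep]
        constructor
        · intro hp
          obtain ⟨x, y, hx, hy, rfl⟩ := mem_prod.1 (h6.2.resolve_right h7 p hp)
          exact ⟨(h8 x hx y hy).1 hp, op_mem_prod.2 ⟨hx, hy⟩⟩
        · rintro ⟨h9, h10⟩
          obtain ⟨x, y, hx, hy, rfl⟩ := mem_prod.1 h10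
          exact (h8 x hx y hy).2 h9
    obtain ⟨ξ, hξ, rfl⟩ := R.surj X hX
    refine ⟨op R.κ (op ξ ν), Or.inr (mem_B.2 ⟨(top_at hν hξ).1, Or.inr ⟨ξ, ν, rfl, hν, hξ⟩⟩), ?_⟩
    filter_upwards [h3, h4] with δ h5 h6
    rw [τ_top hν hξ, ← h6, ← h5.1]
  · obtain ⟨σ, hσ, h3⟩ := R.nm.ae_ex (fun σ δ => a δ ε R.AA.LL σ) (by
      filter_upwards [h, h2] with δ h3 h4
      exact ⟨_, (mem_suc.1 (mem_LL.1 h3).2).resolve_right h4, mem_LL.2 ⟨(mem_LL.1 h3).1, mem_suc.2 (Or.inr rfl)⟩⟩)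
    obtain ⟨x, hx, h4⟩ := R.nm.ae_ex_small (R.AA.small σ _ hσ R.AA.top) (fun x δ => a δ = x) (h3.mono fun δ h => ⟨_, h, rfl⟩)
    have hx := mem_LL.1 hx
    have hl := hk.ord.lt_of_le (mem_suc.1 hx.2) hσ
    exact ⟨x, Or.inr (mem_B.2 ⟨hx.1, Or.inl hl⟩), h4.mono fun δ h => by rw [h, τ_low hl]⟩
end RD
end W6
namespace W6
open ZF Filter AS
variable {M : Type u} [ZM M]
local notation "𝓔" => (ZM.E : M → M → Prop)

namespace RD
variable {R : RD M}

open Classical in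
/-- A choice of conditions of stages at most `δ` is almost everywhere the reflection of one condition. -/
theorem rep (r : M → M) [hr' : Tm (fun w : Nil M × M => r w.2)] (hr : ∀ᶠ δ in R.nm.ae, R.AA.Cond (r δ) ∧ R.AA.Su (r δ) (R.AA.LL δ)) :
    ∃ s, (R.AA.Cond s ∧ R.AA.Su s R.B) ∧ ∀ᶠ δ in R.nm.ae, r δ = R.rf δ s := by
  have : T1 r := T1.of hr'
  have hk := R.nm.inacc
  obtain ⟨θ, hθ, h1⟩ := R.nm.ae_ex (fun θ δ : M => CardLE 𝓔 (R.AA.supp (r δ)) θ) (by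
    filter_upwards [hr, R.nm.ae_inacc, R.nm.ae_mem] with δ h1 h2 h3
    exact (h1.1.2.2 δ (cAS_S.2 ⟨Or.inl h3, h2⟩)).sb fun x hx => by
      have := h1.2 x (mem_supp.1 hx)
      exact mem_sep.2 ⟨(mem_LL.1 this).1, mem_supp.1 hx, (mem_LL.1 this).2⟩)
  obtain ⟨e, -, he⟩ := ac (sep R.κ (fun δ => CardLE 𝓔 (R.AA.supp (r δ)) θ)) (fun δ f => IsInjFromTo 𝓔 f (R.AA.supp (r δ)) θ) (fun x hx => (mem_sep.1 hx).2)
  have he : ∀ᶠ δ in R.nm.ae, (∀ x, x ε R.AA.supp (r δ) → app (app e δ) x ε θ) ∧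
      ∀ x x', x ε R.AA.supp (r δ) → x' ε R.AA.supp (r δ) → app (app e δ) x = app (app e δ) x' → x = x' := by
    filter_upwards [h1, R.nm.ae_mem] with δ h2 h3 using (isInj_iff.1 (he δ (mem_sep.2 ⟨h3, h2⟩))).2
  obtain ⟨X, hX⟩ : ∃ X : M → M → M, X = fun j δ => the (fun x => x ε R.AA.supp (r δ) ∧ app (app e δ) x = j) := ⟨_, rfl⟩
  have hXT : T2 X := .of (by rw [hX]; infer_instance)
  have hX : ∀ᶠ δ in R.nm.ae, ∀ x, x ε R.AA.supp (r δ) → X (app (app e δ) x) δ = x := by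
    filter_upwards [he] with δ h2 x hx
    rw [hX]; exact the_eq ⟨hx, rfl⟩ fun z hz => h2.2 z x hz.1 hx hz.2
  obtain ⟨J, hJ⟩ : ∃ J, ∀ j, j ε J ↔ j ε θ ∧ sep R.κ (fun δ => ∃ x, x ε R.AA.supp (r δ) ∧ app (app e δ) x = j) ε R.D := ⟨sep θ (fun j => sep R.κ (fun δ => ∃ x, x ε R.AA.supp (r δ) ∧ app (app e δ) x = j) ε R.D), fun j => mem_sep⟩
  have hJs : CardLT 𝓔 J R.κ := (CardLT.of_mem hθ).sb fun j hj => ((hJ j).1 hj).1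
  have hJ1 : ∀ j, j ε J → ∀ᶠ δ in R.nm.ae, X j δ ε R.AA.supp (r δ) ∧ app (app e δ) (X j δ) = j := fun j hj => by
    filter_upwards [R.nm.ae_of ((hJ j).1 hj).2, hX] with δ ⟨x, hx, h2⟩ h3
    have := h3 x hx
    rw [h2] at this; rw [this]; exact ⟨hx, h2⟩
  have hJ2 : ∀ᶠ δ in R.nm.ae, ∀ j, j ε θ → (∃ x, x ε R.AA.supp (r δ) ∧ app (app e δ) x = j) → j ε J :=
    R.nm.ae_ball (CardLT.of_mem hθ) (fun j δ : M => (∃ x : M, x ε R.AA.supp (r δ) ∧ app (app e δ) x = j) → j ε J) fun j hj => by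
      rcases R.nm.ae_ult (fun δ => ∃ x, x ε R.AA.supp (r δ) ∧ app (app e δ) x = j) with h2 | h2
      · exact Eventually.of_forall fun _ _ => (hJ j).2 ⟨hj, R.nm.ae_iff.1 h2⟩
      · exact h2.mono fun δ h h' => (h h').elim
  obtain ⟨z, -, hz⟩ := ac J (fun j z : M => ((Cst (fst z) ∨ fst z ε R.B) ∧ (Cst (snd z) ∨ snd z ε R.B)) ∧
      sep R.κ (fun δ => X j δ = R.τ δ (fst z) ∧ R.AA.ev (r δ) (X j δ) = R.τ δ (snd z)) ε R.D) (fun j hj => by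
    obtain ⟨x, hx, h2⟩ := R.rep_atom (fun δ => X j δ) (by
      filter_upwards [hJ1 j hj, hr] with δ h3 h4 using Or.inr (h4.2 _ (mem_supp.1 h3.1)))
    obtain ⟨y, hy, h3⟩ := R.rep_atom (fun δ => R.AA.ev (r δ) (X j δ)) (by
      filter_upwards [hJ1 j hj, hr, R.nm.ae_mem] with δ h3 h4 h5
      exact ((LL_dn (hk.ord.mem h5)).ev h4.1 (h4.2 _ (mem_supp.1 h3.1))).symm)
    refine ⟨op x y, ?_⟩
    simp only [fst_op, snd_op]
    exact ⟨⟨hx, hy⟩, R.nm.ae_iff.1 (h2.and h3)⟩)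
  obtain ⟨f, hf⟩ : ∃ f : M → M, f = fun j => fst (app z j) := ⟨_, rfl⟩
  have hfT : T1 f := .of (by rw [hf]; infer_instance)
  obtain ⟨g, hg⟩ : ∃ g : M → M, g = fun j => snd (app z j) := ⟨_, rfl⟩
  have hgT : T1 g := .of (by rw [hg]; infer_instance)
  have hz : ∀ j, j ε J → ((Cst (f j) ∨ f j ε R.B) ∧ (Cst (g j) ∨ g j ε R.B)) ∧ ∀ᶠ δ in R.nm.ae, X j δ = R.τ δ (f j) ∧ R.AA.ev (r δ) (X j δ) = R.τ δ (g j) := by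
    intro j hj
    rw [hf, hg]; exact ⟨(hz j hj).1, R.nm.ae_of (hz j hj).2⟩
  clear hf hg
  have W : ∀ᶠ δ in R.nm.ae, (R.NN (un (img J f) (img J g)) δ ∧ R.AA.Cond (r δ)) ∧ (∀ y, R.AA.ev (r δ) y ≠ y → ∃ j, j ε J ∧ y = R.τ δ (f j)) ∧
      (∀ j, j ε J → R.AA.ev (r δ) (R.τ δ (f j)) = R.τ δ (g j) ∧ R.AA.ev (r δ) (R.τ δ (f j)) ≠ R.τ δ (f j)) ∧
      ∀ j j', j ε J → j' ε J → f j = f j' → j = j' := by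
    filter_upwards [hr, he, hX, hJ2, R.nm.ae_ball hJs (fun j δ : M => X j δ ε R.AA.supp (r δ) ∧ app (app e δ) (X j δ) = j) hJ1,
      R.nm.ae_ball hJs (fun j δ : M => X j δ = R.τ δ (f j) ∧ R.AA.ev (r δ) (X j δ) = R.τ δ (g j)) fun j hj => (hz j hj).2,
      ae_NN (R := R) (S := un (img J f) (img J g)) (hk.un (CardLT.mono (CardLE.img _) hJs) (CardLT.mono (CardLE.img _) hJs)) (fun x hx => by
        rcases mem_un.1 hx with hx | hx <;> obtain ⟨j, hj, rfl⟩ := mem_img.1 hx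
        · exact (hz j hj).1.1
        · exact (hz j hj).1.2)] with δ h2 h3 h4 h5 h6 h7 h8
    refine ⟨⟨h8, h2.1⟩, fun y hy => ?_, fun j hj => ?_, fun j j' hj hj' e' => ?_⟩
    · have hy := mem_supp.2 hy
      have h9 := h5 _ (h3.1 y hy) ⟨y, hy, rfl⟩
      exact ⟨_, h9, by rw [← (h7 _ h9).1, h4 y hy]⟩
    · rw [← (h7 j hj).1, (h7 j hj).2]
      exact ⟨rfl, (h7 j hj).2 ▸ mem_supp.1 (h6 j hj).1⟩
    · rw [← (h6 j hj).2, ← (h6 j' hj').2, (h7 j hj).1, (h7 j' hj').1, e']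
  have hSf : ∀ j, j ε J → f j ε un (img J f) (img J g) := fun j hj => mem_un.2 (Or.inl (mem_img.2 ⟨j, hj, rfl⟩))
  have hSg : ∀ j, j ε J → g j ε un (img J f) (img J g) := fun j hj => mem_un.2 (Or.inr (mem_img.2 ⟨j, hj, rfl⟩))
  obtain ⟨δ, ⟨⟨h8, hc⟩, ha, hb, hinj⟩⟩ := R.nm.ae_ne W
  have hfc : ∀ j, j ε J → ¬ Cst (f j) := fun j hj h => (hb j hj).2 (by rw [τ_cst h, ev_cst h])
  have hfB : ∀ j, j ε J → f j ε R.B := fun j hj => (hz j hj).1.1.resolve_left (hfc j hj)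
  obtain ⟨s, hs⟩ : ∃ s, s = lam R.AA.At (fun x => if ∃ j, j ε J ∧ x = f j then the (fun v => ∃ j, j ε J ∧ x = f j ∧ v = g j) else x) := ⟨_, rfl⟩
  have hsv : ∀ x, R.AA.ev s x = if ∃ j, j ε J ∧ x = f j then the (fun v => ∃ j, j ε J ∧ x = f j ∧ v = g j) else x := by
    rw [hs]
    refine ev_mk fun x hx => if_neg ?_
    rintro ⟨j, hj, rfl⟩
    exact hx (mem_B.1 (hfB j hj)).1
  have hs1 : ∀ j, j ε J → R.AA.ev s (f j) = g j := fun j hj => by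
    rw [hsv, if_pos ⟨j, hj, rfl⟩]
    exact the_eq ⟨j, hj, rfl, rfl⟩ fun v ⟨j', h1, h2, h3⟩ => by rw [h3, hinj j j' hj h1 h2]
  have hs2 : ∀ x, R.AA.ev s x ≠ x → ∃ j, j ε J ∧ x = f j := fun x hx => by
    by_contra h; rw [hsv, if_neg h] at hx; exact hx rfl
  have had : R.Ad (un (img J f) (img J g)) s := fun x hx => by
    obtain ⟨j, hj, rfl⟩ := hs2 x hx
    rw [hs1 j hj]
    exact ⟨hSf j hj, hSg j hj⟩
  have hsc : R.AA.Cond s := by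
    refine cond_of (hs ▸ Fn.lam) ⟨fun _ => ev_off, fun x hx h => ?_, fun x => ?_⟩ fun γ hγ => ?_
    · obtain ⟨j, hj, rfl⟩ := hs2 x h
      rw [hs1 j hj]
      obtain ⟨h1, h2⟩ := hb j hj
      have hl := mem_LL.1 (h8.st_le (hSf j hj) (hfc j hj))
      have := hc.2.1.1 _ hl.1 h2
      rw [h1] at this
      rcases h8.cases (hSg j hj) with ⟨h3, -⟩ | ⟨h3, h4, h5⟩ | ⟨h3, h4, h5, h6⟩
      · exact Or.inl h3
      · rw [h5] at this
        refine this.imp id (And.imp id fun h6 => ?_)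
        rcases h8.cases (hSf j hj) with ⟨h7, -⟩ | ⟨-, -, h7⟩ | ⟨-, h7, -⟩
        · exact (hfc j hj h7).elim
        · rwa [h7] at h6
        · rw [h7]; exact hk.ord.trans h4 h8.mem
      · rcases this with h7 | ⟨-, h7⟩
        · exact (cst_not h7 h5).elim
        · rw [h6] at h7
          rcases mem_suc.1 hl.2 with h9 | h9
          · exact (eps_asymm h7 h9).elim
          · rw [h9] at h7; exact (eps_irrefl h7).elim
    · by_cases h : R.AA.ev s x = x
      · rw [h, h]
      · obtain ⟨j, hj, rfl⟩ := hs2 x h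
        rw [hs1 j hj]
        by_contra h1
        obtain ⟨j', hj', h2⟩ := hs2 _ h1
        apply (hb j' hj').2
        rw [← h2, ← (hb j hj).1, hc.2.1.2]
    · rcases R.AA.le_top γ hγ with hγ' | rfl
      · obtain ⟨δ, ⟨⟨h8, hc⟩, ha, hb, -⟩, hδ⟩ := R.nm.ae_ne (W.and (R.nm.ae_tail hγ'))
        refine ⟨_, hc.2.2 γ hγ, fun a ha h1 h2 => mem_sep.2 ⟨ha, ?_, h2⟩⟩
        obtain ⟨j, hj, rfl⟩ := hs2 a h1
        have := (hb j hj).2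
        rwa [τ_low (hk.ord.lt_of_le (mem_suc.1 h2) hγ')] at this
      · refine ⟨_, CardLT.mono (CardLE.img (a := J) f) hJs, fun a ha h1 _ => ?_⟩
        obtain ⟨j, hj, rfl⟩ := hs2 a h1
        exact mem_img.2 ⟨j, hj, rfl⟩
  refine ⟨s, ⟨hsc, fun x hx => ?_⟩, ?_⟩
  · obtain ⟨j, hj, rfl⟩ := hs2 x hx
    exact hfB j hj
  · filter_upwards [W] with δ ⟨⟨h8, hc⟩, ha, hb, _⟩
    refine Cond.ext hc (h8.rf_cond had hsc) fun y => ?_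
    by_cases hy : R.AA.ev (r δ) y = y
    · rw [hy, h8.rf_off had]
      intro x h1 h2
      obtain ⟨j, hj, rfl⟩ := hs2 x h1
      exact (hb j hj).2 (h2 ▸ hy)
    · obtain ⟨j, hj, rfl⟩ := ha y hy
      rw [h8.rf_on had hsc (hSf j hj), hs1 j hj, (hb j hj).1]
end RD
end W6
namespace W6
open ZF
variable {M : Type u} [ZM M]
local notation "𝓔" => (ZM.E : M → M → Prop)
namespace AS
variable {𝔄 : AS M}

/-- Functions on `κ` in the extension are covered by a ground-model set of size `κ`, by the chain condition `cc`. -/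
theorem cover_top [Countable M] (G : Gen 𝔄.fp) (b ρ : M) :
    ∃ K, CardLE 𝓔 K 𝔄.κ ∧ ∀ ξ, ξ ε 𝔄.κ → (∃ β, β ε b ∧ Mm ρ G (op ξ β)) → ∃ β, β ε K ∧ Mm ρ G (op ξ β) := by
  obtain ⟨F, hF⟩ : ∃ F : M → M → Prop, F = FF 𝔄.fp ρ := ⟨_, rfl⟩
  have hFd : D2 F := ⟨by rw [hF]; infer_instance⟩
  obtain ⟨a, -, ha⟩ := ac 𝔄.κ (fun ξ A : M => Sb 𝔄.low A ∧ Sb A 𝔄.At ∧ CardLE 𝓔 A 𝔄.κ ∧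
      ∀ u w : M, (∃ β : M, β ε b ∧ F (op ξ β) w) → 𝔄.CL u w → ∃ w0 t : M, (∃ β : M, β ε b ∧ F (op ξ β) w0) ∧ 𝔄.Su w0 A ∧ 𝔄.CL t u ∧ 𝔄.CL t w0)
    (fun ξ hξ => by
      obtain ⟨A, h1, h2, h3, h4⟩ := cc (𝔄 := 𝔄) (sep 𝔄.PP (fun w : M => ∃ β : M, β ε b ∧ F (op ξ β) w)) (fun x hx => (mem_sep.1 hx).1)
      refine ⟨A, h1, h2, h3, fun u w hw hu => ?_⟩
      obtain ⟨w0, t, h5, h6⟩ := h4 u w (mem_sep.2 ⟨mem_PP.2 hu.2.1, hw⟩) hu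
      exact ⟨w0, t, (mem_sep.1 h5).2, h6⟩)
  obtain ⟨f, -, hf⟩ := ac (prod 𝔄.κ 𝔄.PP) (fun z β : M => (∃ β' : M, β' ε b ∧ F (op (fst z) β') (snd z)) → β ε b ∧ F (op (fst z) β) (snd z))
    (fun z _ => by
      by_cases h : ∃ β' : M, β' ε b ∧ F (op (fst z) β') (snd z)
      · exact ⟨h.choose, fun _ => h.choose_spec⟩
      · exact ⟨emp, fun h' => (h h').elim⟩)
  refine ⟨sep b (fun β => ∃ ξ p : M, ξ ε 𝔄.κ ∧ p ε 𝔄.PL (app a ξ) ∧ β = app f (op ξ p)), ?_, ?_⟩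
  · refine kin.union_le CardLE.rfl' (fun ξ β : M => ∃ p : M, p ε 𝔄.PL (app a ξ) ∧ β = app f (op ξ p)) ?_ ?_
    · intro y hy
      obtain ⟨-, ξ, p, h1, h2, h3⟩ := mem_sep.1 hy
      exact ⟨ξ, h1, p, h2, h3⟩
    · intro ξ hξ
      obtain ⟨h1, h2, h3, -⟩ := ha ξ hξ
      exact ⟨_, (CardLE.img (fun p => app f (op ξ p))).trans (PL_le (low_dn h1 h2) h3), fun y hy => mem_img.2 hy⟩
  · rintro ξ hξ ⟨β, hβ, hm⟩
    obtain ⟨u, hu, hu'⟩ := hm.truth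
    obtain ⟨t, ht, -, w0, h1, h2, h3⟩ := G.meet (fun t : M => ∃ w0 : M, (∃ β : M, β ε b ∧ F (op ξ β) w0) ∧ 𝔄.Su w0 (app a ξ) ∧ 𝔄.CL t w0) hu
      (fun v hv => by
        obtain ⟨w0, t, h1, h2, h3, h4⟩ := (ha ξ hξ).2.2.2 v u ⟨β, hβ, by rw [hF]; exact hu'⟩ hv
        exact ⟨t, h3, w0, h1, h2, h4⟩)
    have h5 := hf (op ξ w0) (op_mem_prod.2 ⟨hξ, mem_PP.2 h3.2.1⟩)
    rw [fst_op, snd_op] at h5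
    obtain ⟨h6, h7⟩ := h5 h1
    refine ⟨_, mem_sep.2 ⟨h6, ξ, w0, hξ, mem_PL.2 ⟨h3.2.1, h2⟩, rfl⟩, ?_⟩
    rw [hF] at h7
    exact h7.2 G (G.up _ _ h3 ht)

/-- A family of `κ⁺` subsets of `κ` in the extension is coded by one name over the ground-model `κ⁺`. -/
theorem kplus [Countable M] (G : Gen 𝔄.fp) {lam : M} (hl : Ord lam) (hn : ¬ CardLE 𝓔 lam 𝔄.κ) {l 𝒜 : VG G}
    (h1 : IsCardSuccOf (ZM.E : VG G → VG G → Prop) l (chk G 𝔄.κ)) (h2 : CardLE (ZM.E : VG G → VG G → Prop) 𝒜 l) :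
    ∃ ρ, ∀ A, A ε 𝒜 → ∃ α, α ε lam ∧ ∀ ν, ν ε 𝔄.κ → (Mm ρ G (op α ν) ↔ chk G ν ε A) := by
  have hnV : ¬ CardLE (ZM.E : VG G → VG G → Prop) (chk G lam) (chk G 𝔄.κ) := fun hc => by
    obtain ⟨g, hg1, hg2⟩ := cardLE_iff.1 hc
    obtain ⟨ρ, hρ⟩ := nm_surj (sep (prod (chk G 𝔄.κ) (chk G lam)) (fun z => app g (snd z) = fst z))
    have hm : ∀ ξ α, Mm ρ G (op ξ α) ↔ ξ ε 𝔄.κ ∧ α ε lam ∧ app g (chk G α) = chk G ξ := fun ξ α => by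
      unfold Mm; rw [← hρ, mem_sep, chk_op, fst_op, snd_op, op_mem_prod, mem_chk, mem_chk, and_assoc]
    obtain ⟨K, hK, hK'⟩ := cover_top G lam ρ
    refine hn (CardLE.trans (CardLE.sb fun α hα => ?_) hK)
    obtain ⟨ξ, hξ, e⟩ := mem_chk' (hg1 _ (mem_chk.2 hα))
    obtain ⟨β, hβ, h'⟩ := hK' ξ hξ ⟨α, hα, (hm _ _).2 ⟨hξ, hα, e⟩⟩
    obtain ⟨_, hβl, e'⟩ := (hm _ _).1 h'
    have := hg2 _ _ (mem_chk.2 hα) (mem_chk.2 hβl) (e.trans e'.symm)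
    rw [chk_inj] at this
    exact this ▸ hβ
  obtain ⟨l', h3, -, h4⟩ := exists_succ (chk_ord (G := G).2 (kin (𝔄 := 𝔄)).ord)
  have hll : l = l' := by
    rcases h1.2.2 l' h3.1 h3.2.1 with h | h
    · exact h.symm
    · exact (h3.2.2 l h1.1 h1.2.1).elim id fun h' => (eps_asymm h h').elim
  subst hll
  have hlo : Ord l := h1.1.1
  have hsb : Sb l (chk G lam) := by
    rcases hlo.tri (chk_ord.2 hl) with h | h | h
    · exact (chk_ord.2 hl).sb h
    · exact h ▸ fun _ h => h
    · exact (hnV (h4 _ h)).elim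
  obtain ⟨g, hg1, hg2⟩ := cardLE_iff.1 h2
  obtain ⟨ρ, hρ⟩ := nm_surj (sep (prod (chk G lam) (chk G 𝔄.κ)) (fun z : VG G => ∃ A : VG G, A ε 𝒜 ∧ app g A = fst z ∧ snd z ε A))
  refine ⟨ρ, fun A hA => ?_⟩
  obtain ⟨α, hα, e⟩ := mem_chk' (hsb _ (hg1 A hA))
  refine ⟨α, hα, fun ν hν => ?_⟩
  unfold Mm
  rw [← hρ, mem_sep, chk_op, fst_op, snd_op, op_mem_prod, mem_chk, mem_chk]
  constructor
  · rintro ⟨-, B, hB, h5, h6⟩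
    rwa [← hg2 B A hB hA (h5.trans e.symm)]
  · exact fun h => ⟨⟨hα, hν⟩, A, hA, e, h⟩
end AS
end W6
namespace W6
open ZF Filter AS
variable {M : Type u} [ZM M]
local notation "𝓔" => (ZM.E : M → M → Prop)

/-- The index set of the columns of stage `κ`: large enough to stay outside any given `κ⁺` of them. -/
noncomputable def LL0 (κ : M) : M := prod (un (pw (prod κ κ)) (sing star)) (pw (un (pw (prod κ κ)) (sing star)))

open Classical in
/-- `κ⁺` columns extend to a set of columns indexed bijectively by the subsets of `κ × κ` and `star`. -/
theorem RD.pre {κ lam z : M} (hκ : IsInaccessible 𝓔 κ) (hl : Ord lam) (hl' : ∀ β, β ε lam → CardLE 𝓔 β κ)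
    (hz : ∀ α, α ε lam → Sb (app z α) (LL0 κ) ∧ CardLE 𝓔 (app z α) κ) :
    ∃ A i, Sb A (LL0 κ) ∧ (∀ ξ, ξ ε A → Sb (app i ξ) (prod κ κ) ∨ app i ξ = star) ∧
      (∀ ξ ξ', ξ ε A → ξ' ε A → app i ξ = app i ξ' → ξ = ξ') ∧
      (∀ X, Sb X (prod κ κ) ∨ X = star → ∃ ξ, ξ ε A ∧ app i ξ = X) ∧
      ∀ α, α ε lam → ∀ ξ, ξ ε app z α → ξ ε A ∧ Sb (app i ξ) (prod κ κ) := by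
  obtain ⟨Q, hQ⟩ : ∃ Q, Q = un (pw (prod κ κ)) (sing star) := ⟨_, rfl⟩
  have hQm : ∀ X, X ε Q ↔ Sb X (prod κ κ) ∨ X = star := fun X => by rw [hQ, mem_un, mem_pw, mem_sing]
  have hL : LL0 κ = prod Q (pw Q) := by rw [hQ]; rfl
  rw [hL] at hz ⊢
  obtain ⟨g, hg1, hg2⟩ : ∃ g, (∀ x, x ε lam → app g x ε pw κ) ∧ ∀ x x', x ε lam → x' ε lam → app g x = app g x' → x = x' := by
    rw [← cardLE_iff]
    rcases card_cmp hl (a := pw κ) with h | ⟨γ, h1, h2⟩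
    · exact h
    · exact (cantor (h2.trans (hl' γ h1))).elim
  obtain ⟨e, -, he⟩ := ac lam (fun α f : M => (∀ x : M, x ε app z α → app f x ε κ) ∧ ∀ x x' : M, x ε app z α → x' ε app z α → app f x = app f x' → x = x')
    (fun α hα => cardLE_iff.1 (hz α hα).2)
  obtain ⟨A0, hA0⟩ : ∃ A0, A0 = sep (prod Q (pw Q)) (fun ξ : M => ∃ α : M, α ε lam ∧ ξ ε app z α) := ⟨_, rfl⟩
  have hA0m : ∀ ξ, ξ ε A0 ↔ ∃ α, α ε lam ∧ ξ ε app z α := fun ξ => by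
    rw [hA0, mem_sep]
    exact ⟨fun h => h.2, fun ⟨α, h1, h2⟩ => ⟨(hz α h1).1 _ h2, α, h1, h2⟩⟩
  have h0 : (emp : M) ε κ := hκ.ord.trans emp_om hκ.om_mem
  have h1 : sing (emp : M) ε κ := by
    have : sing (emp : M) = suc emp := ext fun x => by rw [mem_sing, mem_suc]; simp [not_mem_emp]
    rw [this]; exact hκ.suc_mem h0
  obtain ⟨C, hC⟩ : ∃ C : M → M → M, C = fun α μ => un (prod (app g α) (sing emp)) (sing (op μ (sing emp))) := ⟨_, rfl⟩
  have hCT : T2 C := T2.of (by rw [hC]; infer_instance)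
  have hCm : ∀ α μ x y, op x y ε C α μ ↔ (x ε app g α ∧ y = emp) ∨ (x = μ ∧ y = sing emp) := fun α μ x y => by
    rw [hC]; simp only [mem_un, op_mem_prod, mem_sing, op_inj]
  obtain ⟨f, hf1, hf2⟩ : ∃ f, (∀ x, x ε A0 → app f x ε pw (prod κ κ)) ∧ ∀ x x', x ε A0 → x' ε A0 → app f x = app f x' → x = x' := by
    rw [← cardLE_iff]
    refine CardLE.of_rel (fun ξ X : M => ∃ α μ : M, α ε lam ∧ ξ ε app z α ∧ app (app e α) ξ = μ ∧ X = C α μ) (fun ξ hξ => ?_) ?_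
    · obtain ⟨α, h2, h3⟩ := (hA0m ξ).1 hξ
      refine ⟨_, mem_pw.2 fun x hx => ?_, α, _, h2, h3, rfl, rfl⟩
      rw [hC] at hx
      rcases mem_un.1 hx with hx | hx
      · obtain ⟨a, b, h4, h5, rfl⟩ := mem_prod.1 hx
        rw [mem_sing.1 h5, op_mem_prod]; exact ⟨mem_pw.1 (hg1 α h2) _ h4, h0⟩
      · rw [mem_sing.1 hx, op_mem_prod]; exact ⟨(he α h2).1 _ h3, h1⟩
    · rintro ξ ξ' X - - - ⟨α, μ, h2, h3, h4, rfl⟩ ⟨α', μ', h2', h3', h4', h5⟩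
      have hα : α = α' := hg2 _ _ h2 h2' (ext fun x => by
        have := hCm α μ x emp
        rw [h5, hCm] at this
        simpa [emp_ne_sing] using this.symm)
      have hμ := (hCm α μ μ (sing emp)).2 (Or.inr ⟨rfl, rfl⟩)
      rw [h5, hCm] at hμ
      rcases hμ with hμ | hμ
      · exact (emp_ne_sing hμ.2.symm).elim
      · subst hα
        exact (he α h2).2 _ _ h3 h3' (by rw [h4, h4', hμ.1])
  obtain ⟨Y, hY, hYn⟩ : ∃ Y, Y ε pw Q ∧ ∀ ξ, ξ ε A0 → snd ξ ≠ Y := by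
    by_contra hc
    push Not at hc
    refine cantor (a := Q) (((CardLE.of_rel (b := A0) (fun Y ξ : M => snd ξ = Y) hc ?_).trans
      (cardLE_iff.2 ⟨f, hf1, hf2⟩)).trans (CardLE.sb fun x hx => (hQm x).2 (Or.inl (mem_pw.1 hx))))
    exact fun _ _ _ _ _ _ h h' => h.symm.trans h'
  obtain ⟨A, hA⟩ : ∃ A, A = sep (prod Q (pw Q)) (fun ξ : M => ξ ε A0 ∨ ∃ X : M, ξ = op X Y ∧ ∀ η : M, η ε A0 → app f η ≠ X) := ⟨_, rfl⟩
  obtain ⟨i, hi⟩ : ∃ i, i = W6.lam A (fun ξ => if ξ ε A0 then app f ξ else fst ξ) := ⟨_, rfl⟩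
  have hAm : ∀ ξ, ξ ε A ↔ ξ ε A0 ∨ ∃ X, X ε Q ∧ ξ = op X Y ∧ ∀ η, η ε A0 → app f η ≠ X := fun ξ => by
    rw [hA, mem_sep]
    constructor
    · rintro ⟨h2, h3 | ⟨X, rfl, h3⟩⟩
      · exact Or.inl h3
      · exact Or.inr ⟨X, (op_mem_prod.1 h2).1, rfl, h3⟩
    · rintro (h3 | ⟨X, h2, rfl, h3⟩)
      · exact ⟨by rw [hA0] at h3; exact (mem_sep.1 h3).1, Or.inl h3⟩
      · exact ⟨op_mem_prod.2 ⟨h2, hY⟩, Or.inr ⟨X, rfl, h3⟩⟩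
  have hn : ∀ X, ¬ op X Y ε A0 := fun X h => hYn _ h snd_op
  have hia : ∀ ξ, ξ ε A0 → app i ξ = app f ξ := fun ξ h => by rw [hi, app_lam ((hAm ξ).2 (Or.inl h)), if_pos h]
  have hib : ∀ X, op X Y ε A → app i (op X Y) = X := fun X h => by rw [hi, app_lam h, if_neg (hn X), fst_op]
  refine ⟨A, i, fun ξ h => by rw [hA] at h; exact (mem_sep.1 h).1, fun ξ h => ?_, fun ξ ξ' h h' h2 => ?_, fun X hX => ?_, fun α hα ξ hξ => ?_⟩
  · rcases (hAm ξ).1 h with h2 | ⟨X, h2, rfl, -⟩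
    · rw [hia ξ h2]; exact Or.inl (mem_pw.1 (hf1 ξ h2))
    · rw [hib X h]; exact (hQm X).1 h2
  · rcases (hAm ξ).1 h with h3 | ⟨X, h3, rfl, h4⟩ <;> rcases (hAm ξ').1 h' with h3' | ⟨X', h3', rfl, h4'⟩
    · rw [hia _ h3, hia _ h3'] at h2; exact hf2 _ _ h3 h3' h2
    · rw [hia _ h3, hib _ h'] at h2; exact (h4' _ h3 h2).elim
    · rw [hia _ h3', hib _ h] at h2; exact (h4 _ h3' h2.symm).elim
    · rw [hib _ h, hib _ h'] at h2; rw [h2]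
  · by_cases h : ∃ η, η ε A0 ∧ app f η = X
    · obtain ⟨η, h2, h3⟩ := h
      exact ⟨η, (hAm η).2 (Or.inl h2), by rw [hia η h2, h3]⟩
    · have := (hAm (op X Y)).2 (Or.inr ⟨X, (hQm X).2 hX, rfl, fun η h2 h3 => h ⟨η, h2, h3⟩⟩)
      exact ⟨_, this, hib X this⟩
  · have := (hA0m ξ).2 ⟨α, hα, hξ⟩
    exact ⟨(hAm ξ).2 (Or.inl this), by rw [hia ξ this]; exact mem_pw.1 (hf1 ξ this)⟩
end W6
namespace W6
open ZF Filter AS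
variable {M : Type u} [ZM M]
local notation "𝓔" => (ZM.E : M → M → Prop)
namespace RD
variable (R : RD M)

/-- The atoms of stage below `κ` together with the columns of stage `κ` in `Z`; thus `BZ A = B`. -/
noncomputable def BZ (Z : M) : M := sep R.AA.At (fun a => R.AA.st a = R.κ → fst (snd a) ε Z)
instance : T1 R.BZ := .of (by unfold BZ; infer_instance)

/-- The condition `p` identifies the first `δ` atoms of the column `ξ` with those of its reflection. -/
def Ms (ξ δ p : M) : Prop := ∀ ν, ν ε δ → R.AA.ev p (op R.κ (op ξ ν)) = R.τ δ (op R.κ (op ξ ν))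
instance : D3 R.Ms := ⟨by unfold Ms; infer_instance⟩

/-- The condition `p` leaves the stages up to `δ` alone. -/
def Fx (δ p : M) : Prop := ∀ x, x ε R.AA.LL δ → R.AA.ev p x = x
instance : D2 R.Fx := ⟨by unfold Fx; infer_instance⟩

variable {R}
theorem BZ_dn {Z : M} : R.AA.Dn (R.BZ Z) :=
  low_dn (fun x hx => mem_sep.2 ⟨(mem_low.1 hx).1, fun h => (eps_irrefl (h ▸ (mem_low.1 hx).2)).elim⟩) fun x hx => (mem_sep.1 hx).1
theorem BZ_mono {Z Z' : M} (h : Sb Z Z') : Sb (R.BZ Z) (R.BZ Z') := fun x hx =>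
  mem_sep.2 ⟨(mem_sep.1 hx).1, fun h' => h _ ((mem_sep.1 hx).2 h')⟩
theorem BZ_top {Z ξ ν : M} (h : op R.κ (op ξ ν) ε R.BZ Z) : ξ ε Z := by
  have := (mem_sep.1 h).2 (cAS_st (mem_sep.1 h).1)
  rwa [snd_op, fst_op] at this
theorem LL_BZ {Z δ : M} (hδ : δ ε R.κ) : Sb (R.AA.LL δ) (R.BZ Z) := fun x hx => mem_sep.2 ⟨(mem_LL.1 hx).1, fun h => by
  have := R.nm.inacc.ord.lt_of_le (mem_suc.1 (mem_LL.1 hx).2) hδ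
  rw [h] at this; exact (eps_irrefl this).elim⟩

theorem one : ∃ p, R.AA.Cond p ∧ ∀ x, R.AA.ev p x = x := by
  refine ⟨_, cond_mk (f := fun x => x) ⟨fun _ _ => rfl, fun _ _ h => (h rfl).elim, fun _ => rfl⟩ fun γ hγ => ?_, ev_mk fun _ _ => rfl⟩
  exact ⟨emp, (R.AA.inacc γ hγ).emp, fun _ _ h => (h rfl).elim⟩

theorem Fx.rst {δ p q : M} (hp : R.Fx δ p) (hq : R.Fx δ q) (hc : R.AA.Cond p) (hc' : R.AA.Cond q) (hδ : δ ε R.κ) :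
    R.AA.rst p (R.AA.LL δ) = R.AA.rst q (R.AA.LL δ) := by
  have hL := LL_dn (𝔄 := R.AA) (R.nm.inacc.ord.mem hδ)
  refine (hc.rst hL).ext (hc'.rst hL) fun x => ?_
  by_cases hx : x ε R.AA.LL δ
  · rw [ev_rst_on hx, ev_rst_on hx, hp x hx, hq x hx]
  · rw [ev_rst_off hx, ev_rst_off hx]

open Classical in
/-- The condition identifying the first `δ` atoms of each column in `N` with those of its reflection. -/
theorem master {δ N : M} (hδ : δ ε R.κ) (hi : IsInaccessible 𝓔 δ) (hN : ∀ ξ, ξ ε N → ξ ε R.A ∧ Sb (app R.i ξ) (prod R.κ R.κ))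
    (hc : CardLE 𝓔 N δ) : ∃ m, R.AA.Cond m ∧ (∀ ξ, ξ ε N → R.Ms ξ δ m) ∧
      ∀ x, R.AA.ev m x ≠ x → ∃ ξ ν, x = op R.κ (op ξ ν) ∧ ξ ε N ∧ ν ε R.κ := by
  have hk := R.nm.inacc
  obtain ⟨m0, hm0⟩ : ∃ m0, m0 = sep R.AA.At (fun x : M => ∃ ξ ν : M, ξ ε N ∧ ν ε δ ∧ x = op R.κ (op ξ ν)) := ⟨_, rfl⟩
  have hm : ∀ x, x ε m0 → ∃ ξ ν, ξ ε N ∧ ν ε δ ∧ x = op R.κ (op ξ ν) := fun x hx => by rw [hm0] at hx; exact (mem_sep.1 hx).2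
  have hδk : ∀ ν, ν ε δ → ν ε R.κ := fun ν h => hk.ord.trans h hδ
  have hat : ∀ ξ ν, ξ ε N → ν ε δ → op R.κ (op ξ ν) ε m0 ∧ R.τ δ (op R.κ (op ξ ν)) ε R.AA.NS ∧
      R.AA.st (R.τ δ (op R.κ (op ξ ν))) = δ := fun ξ ν h1 h2 => by
    rw [τ_top (hδk ν h2) (hN ξ h1).1]
    have h3 := τ_at (R := R) (i := app R.i ξ) hi hδ h2
    refine ⟨?_, cAS_ns.2 ⟨h3, Or.inr ?_⟩, cAS_st h3⟩
    · rw [hm0]; exact mem_sep.2 ⟨(top_at (hδk ν h2) (hN ξ h1).1).1, ξ, ν, h1, h2, rfl⟩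
    · rw [tr_sub (hN ξ h1).2]
      exact fun e => star_not (x := δ) (y := δ) (e ▸ fun x hx => (mem_sep.1 hx).2)
  obtain ⟨f, hf⟩ : ∃ f : M → M, f = fun x => if x ε m0 then R.τ δ x else x := ⟨_, rfl⟩
  have hfT : T1 f := T1.of (by rw [hf]; infer_instance)
  have hf0 : ∀ x, ¬ x ε m0 → f x = x := fun x h => by rw [hf]; exact if_neg h
  have hf1 : ∀ x, x ε m0 → f x = R.τ δ x := fun x h => by rw [hf]; exact if_pos h
  have hfm : ∀ x, f x ≠ x → x ε m0 := fun x h => by_contra fun h' => h (hf0 x h')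
  have hma : ∀ x, x ε m0 → x ε R.AA.At ∧ R.AA.st x = R.κ := fun x h => by
    obtain ⟨ξ, ν, h1, h2, rfl⟩ := hm x h
    exact top_at (hδk ν h2) (hN ξ h1).1
  have hg : R.AA.Good f := by
    refine ⟨fun x hx => hf0 x fun h => hx (hma x h).1, fun x hx h => ?_, fun x => ?_⟩
    · have := hfm x h
      rw [hf1 x this]
      obtain ⟨ξ, ν, h1, h2, rfl⟩ := hm x this
      obtain ⟨-, h3, h4⟩ := hat ξ ν h1 h2
      refine Or.inr ⟨h3, ?_⟩
      rw [h4, (hma _ this).2]; exact hδ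
    · by_cases h : x ε m0
      · rw [hf1 x h]
        obtain ⟨ξ, ν, h1, h2, rfl⟩ := hm x h
        refine hf0 _ fun h' => ?_
        have := (hma _ h').2
        rw [(hat ξ ν h1 h2).2.2] at this
        rw [this] at hδ; exact eps_irrefl hδ
      · rw [hf0 x h, hf0 x h]
  have hev := ev_mk (𝔄 := R.AA) hg.1
  refine ⟨lam R.AA.At f, cond_mk hg fun γ hγ => ?_, fun ξ hξ ν hν => ?_, fun x hx => ?_⟩
  · rcases (cAS_S.1 hγ).1 with h | rfl
    · refine ⟨emp, (R.AA.inacc γ hγ).emp, fun a ha h1 h2 => ?_⟩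
      rw [(hma a (hfm a h1)).2] at h2
      exact (eps_irrefl (hk.ord.lt_of_le (mem_suc.1 h2) h)).elim
    · refine ⟨img (prod N δ) (fun z => op R.κ z), CardLT.mono (CardLE.img _) (hk.prod (CardLT.mono hc (CardLT.of_mem hδ)) (CardLT.of_mem hδ)), fun a ha h1 _ => ?_⟩
      obtain ⟨ξ, ν, h3, h4, rfl⟩ := hm a (hfm a h1)
      exact mem_img.2 ⟨_, op_mem_prod.2 ⟨h3, h4⟩, rfl⟩
  · rw [hev, hf1 _ (hat ξ ν hξ hν).1]
  · rw [hev] at hx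
    obtain ⟨ξ, ν, h1, h2, rfl⟩ := hm x (hfm x hx)
    exact ⟨ξ, ν, rfl, h1, hδk ν h2⟩

/-- A directed set of conditions above stage `δ` has a lower bound that masters prescribed new columns. -/
theorem pt {δ F U N : M} (hδ : δ ε R.κ) (hi : IsInaccessible 𝓔 δ) (hF : R.AA.Dir F) (hFc : CardLE 𝓔 F δ)
    (hFu : ∀ p, p ε F → R.AA.Su p (R.BZ U) ∧ R.Fx δ p) (hN : ∀ ξ, ξ ε N → ξ ε R.A ∧ Sb (app R.i ξ) (prod R.κ R.κ))
    (hc : CardLE 𝓔 N δ) (hUN : ∀ ξ, ξ ε N → ¬ ξ ε U) : ∃ h, R.AA.Cond h ∧ R.AA.Su h (R.BZ (un U N)) ∧ R.Fx δ h ∧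
      (∀ p, p ε F → R.AA.Le h p) ∧ ∀ ξ, ξ ε N → R.Ms ξ δ h := by
  have hk := R.nm.inacc
  obtain ⟨m, h1, h2, h3⟩ := master hδ hi hN hc
  obtain ⟨p0, hp0⟩ := hF.1
  obtain ⟨h4, h5⟩ := hF.glb (size_chain (hF.2.1 p0 hp0) hδ (fun γ hγ h => CardLT.mono hFc (CardLT.of_mem h)) hF.2.1
    fun q hq => (hFu q hq).2.rst (hFu p0 hp0).2 (hF.2.1 q hq) (hF.2.1 p0 hp0) hδ)
  obtain ⟨g, hg⟩ : ∃ g, g = R.AA.glb F := ⟨_, rfl⟩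
  rw [← hg] at h4 h5
  have hgc := (h4 p0 hp0).1
  have hgu := h5 _ fun p hp => (hFu p hp).1
  have hgf : R.Fx δ g := fun x hx => by
    obtain ⟨p, hp, h6⟩ := hF.ev_glb x
    rw [hg, ← h6 p hp (Le.refl (hF.2.1 p hp))]
    exact (hFu p hp).2 x hx
  have hmB : ∀ x, x ε R.BZ U → R.AA.ev m x = x := fun x hx => by_contra fun h => by
    obtain ⟨ξ, ν, rfl, h7, -⟩ := h3 x h
    exact hUN ξ h7 (BZ_top hx)
  have hr : ∀ x, R.AA.ev (R.AA.rst m (R.BZ U)) x = x := fun x => by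
    by_cases hx : x ε R.BZ U
    · rw [ev_rst_on hx, hmB x hx]
    · exact ev_rst_off hx
  obtain ⟨h6, h7⟩ := amalg (BZ_dn (Z := U)) (r := g) (p := m) ⟨hgc, h1.rst BZ_dn, fun x => by rw [hr]⟩ h1 hgu
  refine ⟨R.AA.comp g m, h6.1, fun x hx => ?_, fun x hx => ?_, fun p hp => h7.trans (h4 p hp), fun ξ hξ ν hν => ?_⟩
  · by_cases h : R.AA.ev m x = x
    · rw [ev_comp, h] at hx
      exact BZ_mono (fun ξ h => mem_un.2 (Or.inl h)) x (hgu x hx)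
    · obtain ⟨ξ, ν, rfl, h8, h9⟩ := h3 x h
      refine mem_sep.2 ⟨(top_at h9 (hN ξ h8).1).1, fun _ => ?_⟩
      rw [snd_op, fst_op]; exact mem_un.2 (Or.inr h8)
  · rw [ev_comp, hmB x (LL_BZ hδ x hx), hgf x hx]
  · rw [ev_comp, h2 ξ hξ ν hν, τ_top (hk.ord.trans hν hδ) (hN ξ hξ).1]
    have := τ_at (R := R) (i := app R.i ξ) hi hδ hν
    exact hgf _ (mem_LL.2 ⟨this, by rw [cAS_st this]; exact mem_suc.2 (Or.inr rfl)⟩)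
end RD
end W6
namespace W6
open ZF Filter AS
variable {M : Type u} [ZM M]
local notation "𝓔" => (ZM.E : M → M → Prop)
namespace RD
variable {R : RD M}

theorem Ms.le {ξ δ p q : M} (h : R.Ms ξ δ p) (hq : R.AA.Le q p) (hf : R.Fx δ q) (hδ : δ ε R.κ) (hi : IsInaccessible 𝓔 δ)
    (hξ : ξ ε R.A) : R.Ms ξ δ q := fun ν hν => by
  rw [← hq.2.2, h ν hν, τ_top (R.nm.inacc.ord.trans hν hδ) hξ]
  have := τ_at (R := R) (i := app R.i ξ) hi hδ hν
  exact hf _ (mem_LL.2 ⟨this, by rw [cAS_st this]; exact mem_suc.2 (Or.inr rfl)⟩)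

/-- The requirements on `h` at the index `α`: it lives above stage `δ`, and `D (α, δ)` is decided below it by
conditions of stages up to `δ`. -/
def Dc (D : M → M → Prop) (α δ h : M) : Prop := R.AA.Cond h ∧ R.Fx δ h ∧
  ∀ r, R.AA.Cond r → R.AA.Su r (R.AA.LL δ) → ∃ r', R.AA.Le r' r ∧ R.AA.Su r' (R.AA.LL δ) ∧ D (op α δ) (R.AA.comp r' h)
instance {D : M → M → Prop} [D2 D] : D3 (R.Dc D) := ⟨by unfold Dc; infer_instance⟩

theorem seq {lam z : M} (hl : Ord lam) (hl' : ∀ β, β ε lam → CardLE 𝓔 β R.κ)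
    (hz : ∀ α, α ε lam → (∀ ξ, ξ ε app z α → ξ ε R.A ∧ Sb (app R.i ξ) (prod R.κ R.κ)) ∧ CardLE 𝓔 (app z α) R.κ)
    (D : M → M → Prop) [D2 D] (hop : ∀ x t t', D x t → R.AA.Le t' t → D x t')
    (hden : ∀ α δ Z t, α ε lam → δ ε R.κ → Sb (app z α) Z → R.AA.Cond t → R.AA.Su t (R.BZ Z) →
      ∃ t', R.AA.Le t' t ∧ R.AA.Su t' (R.BZ Z) ∧ D (op α δ) t') :
    ∃ h, ∀ α, α ε lam → (∀ δ, δ ε R.κ → R.Dc D α δ (app (app h α) δ)) ∧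
      (∀ ξ, ξ ε app z α → ∀ᶠ δ in R.nm.ae, R.Ms ξ δ (app (app h α) δ)) ∧
      ∀ γ, γ ε α → ∀ᶠ δ in R.nm.ae, R.AA.Le (app (app h α) δ) (app (app h γ) δ) := by
  have hk := R.nm.inacc
  obtain ⟨s, -, hs⟩ := rs hl (Y := prod (pw R.A) (pw (prod R.κ R.AA.PP))) (fun α s y : M =>
    (CardLE 𝓔 (fst y) R.κ ∧ Sb (app z α) (fst y) ∧ ∀ ξ : M, ξ ε fst y → ξ ε R.A) ∧
    (∀ δ : M, δ ε R.κ → R.Dc D α δ (app (snd y) δ) ∧ R.AA.Su (app (snd y) δ) (R.BZ (fst y))) ∧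
    (∀ ξ : M, ξ ε fst y → sep R.κ (fun δ : M => R.Ms ξ δ (app (snd y) δ)) ε R.D) ∧
    ∀ γ : M, γ ε α → sep R.κ (fun δ : M => R.AA.Le (app (snd y) δ) (app (snd (app s γ)) δ)) ε R.D) (fun α s hα _ hs => by
      obtain ⟨U, hU⟩ : ∃ U, U = sep R.A (fun ξ : M => ∃ γ : M, γ ε α ∧ ξ ε fst (app s γ)) := ⟨_, rfl⟩
      obtain ⟨N, hN⟩ : ∃ N, N = sep (app z α) (fun ξ : M => ¬ ξ ε U) := ⟨_, rfl⟩
      have hNz : ∀ ξ, ξ ε N → ξ ε app z α ∧ ¬ ξ ε U := fun ξ h => by rw [hN] at h; exact mem_sep.1 h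
      have hUm : ∀ ξ γ, γ ε α → ξ ε fst (app s γ) → ξ ε U := fun ξ γ h1 h2 => by
        rw [hU]; exact mem_sep.2 ⟨(hs γ h1).2.1.2.2 ξ h2, γ, h1, h2⟩
      have hUm' : ∀ ξ, ξ ε U → ξ ε R.A ∧ ∃ γ, γ ε α ∧ ξ ε fst (app s γ) := fun ξ h => by rw [hU] at h; exact mem_sep.1 h
      have hUc : CardLE 𝓔 U R.κ := hk.union_le (hl' α hα) (fun γ ξ : M => ξ ε fst (app s γ)) (fun ξ h => (hUm' ξ h).2)
        fun γ hγ => ⟨_, (hs γ hγ).2.1.1, fun _ h => h⟩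
      have hNc : CardLE 𝓔 N R.κ := (CardLE.sb fun ξ h => (hNz ξ h).1).trans (hz α hα).2
      obtain ⟨e, he1, he2⟩ := cardLE_iff.1 (hl' α hα)
      obtain ⟨e', he1', he2'⟩ := cardLE_iff.1 hNc
      obtain ⟨Gd, hGd⟩ : ∃ Gd : M → Prop, Gd = fun δ => IsInaccessible 𝓔 δ ∧ ∀ γ γ' : M, γ ε α → γ' ε γ → app e γ ε δ → app e γ' ε δ →
        R.AA.Le (app (snd (app s γ)) δ) (app (snd (app s γ')) δ) := ⟨_, rfl⟩
      have hGD : D1 Gd := ⟨by rw [hGd]; infer_instance⟩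
      have hao := hl.mem hα
      have hgood : ∀ᶠ δ in R.nm.ae, Gd δ := by
        have h1 : ∀ᶠ δ in R.nm.ae, ∀ i, i ε δ → ∀ j, j ε δ → ∀ γ γ', γ ε α → γ' ε γ → app e γ = i → app e γ' = j →
            R.AA.Le (app (snd (app s γ)) δ) (app (snd (app s γ')) δ) := by
          refine R.nm.ae_diag (fun i δ : M => ∀ j : M, j ε δ → ∀ γ γ' : M, γ ε α → γ' ε γ → app e γ = i → app e γ' = j →
            R.AA.Le (app (snd (app s γ)) δ) (app (snd (app s γ')) δ)) fun i _ =>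
            R.nm.ae_diag (fun j δ : M => ∀ γ γ' : M, γ ε α → γ' ε γ → app e γ = i → app e γ' = j →
            R.AA.Le (app (snd (app s γ)) δ) (app (snd (app s γ')) δ)) fun j _ => ?_
          by_cases h : ∃ γ γ', γ ε α ∧ γ' ε γ ∧ app e γ = i ∧ app e γ' = j
          · obtain ⟨γ, γ', h1, h2, rfl, rfl⟩ := h
            have h3 := (hs γ h1).2.2.2.2 γ' h2
            rw [app_res h2] at h3
            filter_upwards [R.nm.ae_of h3] with δ hδ γ1 γ2 h4 h5 h6 h7
            have := he2 _ _ h4 h1 h6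
            subst this
            rwa [he2 _ _ (hao.trans h5 h4) (hao.trans h2 h4) h7]
          · exact Eventually.of_forall fun δ γ γ' h1 h2 h3 h4 => (h ⟨γ, γ', h1, h2, h3, h4⟩).elim
        filter_upwards [h1, R.nm.ae_inacc] with δ h2 h3
        rw [hGd]
        exact ⟨h3, fun γ γ' h4 h5 h6 h7 => h2 _ h6 _ h7 γ γ' h4 h5 rfl rfl⟩
      have hsd : ∀ γ, γ ε α → ∀ δ, δ ε R.κ → R.Dc D γ δ (app (snd (app s γ)) δ) ∧ R.AA.Su (app (snd (app s γ)) δ) (R.BZ (fst (app s γ))) :=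
        fun γ h => (hs γ h).2.2.1
      obtain ⟨h, -, hh⟩ := ac R.κ (fun δ h : M => (R.Dc D α δ h ∧ R.AA.Su h (R.BZ (un U N))) ∧
          (Gd δ → (∀ γ : M, γ ε α → app e γ ε δ → R.AA.Le h (app (snd (app s γ)) δ)) ∧ ∀ ξ : M, ξ ε N → app e' ξ ε δ → R.Ms ξ δ h)) (fun δ hδ => by
        obtain ⟨o, ho, ho'⟩ := one (R := R)
        obtain ⟨h0, a1, a2, a3, a4⟩ : ∃ h0, R.AA.Cond h0 ∧ R.AA.Su h0 (R.BZ (un U N)) ∧ R.Fx δ h0 ∧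
          (Gd δ → (∀ γ : M, γ ε α → app e γ ε δ → R.AA.Le h0 (app (snd (app s γ)) δ)) ∧ ∀ ξ : M, ξ ε N → app e' ξ ε δ → R.Ms ξ δ h0) := by
          by_cases hg : Gd δ
          swap
          · exact ⟨o, ho, fun x hx => (hx (ho' x)).elim, fun x _ => ho' x, fun h => (hg h).elim⟩
          rw [hGd] at hg
          obtain ⟨hi, hg⟩ := hg
          obtain ⟨F0, hF0⟩ : ∃ F0, F0 = img (sep α (fun γ => app e γ ε δ)) (fun γ => app (snd (app s γ)) δ) := ⟨_, rfl⟩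
          have hFm : ∀ p, p ε F0 ↔ ∃ γ, (γ ε α ∧ app e γ ε δ) ∧ p = app (snd (app s γ)) δ := fun p => by
            rw [hF0, mem_img]; simp only [mem_sep]
          have hso : ∀ p, R.AA.Cond p → R.AA.Le p o := fun p hp => ⟨hp, ho, fun x => by rw [ho']⟩
          have hFc : ∀ p, p ε un (sing o) F0 → R.AA.Cond p := fun p hp => by
            rcases mem_un.1 hp with h | h
            · rw [mem_sing.1 h]; exact ho
            · obtain ⟨γ, h1, rfl⟩ := (hFm p).1 h
              exact (hsd γ h1.1 δ hδ).1.1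
          have hdir : R.AA.Dir (un (sing o) F0) := by
            refine ⟨⟨o, mem_un.2 (Or.inl (mem_sing.2 rfl))⟩, hFc, fun p q hp hq => ?_⟩
            have hp' := hFc p hp
            have hq' := hFc q hq
            rcases mem_un.1 hp with h | h
            · rw [mem_sing.1 h]; exact ⟨q, hq, hso q hq', Le.refl hq'⟩
            rcases mem_un.1 hq with h' | h'
            · rw [mem_sing.1 h']; exact ⟨p, hp, Le.refl hp', hso p hp'⟩
            obtain ⟨γ, h1, rfl⟩ := (hFm p).1 h
            obtain ⟨γ', h1', rfl⟩ := (hFm q).1 h'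
            rcases (hao.mem h1.1).tri (hao.mem h1'.1) with h2 | h2 | h2
            · exact ⟨_, hq, hg _ _ h1'.1 h2 h1'.2 h1.2, Le.refl hq'⟩
            · rw [h2]; exact ⟨_, hq, Le.refl hq', Le.refl hq'⟩
            · exact ⟨_, hp, Le.refl hp', hg _ _ h1.1 h2 h1.2 h1'.2⟩
          obtain ⟨h0, b1, b2, b3, b4, b5⟩ := pt (U := U) (N := sep N (fun ξ => app e' ξ ε δ)) hδ hi hdir
            (hi.un_le ((hi.sing o).cardLE hi.ord) (by
              rw [hF0]
              exact (CardLE.img _).trans (CardLE.of (fun γ => app e γ) (fun γ h => (mem_sep.1 h).2)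
                fun γ γ' h h' => he2 γ γ' (mem_sep.1 h).1 (mem_sep.1 h').1)))
            (fun p hp => by
              rcases mem_un.1 hp with h | h
              · rw [mem_sing.1 h]; exact ⟨fun x hx => (hx (ho' x)).elim, fun x _ => ho' x⟩
              · obtain ⟨γ, h1, rfl⟩ := (hFm p).1 h
                have := hsd γ h1.1 δ hδ
                exact ⟨fun x hx => BZ_mono (hUm · γ h1.1) x (this.2 x hx), this.1.2.1⟩)
            (fun ξ h => (hz α hα).1 ξ (hNz ξ (mem_sep.1 h).1).1)
            (CardLE.of (fun γ => app e' γ) (fun γ h => (mem_sep.1 h).2) fun γ γ' h h' => he2' γ γ' (mem_sep.1 h).1 (mem_sep.1 h').1)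
            (fun ξ h => (hNz ξ (mem_sep.1 h).1).2)
          exact ⟨h0, b1, fun x hx => BZ_mono (fun ξ h => mem_un.2 ((mem_un.1 h).imp id fun h => (mem_sep.1 h).1)) x (b2 x hx), b3,
            fun _ => ⟨fun γ h1 h2 => b4 _ (mem_un.2 (Or.inr ((hFm _).2 ⟨γ, ⟨h1, h2⟩, rfl⟩))), fun ξ h1 h2 => b5 ξ (mem_sep.2 ⟨h1, h2⟩)⟩⟩
        obtain ⟨q, c1, c2, c3, c4⟩ := DL (𝔄 := R.AA) (X := sing (op α δ)) (B := R.BZ (un U N)) hδ (LL_BZ hδ)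
          (fun γ hγ _ => (R.AA.inacc γ hγ).sing _) D a1 a2 (fun x t hx ht hu => by
            rw [mem_sing.1 hx]
            refine hden α δ _ t hα hδ (fun ξ h => mem_un.2 ?_) ht.1 hu
            by_cases h' : ξ ε U
            · exact Or.inl h'
            · right; rw [hN]; exact mem_sep.2 ⟨h, h'⟩) (fun x t t' _ h h' _ => hop x t t' h h')
        have hq : R.Fx δ q := fun x hx => by rw [← ev_rst_on hx, c3, ev_rst_on hx, a3 x hx]
        refine ⟨q, ⟨⟨c1.1, hq, fun r hr hr' => c4 _ r (mem_sing.2 rfl) ⟨hr, a1.rst (LL_dn (hk.ord.mem hδ)), fun x => ?_⟩ hr'⟩, c2⟩, fun hg => ?_⟩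
        · by_cases hx : x ε R.AA.LL δ
          · rw [ev_rst_on hx, a3 x hx]
          · rw [ev_rst_off hx]
        · obtain ⟨a5, a6⟩ := a4 hg
          rw [hGd] at hg
          exact ⟨fun γ h1 h2 => c1.trans (a5 γ h1 h2), fun ξ h1 h2 => (a6 ξ h1 h2).le c1 hq hδ hg.1 ((hz α hα).1 ξ (hNz ξ h1).1).1⟩)
      have hle : ∀ γ, γ ε α → ∀ᶠ δ in R.nm.ae, R.AA.Le (app h δ) (app (snd (app s γ)) δ) := fun γ hγ => by
        filter_upwards [R.nm.ae_mem, hgood, R.nm.ae_tail (he1 γ hγ)] with δ h1 h2 h3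
        exact ((hh δ h1).2 h2).1 γ hγ h3
      have hh' : ∀ δ, δ ε R.κ → app (W6.lam R.κ (fun δ => app h δ)) δ = app h δ := fun δ h => app_lam h
      obtain ⟨h', eh⟩ : ∃ h', h' = W6.lam R.κ (fun δ => app h δ) := ⟨_, rfl⟩
      rw [← eh] at hh'
      refine ⟨op (un U N) h', op_mem_prod.2 ⟨mem_pw.2 fun ξ hξ => ?_, mem_pw.2 fun x hx => ?_⟩, ?_⟩
      · exact (mem_un.1 hξ).elim (fun h => (hUm' ξ h).1) fun h => ((hz α hα).1 ξ (hNz ξ h).1).1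
      · rw [eh] at hx
        obtain ⟨δ, hδ, rfl⟩ := mem_lam.1 hx
        exact op_mem_prod.2 ⟨hδ, mem_PP.2 (hh δ hδ).1.1.1⟩
      · rw [fst_op, snd_op]
        refine ⟨⟨hk.un_le hUc hNc, fun ξ h => mem_un.2 ?_, fun ξ hξ => (mem_un.1 hξ).elim (fun h => (hUm' ξ h).1) fun h => ((hz α hα).1 ξ (hNz ξ h).1).1⟩,
          fun δ hδ => by rw [hh' δ hδ]; exact (hh δ hδ).1, fun ξ hξ => R.nm.ae_iff.1 ?_, fun γ hγ => R.nm.ae_iff.1 ?_⟩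
        · by_cases h' : ξ ε U
          · exact Or.inl h'
          · right; rw [hN]; exact mem_sep.2 ⟨h, h'⟩
        · rcases mem_un.1 hξ with h1 | h1
          · obtain ⟨h2, γ, h3, h4⟩ := hUm' ξ h1
            filter_upwards [hle γ h3, R.nm.ae_of ((hs γ h3).2.2.2.1 ξ h4), R.nm.ae_mem, R.nm.ae_inacc] with δ h5 h6 h7 h8
            rw [hh' δ h7]
            exact h6.le h5 (hh δ h7).1.1.2.1 h7 h8 h2
          · filter_upwards [R.nm.ae_mem, hgood, R.nm.ae_tail (he1' ξ h1)] with δ h2 h3 h4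
            rw [hh' δ h2]
            exact ((hh δ h2).2 h3).2 ξ h1 h4
        · filter_upwards [hle γ hγ, R.nm.ae_mem] with δ h1 h2
          rwa [hh' δ h2])
  refine ⟨W6.lam lam (fun α => snd (app s α)), fun α hα => ?_⟩
  have hsα := (hs α hα).2
  rw [app_lam hα]
  refine ⟨fun δ hδ => (hsα.2.1 δ hδ).1, fun ξ hξ => R.nm.ae_of (hsα.2.2.1 ξ (hsα.1.2.1 ξ hξ)), fun γ hγ => ?_⟩
  have := hsα.2.2.2 γ hγ
  rw [app_res hγ] at this
  rw [app_lam (hl.trans hγ hα)]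
  exact R.nm.ae_of this
end RD
end W6
namespace W6
open ZF Filter AS
variable {M : Type u} [ZM M]
local notation "𝓔" => (ZM.E : M → M → Prop)

/-- The set of truth values: the empty set stands for truth. -/
noncomputable def Two : M := pr emp (sing emp)
theorem mem_Two {b : M} : b ε Two ↔ b = emp ∨ b = sing emp := mem_pr

namespace AS
variable {𝔄 : AS M}

variable (𝔄) in
/-- `p` forces that the truth value of `x ∈ ρ` is `b`. -/
def FE (ρ b x p : M) : Prop := (b = emp → FF 𝔄.fp ρ x p) ∧ (b ≠ emp → FN 𝔄.fp ρ x p)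
instance [Countable M] : D4 𝔄.FE := ⟨by unfold FE; infer_instance⟩
variable (𝔄) in
/-- `p` decides `x ∈ ρ`. -/
def DE (ρ x p : M) : Prop := ∃ b, b ε Two ∧ 𝔄.FE ρ b x p
instance [Countable M] : D3 𝔄.DE := ⟨by unfold DE; infer_instance⟩
instance [Countable M] {ρ : M} : D2 (𝔄.DE ρ) := ⟨inferInstance⟩
/-- The truth value of `x ∈ ρ` is `b`. -/
def Me (ρ b : M) (G : Gen 𝔄.fp) (x : M) : Prop := (b = emp → Mm ρ G x) ∧ (b ≠ emp → ¬ Mm ρ G x)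

variable {ρ b b' x p q : M}
theorem FE.mono (h : 𝔄.FE ρ b x p) (h' : 𝔄.CL q p) : 𝔄.FE ρ b x q := ⟨fun e => (h.1 e).mono h', fun e => (h.2 e).mono h'⟩
theorem FE.cond (h : 𝔄.FE ρ b x p) : 𝔄.Cond p := by
  by_cases e : b = emp
  · exact mem_PP.1 (h.1 e).1
  · exact mem_PP.1 (h.2 e).1
theorem FE.decide [Countable M] (hp : 𝔄.Cond p) : ∃ q b, 𝔄.CL q p ∧ b ε Two ∧ 𝔄.FE ρ b x q := by
  obtain ⟨q, hq, h | h⟩ := FF.decide (𝔽 := 𝔄.fp) (ρ := ρ) (x := x) (mem_PP.2 hp)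
  · exact ⟨q, emp, hq, mem_Two.2 (Or.inl rfl), fun _ => h, fun e => (e rfl).elim⟩
  · exact ⟨q, sing emp, hq, mem_Two.2 (Or.inr rfl), fun e => (emp_ne_sing e.symm).elim, fun _ => h⟩
theorem FE.uniq [Countable M] (h : 𝔄.FE ρ b x p) (h' : 𝔄.FE ρ b' x p) (hb : b ε Two) (hb' : b' ε Two) : b = b' := by
  rcases mem_Two.1 hb with rfl | rfl <;> rcases mem_Two.1 hb' with rfl | rfl
  · rfl
  · exact ((h.1 rfl).not (h'.2 emp_ne_sing.symm)).elim
  · exact ((h'.1 rfl).not (h.2 emp_ne_sing.symm)).elim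
  · rfl
theorem Me.truth {G : Gen 𝔄.fp} (h : ¬ Me ρ b G x) (hb : b ε Two) : ∃ p b', G.S p ∧ b' ε Two ∧ b' ≠ b ∧ 𝔄.FE ρ b' x p := by
  by_cases hm : Mm ρ G x
  · obtain ⟨p, hp, h'⟩ := hm.truth
    exact ⟨p, emp, hp, mem_Two.2 (Or.inl rfl), fun e => h ⟨fun _ => hm, fun h' => (h' e.symm).elim⟩, fun _ => h', fun e => (e rfl).elim⟩
  · obtain ⟨p, hp, h'⟩ := Mm.truth' hm
    exact ⟨p, sing emp, hp, mem_Two.2 (Or.inr rfl), fun e => h ⟨fun h' => (emp_ne_sing (h' ▸ e).symm).elim, fun _ => hm⟩,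
      fun e => (emp_ne_sing e.symm).elim, fun _ => h'⟩

/-- For every `α` at most `κ` columns of stage `κ` suffice to decide all `(α, ν) ∈ ρ`. -/
theorem cols [Countable M] {κ Λ : M} (hκ : IsInaccessible 𝓔 κ) (ρ lam : M) : ∃ z, ∀ α, α ε lam → (Sb (app z α) Λ ∧ CardLE 𝓔 (app z α) κ) ∧
    ∀ ν b, ν ε κ → b ε Two → ∀ u w, (cAS hκ Λ).FE ρ b (op α ν) w → (cAS hκ Λ).CL u w → ∃ w0 t, (cAS hκ Λ).FE ρ b (op α ν) w0 ∧
      (∀ x, (cAS hκ Λ).ev w0 x ≠ x → (cAS hκ Λ).st x = κ → fst (snd x) ε app z α) ∧ (cAS hκ Λ).CL t u ∧ (cAS hκ Λ).CL t w0 := by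
  obtain ⟨𝔄, h𝔄⟩ : ∃ 𝔄, 𝔄 = cAS hκ Λ := ⟨_, rfl⟩
  obtain ⟨c, -, hc⟩ := ac (prod lam (prod κ Two)) (fun y A : M => Sb A 𝔄.At ∧ CardLE 𝓔 A κ ∧ ∀ u w : M, 𝔄.FE ρ (snd (snd y)) (op (fst y) (fst (snd y))) w →
    𝔄.CL u w → ∃ w0 t : M, 𝔄.FE ρ (snd (snd y)) (op (fst y) (fst (snd y))) w0 ∧ 𝔄.Su w0 A ∧ 𝔄.CL t u ∧ 𝔄.CL t w0) (fun y hy => by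
    obtain ⟨A, -, h1, h2, h3⟩ := 𝔄.cc (sep 𝔄.PP (fun w => 𝔄.FE ρ (snd (snd y)) (op (fst y) (fst (snd y))) w)) fun x hx => (mem_sep.1 hx).1
    refine ⟨A, h1, by rw [h𝔄] at h2; exact h2, fun u w h h' => ?_⟩
    obtain ⟨w0, t, h4, h5⟩ := h3 u w (mem_sep.2 ⟨mem_PP.2 h.cond, h⟩) h'
    exact ⟨w0, t, (mem_sep.1 h4).2, h5⟩)
  refine ⟨W6.lam lam (fun α => sep Λ (fun ξ => ∃ y x : M, y ε prod κ Two ∧ x ε app c (op α y) ∧ ξ = fst (snd x))), fun α hα => ?_⟩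
  rw [app_lam hα]
  refine ⟨⟨fun x hx => (mem_sep.1 hx).1, hκ.union_le (a := prod κ Two) ?_ (fun y ξ : M => ∃ x : M, x ε app c (op α y) ∧ ξ = fst (snd x)) (fun ξ h => ?_) fun y hy => ?_⟩, ?_⟩
  · exact (CardLE.prod .rfl' ((hκ.two _ _).cardLE hκ.ord)).trans hκ.sq
  · obtain ⟨-, y, x, h1, h2, h3⟩ := mem_sep.1 h; exact ⟨y, h1, x, h2, h3⟩
  · exact ⟨img (app c (op α y)) (fun x => fst (snd x)), (CardLE.img _).trans (hc _ (op_mem_prod.2 ⟨hα, hy⟩)).2.1, fun ξ h => mem_img.2 h⟩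
  · intro ν b hν hb u w h1 h2
    have hy : op ν b ε prod κ Two := op_mem_prod.2 ⟨hν, hb⟩
    have h0 := hc _ (op_mem_prod.2 ⟨hα, hy⟩)
    rw [fst_op, snd_op, fst_op, snd_op] at h0
    rw [← h𝔄] at h1 h2 ⊢
    obtain ⟨w0, t, h3, h4, h5⟩ := h0.2.2 u w h1 h2
    refine ⟨w0, t, h3, fun x hx e => mem_sep.2 ⟨?_, _, x, hy, h4 x hx, rfl⟩, h5⟩
    have := h0.1 x (h4 x hx)
    rw [h𝔄] at this e
    obtain ⟨δ, i, ν, rfl, h6, h7⟩ := cAS_cases this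
    rw [cAS_st this] at e
    subst e
    rw [snd_op, fst_op]
    exact h7.2.elim (fun h => (eps_irrefl h.1).elim) (·.2)
end AS
end W6
namespace W6
open ZF Filter AS
variable {M : Type u} [ZM M]
local notation "𝓔" => (ZM.E : M → M → Prop)
namespace RD
variable {R : RD M}

theorem top_ns {x : M} (h : x ε R.AA.At) (e : R.AA.st x = R.κ) : x ε R.AA.NS := by
  obtain ⟨δ, i, ν, rfl, -, -⟩ := cAS_cases h
  rw [cAS_st h] at e
  exact cAS_ns.2 ⟨h, Or.inl e⟩

theorem NN.rf_cl {S δ s t : M} (H : R.NN S δ) (hs : R.Ad S s) (ht : R.Ad S t) (h : R.AA.CL s t) : R.AA.CL (R.rf δ s) (R.rf δ t) := by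
  have key : ∀ y, R.AA.ev (R.rf δ s) (R.AA.ev (R.rf δ t) y) ≠ R.AA.ev (R.rf δ s) y → y ε R.AA.At ∧ R.AA.ev s (R.AA.ev t y) ≠ R.AA.ev s y := by
    intro y hy
    obtain ⟨x, h2, h3, rfl⟩ := H.rf_moved ht h.2.1 (y := y) fun e => hy (by rw [e])
    rw [H.rf_on ht h.2.1 h2, H.rf_on hs h.1 h2, H.rf_on hs h.1 (H.ad_mem ht h.2.1 h2)] at hy
    have hne : R.AA.ev s (R.AA.ev t x) ≠ R.AA.ev s x := fun e => hy (by rw [e])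
    have hx : x ε R.AA.At := by_contra fun h => h3 (ev_off h)
    rcases H.cases h2 with h | h | h'
    · exact (cst_not h.1 hx).elim
    · rw [h.2.2]; exact ⟨hx, hne⟩
    · exact (hne (h.2.2.1 x (top_ns hx h'.2.1))).elim
  exact ⟨H.rf_cond hs h.1, H.rf_cond ht h.2.1, fun x hx => by_contra fun e => (key x e).2 (h.2.2.1 x hx), fun γ => (h.2.2.2 γ).sb fun x hx => by
    obtain ⟨h1, h2, h3⟩ := mem_sep.1 hx
    exact mem_sep.2 ⟨h1, h2, (key x h3).2⟩⟩

theorem Fx.amalg {δ r p : M} (h : R.Fx δ p) (hp : R.AA.Cond p) (hδ : Ord δ) (hr : R.AA.Cond r) (hs : R.AA.Su r (R.AA.LL δ)) :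
    R.AA.Le (R.AA.comp r p) p ∧ R.AA.Le (R.AA.comp r p) r :=
  AS.amalg (LL_dn hδ) ⟨hr, hp.rst (LL_dn hδ), fun x => by
    by_cases hx : x ε R.AA.LL δ
    · rw [ev_rst_on hx, h x hx]
    · rw [ev_rst_off hx]⟩ hp hs

variable (R) in
/-- A sequence of names for subsets of `κ`, coded by `ρ`, with the columns `z α` that it depends on and with master
conditions `h α δ` deciding the reflected names. -/
structure Sq (ρ lam z h : M) : Prop where
  ord : Ord lam
  small : ∀ β, β ε lam → CardLE (ZM.E : M → M → Prop) β R.κ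
  notle : ¬ CardLE (ZM.E : M → M → Prop) lam R.κ
  zA : ∀ α, α ε lam → Sb (app z α) R.A
  cc : ∀ α ν b, α ε lam → ν ε R.κ → b ε Two → ∀ u w, R.AA.FE ρ b (op α ν) w → R.AA.CL u w → ∃ w0 t, R.AA.FE ρ b (op α ν) w0 ∧
      R.AA.Su w0 (R.BZ (app z α)) ∧ R.AA.CL t u ∧ R.AA.CL t w0
  dc : ∀ α, α ε lam → ∀ δ, δ ε R.κ → R.Dc (R.AA.DE ρ) α δ (app (app h α) δ)
  ms : ∀ α, α ε lam → ∀ ξ, ξ ε app z α → ∀ᶠ δ in R.nm.ae, R.Ms ξ δ (app (app h α) δ)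
  le : ∀ α, α ε lam → ∀ γ, γ ε α → ∀ᶠ δ in R.nm.ae, R.AA.Le (app (app h α) δ) (app (app h γ) δ)

theorem Sq.exists [Countable M] {κ D lam : M} (nm : NM κ D) (hl : Ord lam) (hl' : ∀ β, β ε lam → CardLE 𝓔 β κ) (hn : ¬ CardLE 𝓔 lam κ) (ρ : M) :
    ∃ A i hA col inj surj z h, Sq ⟨κ, D, LL0 κ, A, i, nm, hA, col, inj, surj⟩ ρ lam z h := by
  obtain ⟨z, hz⟩ := AS.cols (Λ := LL0 κ) nm.inacc ρ lam
  obtain ⟨A, i, h1, h2, h3, h4, h5⟩ := pre nm.inacc hl hl' fun α hα => (hz α hα).1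
  obtain ⟨R, hR⟩ : ∃ R : RD M, R = ⟨κ, D, LL0 κ, A, i, nm, h1, h2, h3, h4⟩ := ⟨_, rfl⟩
  have hcc : ∀ α ν b, α ε lam → ν ε R.κ → b ε Two → ∀ u w, R.AA.FE ρ b (op α ν) w → R.AA.CL u w → ∃ w0 t, R.AA.FE ρ b (op α ν) w0 ∧
      R.AA.Su w0 (R.BZ (app z α)) ∧ R.AA.CL t u ∧ R.AA.CL t w0 := by
    subst hR
    intro α ν b hα hν hb u w h6 h7
    obtain ⟨w0, t, h8, h9, h10⟩ := (hz α hα).2 ν b hν hb u w h6 h7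
    exact ⟨w0, t, h8, fun x hx => mem_sep.2 ⟨by_contra fun h => hx (ev_off h), h9 x hx⟩, h10⟩
  obtain ⟨h, hh⟩ := R.seq (z := z) hl (by subst hR; exact hl') (by subst hR; exact fun α hα => ⟨h5 α hα, (hz α hα).1.2⟩)
    (R.AA.DE ρ) (fun x t t' ⟨b, h, h'⟩ hl => ⟨b, h, h'.mono hl.cl⟩) (by
    intro α δ Z t hα hδ hZ ht htu
    obtain ⟨q, b, h6, h7, h8⟩ := FE.decide (𝔄 := R.AA) (ρ := ρ) (x := op α δ) ht
    obtain ⟨w0, t', h9, h10, h11, h12⟩ := hcc α δ b hα hδ h7 q q h8 (CL.refl h6.1)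
    have h13 := (h11.trans h6).comp
    have h14 := (h13.2.1.trans h12).rst (BZ_dn (Z := Z))
    have h15 := h13.1.rst (BZ_dn (Z := Z))
    rw [AS.Su.rst ht BZ_dn htu] at h15
    rw [AS.Su.rst h9.cond BZ_dn (fun x hx => BZ_mono hZ x (h10 x hx))] at h14
    exact ⟨_, h15, rst_su, b, h7, h9.mono h14⟩)
  subst hR
  exact ⟨A, i, h1, h2, h3, h4, z, h, hl, hl', hn, fun α hα ξ h => (h5 α hα ξ h).1, hcc, fun α hα => (hh α hα).1, fun α hα => (hh α hα).2.1,
    fun α hα => (hh α hα).2.2⟩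

variable (R) in
/-- The reflections of `s`, with the master conditions, force truth value `b` at `α` almost everywhere. -/
def Es (ρ h α b s : M) : Prop := (R.AA.Cond s ∧ R.AA.Su s R.B) ∧
  sep R.κ (fun δ => R.AA.FE ρ b (op α δ) (R.AA.comp (R.rf δ s) (app (app h α) δ))) ε R.D
instance [Countable M] : D5 R.Es := ⟨by unfold Es; infer_instance⟩

theorem meetB (G : Gen R.AA.fp) (φ : M → Prop) [hd : Df (fun w : Nil M × M => φ w.2)] (H : ∀ t, R.AA.Cond t → R.AA.Su t R.B → ∃ s, R.AA.Le s t ∧ R.AA.Su s R.B ∧ φ s) :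
    ∃ s, G.S s ∧ R.AA.Su s R.B ∧ φ s := by
  have : D1 φ := ⟨hd⟩
  obtain ⟨r, hr, s, h1, h2⟩ := G.meet' (fun r : M => ∃ s : M, R.AA.CL r s ∧ R.AA.Su s R.B ∧ φ s) fun q hq => by
    have hq := mem_PP.1 hq
    have hB : R.AA.Dn R.B := BZ_dn (Z := R.A)
    obtain ⟨s, h1, h2⟩ := H _ (hq.rst hB) rst_su
    have h3 := amalg hB h1 hq h2.1
    exact ⟨_, h3.1.cl, s, h3.2.cl, h2⟩
  exact ⟨s, G.up _ _ h1 hr, h2⟩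

namespace Sq
variable [Countable M] {ρ lam z h α b b' s s' : M} (Q : R.Sq ρ lam z h) (hα : α ε lam)
include Q hα

theorem fx {δ r : M} (hδ : δ ε R.κ) (hr : R.AA.Cond r) (hs : R.AA.Su r (R.AA.LL δ)) :
    R.AA.Le (R.AA.comp r (app (app h α) δ)) (app (app h α) δ) ∧ R.AA.Le (R.AA.comp r (app (app h α) δ)) r :=
  (Q.dc α hα δ hδ).2.1.amalg (Q.dc α hα δ hδ).1 (R.nm.inacc.ord.mem hδ) hr hs

theorem mono (hs : R.Es ρ h α b s) (hl : R.AA.CL s' s) (hu : R.AA.Su s' R.B) : R.Es ρ h α b s' := by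
  have hs' := And.intro hl.1 hu
  refine ⟨hs', R.nm.ae_iff.1 ?_⟩
  filter_upwards [R.nm.ae_of hs.2, ae_ad hs.1 hs' hs'] with δ h1 ⟨S, H, h2, h3, _⟩
  have h4 := Q.fx hα H.mem (H.rf_cond h3 hl.1) (H.rf_su h3 hl.1)
  exact h1.mono (CL.comp_of (h4.2.cl.trans (H.rf_cl h3 h2 hl)) h4.1.cl h1.cond)

theorem dense {t : M} (ht : R.AA.Cond t) (hu : R.AA.Su t R.B) : ∃ s b, R.AA.Le s t ∧ b ε Two ∧ R.Es ρ h α b s := by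
  obtain ⟨f, -, hf⟩ := ac R.κ (fun δ r : M => R.AA.Cond (R.rf δ t) → R.AA.Su (R.rf δ t) (R.AA.LL δ) →
      R.AA.Le r (R.rf δ t) ∧ R.AA.Su r (R.AA.LL δ) ∧ R.AA.DE ρ (op α δ) (R.AA.comp r (app (app h α) δ))) fun δ hδ => by
    by_cases e : R.AA.Cond (R.rf δ t) ∧ R.AA.Su (R.rf δ t) (R.AA.LL δ)
    · obtain ⟨r, h1⟩ := (Q.dc α hα δ hδ).2.2 _ e.1 e.2
      exact ⟨r, fun _ _ => h1⟩
    · exact ⟨emp, fun h1 h2 => (e ⟨h1, h2⟩).elim⟩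
  have hf' : ∀ᶠ δ in R.nm.ae, R.AA.Le (app f δ) (R.rf δ t) ∧ R.AA.Su (app f δ) (R.AA.LL δ) ∧ R.AA.DE ρ (op α δ) (R.AA.comp (app f δ) (app (app h α) δ)) := by
    filter_upwards [ae_ad ⟨ht, hu⟩ ⟨ht, hu⟩ ⟨ht, hu⟩] with δ ⟨S, H, h2, _⟩
    exact hf δ H.mem (H.rf_cond h2 ht) (H.rf_su h2 ht)
  obtain ⟨s, hs, hs'⟩ := rep (R := R) (fun δ => app f δ) (hf'.mono fun δ h => ⟨h.1.1, h.2.1⟩)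
  obtain ⟨b, hb, h1⟩ := R.nm.ae_ex_small (R.nm.inacc.two emp (sing emp))
    (fun b δ : M => R.AA.FE ρ b (op α δ) (R.AA.comp (R.rf δ s) (app (app h α) δ))) (by
      filter_upwards [hf', hs'] with δ h1 h2
      rw [← h2]; exact h1.2.2)
  refine ⟨s, b, ?_, hb, hs, R.nm.ae_iff.1 h1⟩
  obtain ⟨δ, ⟨S, H, h2, h3, _⟩, h4, h5⟩ := R.nm.ae_ne ((ae_ad hs ⟨ht, hu⟩ hs).and (hs'.and hf'))
  rw [h4] at h5
  exact (H.rf_le h2 hs.1 h3 ht).1 h5.1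

theorem cons (G : Gen R.AA.fp) (h1 : R.Es ρ h α b s) (h2 : R.Es ρ h α b' s') (hs : G.S s) (hs' : G.S s') (hb : b ε Two) (hb' : b' ε Two) : b = b' := by
  obtain ⟨t, -, h3, h4⟩ := G.dir _ _ hs hs'
  have hB : R.AA.Dn R.B := BZ_dn (Z := R.A)
  have h5 := CL.rst h3 hB
  have h6 := CL.rst h4 hB
  rw [AS.Su.rst h1.1.1 hB h1.1.2] at h5
  rw [AS.Su.rst h2.1.1 hB h2.1.2] at h6
  obtain ⟨δ, h7, h8⟩ := R.nm.ae_ne ((R.nm.ae_of (Q.mono hα h1 h5 rst_su).2).and (R.nm.ae_of (Q.mono hα h2 h6 rst_su).2))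
  exact h7.uniq h8 hb hb'

theorem meet (G : Gen R.AA.fp) : ∃ s b, G.S s ∧ b ε Two ∧ R.Es ρ h α b s := by
  obtain ⟨E, hE⟩ : ∃ E : M → Prop, E = fun s => ∃ b, b ε Two ∧ R.Es ρ h α b s := ⟨_, rfl⟩
  have hEd : D1 E := ⟨by rw [hE]; infer_instance⟩
  obtain ⟨s, h1, -, h2⟩ := meetB G E fun t ht hu => by
    obtain ⟨s, b, h1, h2, h3⟩ := Q.dense hα ht hu
    exact ⟨s, h1, h3.1.2, by rw [hE]; exact ⟨b, h2, h3⟩⟩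
  rw [hE] at h2
  obtain ⟨b, h2, h3⟩ := h2
  exact ⟨s, b, h1, h2, h3⟩

end Sq
end RD
end W6
namespace W6
open ZF Filter AS
variable {M : Type u} [ZM M]
local notation "𝓔" => (ZM.E : M → M → Prop)
namespace RD
variable {R : RD M}
theorem B_dn : R.AA.Dn R.B := BZ_dn (Z := R.A)

namespace Sq
variable [Countable M] {ρ lam z h : M} (Q : R.Sq ρ lam z h) 
include Q

theorem core₁ (G : Gen R.AA.fp) {K : M} (hK : Sb K (prod lam Two)) (hKc : CardLT 𝓔 K R.κ) : ∃ θ q, θ ε R.κ ∧ G.S q ∧ R.AA.Su q R.B ∧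
    ∀ α b s, op α b ε K → G.S s → R.Es ρ h α b s → ∃ r, G.S r ∧ R.AA.Le r (R.AA.rst q (R.AA.LL θ)) ∧ R.AA.Su r (R.AA.LL θ) ∧ R.Es ρ h α b (R.AA.comp r q) := by
  obtain ⟨θ, hθ, hKθ⟩ := hKc
  obtain ⟨D, hD⟩ : ∃ D : M → M → Prop, D = fun ξ t => ∃ b, b ε Two ∧ R.Es ρ h (fst ξ) b t := ⟨_, rfl⟩
  have hDd : D2 D := ⟨by rw [hD]; infer_instance⟩
  have hL := LL_dn (𝔄 := R.AA) (R.nm.inacc.ord.mem hθ)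
  have hKl : ∀ ξ, ξ ε K → fst ξ ε lam := fun ξ hξ => by
    obtain ⟨α, b, h1, -, rfl⟩ := mem_prod.1 (hK ξ hξ)
    rwa [fst_op]
  obtain ⟨q, hq, hqB, hq'⟩ := meetB G (fun q : M => ∀ ξ r : M, ξ ε K → R.AA.Le r (R.AA.rst q (R.AA.LL θ)) → R.AA.Su r (R.AA.LL θ) →
      ∃ r' : M, R.AA.Le r' r ∧ R.AA.Su r' (R.AA.LL θ) ∧ D ξ (R.AA.comp r' q)) fun p hp hpB => by
    obtain ⟨q, h1, h2, h3, h4⟩ := DL (𝔄 := R.AA) (X := K) hθ (LL_BZ (Z := R.A) hθ) (fun γ _ h => ⟨θ, h, hKθ⟩) D hp hpB (fun ξ t hξ ht htB => by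
      obtain ⟨s, b, h1, h2, h3⟩ := Q.dense (hKl ξ hξ) ht.1 htB
      exact ⟨s, h1, h3.1.2, by rw [hD]; exact ⟨b, h2, h3⟩⟩) fun ξ t t' hξ h1 h2 h3 => by
      rw [hD] at h1 ⊢
      obtain ⟨b, h4, h5⟩ := h1
      exact ⟨b, h4, Q.mono (hKl ξ hξ) h5 h2.cl h3⟩
    exact ⟨q, h1, h2, by rw [h3]; exact h4⟩
  refine ⟨θ, q, hθ, hq, hqB, fun α b s hα hs hE => ?_⟩
  have hqc := mem_PP.1 (G.sub _ hq)
  obtain ⟨t, h1, h2, r, h3, h4, h5, h6⟩ := G.meet (fun t : M => ∃ r : M, R.AA.CL t r ∧ R.AA.Le r (R.AA.rst q (R.AA.LL θ)) ∧ R.AA.Su r (R.AA.LL θ) ∧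
      D (op α b) (R.AA.comp r q)) hq fun t ht => by
    have h1 := CL.comp ht
    have h2 := h1.1.rst hL
    obtain ⟨r, h3, h4, h5⟩ := hq' _ _ hα h2 rst_su
    have h6 := amalg hL h3 h1.1.1 h4
    exact ⟨_, h6.1.cl.trans h1.2.1, r, h6.2.cl, h3.trans h2, h4, h5⟩
  have h7 := G.up _ _ (CL.comp_of h3 h2 (amalg hL h4 hqc h5).1.1) h1
  rw [hD] at h6
  obtain ⟨b', h8, h9⟩ := h6
  rw [fst_op] at h9
  obtain ⟨h10, h11⟩ := op_mem_prod.1 (hK _ hα)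
  rw [Q.cons h10 G hE h9 hs h7 h11 h8]
  exact ⟨r, G.up _ _ h3 h1, h4, h5, h9⟩

/-- The amalgamation of a reflected condition with a master condition lies below the columns in `Z` of the condition. -/
theorem refl_le {Z β δ p S : M} (hZ : Sb Z R.A) (hβ : β ε lam) (hp : R.AA.Cond p) (H : R.NN S δ) (hS : R.Ad S (R.AA.rst p R.B))
    (hm : ∀ x, R.AA.ev (R.AA.rst p R.B) x ≠ x → fst (snd x) ε Z → R.Ms (fst (snd x)) δ (app (app h β) δ)) :
    R.AA.Le (R.AA.comp (R.rf δ (R.AA.rst p R.B)) (app (app h β) δ)) (R.AA.rst p (R.BZ Z)) := by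
  have hs := hp.rst (B_dn (R := R))
  have hd := Q.dc β hβ δ H.mem
  refine ⟨(Q.fx hβ H.mem (H.rf_cond hS hs) (H.rf_su hS hs)).1.1, hp.rst BZ_dn, fun x => ?_⟩
  by_cases e : R.AA.ev (R.AA.rst p (R.BZ Z)) x = x
  · rw [e]
  have hx : x ε R.BZ Z := by_contra fun h => e (ev_rst_off h)
  rw [ev_rst_on hx] at e ⊢
  have hxB : x ε R.B := BZ_mono hZ x hx
  rw [← ev_rst_on (p := p) hxB] at e ⊢
  have low : ∀ y, y ε S → R.τ δ y = y → R.AA.ev (app (app h β) δ) y = y := fun y hy e => by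
    rcases H.cases hy with h | h | h
    · exact ev_cst h.1
    · exact hd.2.1 y (mem_LL.2 ⟨h.1, mem_suc.2 (Or.inl h.2.1)⟩)
    · obtain ⟨-, h1, -, h2⟩ := h
      rw [e, h1] at h2
      exact (eps_irrefl (h2 ▸ H.mem)).elim
  have hv := τ_val (δ := δ) hs e
  have hvS := (hS x e).2
  rw [ev_comp, ev_comp, low _ hvS hv]
  have h1 : R.AA.ev (app (app h β) δ) x = R.τ δ x := by
    rcases H.cs x (hS x e).1 with h | h | ⟨ξ, ν, rfl, h1, h2⟩
    · exact (e (ev_cst h)).elim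
    · have h3 := τ_low (δ := δ) (R.nm.inacc.ord.trans h.2 H.mem)
      rw [h3, low _ (hS x e).1 h3]
    · have := hm _ e
      rw [snd_op, fst_op] at this
      exact this (BZ_top hx) ν h1
  rw [h1, H.rf_on hS hs (hS x e).1]
  conv_lhs => rw [← hv, H.rf_on hS hs hvS]
  rw [(Le.refl hs).2.2]
end Sq
end RD
end W6
namespace W6
open ZF Filter AS
variable {M : Type u} [ZM M]
local notation "𝓔" => (ZM.E : M → M → Prop)
namespace RD
variable {R : RD M}
namespace Sq
variable [Countable M] {ρ lam z h : M} (Q : R.Sq ρ lam z h) 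
include Q

theorem bdd {K : M} (hK : Sb K (prod lam Two)) (hKc : CardLT 𝓔 K R.κ) : ∃ β, β ε lam ∧ ∀ α b, op α b ε K → α = β ∨ α ε β := by
  have hK' : ∀ y, y ε K → fst y ε lam := fun y hy => by
    obtain ⟨α, b, h1, -, rfl⟩ := mem_prod.1 (hK y hy)
    rwa [fst_op]
  by_contra hc
  push Not at hc
  refine Q.notle (R.nm.inacc.union_le (hKc.cardLE R.nm.inacc.ord) (fun y β : M => β ε fst y) (fun β hβ => ?_) fun y hy => ⟨_, Q.small _ (hK' y hy), fun _ h => h⟩)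
  obtain ⟨α, b, h1, h2, h3⟩ := hc β hβ
  refine ⟨_, h1, ?_⟩
  have := hK' _ h1
  rw [fst_op] at this ⊢
  exact ((Q.ord.mem hβ).tri (Q.ord.mem this)).elim id fun h => h.elim (fun h => (h2 h.symm).elim) fun h => (h3 h).elim

/-- The decisions made by `r`, a part of small stages of the generic object, about the reflected names. -/
theorem core₂ {K η θ q p₀ : M} (hK : Sb K (prod lam Two)) (hKc : CardLT 𝓔 K R.κ) (hη : η ε R.κ) (hθ : θ ε R.κ) (hq : R.AA.Su q R.B)
    (T : M → M → M → Prop) [D3 T] (hT : ∀ r α b, T r α b → op α b ε K ∧ R.AA.Le r (R.AA.rst q (R.AA.LL θ)) ∧ R.AA.Su r (R.AA.LL θ) ∧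
      R.Es ρ h α b (R.AA.comp r q)) (hp : R.AA.CL p₀ q) :
    ∃ ν p, ν ε R.κ ∧ η ε ν ∧ R.AA.CL p p₀ ∧ ∀ u r α b b', R.AA.CL u p → T r α b → R.AA.CL u r → b' ε Two → R.AA.FE ρ b' (op α ν) u → b = b' := by
  by_contra hc
  push Not at hc
  have hk := R.nm.inacc
  obtain ⟨p, hp1, hp2⟩ : ∃ p, R.AA.Le p q ∧ R.AA.CL p p₀ := ⟨_, hp.comp.1, hp.comp.2.1⟩
  have hL := LL_dn (𝔄 := R.AA) (hk.ord.mem hθ)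
  have hs := hp1.1.rst (B_dn (R := R))
  have hsq := hp1.rst (B_dn (R := R))
  rw [AS.Su.rst hp1.2.1 B_dn hq] at hsq
  obtain ⟨β, hβ, hβ'⟩ := Q.bdd hK hKc
  obtain ⟨Z, hZ⟩ : ∃ Z, Z = sep R.A (fun ξ : M => ∃ y : M, y ε K ∧ ξ ε app z (fst y)) := ⟨_, rfl⟩
  have hKl : ∀ α b, op α b ε K → α ε lam ∧ b ε Two := fun α b h => op_mem_prod.1 (hK _ h)
  have hZz : ∀ α b, op α b ε K → Sb (app z α) Z := fun α b h ξ hξ => by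
    rw [hZ]; exact mem_sep.2 ⟨Q.zA _ (hKl _ _ h).1 ξ hξ, _, h, by rwa [fst_op]⟩
  have hle : ∀ α b, op α b ε K → ∀ᶠ δ in R.nm.ae, R.AA.Le (app (app h β) δ) (app (app h α) δ) := fun α b h => by
    rcases hβ' α b h with rfl | h'
    · filter_upwards [R.nm.ae_mem] with δ hδ using Le.refl (Q.dc _ hβ δ hδ).1
    · exact Q.le β hβ α h'
  have e1 : ∀ᶠ δ in R.nm.ae, ∀ x, x ε R.AA.supp (R.AA.rst p R.B) → fst (snd x) ε Z → R.Ms (fst (snd x)) δ (app (app h β) δ) :=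
    R.nm.ae_ball hs.supp_lt (fun x δ : M => fst (snd x) ε Z → R.Ms (fst (snd x)) δ (app (app h β) δ)) fun x _ => by
      by_cases hx : fst (snd x) ε Z
      · rw [hZ] at hx
        obtain ⟨h1, y, hy, h2⟩ := mem_sep.1 hx
        obtain ⟨α, b, h3, -, rfl⟩ := mem_prod.1 (hK y hy)
        rw [fst_op] at h2
        filter_upwards [Q.ms α h3 _ h2, hle α b hy, R.nm.ae_mem, R.nm.ae_inacc] with δ h4 h5 h6 h7 _
        exact h4.le h5 (Q.dc β hβ δ h6).2.1 h6 h7 h1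
      · exact Eventually.of_forall fun δ h => (hx h).elim
  have hrq : ∀ r α b, T r α b → (R.AA.Cond r ∧ R.AA.Su r R.B) ∧ R.AA.Cond q ∧ R.AA.Su q R.B := fun r α b h =>
    ⟨⟨(hT r α b h).2.1.1, fun x hx => LL_BZ hθ x ((hT r α b h).2.2.1 x hx)⟩, hp1.2.1, hq⟩
  have e2 : ∀ᶠ δ in R.nm.ae, ∀ y, y ε prod (R.AA.PL (R.AA.LL θ)) K → T (fst y) (fst (snd y)) (snd (snd y)) →
      R.AA.FE ρ (snd (snd y)) (op (fst (snd y)) δ) (R.AA.comp (R.rf δ (R.AA.comp (fst y) q)) (app (app h (fst (snd y))) δ)) ∧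
      (R.AA.Cond (R.rf δ (R.AA.comp (fst y) q)) ∧ ∀ x, R.AA.ev (R.rf δ (R.AA.comp (fst y) q)) x = R.AA.ev (fst y) (R.AA.ev (R.rf δ q) x)) ∧
      R.AA.Le (app (app h β) δ) (app (app h (fst (snd y))) δ) :=
    R.nm.ae_ball (hk.prod (LL_small (𝔄 := R.AA) hθ) hKc) (fun y δ : M => T (fst y) (fst (snd y)) (snd (snd y)) →
      R.AA.FE ρ (snd (snd y)) (op (fst (snd y)) δ) (R.AA.comp (R.rf δ (R.AA.comp (fst y) q)) (app (app h (fst (snd y))) δ)) ∧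
      (R.AA.Cond (R.rf δ (R.AA.comp (fst y) q)) ∧ ∀ x : M, R.AA.ev (R.rf δ (R.AA.comp (fst y) q)) x = R.AA.ev (fst y) (R.AA.ev (R.rf δ q) x)) ∧
      R.AA.Le (app (app h β) δ) (app (app h (fst (snd y))) δ)) fun y _ => by
        by_cases hy : T (fst y) (fst (snd y)) (snd (snd y))
        · have h1 := hT _ _ _ hy
          have h2 := hrq _ _ _ hy
          filter_upwards [R.nm.ae_of h1.2.2.2.2, hle _ _ h1.1, ae_ad h2.1 h2.2 h1.2.2.2.1, R.nm.ae_tail hθ] with δ h3 h4 ⟨S, H, h5, h6, h7⟩ h8 _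
          exact ⟨h3, ⟨H.rf_cond h7 h1.2.2.2.1.1, H.rf_comp h5 h2.1.1 h6 h2.2.1 h1.2.2.1 h8 h1.2.2.2.1.1 h7⟩, h4⟩
        · exact Eventually.of_forall fun δ h => (hy h).elim
  have hqc := And.intro hp1.2.1 hq
  obtain ⟨δ, h1, h2, ⟨S, H, h3, h4, -⟩, h5⟩ := R.nm.ae_ne (e1.and (e2.and ((ae_ad ⟨hs, rst_su⟩ hqc hqc).and (R.nm.ae_tail hη))))
  have hcp := Q.refl_le (by rw [hZ]; exact fun x hx => (mem_sep.1 hx).1) hβ hp1.1 H h3 fun x hx => h1 x (mem_supp.2 hx)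
  obtain ⟨hch, hcs⟩ := Q.fx hβ H.mem (H.rf_cond h3 hs) (H.rf_su h3 hs)
  obtain ⟨c, hc'⟩ : ∃ c, c = R.AA.comp (R.rf δ (R.AA.rst p R.B)) (app (app h β) δ) := ⟨_, rfl⟩
  rw [← hc'] at hcp hch hcs
  have hD := BZ_dn (R := R) (Z := Z)
  have h6 := hcp.rst hD
  rw [AS.Su.rst hcp.2.1 hD rst_su] at h6
  have h7 := amalg hD h6 hp1.1 rst_su
  obtain ⟨v, r, α, b, b', h8, h9, h10, h11, h12, h13⟩ := hc δ _ H.mem h5 (h7.1.cl.trans hp2)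
  have h14 := hT _ _ _ h9
  obtain ⟨hα, hb⟩ := hKl _ _ h14.1
  obtain ⟨w, t, h15, h16, h17, h18⟩ := Q.cc α δ b' hα H.mem h11 v v h12 (CL.refl h8.1)
  -- `t` lies below the reflected part, `r` and `w`, all of which are supported on the columns of `Z`
  have h19 := ((h17.trans h8).trans h7.2.cl).comp
  have h20 := h19.1.rst hD
  rw [AS.Su.rst h6.1 hD rst_su] at h20
  have h21 := (h19.2.1.trans h18).rst hD
  rw [AS.Su.rst h15.cond hD (fun x hx => BZ_mono (hZz _ _ h14.1) x (h16 x hx))] at h21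
  have h22 := (h19.2.1.trans (h17.trans h10)).rst hD
  rw [AS.Su.rst h14.2.1.1 hD (fun x hx => LL_BZ hθ x (h14.2.2.1 x hx))] at h22
  obtain ⟨hvc, hvt⟩ := amalg hD h20 hch.1 rst_su
  obtain ⟨u, hu⟩ : ∃ u, u = R.AA.comp (R.AA.rst (R.AA.comp t (R.AA.rst c (R.BZ Z))) (R.BZ Z)) c := ⟨_, rfl⟩
  rw [← hu] at hvc hvt
  have hy := h2 (op r (op α b)) (op_mem_prod.2 ⟨mem_PL.2 ⟨h14.2.1.1, h14.2.2.1⟩, h14.1⟩)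
  rw [fst_op, snd_op, fst_op, snd_op] at hy
  obtain ⟨f1, ⟨f2, f3⟩, f4⟩ := hy h9
  have f5 := hvc.cl.trans (hcs.trans ((H.rf_le h3 hs h4 hp1.2.1).2 hsq)).cl
  have f6 : R.AA.Cond (R.AA.comp r (R.rf δ q)) := comp_cond h14.2.1.1 (H.rf_cond h4 hp1.2.1) fun x => by
    rw [← f3, ← f3]; exact (Le.refl f2).2.2 x
  have f7 : R.AA.CL u (R.rf δ (R.AA.comp r q)) := by
    rw [f2.ext f6 (fun x => by rw [f3, ev_comp])]
    exact CL.comp_of (hvt.cl.trans h22) f5 f6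
  exact h13 ((f1.mono (CL.comp_of f7 (hvc.trans (hch.trans f4)).cl f1.cond)).uniq (h15.mono (hvt.cl.trans h21)) hb h11)

theorem core (G : Gen R.AA.fp) {K η : M} (hK : Sb K (prod lam Two)) (hKc : CardLT 𝓔 K R.κ) (hη : η ε R.κ) :
    ∃ ν, ν ε R.κ ∧ η ε ν ∧ ∀ α b s, op α b ε K → G.S s → R.Es ρ h α b s → Me ρ b G (op α ν) := by
  obtain ⟨θ, q, hθ, hq, hqB, h1⟩ := Q.core₁ G hK hKc
  obtain ⟨T, hT⟩ : ∃ T : M → M → M → Prop, T = fun r α b => op α b ε K ∧ R.AA.Le r (R.AA.rst q (R.AA.LL θ)) ∧ R.AA.Su r (R.AA.LL θ) ∧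
      R.Es ρ h α b (R.AA.comp r q) := ⟨_, rfl⟩
  have hTd : D3 T := ⟨by rw [hT]; infer_instance⟩
  obtain ⟨p, hp, -, ν, hν, hν', h2⟩ := G.meet (fun p : M => ∃ ν : M, ν ε R.κ ∧ η ε ν ∧ ∀ u r α b b' : M, R.AA.CL u p → T r α b → R.AA.CL u r →
      b' ε Two → R.AA.FE ρ b' (op α ν) u → b = b') hq fun p₀ hp => by
    obtain ⟨ν, p, h2, h3, h4, h5⟩ := Q.core₂ hK hKc hη hθ hqB T (by rw [hT]; exact fun _ _ _ => id) hp
    exact ⟨p, h4, ν, h2, h3, h5⟩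
  refine ⟨ν, hν, hν', fun α b s h3 h4 h5 => by_contra fun h6 => ?_⟩
  obtain ⟨r, h7, h8⟩ := h1 α b s h3 h4 h5
  obtain ⟨p', b', h9, h10, h11, h12⟩ := Me.truth h6 (op_mem_prod.1 (hK _ h3)).2
  obtain ⟨v, hv, v1, v2⟩ := G.dir _ _ hp h7
  obtain ⟨u, -, u1, u2⟩ := G.dir _ _ hv h9
  exact h11 (h2 u r α b b' (CL.trans u1 v1) (by rw [hT]; exact ⟨h3, h8⟩) (CL.trans u1 v2) h10 (h12.mono u2)).symm
end Sq
end RD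
end W6
namespace W6
open ZF Filter AS
variable {M : Type u} [ZM M]
local notation "𝓔" => (ZM.E : M → M → Prop)

/-- A family of subsets of `κ`, every fewer than `κ` of which have arbitrarily large common elements, extends to a `κ`-complete
nonprincipal filter. -/
theorem filter_gen {κ Y : M} (hκ : IsInaccessible 𝓔 κ) (hY : ∀ X, X ε Y → Sb X κ)
    (h : ∀ J, Sb J Y → CardLT 𝓔 J κ → ∀ η, η ε κ → ∃ ν, ν ε κ ∧ η ε ν ∧ ∀ X, X ε J → ν ε X) :
    ∃ F, IsKappaCompleteFilterOn 𝓔 F κ ∧ ¬ IsPrincipalOn 𝓔 F κ ∧ Sb Y F := by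
  obtain ⟨B, hB⟩ : ∃ B : M → M → M → Prop, B = fun X J η => Sb J Y ∧ CardLT 𝓔 J κ ∧ η ε κ ∧
      ∀ ν, ν ε κ → η ε ν → (∀ y, y ε J → ν ε y) → ν ε X := ⟨_, rfl⟩
  have hBd : D3 B := ⟨by rw [hB]; infer_instance⟩
  obtain ⟨F, hF⟩ : ∃ F, ∀ X, X ε F ↔ Sb X κ ∧ ∃ J η, B X J η :=
    ⟨sep (pw κ) (fun X : M => ∃ J η : M, B X J η), fun X => by rw [mem_sep, mem_pw]⟩
  have hne : ∀ {X J η}, B X J η → ∃ ν, ν ε X := fun {X J η} hX => by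
    rw [hB] at hX
    obtain ⟨h1, h2, h3, h4⟩ := hX
    obtain ⟨ν, h5, h6, h7⟩ := h J h1 h2 η h3
    exact ⟨ν, h4 ν h5 h6 h7⟩
  have hend : ∀ η, η ε κ → sep κ (fun ν => η ε ν) ε F := fun η hη => (hF _).2 ⟨fun x hx => (mem_sep.1 hx).1, emp, η, by
    rw [hB]; exact ⟨fun x hx => (not_mem_emp hx).elim, hκ.emp, hη, fun ν h1 h2 _ => mem_sep.2 ⟨h1, h2⟩⟩⟩
  refine ⟨F, ⟨⟨fun X hX => ((hF X).1 hX).1, ⟨_, hend _ hκ.om_mem⟩, fun X hX => ?_, fun X Z hX hXZ hZ => ?_⟩, fun β g hβ hg Z hZ => ?_⟩,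
    ?_, fun X hX => (hF X).2 ⟨hY X hX, sing X, W6.om, ?_⟩⟩
  · obtain ⟨-, J, η, hX⟩ := (hF X).1 hX
    exact hne hX
  · obtain ⟨-, J, η, hX⟩ := (hF X).1 hX
    rw [hB] at hX
    exact (hF Z).2 ⟨hZ, J, η, by rw [hB]; exact ⟨hX.1, hX.2.1, hX.2.2.1, fun ν h1 h2 h3 => hXZ _ (hX.2.2.2 ν h1 h2 h3)⟩⟩
  · obtain ⟨hg, hg'⟩ := isFunc_iff.1 hg
    obtain ⟨f, -, hf⟩ := ac β (fun γ z : M => B (app g γ) (fst z) (snd z)) fun γ hγ => by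
      obtain ⟨-, J, η, hX⟩ := (hF _).1 (hg' γ hγ)
      exact ⟨op J η, by rwa [fst_op, snd_op]⟩
    rw [hB] at hf
    have hβ' : CardLT 𝓔 β κ := CardLT.of_mem hβ
    obtain ⟨η, hη, hη'⟩ := hκ.bdd hβ' (fun γ : M => snd (app f γ)) fun γ hγ => (hf γ hγ).2.2.1
    refine (hF Z).2 ⟨fun x hx => ((hZ x).1 hx).1, sep Y (fun X : M => ∃ γ : M, γ ε β ∧ X ε fst (app f γ)), η, ?_⟩
    rw [hB]
    refine ⟨fun x hx => (mem_sep.1 hx).1, ?_, hη, fun ν h1 h2 h3 => (hZ ν).2 ⟨h1, fun γ X hγ hX => ?_⟩⟩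
    · exact hκ.union hβ' (fun γ X : M => X ε fst (app f γ)) (fun X hX => (mem_sep.1 hX).2) fun γ hγ => ⟨_, (hf γ hγ).2.1, fun _ => id⟩
    · rw [pairMem, hg.op_mem] at hX
      rw [hX.2]
      refine (hf γ hγ).2.2.2 ν h1 ((hκ.ord.mem h1).trans (hη' γ hγ) h2) fun y hy => h3 y (mem_sep.2 ⟨(hf γ hγ).1 y hy, γ, hγ, hy⟩)
  · rintro ⟨a, ha⟩
    have h1 : a ε F := by
      obtain ⟨h1, h2⟩ := (ha _).1 (hend _ hκ.om_mem)
      exact (ha a).2 ⟨fun x hx => h1 x (h2 x hx), fun _ => id⟩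
    obtain ⟨h2, J, η, h3⟩ := (hF a).1 h1
    obtain ⟨x, hx⟩ := hne h3
    exact eps_irrefl ((mem_sep.1 (show x ε _ from ((ha _).1 (hend x (h2 x hx))).2 x hx)).2)
  · rw [hB]
    exact ⟨fun x hx => by rwa [mem_sing.1 hx], hκ.sing X, hκ.om_mem, fun ν _ _ h3 => h3 X (mem_sing.2 rfl)⟩

/-- The forcing preserves the weak measurability of `κ`. -/
theorem wm [Countable M] {κ D : M} (nm : NM κ D) (G : Gen (cAS nm.inacc (LL0 κ)).fp) :
    IsWeaklyMeasurable (ZM.E : VG G → VG G → Prop) (chk G κ) := by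
  have hi : IsInaccessible (ZM.E : VG G → VG G → Prop) (chk G κ) := inacc_V G
  refine ⟨hi, fun l 𝒜 hl h𝒜 hc => ?_⟩
  obtain ⟨lam, h1, h2, h3⟩ := exists_succ nm.inacc.ord
  obtain ⟨ρ, hρ⟩ := kplus G h1.1.1 h2 hl hc
  obtain ⟨A, i, hA, col, inj, surj, z, h, Q⟩ := RD.Sq.exists nm h1.1.1 h3 h2 ρ
  obtain ⟨R, hR⟩ : ∃ R : RD M, R = ⟨κ, D, LL0 κ, A, i, nm, hA, col, inj, surj⟩ := ⟨_, rfl⟩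
  obtain ⟨E0, hE0⟩ : ∃ E0, ∀ s α b, op s (op α b) ε E0 ↔ s ε (cAS nm.inacc (LL0 κ)).PP ∧ (α ε lam ∧ b ε Two) ∧ R.Es ρ h α b s :=
    ⟨sep (prod (cAS nm.inacc (LL0 κ)).PP (prod lam Two)) (fun x : M => R.Es ρ h (fst (snd x)) (snd (snd x)) (fst x)), fun s α b => by
      rw [mem_sep, op_mem_prod, op_mem_prod, fst_op, snd_op, fst_op, snd_op, and_assoc]⟩
  obtain ⟨W, hW⟩ : ∃ W : VG G → VG G → Prop, W = fun X z => ∃ s, s ε W6.nm G (Gnm (cAS nm.inacc (LL0 κ)).fp) ∧ op s z ε chk G E0 ∧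
      ∀ ν, ν ε chk G κ → (ν ε X ↔ (snd z = emp → op (fst z) ν ε W6.nm G ρ) ∧ (snd z ≠ emp → ¬ op (fst z) ν ε W6.nm G ρ)) := ⟨_, rfl⟩
  have hWd : D2 W := ⟨by rw [hW]; infer_instance⟩
  have hW' : ∀ X α b, W X (chk G (op α b)) ↔ ∃ s, G.S s ∧ op s (op α b) ε E0 ∧ ∀ ν, ν ε κ → (chk G ν ε X ↔ Me ρ b G (op α ν)) := by
    intro X α b
    rw [hW]
    have hb : snd (chk G (op α b)) = emp ↔ b = emp := by rw [chk_op, snd_op, ← chk_emp (G := G), chk_inj]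
    have hm : ∀ ν, op (fst (chk G (op α b))) (chk G ν) ε W6.nm G ρ ↔ Mm ρ G (op α ν) := fun ν => by
      unfold Mm; rw [chk_op, fst_op, chk_op]
    constructor
    · rintro ⟨s, hs, h4, h5⟩
      obtain ⟨s, hs', rfl⟩ := mem_Gnm.1 hs
      rw [← chk_op, mem_chk] at h4
      refine ⟨s, hs', h4, fun ν hν => (h5 _ (mem_chk.2 hν)).trans ?_⟩
      unfold Me; rw [hm, ne_eq, hb]
    · rintro ⟨s, hs, h4, h5⟩
      refine ⟨_, chk_mem_Gnm.2 hs, by rwa [← chk_op, mem_chk], fun ν hν => ?_⟩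
      obtain ⟨ν, hν', rfl⟩ := mem_chk' hν
      rw [h5 ν hν', hm, ne_eq, hb]; rfl
  obtain ⟨Y, hY⟩ : ∃ Y, ∀ X, X ε Y ↔ Sb X (chk G κ) ∧ ∃ z, z ε chk G (prod lam Two) ∧ W X z :=
    ⟨sep (pw (chk G κ)) (fun X : VG G => ∃ z : VG G, z ε chk G (prod lam Two) ∧ W X z), fun X => by rw [mem_sep, mem_pw]⟩
  obtain ⟨F, hF1, hF2, hF3⟩ := filter_gen hi (fun X hX => ((hY X).1 hX).1) fun J hJ hJc η hη => by
    obtain ⟨η, hη', rfl⟩ := mem_chk' hη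
    obtain ⟨γ, hγ, hJc⟩ := hJc
    obtain ⟨γ, hγ', rfl⟩ := mem_chk' hγ
    obtain ⟨f, hf1, hf2⟩ := cardLE_iff.1 hJc
    obtain ⟨τ, hτ⟩ := nm_surj (sep (prod (chk G γ) (chk G (prod lam Two)))
      (fun y : VG G => ∃ X : VG G, X ε J ∧ app f X = fst y ∧ W X (snd y)))
    have hm : ∀ ξ β, Mm τ G (op ξ β) ↔ (ξ ε γ ∧ β ε prod lam Two) ∧ ∃ X, X ε J ∧ app f X = chk G ξ ∧ W X (chk G β) := fun ξ β => by
      unfold Mm; rw [← hτ, mem_sep, chk_op, op_mem_prod, mem_chk, mem_chk, fst_op, snd_op]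
    obtain ⟨K, hK, hKb, hK'⟩ := cover G hγ' (prod lam Two) τ
    subst hR
    obtain ⟨ν, hν, hν', h4⟩ := Q.core G hKb hK hη'
    refine ⟨chk G ν, mem_chk.2 hν, mem_chk.2 hν', fun X hX => ?_⟩
    obtain ⟨ξ, hξ, e⟩ := mem_chk' (hf1 X hX)
    obtain ⟨z, hz, hXz⟩ := ((hY X).1 (hJ X hX)).2
    obtain ⟨β, hβ, rfl⟩ := mem_chk' hz
    obtain ⟨β, hβK, h5⟩ := hK' ξ hξ ⟨β, hβ, (hm _ _).2 ⟨⟨hξ, hβ⟩, X, hX, e, hXz⟩⟩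
    obtain ⟨⟨-, hβ⟩, X', hX', e', h6⟩ := (hm _ _).1 h5
    obtain rfl := hf2 _ _ hX' hX (e'.trans e.symm)
    obtain ⟨α, b, hα, hb, rfl⟩ := mem_prod.1 hβ
    obtain ⟨s, hs, h7, h8⟩ := (hW' _ _ _).1 h6
    exact (h8 ν hν).2 (h4 α b s hβK hs ((hE0 _ _ _).1 h7).2.2)
  refine ⟨F, hF1, hF2, fun A hA => ?_⟩
  obtain ⟨α, hα, h4⟩ := hρ A hA
  have hAκ : Sb A (chk G κ) := h𝒜 A hA
  obtain ⟨s, b, hs, hb, h5⟩ : ∃ s b, G.S s ∧ b ε Two ∧ R.Es ρ h α b s := by subst hR; exact Q.meet hα G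
  have hY' : ∀ X, Sb X (chk G κ) → (∀ ν, ν ε κ → (chk G ν ε X ↔ Me ρ b G (op α ν))) → X ε F := fun X hX h6 => hF3 X ((hY X).2
    ⟨hX, chk G (op α b), mem_chk.2 (op_mem_prod.2 ⟨hα, hb⟩), (hW' _ _ _).2 ⟨s, hs, (hE0 _ _ _).2 ⟨G.sub _ hs, ⟨hα, hb⟩, h5⟩, h6⟩⟩)
  by_cases e : b = emp
  · exact Or.inl (hY' A hAκ fun ν hν => by
      rw [← h4 ν hν]; exact ⟨fun h => ⟨fun _ => h, fun e' => (e' e).elim⟩, fun h => h.1 e⟩)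
  · refine Or.inr ⟨sep (chk G κ) (fun x => ¬ x ε A), fun x => mem_sep, hY' _ (fun x hx => (mem_sep.1 hx).1) fun ν hν => ?_⟩
    rw [mem_sep, mem_chk, ← h4 ν hν]
    exact ⟨fun h => ⟨fun e' => (e e').elim, fun _ => h.2⟩, fun h => ⟨hν, h.2 e⟩⟩
end W6
namespace W6
open ZF Filter AS
section
variable {M : Type u} [ZM M]
local notation "𝓔" => (ZM.E : M → M → Prop)

theorem id_cond {𝔄 : AS M} : 𝔄.Cond (lam 𝔄.At (fun x => x)) :=
  cond_mk (f := fun x : M => x) ⟨fun _ _ => rfl, fun x _ h => (h rfl).elim, fun _ => rfl⟩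
    fun γ hγ => ⟨_, (𝔄.inacc γ hγ).emp, fun _ _ h => (h rfl).elim⟩

/-- The forcing is atomless: a condition leaves some atom of stage `κ` free, and no value is an atom of this stage. -/
theorem atomless {κ : M} (hκ : IsInaccessible 𝓔 κ) {p : M} (hp : (cAS hκ (LL0 κ)).Cond p) :
    ∃ q, (cAS hκ (LL0 κ)).CL q p ∧ ¬ (cAS hκ (LL0 κ)).CL p q := by
  obtain ⟨i, hi⟩ : ∃ i, i ε LL0 κ := ⟨op emp emp, op_mem_prod.2
    ⟨mem_un.2 (Or.inl (mem_pw.2 fun x hx => (not_mem_emp hx).elim)), mem_pw.2 fun x hx => (not_mem_emp hx).elim⟩⟩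
  have hA : ∀ ξ, ξ ε κ → op κ (op i ξ) ε (cAS hκ (LL0 κ)).At := fun ξ hξ => cAS_mem.2 ⟨hξ, hκ, Or.inr ⟨rfl, hi⟩⟩
  obtain ⟨ξ, hξ, e⟩ : ∃ ξ, ξ ε κ ∧ (cAS hκ (LL0 κ)).ev p (op κ (op i ξ)) = op κ (op i ξ) := by
    by_contra h
    push Not at h
    exact hκ.not_lt (CardLE.of (fun ξ : M => op κ (op i ξ)) (fun ξ hξ => mem_supp.2 (h ξ hξ)) fun x y _ _ e => (op3_inj.1 e).2.2) hp.supp_lt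
  obtain ⟨q, hq, h1, -⟩ := set_one hp (hA ξ hξ) e (Or.inl rfl) fun x hx => by_contra fun hne => by
    by_cases hxA : x ε (cAS hκ (LL0 κ)).At
    · rcases hp.2.1.1 x hxA (fun h => hne (h.symm.trans hx)) with h | ⟨-, h⟩
      · rw [hx] at h; exact cst_not h (hA ξ hξ)
      · obtain ⟨δ, j, ν, rfl, -, hc⟩ := cAS_cases hxA
        rw [hx, cAS_st (hA ξ hξ), cAS_st hxA] at h
        rcases hc.2 with hδ | hδ
        · exact eps_asymm h hδ.1
        · exact eps_irrefl (hδ.1 ▸ h)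
    · rw [ev_off hxA] at hx; exact hne hx
  refine ⟨q, hq.cl, fun h => ?_⟩
  have := h.2.2.1 _ (cAS_ns.2 ⟨hA ξ hξ, Or.inl rfl⟩)
  rw [h1, e, ev_cst (Or.inl rfl)] at this
  exact emp_ne_op this

/-- In the extension no cardinal below `κ` is weakly compact. -/
theorem no_wc [Countable M] {κ Λ : M} (hκ : IsInaccessible 𝓔 κ) (G : Gen (cAS hκ Λ).fp) {μ : VG G} (h : μ ε chk G κ) :
    ¬ IsWeaklyCompact (ZM.E : VG G → VG G → Prop) μ := by
  rintro ⟨h1, h2⟩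
  obtain ⟨γ, hγ, rfl⟩ := mem_chk' h
  have hi := inacc_down h1
  have hA : ∀ ξ, ξ ε γ → op γ (op star ξ) ε (cAS hκ Λ).At := fun ξ hξ => cAS_mem.2 ⟨hξ, hi, Or.inl ⟨hγ, Or.inr rfl⟩⟩
  refine no_tp G (cAS_S.2 ⟨Or.inl hγ, hi⟩) h1 (fun ξ : M => op γ (op star ξ)) (fun ξ hξ => ⟨hA ξ hξ, cAS_st (hA ξ hξ), fun h => ?_⟩)
    (fun x y e => (op3_inj.1 e).2.2) h2
  rcases (cAS_ns.1 h).2 with h | h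
  · exact eps_irrefl (h ▸ hγ)
  · exact h rfl
end
end W6

theorem stmt6 (U : ZFCUniverse.{u}) (hU : Countable U.M) (κ : U.M)
    (hκ : ZF.IsMeasurable U.mem κ) :
    ∃ (V : ZFCUniverse.{u}) (e : MemEmbed U V) (P leP : U.M) (G : V.M),
      IsSetGenericExt U V e P leP G ∧
      ZF.IsLeastWeaklyCompact V.mem (e.f κ) ∧
      ZF.IsWeaklyMeasurable V.mem (e.f κ) := by
  let _ : ZM U.M := ⟨U.mem, U.zfc⟩
  obtain ⟨D, nm⟩ := W6.NM.exists hκ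
  obtain ⟨G, -⟩ := W6.Gen.exists (𝔽 := (W6.cAS nm.inacc (W6.LL0 κ)).fp) (W6.AS.mem_PP.2 W6.id_cond)
  obtain ⟨e, leP, H, he, h⟩ := W6.isSetGenericExt U _ G fun p hp => W6.atomless nm.inacc (W6.AS.mem_PP.1 hp)
  have hw := W6.wm nm G
  rw [← he] at hw
  exact ⟨_, e, _, leP, H, h, ⟨⟨hw.1, W6.tree_of_wm hw⟩, fun μ hμ => W6.no_wc nm.inacc G (he ▸ hμ)⟩, hw⟩
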